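/- Let 𝔮 be a primary ideal of the ring O(ℝⁿ) of real-analytic functions on ℝⁿ and let Z(𝔮) := {x ∈ ℝⁿ : f(x) = 0 for all f ∈ 𝔮}. Then: (a) 𝔮 is saturated if and only if Z(𝔮) ≠ ∅; and (b) Z(𝔮) is a preconnected subset of ℝⁿ. -/

import Mathlib

/-!
A primary ideal `q` with a zero `x` contains every `g` that lies locally at `x` in the ideal sheaf of
`q`: clearing denominators gives `h * g ∈ q` with `h x ≠ 0`, and no power of `h` is in `q`
(`CA.mem_of_local`). This gives (a), since without zeros `1` lies in the saturation.

For (b), suppose the zero set splits into disjoint nonempty closed parts `A`, `B`. Replace the ideal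
sheaf of `q` by the unit ideal near `B`; this does not affect the stalks near `A`. If the new sheaf
extends to a coherent sheaf on a complex neighbourhood of `ℝⁿ`, a form of Cartan's Theorem A
(`CA.globA`) yields a global section `e` close to `1` at a point of `B`. By the first paragraph, at a
point of `A`, `e ∈ q`, so `e` vanishes on `B`: a contradiction (`CA.preconn`). Clearing denominators
(`CA.clear_den`) is a second application of `CA.globA`, to a sheaf of relations.

*Coherence of the ideal sheaf of `q`* (`CA.fin_gen`). The stalk at `x` is generated by finitely many
`b j ∈ q`; these must generate on a whole ball about `x`. It suffices that a section of the quotient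
of the sheaf of germs by the ideal sheaf of `b` vanishes over a small ball if it vanishes at the centre
(`CA.inj`). By Noetherian induction one may assume that the stalk ideal `P` is prime. If `w ∉ P`,
the section is divisible by all powers of `w`, so by Krull it vanishes wherever `w` does. If `P` is
not closed under real parts or is maximal, this is enough; otherwise there is a real vector field `v`
preserving `P` but not zero modulo `P` (`CA.real_tangent`), and its flow preserves the support of
the section (`CA.flow`, using Seidenberg's theorem that `v` preserves associated primes). Extremising
the distance to `x`, or a coordinate on a sphere about `x`, over the support, gives a point of the
support at which a function outside `P` vanishes, which is impossible.

*Theorem A* is proved from scratch: Weierstrass division and preparation, Oka's coherence theorem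
(`CA.oka`), splitting and Runge approximation with estimates by Cauchy integrals, Cartan's lemma on
matrices near the identity (`CA.cartan_factor`), Theorems A and B on boxes by repeated bisection,
and a Mittag-Leffler argument on a tube around `ℝⁿ`. An arbitrary neighbourhood of `ℝⁿ` is reduced to
a tube by a holomorphic map, real on `ℝⁿ`, shrinking a tube into the neighbourhood (`CA.shrink`).
-/

/-- The ring of real-analytic functions on `ℝⁿ`, as a subring of the pointwise function ring. -/
noncomputable def ORn (n : ℕ) : Subring ((Fin n → ℝ) → ℝ) where
  carrier := {f | ∀ x, AnalyticAt ℝ f x}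
  mul_mem' hf hg x := (hf x).mul (hg x)
  one_mem' _ := analyticAt_const
  add_mem' hf hg x := (hf x).add (hg x)
  zero_mem' _ := analyticAt_const
  neg_mem' hf x := (hf x).neg

/-- The saturation of a set of global real-analytic functions on `ℝⁿ`. -/
def saturation (n : ℕ) (a : Set (ORn n)) : Set (ORn n) :=
  {g | ∀ x : Fin n → ℝ, ∃ U : Set (Fin n → ℝ), IsOpen U ∧ x ∈ U ∧
    ∃ (r : ℕ) (A : Fin r → ORn n) (c : Fin r → ((Fin n → ℝ) → ℝ)),
      (∀ i, A i ∈ a) ∧ (∀ i, ∀ y ∈ U, AnalyticAt ℝ (c i) y) ∧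
      ∀ y ∈ U, (g : (Fin n → ℝ) → ℝ) y = ∑ i, c i y * (A i : (Fin n → ℝ) → ℝ) y}

/-- The common zero set of an ideal of real-analytic functions on `ℝⁿ`. -/
def ZR (n : ℕ) (a : Ideal (ORn n)) : Set (Fin n → ℝ) :=
  {x | ∀ f ∈ a, (f : (Fin n → ℝ) → ℝ) x = 0}

open Filter Topology MeasureTheory Set Metric

/-! ### Cauchy integrals and analyticity in several variables -/

namespace CA

/-- Integration pairing of continuous functions on a compact measure space. -/
noncomputable def pairI {Y : Type} [TopologicalSpace Y] [CompactSpace Y] [MeasurableSpace Y]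
    [BorelSpace Y] [SecondCountableTopology Y] (ν : Measure Y) [IsFiniteMeasure ν]
    (H : Type*) [NormedAddCommGroup H] [NormedSpace ℂ H] :
    C(Y, ℂ) →L[ℂ] C(Y, H) →L[ℂ] H :=
  have h_int : ∀ (u : C(Y, ℂ)) (v : C(Y, H)), Integrable (fun y => u y • v y) ν := fun u v =>
    (u.continuous.smul v.continuous).integrable_of_hasCompactSupport
      (HasCompactSupport.of_compactSpace _)
  LinearMap.mkContinuous₂
    (LinearMap.mk₂ ℂ (fun u v => ∫ y, u y • v y ∂ν)
      (fun u u' v => by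
        simp only [ContinuousMap.add_apply, add_smul]
        exact integral_add (h_int u v) (h_int u' v))
      (fun c u v => by
        simp only [ContinuousMap.smul_apply, smul_assoc]
        exact integral_smul c _)
      (fun u v v' => by
        simp only [ContinuousMap.add_apply, smul_add]
        exact integral_add (h_int u v) (h_int u v'))
      (fun c u v => by
        simp only [ContinuousMap.smul_apply]
        rw [← integral_smul]
        congr 1; ext y; rw [smul_comm]))
    (ν.real univ) (fun u v => by
      simp only [LinearMap.mk₂_apply]
      refine (norm_integral_le_of_norm_le_const (C := ‖u‖ * ‖v‖) (Eventually.of_forall ?_)).trans ?_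
      · intro y
        rw [norm_smul]
        exact mul_le_mul (u.norm_coe_le_norm y) (v.norm_coe_le_norm y) (norm_nonneg _)
          (norm_nonneg _)
      · rw [mul_comm, mul_assoc])

theorem pairI_apply {Y : Type} [TopologicalSpace Y] [CompactSpace Y] [MeasurableSpace Y]
    [BorelSpace Y] [SecondCountableTopology Y] (ν : Measure Y) [IsFiniteMeasure ν]
    {H : Type*} [NormedAddCommGroup H] [NormedSpace ℂ H] (u : C(Y, ℂ)) (v : C(Y, H)) :
    pairI ν H u v = ∫ y, u y • v y ∂ν := rfl

/-- The Cauchy kernel `y ↦ (γ y - z)⁻¹`, as a continuous function (junk if `z ∈ range γ`). -/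
noncomputable def cker {Y : Type} [TopologicalSpace Y] [CompactSpace Y] (γ : C(Y, ℂ)) (z : ℂ) :
    C(Y, ℂ) := Ring.inverse (γ - algebraMap ℂ C(Y, ℂ) z)

theorem isUnit_kernel {Y : Type} [TopologicalSpace Y] [CompactSpace Y] (γ : C(Y, ℂ)) {z : ℂ}
    (hz : z ∉ range γ) : IsUnit (γ - algebraMap ℂ C(Y, ℂ) z) := by
  rw [ContinuousMap.isUnit_iff_forall_ne_zero]
  intro y h
  apply hz
  exact ⟨y, by simpa [sub_eq_zero] using h⟩

theorem cker_apply {Y : Type} [TopologicalSpace Y] [CompactSpace Y] (γ : C(Y, ℂ)) {z : ℂ}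
    (hz : z ∉ range γ) (y : Y) : cker γ z y = (γ y - z)⁻¹ := by
  have h := Ring.inverse_mul_cancel _ (isUnit_kernel γ hz)
  have h2 := congrArg (fun f : C(Y, ℂ) => f y) h
  simp at h2
  exact eq_inv_of_mul_eq_one_left h2

theorem cker_analytic {Y : Type} [TopologicalSpace Y] [CompactSpace Y] (γ : C(Y, ℂ)) {z : ℂ}
    (hz : z ∉ range γ) : AnalyticAt ℂ (cker γ) z := by
  have h1 : AnalyticAt ℂ (fun z : ℂ => γ - algebraMap ℂ C(Y, ℂ) z) z :=
    analyticAt_const.sub ((Algebra.linearMap ℂ C(Y,ℂ)).toContinuousLinearMap.analyticAt z)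
  obtain ⟨u, hu⟩ := isUnit_kernel γ hz
  have h2 := analyticAt_inverse (𝕜 := ℂ) u
  rw [hu] at h2
  exact h2.comp_of_eq h1 rfl

/-- Cauchy integrals with an analytically varying density are analytic. -/
theorem cauchyI_analytic {Y : Type} [TopologicalSpace Y] [CompactSpace Y] [MeasurableSpace Y]
    [BorelSpace Y] [SecondCountableTopology Y] (ν : Measure Y) [IsFiniteMeasure ν]
    {H : Type*} [NormedAddCommGroup H] [NormedSpace ℂ H]
    {E : Type*} [NormedAddCommGroup E] [NormedSpace ℂ E] (γ : C(Y, ℂ)) {w : E → ℂ}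
    {G : E → C(Y, H)} {x : E} (hw : AnalyticAt ℂ w x) (hx : w x ∉ range γ) (hG : AnalyticAt ℂ G x) :
    AnalyticAt ℂ (fun z => pairI ν H (cker γ (w z)) (G z)) x := by
  have h1 : AnalyticAt ℂ (fun z => (cker γ (w z), G z)) x :=
    AnalyticAt.prod ((cker_analytic γ hx).comp hw) hG
  exact ((pairI ν H).analyticAt_bilinear (cker γ (w x), G x)).comp_of_eq h1 rfl

/-- The parameter interval of a circle. -/
abbrev CI : Type := ↥(Icc (0 : ℝ) (2 * Real.pi))

noncomputable instance : MeasureSpace CI := Measure.Subtype.measureSpace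

instance : IsFiniteMeasure (volume : Measure CI) := ⟨by
  have h : NullMeasurableSet (Icc (0 : ℝ) (2 * Real.pi)) volume :=
    measurableSet_Icc.nullMeasurableSet
  rw [Measure.Subtype.volume_univ h]
  exact isCompact_Icc.measure_lt_top⟩

noncomputable def circ (c : ℂ) (r : ℝ) : C(CI, ℂ) :=
  ⟨fun t => circleMap c r t, (continuous_circleMap c r).comp continuous_subtype_val⟩

theorem circ_notMem (c : ℂ) {r : ℝ} {w : ℂ} (hw : w ∈ ball c r) : w ∉ range (circ c r) := by
  rintro ⟨t, rfl⟩
  have := circleMap_notMem_ball c r t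
  exact this hw

/-- The constant and the derivative in Cauchy's formula for a circle. -/
noncomputable def cwt (r : ℝ) : C(CI, ℂ) :=
  ⟨fun t => (2 * Real.pi * Complex.I)⁻¹ * deriv (circleMap 0 r) t, by
    simp only [deriv_circleMap]
    exact continuous_const.mul (((continuous_circleMap 0 r).comp continuous_subtype_val).mul
      continuous_const)⟩

theorem cauchy_circ {H : Type*} [NormedAddCommGroup H] [NormedSpace ℂ H] [CompleteSpace H]
    {c w : ℂ} {r : ℝ} (f : ℂ → H) (hf : ContinuousOn f (closedBall c r))
    (hd : ∀ z ∈ ball c r, DifferentiableAt ℂ f z) (hw : w ∈ ball c r) (g : C(CI, H))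
    (hg : ∀ t, g t = cwt r t • f (circ c r t)) :
    pairI volume H (cker (circ c r) w) g = f w := by
  rw [← Complex.two_pi_I_inv_smul_circleIntegral_sub_inv_smul_of_differentiable_on_off_countable
    countable_empty hw hf (by simpa using hd), pairI_apply]
  have : ∀ t : CI, cker (circ c r) w t • g t = (fun t : ℝ => (2 * Real.pi * Complex.I : ℂ)⁻¹ •
      (deriv (circleMap c r) t • (circleMap c r t - w)⁻¹ • f (circleMap c r t))) (t : ℝ) := by
    intro t
    rw [hg, cker_apply _ (circ_notMem c hw)]
    simp only [circ, cwt, ContinuousMap.coe_mk, deriv_circleMap, smul_smul]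
    congr 1
    ring
  simp_rw [this]
  rw [circleIntegral, ← intervalIntegral.integral_smul,
    intervalIntegral.integral_of_le (by positivity), ← integral_Icc_eq_integral_Ioc]
  refine integral_subtype (s := Icc (0 : ℝ) (2 * Real.pi)) measurableSet_Icc
    (fun t : ℝ => (2 * Real.pi * Complex.I : ℂ)⁻¹ •
      (deriv (circleMap c r) t • (circleMap c r t - w)⁻¹ • f (circleMap c r t)))

/-- Osgood's lemma in a weak vector-valued form: a continuous map on an open set of `ℂⁿ` into a
Banach space which is separately holomorphic after applying each of a separating family of
functionals is analytic. -/
theorem osgood : ∀ {n : ℕ} {H : Type} [NormedAddCommGroup H] [NormedSpace ℂ H] [CompleteSpace H]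
    (Φ : Set (H →L[ℂ] ℂ)), (∀ u, (∀ φ ∈ Φ, φ u = 0) → u = 0) →
    ∀ (g : (Fin n → ℂ) → H) (U : Set (Fin n → ℂ)) (x : Fin n → ℂ), IsOpen U → x ∈ U →
    ContinuousOn g U →
    (∀ φ ∈ Φ, ∀ y ∈ U, ∀ i, DifferentiableAt ℂ (fun t => φ (g (Function.update y i t))) (y i)) →
    AnalyticAt ℂ g x := by
  intro n
  induction n with
  | zero =>
    intro H _ _ _ Φ hΦ g U x hU hx hg hs
    have : g = fun _ => g x := by ext y; rw [Subsingleton.elim y x]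
    rw [this]
    exact analyticAt_const
  | succ n ih =>
    intro H _ _ _ Φ hΦ g U x hU hx hg hs
    obtain ⟨r₀, hr₀, hball⟩ := Metric.isOpen_iff.1 hU x hx
    obtain ⟨r, hr, hr'⟩ := exists_between hr₀
    have hcl : ∀ (t : ℂ) (y : Fin n → ℂ), t ∈ closedBall (x 0) r →
        y ∈ ball (Fin.tail x) r → (Fin.cons t y : Fin (n+1) → ℂ) ∈ U := by
      intro t y ht hy
      apply hball
      rw [mem_ball, dist_pi_lt_iff hr₀]
      intro i
      refine Fin.cases ?_ (fun j => ?_) i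
      · simpa using (Metric.mem_closedBall.1 ht).trans_lt hr'
      · have := (dist_pi_lt_iff hr).1 (Metric.mem_ball.1 hy) j
        simpa [Fin.tail] using this.trans hr'
    have hccont : Continuous fun p : ℂ × (Fin n → ℂ) => (Fin.cons p.1 p.2 : Fin (n+1) → ℂ) := by
      fun_prop
    have hcont : ∀ y ∈ ball (Fin.tail x) r,
        Continuous (fun t : CI => cwt r t • g (Fin.cons (circ (x 0) r t) y)) := by
      intro y hy
      refine (cwt r).continuous.smul ?_
      refine hg.comp_continuous (hccont.comp ((circ (x 0) r).continuous.prodMk continuous_const)) ?_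
      intro t
      exact hcl _ _ (circleMap_mem_closedBall _ hr.le _) hy
    classical
    let G : (Fin n → ℂ) → C(CI, H) := fun y =>
      if h : Continuous (fun t : CI => cwt r t • g (Fin.cons (circ (x 0) r t) y)) then ⟨_, h⟩ else 0
    have hG : ∀ y ∈ ball (Fin.tail x) r, ∀ t,
        G y t = cwt r t • g (Fin.cons (circ (x 0) r t) y) := by
      intro y hy t
      simp only [G, dif_pos (hcont y hy), ContinuousMap.coe_mk]
    have hGan : AnalyticAt ℂ G (Fin.tail x) := by
      refine ih (H := C(CI, H)) {ψ | ∃ φ ∈ Φ, ∃ t : CI, ψ = φ.comp (ContinuousMap.evalCLM ℂ t)} ?_ G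
        (ball (Fin.tail x) r) (Fin.tail x) isOpen_ball (mem_ball_self hr) ?_ ?_
      · intro u hu
        ext t
        exact hΦ _ fun φ hφ => hu _ ⟨φ, hφ, t, rfl⟩
      · rw [continuousOn_iff_continuous_domRestrict]
        apply ContinuousMap.continuous_of_continuous_uncurry
        have : (Function.uncurry fun (x_1 : ball (Fin.tail x) r) (t : CI) =>
            ((ball (Fin.tail x) r).domRestrict G x_1) t) =
            fun p => cwt r p.2 • g (Fin.cons (circ (x 0) r p.2) (p.1 : Fin n → ℂ)) := by
          ext ⟨y, t⟩
          exact hG y y.2 t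
        rw [this]
        refine ((cwt r).continuous.comp continuous_snd).smul ?_
        refine hg.comp_continuous (hccont.comp ((((circ (x 0) r).continuous).comp
          continuous_snd).prodMk (continuous_subtype_val.comp continuous_fst))) ?_
        intro p
        exact hcl _ _ (circleMap_mem_closedBall _ hr.le _) p.1.2
      · rintro ψ ⟨φ, hφ, t, rfl⟩ y hy i
        have h1 := (hs φ hφ (Fin.cons (circ (x 0) r t) y)
          (hcl _ _ (circleMap_mem_closedBall _ hr.le _) hy) i.succ).const_mul (cwt r t)
        rw [Fin.cons_succ] at h1
        refine h1.congr_of_eventuallyEq ?_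
        have hev : ∀ᶠ s in 𝓝 (y i), Function.update y i s ∈ ball (Fin.tail x) r := by
          have hc : Continuous fun s : ℂ => Function.update y i s :=
            continuous_const.update i continuous_id
          exact hc.continuousAt.eventually_mem (Metric.isOpen_ball.mem_nhds (by simpa using hy))
        filter_upwards [hev] with s hs'
        simp only [ContinuousLinearMap.comp_apply, ContinuousMap.evalCLM_apply]
        rw [hG _ hs', map_smul, ← Fin.cons_update, smul_eq_mul]
    have hform : ∀ᶠ z in 𝓝 x, g z = pairI volume H (cker (circ (x 0) r) (z 0)) (G (Fin.tail z)) := by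
      filter_upwards [ball_mem_nhds x hr] with z hz
      rw [mem_ball, dist_pi_lt_iff hr] at hz
      have hz0 : z 0 ∈ ball (x 0) r := hz 0
      have hzt : Fin.tail z ∈ ball (Fin.tail x) r := by
        rw [mem_ball, dist_pi_lt_iff hr]
        exact fun i => hz i.succ
      have hcG : ContinuousOn (fun t => g (Fin.cons t (Fin.tail z)))
          (closedBall (x 0) r) :=
        hg.comp (hccont.comp (continuous_id.prodMk continuous_const)).continuousOn
          (fun t ht => hcl _ _ ht hzt)
      rw [← sub_eq_zero]
      apply hΦ
      intro φ hφ
      rw [map_sub, sub_eq_zero]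
      have key := cauchy_circ (fun t => φ (g (Fin.cons t (Fin.tail z))))
        (φ.continuous.comp_continuousOn hcG) (w := z 0) (r := r) (c := x 0) (fun t ht => by
          have := hs φ hφ (Fin.cons t (Fin.tail z))
            (hcl _ _ (ball_subset_closedBall ht) hzt) 0
          simpa using this) hz0 ⟨fun t => φ (G (Fin.tail z) t),
            φ.continuous.comp (G (Fin.tail z)).continuous⟩ (fun t => by
          simp only [ContinuousMap.coe_mk]
          rw [hG _ hzt, map_smul])
      rw [Fin.cons_self_tail] at key
      rw [← key, pairI_apply, pairI_apply, ← φ.integral_comp_comm]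
      · simp
      · exact ((cker _ _).continuous.smul (G _).continuous).integrable_of_hasCompactSupport
          (HasCompactSupport.of_compactSpace _)
    have htail : AnalyticAt ℂ (fun z : Fin (n+1) → ℂ => Fin.tail z) x := by
      rw [analyticAt_pi_iff]
      intro i
      exact (ContinuousLinearMap.proj (R := ℂ) (φ := fun _ : Fin (n+1) => ℂ) i.succ).analyticAt x
    refine AnalyticAt.congr ?_ (hform.mono fun z hz => hz.symm)
    exact cauchyI_analytic volume _
      ((ContinuousLinearMap.proj (R := ℂ) (φ := fun _ : Fin (n+1) => ℂ) 0).analyticAt x)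
      (circ_notMem _ (mem_ball_self hr)) (hGan.comp_of_eq htail rfl)

/-- A function viewed as an element of `C(Y, H)`; zero if it is not continuous. -/
noncomputable def mkC {Y H : Type*} [TopologicalSpace Y] [TopologicalSpace H] [Zero H] (f : Y → H) :
    C(Y, H) := by
  classical exact if h : Continuous f then ⟨f, h⟩ else ⟨fun _ => 0, continuous_const⟩

theorem mkC_apply {Y H : Type*} [TopologicalSpace Y] [TopologicalSpace H] [Zero H] {f : Y → H}
    (h : Continuous f) (y : Y) : mkC f y = f y := by
  rw [mkC, dif_pos h]; rfl

/-- A jointly continuous family of holomorphic functions, parametrised by a compact space `Y`,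
is a holomorphic map into `C(Y, H)`. -/
theorem curry_analytic {Y H E : Type} [TopologicalSpace Y] [CompactSpace Y]
    [NormedAddCommGroup H] [NormedSpace ℂ H] [CompleteSpace H] [NormedAddCommGroup E]
    [NormedSpace ℂ E] [FiniteDimensional ℂ E] (F : Y → E → H) {U : Set E} {x : E} (hU : IsOpen U)
    (hx : x ∈ U) (hF : ContinuousOn (Function.uncurry F) (univ ×ˢ U))
    (hd : ∀ y, ∀ z ∈ U, AnalyticAt ℂ (F y) z) :
    AnalyticAt ℂ (fun z => mkC fun y => F y z) x := by
  let e : E ≃L[ℂ] (Fin (Module.finrank ℂ E) → ℂ) :=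
    ContinuousLinearEquiv.ofFinrankEq (by simp)
  have hc : ∀ z ∈ U, Continuous fun y => F y z := fun z hz =>
    hF.comp_continuous (continuous_id.prodMk continuous_const) fun y => ⟨mem_univ _, hz⟩
  have key : AnalyticAt ℂ (fun z => mkC fun y => F y (e.symm z)) (e x) := by
    refine osgood {ψ | ∃ φ : H →L[ℂ] ℂ, ∃ t : Y, ψ = φ.comp (ContinuousMap.evalCLM ℂ t)} ?_ _
      (e.symm ⁻¹' U) (e x) (hU.preimage e.symm.continuous) (by simpa using hx) ?_ ?_
    · intro u hu
      ext t
      by_contra hne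
      obtain ⟨φ, hφ⟩ := SeparatingDual.exists_ne_zero (R := ℂ) hne
      exact hφ (hu _ ⟨φ, t, rfl⟩)
    · rw [continuousOn_iff_continuous_domRestrict]
      apply ContinuousMap.continuous_of_continuous_uncurry
      have : (Function.uncurry fun (z : (e.symm ⁻¹' U : Set _)) (t : Y) =>
          ((e.symm ⁻¹' U).domRestrict (fun z => mkC fun y => F y (e.symm z)) z) t) =
          fun p => Function.uncurry F (p.2, e.symm (p.1 : Fin _ → ℂ)) := by
        ext ⟨z, t⟩
        exact mkC_apply (hc _ z.2) t
      rw [this]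
      refine hF.comp_continuous (continuous_snd.prodMk (e.symm.continuous.comp
        (continuous_subtype_val.comp continuous_fst))) ?_
      exact fun p => ⟨mem_univ _, p.1.2⟩
    · rintro ψ ⟨φ, t, rfl⟩ z hz i
      have hup : AnalyticAt ℂ (fun s : ℂ => Function.update z i s) (z i) := by
        rw [analyticAt_pi_iff]
        intro j
        by_cases h : j = i
        · subst h; simp only [Function.update_self]; exact analyticAt_id
        · simpa [Function.update_of_ne h] using analyticAt_const
      have hup0 : Function.update z i (z i) = z := Function.update_eq_self i z
      have h1 : AnalyticAt ℂ (fun s : ℂ => φ (F t (e.symm (Function.update z i s)))) (z i) := by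
        refine (φ.analyticAt _).comp ?_
        refine AnalyticAt.comp (g := F t) (f := fun s => e.symm (Function.update z i s)) ?_ ?_
        · simp only [hup0]
          exact hd t _ hz
        · exact (e.symm.toContinuousLinearMap.analyticAt _).comp hup
      refine h1.differentiableAt.congr_of_eventuallyEq ?_
      have hev : ∀ᶠ s in 𝓝 (z i), Function.update z i s ∈ e.symm ⁻¹' U :=
        hup.continuousAt.eventually_mem ((hU.preimage e.symm.continuous).mem_nhds (by
          rw [hup0]; exact hz))
      filter_upwards [hev] with s hs
      simp only [ContinuousLinearMap.comp_apply, ContinuousMap.evalCLM_apply]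
      rw [mkC_apply (hc _ hs)]
  have := key.comp_of_eq (e.toContinuousLinearMap.analyticAt x) rfl
  refine this.congr (Eventually.of_forall fun z => ?_)
  simp

/-- A continuous map that is holomorphic in each coordinate is analytic. -/
theorem analytic_of_separate {n : ℕ} {g : (Fin n → ℂ) → ℂ} {U : Set (Fin n → ℂ)} (hU : IsOpen U)
    (hg : ContinuousOn g U)
    (hs : ∀ y ∈ U, ∀ i, DifferentiableAt ℂ (fun t => g (Function.update y i t)) (y i))
    {x : Fin n → ℂ} (hx : x ∈ U) : AnalyticAt ℂ g x :=
  osgood {ContinuousLinearMap.id ℂ ℂ} (by simp) g U x hU hx hg (by simpa using hs)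

theorem update_analytic {n : ℕ} (z : Fin n → ℂ) (i : Fin n) (t : ℂ) :
    AnalyticAt ℂ (fun s : ℂ => Function.update z i s) t := by
  rw [analyticAt_pi_iff]
  intro j
  by_cases h : j = i
  · subst h; simp only [Function.update_self]; exact analyticAt_id
  · simpa [Function.update_of_ne h] using analyticAt_const

/-- Locally uniform limits of analytic functions of several variables are analytic. -/
theorem analytic_of_limit {n : ℕ} {F : ℕ → (Fin n → ℂ) → ℂ} {g : (Fin n → ℂ) → ℂ}
    {U : Set (Fin n → ℂ)} (hU : IsOpen U) (hF : ∀ k, ∀ x ∈ U, AnalyticAt ℂ (F k) x)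
    (hl : TendstoLocallyUniformlyOn F g atTop U) {x : Fin n → ℂ} (hx : x ∈ U) :
    AnalyticAt ℂ g x := by
  refine analytic_of_separate hU (hl.continuousOn (Frequently.of_forall fun k y hy =>
    (hF k y hy).continuousAt.continuousWithinAt)) (fun y hy i => ?_) hx
  have hc : Continuous fun s : ℂ => Function.update y i s := continuous_const.update i continuous_id
  have hV : IsOpen ((fun s : ℂ => Function.update y i s) ⁻¹' U) := hU.preimage hc
  have hl' := hl.comp (fun s : ℂ => Function.update y i s) (mapsTo_preimage _ _) hc.continuousOn
  refine (hl'.differentiableOn (Eventually.of_forall fun k s hs => ?_) hV).differentiableAt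
    (hV.mem_nhds (by simpa using hy))
  exact ((hF k _ hs).comp (update_analytic y i s)).differentiableAt.differentiableWithinAt

/-! ### Weierstrass division -/

/-- Coefficients of the monic polynomial of degree `k` with lower coefficients `a`. -/
def mco (k : ℕ) (a : ℕ → ℂ) (i : ℕ) : ℂ := if i < k then a i else 1

/-- The monic polynomial function of degree `k` with lower coefficients `a`. -/
def WP (k : ℕ) (a : ℕ → ℂ) (s : ℂ) : ℂ := ∑ i ∈ Finset.range (k + 1), mco k a i * s ^ i

theorem WP_eq (k : ℕ) (a : ℕ → ℂ) (s : ℂ) :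
    WP k a s = s ^ k + ∑ i ∈ Finset.range k, a i * s ^ i := by
  rw [WP, Finset.sum_range_succ, add_comm]
  congr 1
  · simp [mco]
  · exact Finset.sum_congr rfl fun i hi => by simp [mco, Finset.mem_range.1 hi]

theorem WP_sub (k : ℕ) (a : ℕ → ℂ) (s t : ℂ) :
    WP k a s = WP k a t + (s - t) * ∑ j ∈ Finset.range k, t ^ j *
      ∑ i ∈ Finset.range (k + 1), (if j < i then mco k a i else 0) * s ^ (i - 1 - j) := by
  have h : ∀ i ∈ Finset.range (k + 1), mco k a i * s ^ i = mco k a i * t ^ i +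
      (s - t) * ∑ j ∈ Finset.range k, t ^ j * ((if j < i then mco k a i else 0) * s ^ (i - 1 - j)) := by
    intro i hi
    have h1 := geom_sum₂_mul t s i
    have h2 : ∑ j ∈ Finset.range k, t ^ j * ((if j < i then mco k a i else 0) * s ^ (i - 1 - j)) =
        mco k a i * ∑ j ∈ Finset.range i, t ^ j * s ^ (i - 1 - j) := by
      have hsub : Finset.range i ⊆ Finset.range k := by
        intro x; simp only [Finset.mem_range] at *; omega
      rw [Finset.mul_sum, ← Finset.sum_subset hsub]
      · exact Finset.sum_congr rfl fun j hj => by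
          rw [if_pos (Finset.mem_range.1 hj)]; ring
      · intro j _ hj
        rw [if_neg (by simpa using hj)]; ring
    rw [h2]
    linear_combination (mco k a i) * h1
  rw [WP, Finset.sum_congr rfl h, Finset.sum_add_distrib, ← WP, ← Finset.mul_sum,
    Finset.sum_comm]
  simp_rw [Finset.mul_sum]

theorem circ_notMem' (c : ℂ) {r : ℝ} (hr : 0 < r) {w : ℂ} (hw : w ∉ sphere c r) :
    w ∉ range (circ c r) := by
  rintro ⟨t, rfl⟩
  exact hw (circleMap_mem_sphere c hr.le _)

theorem cauchy_circ_out {c w : ℂ} {r : ℝ} (hr : 0 < r) (f : ℂ → ℂ)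
    (hf : ContinuousOn f (closedBall c r))
    (hd : ∀ z ∈ ball c r, DifferentiableAt ℂ f z) (hw : w ∉ closedBall c r)
    (g : C(CI, ℂ)) (hg : ∀ t, g t = cwt r t • f (circ c r t)) :
    pairI volume ℂ (cker (circ c r) w) g = 0 := by
  have hne : ∀ z ∈ closedBall c r, z - w ≠ 0 := fun z hz h =>
    hw (by rw [← sub_eq_zero.1 h]; exact hz)
  have h0 : (∮ z in C(c, r), (z - w)⁻¹ * f z) = 0 := by
    refine Complex.circleIntegral_eq_zero_of_differentiable_on_off_countable hr.le
      countable_empty ?_ ?_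
    · exact ((continuousOn_id.sub continuousOn_const).inv₀ hne).mul hf
    · intro z hz
      have hz := hz.1
      have h1 : DifferentiableAt ℂ (fun z => (z - w)⁻¹) z :=
        DifferentiableAt.fun_inv (by fun_prop) (hne z (ball_subset_closedBall hz))
      exact h1.mul (hd z hz)
  have hw' : w ∉ range (circ c r) := circ_notMem' c hr fun h =>
    hw (sphere_subset_closedBall h)
  rw [pairI_apply]
  have : ∀ t : CI, cker (circ c r) w t • g t = (fun t : ℝ => (2 * Real.pi * Complex.I : ℂ)⁻¹ •
      (deriv (circleMap c r) t • ((circleMap c r t - w)⁻¹ * f (circleMap c r t)))) (t : ℝ) := by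
    intro t
    rw [hg, cker_apply _ hw']
    simp only [circ, cwt, ContinuousMap.coe_mk, deriv_circleMap, smul_eq_mul]
    ring
  simp_rw [this]
  have h1 := integral_subtype (s := Icc (0 : ℝ) (2 * Real.pi)) measurableSet_Icc
    (fun t : ℝ => (2 * Real.pi * Complex.I : ℂ)⁻¹ •
      (deriv (circleMap c r) t • ((circleMap c r t - w)⁻¹ * f (circleMap c r t))))
  refine h1.trans ?_
  rw [integral_Icc_eq_integral_Ioc, ← intervalIntegral.integral_of_le (by positivity),
    intervalIntegral.integral_smul]
  rw [circleIntegral] at h0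
  rw [h0, smul_zero]

theorem mco_analytic {E : Type} [NormedAddCommGroup E] [NormedSpace ℂ E] {k : ℕ} {a : ℕ → E → ℂ}
    {p : E} (h : ∀ j < k, AnalyticAt ℂ (a j) p) (i : ℕ) :
    AnalyticAt ℂ (fun p => mco k (fun j => a j p) i) p := by
  by_cases hi : i < k
  · simpa [mco, hi] using h i hi
  · simpa [mco, hi] using analyticAt_const

theorem WP_analytic {E : Type} [NormedAddCommGroup E] [NormedSpace ℂ E] {k : ℕ} {a : ℕ → E → ℂ}
    {p : E} (b : ℂ) (h : ∀ j < k, AnalyticAt ℂ (a j) p) (z : ℂ) :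
    AnalyticAt ℂ (fun w : ℂ × E => WP k (fun j => a j w.2) (w.1 - b)) (z, p) := by
  unfold WP
  refine Finset.analyticAt_fun_sum _ fun i _ => ?_
  refine AnalyticAt.mul ?_ ((analyticAt_fst.sub analyticAt_const).pow i)
  exact AnalyticAt.comp (g := fun p => mco k (fun j => a j p) i) (f := Prod.snd)
    (mco_analytic h i) analyticAt_snd

theorem eventually_nhds_compact {E : Type} [NormedAddCommGroup E] {K : Set ℂ} (hK : IsCompact K)
    {p₀ : E} {Q : ℂ × E → Prop} (h : ∀ z ∈ K, ∀ᶠ w in 𝓝 (z, p₀), Q w) :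
    ∀ᶠ p in 𝓝 p₀, ∀ z ∈ K, Q (z, p) :=
  hK.eventually_forall_of_forall_eventually fun z hz =>
    (continuous_swap.tendsto (p₀, z)).eventually (h z hz)

/-- The pointwise decomposition of the Cauchy kernel times a polynomial. -/
theorem cker_WP (k : ℕ) (a : ℕ → ℂ) (b z : ℂ) (γ : C(CI, ℂ)) (hz : z ∉ range γ) (u : C(CI, ℂ))
    (hu : ∀ t, u t = WP k a (γ t - b)) :
    cker γ z * u = WP k a (z - b) • cker γ z + ∑ j ∈ Finset.range k, (z - b) ^ j •
      ∑ i ∈ Finset.range (k + 1), (if j < i then mco k a i else 0) •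
        (γ - algebraMap ℂ C(CI, ℂ) b) ^ (i - 1 - j) := by
  ext t
  have hne : γ t - z ≠ 0 := fun h => hz ⟨t, sub_eq_zero.1 h⟩
  simp only [ContinuousMap.mul_apply, ContinuousMap.add_apply, ContinuousMap.smul_apply,
    ContinuousMap.sum_apply, hu, cker_apply γ hz, smul_eq_mul, ContinuousMap.pow_apply,
    ContinuousMap.sub_apply, algebraMap_apply]
  rw [WP_sub k _ (γ t - b) (z - b)]
  simp only [sub_sub_sub_cancel_right, mul_one]
  rw [mul_add, inv_mul_cancel_left₀ hne, mul_comm]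

set_option maxHeartbeats 1000000 in
/-- Division by an analytic family of monic polynomials that has no zeros on a circle. Only the
roots inside of the circle are seen by `f`; near the other roots the remainder is divisible. -/
theorem polydiv {E : Type} [NormedAddCommGroup E] [NormedSpace ℂ E] [FiniteDimensional ℂ E]
    {c : ℂ} (b : ℂ) {r : ℝ} (hr : 0 < r) (k : ℕ) (a : ℕ → E → ℂ) (f : ℂ × E → ℂ) (p₀ : E)
    (ha : ∀ j < k, AnalyticAt ℂ (a j) p₀)
    (hf : ∀ z ∈ closedBall c r, AnalyticAt ℂ f (z, p₀))
    (hW : ∀ z ∈ sphere c r, WP k (fun j => a j p₀) (z - b) ≠ 0) :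
    ∃ (q : ℂ × E → ℂ) (R : ℕ → E → ℂ), (∀ j, AnalyticAt ℂ (R j) p₀) ∧ ∀ᶠ p in 𝓝 p₀,
      (∀ z ∉ sphere c r, AnalyticAt ℂ q (z, p)) ∧
      (∀ z ∈ ball c r, f (z, p) = q (z, p) * WP k (fun j => a j p) (z - b) +
          ∑ j ∈ Finset.range k, R j p * (z - b) ^ j) ∧
      (∀ z ∉ closedBall c r, 0 = q (z, p) * WP k (fun j => a j p) (z - b) +
          ∑ j ∈ Finset.range k, R j p * (z - b) ^ j) := by
  have hev : ∀ᶠ p in 𝓝 p₀, (∀ j < k, AnalyticAt ℂ (a j) p) ∧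
      (∀ z ∈ closedBall c r, AnalyticAt ℂ f (z, p)) ∧
      ∀ z ∈ sphere c r, WP k (fun j => a j p) (z - b) ≠ 0 := by
    refine Eventually.and ?_ (Eventually.and ?_ ?_)
    · have : ∀ᶠ p in 𝓝 p₀, ∀ j ∈ Finset.range k, AnalyticAt ℂ (a j) p :=
        (eventually_all_finset _).2 fun j hj => (ha j (Finset.mem_range.1 hj)).eventually_analyticAt
      exact this.mono fun p h j hj => h j (Finset.mem_range.2 hj)
    · exact eventually_nhds_compact (isCompact_closedBall c r) fun z hz =>
        (hf z hz).eventually_analyticAt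
    · exact eventually_nhds_compact (Q := fun w => WP k (fun j => a j w.2) (w.1 - b) ≠ 0)
        (isCompact_sphere c r) fun z hz => (WP_analytic b ha z).continuousAt.eventually_ne (hW z hz)
  obtain ⟨U, hUe, hU, hp₀⟩ := _root_.eventually_nhds_iff.1 hev
  obtain ⟨γ, hγ⟩ : ∃ γ : C(CI, ℂ), γ = circ c r := ⟨_, rfl⟩
  have hγs : ∀ t, γ t ∈ sphere c r := fun t => by
    rw [hγ]; exact circleMap_mem_sphere c hr.le _
  have hγn : ∀ z ∉ sphere c r, z ∉ range γ := by
    rw [hγ]; exact fun z hz => circ_notMem' c hr hz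
  obtain ⟨F, hF⟩ : ∃ F : CI → E → ℂ, F = fun t p =>
    cwt r t * (f (γ t, p) / WP k (fun j => a j p) (γ t - b)) := ⟨_, rfl⟩
  have hpair : ∀ t p, AnalyticAt ℂ (fun p : E => ((γ t, p) : ℂ × E)) p := fun t p =>
    analyticAt_const.prod analyticAt_id
  have hFan : ∀ t, ∀ p ∈ U, AnalyticAt ℂ (F t) p := by
    intro t p hp
    obtain ⟨h1, h2, h3⟩ := hUe p hp
    rw [hF]
    refine analyticAt_const.mul (AnalyticAt.div ?_ ?_ (h3 _ (hγs t)))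
    · exact (h2 _ (sphere_subset_closedBall (hγs t))).comp (hpair t p)
    · exact (WP_analytic b h1 (γ t)).comp (hpair t p)
  have hFc : ContinuousOn (Function.uncurry F) (univ ×ˢ U) := by
    rintro ⟨t, p⟩ ⟨-, hp⟩
    obtain ⟨h1, h2, h3⟩ := hUe p hp
    have hc : ContinuousAt (fun w : CI × E => ((γ w.1, w.2) : ℂ × E)) (t, p) :=
      ((γ.continuous.comp continuous_fst).prodMk continuous_snd).continuousAt
    have c1 : ContinuousAt (fun w : CI × E => cwt r w.1) (t, p) :=
      ((cwt r).continuous.comp continuous_fst).continuousAt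
    have c2 : ContinuousAt (fun w : CI × E => f (γ w.1, w.2)) (t, p) :=
      ContinuousAt.comp (g := f) (h2 _ (sphere_subset_closedBall (hγs t))).continuousAt hc
    have c3 : ContinuousAt (fun w : CI × E => WP k (fun j => a j w.2) (γ w.1 - b)) (t, p) := by
      have h4 : ContinuousAt ((fun w : ℂ × E => WP k (fun j => a j w.2) (w.1 - b)) ∘
          fun w : CI × E => ((γ w.1, w.2) : ℂ × E)) (t, p) := by
        refine ContinuousAt.comp ?_ hc
        exact (WP_analytic b h1 (γ t)).continuousAt
      exact h4
    rw [hF]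
    exact (c1.mul (c2.div₀ c3 (h3 _ (hγs t)))).continuousWithinAt
  have hG : ∀ p ∈ U, AnalyticAt ℂ (fun p => mkC fun t => F t p) p := fun p hp =>
    curry_analytic F hU hp hFc hFan
  have hFcp : ∀ p ∈ U, Continuous fun t => F t p := fun p hp =>
    hFc.comp_continuous (continuous_id.prodMk continuous_const) fun y => ⟨mem_univ _, hp⟩
  obtain ⟨Cj, hCj⟩ : ∃ Cj : ℕ → E → C(CI, ℂ), Cj = fun j p => ∑ i ∈ Finset.range (k + 1),
    (if j < i then mco k (fun j => a j p) i else 0) •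
      (γ - algebraMap ℂ C(CI, ℂ) b) ^ (i - 1 - j) := ⟨_, rfl⟩
  have hWc : ∀ p, Continuous fun t => WP k (fun j => a j p) (γ t - b) := by
    intro p
    unfold WP
    exact continuous_finsetSum _ fun i _ => continuous_const.mul
      ((γ.continuous.sub continuous_const).pow i)
  have key : ∀ p z, z ∉ sphere c r → pairI volume ℂ (cker γ z)
      (mkC (fun t => WP k (fun j => a j p) (γ t - b)) * mkC fun t => F t p) =
      pairI volume ℂ (cker γ z) (mkC fun t => F t p) * WP k (fun j => a j p) (z - b) +
        ∑ j ∈ Finset.range k, pairI volume ℂ (Cj j p) (mkC fun t => F t p) * (z - b) ^ j := by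
    intro p z hz
    have hmul : ∀ u v w : C(CI, ℂ), pairI volume ℂ u (v * w) = pairI volume ℂ (u * v) w := by
      intro u v w
      simp only [pairI_apply, smul_eq_mul, ContinuousMap.mul_apply, mul_assoc]
    rw [hmul, cker_WP k (fun j => a j p) b z γ (hγn z hz) _ (fun t => mkC_apply (hWc p) t)]
    simp only [map_add, map_smul, map_sum, add_apply,
      smul_apply, sum_apply, smul_eq_mul, hCj]
    congr 1
    · ring
    · exact Finset.sum_congr rfl fun j _ => by ring
  have hgt : ∀ p ∈ U, ∀ t, (mkC (fun t => WP k (fun j => a j p) (γ t - b)) * mkC fun t => F t p) t =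
      cwt r t • (fun z => f (z, p)) (circ c r t) := by
    intro p hp t
    rw [ContinuousMap.mul_apply, mkC_apply (hWc p), mkC_apply (hFcp p hp), ← hγ, hF]
    have := (hUe p hp).2.2 _ (hγs t)
    simp only [smul_eq_mul]
    field_simp
  have hs1 : ∀ p ∈ U, ContinuousOn (fun z => f (z, p)) (closedBall c r) := fun p hp z hz =>
    ContinuousAt.continuousWithinAt (ContinuousAt.comp (g := f) ((hUe p hp).2.1 z hz).continuousAt
      (continuous_id.prodMk continuous_const).continuousAt)
  have hs2 : ∀ p ∈ U, ∀ z ∈ ball c r, DifferentiableAt ℂ (fun z => f (z, p)) z :=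
    fun p hp z hz => (AnalyticAt.comp (g := f) (f := fun z : ℂ => (z, p))
      ((hUe p hp).2.1 z (ball_subset_closedBall hz))
        (analyticAt_id.prod analyticAt_const)).differentiableAt
  refine ⟨fun w => pairI volume ℂ (cker γ w.1) (mkC fun t => F t w.2),
    fun j p => pairI volume ℂ (Cj j p) (mkC fun t => F t p), ?_, ?_⟩
  · intro j
    have hC : AnalyticAt ℂ (Cj j) p₀ := by
      rw [hCj]
      refine Finset.analyticAt_fun_sum _ fun i _ => ?_
      refine AnalyticAt.fun_smul ?_ analyticAt_const
      split_ifs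
      · exact mco_analytic ha i
      · exact analyticAt_const
    exact ((pairI volume ℂ).analyticAt_bilinear (Cj j p₀, _)).comp_of_eq (hC.prod (hG p₀ hp₀)) rfl
  · filter_upwards [hU.mem_nhds hp₀] with p hp
    refine ⟨fun z hz => ?_, fun z hz => ?_, fun z hz => ?_⟩
    · exact cauchyI_analytic volume γ (w := Prod.fst) (G := fun w : ℂ × E => mkC fun t => F t w.2)
        analyticAt_fst (hγn z hz)
        (AnalyticAt.comp (g := fun p => mkC fun t => F t p) (f := Prod.snd) (hG p hp) analyticAt_snd)
    · have := cauchy_circ (fun z => f (z, p)) (hs1 p hp) (hs2 p hp) hz _ (hgt p hp)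
      rw [← hγ, key p z fun h => (ne_of_lt hz) h] at this
      exact this.symm
    · have := cauchy_circ_out hr (fun z => f (z, p)) (hs1 p hp) (hs2 p hp) hz _ (hgt p hp)
      rw [← hγ, key p z fun h => hz (sphere_subset_closedBall h)] at this
      exact this.symm

/-- A polynomial divisible, as a function near the roots, by a polynomial of larger degree with
roots in `V` is zero. -/
theorem poly_uniq {V : Set ℂ} (hV : IsOpen V) (l : Multiset ℂ) (hl : ∀ ζ ∈ l, ζ ∈ V) :
    ∀ (R : Polynomial ℂ) (q : ℂ → ℂ), ContinuousOn q V → R.degree < (Multiset.card l : ℕ) →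
      (∀ z ∈ V, R.eval z = q z * (l.map fun ζ => z - ζ).prod) → R = 0 := by
  induction l using Multiset.induction_on with
  | empty =>
    intro R q _ hd _
    simpa using hd
  | cons ζ l ih =>
    intro R q hq hd h
    by_contra hR
    have hζ : ζ ∈ V := hl ζ (Multiset.mem_cons_self _ _)
    have hroot : R.IsRoot ζ := by
      rw [Polynomial.IsRoot, h ζ hζ]; simp
    obtain ⟨S, hS⟩ := Polynomial.dvd_iff_isRoot.2 hroot
    have hS0 : S = 0 := by
      refine ih (fun ζ h => hl ζ (Multiset.mem_cons_of_mem h)) S q hq ?_ ?_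
      · by_contra hcon
        push Not at hcon
        have hne : S ≠ 0 := fun h0 => hR (by rw [hS, h0, mul_zero])
        rw [hS, Polynomial.degree_mul, Polynomial.degree_X_sub_C] at hd
        rw [Polynomial.degree_eq_natDegree hne] at hd hcon
        rw [Multiset.card_cons] at hd
        norm_cast at hd hcon
        omega
      · have heq : ∀ z ∈ V, z ≠ ζ → S.eval z = q z * (l.map fun ζ => z - ζ).prod := by
          intro z hz hne
          have := h z hz
          rw [hS, Polynomial.eval_mul, Multiset.map_cons, Multiset.prod_cons] at this
          simp only [Polynomial.eval_sub, Polynomial.eval_X, Polynomial.eval_C] at this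
          have h0 : z - ζ ≠ 0 := sub_ne_zero.2 hne
          apply mul_left_cancel₀ h0
          rw [this]; ring
        intro z hz
        by_cases hne : z = ζ
        · subst hne
          have hc1 : ContinuousAt (fun w => S.eval w - q w * (l.map fun ζ => w - ζ).prod) z := by
            refine S.continuous.continuousAt.sub ((hq.continuousAt (hV.mem_nhds hz)).mul ?_)
            exact (continuous_multiset_prod l fun i _ => by fun_prop).continuousAt
          have hev : ∀ᶠ w in 𝓝[≠] z, S.eval w - q w * (l.map fun ζ => w - ζ).prod = 0 := by
            filter_upwards [self_mem_nhdsWithin, mem_nhdsWithin_of_mem_nhds (hV.mem_nhds hz)]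
              with w hw hwV
            rw [heq w hwV hw, sub_self]
          have h1 : Tendsto (fun w => S.eval w - q w * (l.map fun ζ => w - ζ).prod) (𝓝[≠] z)
            (𝓝 0) := tendsto_const_nhds.congr' (hev.mono fun w hw => hw.symm)
          exact sub_eq_zero.1 (tendsto_nhds_unique (hc1.tendsto.mono_left nhdsWithin_le_nhds) h1)
        · exact heq z hz hne
    exact hR (by rw [hS, hS0, mul_zero])

/-! ### Weierstrass preparation -/

open scoped ContDiff

open Polynomial in
/-- `WP` as a polynomial. -/
noncomputable def WPp (k : ℕ) (a : ℕ → ℂ) : ℂ[X] := ∑ i ∈ Finset.range (k + 1), C (mco k a i) * X ^ i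

open Polynomial in
theorem WPp_eq (k : ℕ) (a : ℕ → ℂ) :
    WPp k a = X ^ k + ∑ i ∈ Finset.range k, C (a i) * X ^ i := by
  rw [WPp, Finset.sum_range_succ, add_comm]
  congr 1
  · simp [mco]
  · exact Finset.sum_congr rfl fun i hi => by simp [mco, Finset.mem_range.1 hi]

open Polynomial in
theorem sum_degree_lt (k : ℕ) (a : ℕ → ℂ) : Polynomial.degree (∑ i ∈ Finset.range k, Polynomial.C (a i) * X ^ i) < (k : WithBot ℕ) := by
  refine (degree_sum_le _ _).trans_lt ?_
  rw [Finset.sup_lt_iff (by exact WithBot.bot_lt_coe k)]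
  intro i hi
  refine (degree_C_mul_X_pow_le i (a i)).trans_lt ?_
  exact_mod_cast Finset.mem_range.1 hi

theorem WPp_eval (k : ℕ) (a : ℕ → ℂ) (s : ℂ) : (WPp k a).eval s = WP k a s := by
  simp [WPp, WP, Polynomial.eval_finsetSum]

theorem WPp_monic (k : ℕ) (a : ℕ → ℂ) : (WPp k a).Monic := by
  rw [WPp_eq]; exact Polynomial.monic_X_pow_add (sum_degree_lt k a)

theorem WPp_natDegree (k : ℕ) (a : ℕ → ℂ) : (WPp k a).natDegree = k := by
  rw [WPp_eq]
  refine Polynomial.natDegree_eq_of_degree_eq_some ?_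
  rw [Polynomial.degree_add_eq_left_of_degree_lt]
  · simp
  · simpa using sum_degree_lt k a

/-- A polynomial of degree `< k` which is divisible near all roots by a monic polynomial of
degree `k` is zero. -/
theorem WP_uniq {V : Set ℂ} (hV : IsOpen V) (k : ℕ) (a : ℕ → ℂ) (b : ℂ)
    (hroots : ∀ z, WP k a (z - b) = 0 → z ∈ V) (R : ℕ → ℂ) (q : ℂ → ℂ) (hq : ContinuousOn q V)
    (h : ∀ z ∈ V, ∑ j ∈ Finset.range k, R j * (z - b) ^ j = q z * WP k a (z - b)) :
    ∀ j < k, R j = 0 := by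
  have hsp := IsAlgClosed.splits (WPp k a)
  have hprod := hsp.eq_prod_roots_of_monic (WPp_monic k a)
  have hcard : Multiset.card (WPp k a).roots = k := by
    rw [← hsp.natDegree_eq_card_roots, WPp_natDegree]
  have h0 := poly_uniq (V := (fun s => s + b) ⁻¹' V) (hV.preimage (by fun_prop)) (WPp k a).roots
    (fun ζ hζ => hroots _ (by
      have := (Polynomial.mem_roots'.1 hζ).2
      rw [Polynomial.IsRoot, WPp_eval] at this
      simpa using this))
    (∑ j ∈ Finset.range k, Polynomial.C (R j) * Polynomial.X ^ j) (fun s => q (s + b))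
    (hq.comp (by fun_prop) fun s hs => hs) (by rw [hcard]; exact sum_degree_lt k R) (by
      intro s hs
      have h1 := h (s + b) hs
      have h2 : (Multiset.map (fun ζ => s - ζ) (WPp k a).roots).prod = WP k a s := by
        conv_rhs => rw [← WPp_eval, hprod]
        rw [Polynomial.eval_multiset_prod, Multiset.map_map]
        simp
      rw [h2, Polynomial.eval_finsetSum]
      simpa using h1)
  intro j hj
  have := congrArg (fun p => Polynomial.coeff p j) h0
  simpa [Polynomial.finsetSum_coeff, Polynomial.coeff_C_mul_X_pow, hj] using this

/-- Weierstrass preparation. -/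
theorem prep {E : Type} [NormedAddCommGroup E] [NormedSpace ℂ E] [FiniteDimensional ℂ E]
    {f : ℂ × E → ℂ} {z₀ : ℂ} {p₀ : E} (hf : AnalyticAt ℂ f (z₀, p₀))
    (hne : ¬ ∀ᶠ z in 𝓝 z₀, f (z, p₀) = 0) :
    ∃ (k : ℕ) (a : ℕ → E → ℂ) (u : ℂ × E → ℂ), (∀ j < k, AnalyticAt ℂ (a j) p₀ ∧ a j p₀ = 0) ∧
      AnalyticAt ℂ u (z₀, p₀) ∧ u (z₀, p₀) ≠ 0 ∧
      ∀ᶠ w in 𝓝 (z₀, p₀), f w = u w * WP k (fun j => a j w.2) (w.1 - z₀) := by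
  have hf0 : AnalyticAt ℂ (fun z => f (z, p₀)) z₀ :=
    AnalyticAt.comp (g := f) (f := fun z : ℂ => (z, p₀)) hf (analyticAt_id.prod analyticAt_const)
  obtain ⟨k, g, hg, hg0, hfg⟩ := hf0.exists_eventuallyEq_pow_smul_nonzero_iff.2 hne
  -- a radius on which everything is analytic
  have hev : ∀ᶠ z in 𝓝 z₀, AnalyticAt ℂ f (z, p₀) ∧ f (z, p₀) = (z - z₀) ^ k • g z ∧
      AnalyticAt ℂ g z := by
    have h1 : ∀ᶠ z in 𝓝 z₀, AnalyticAt ℂ f (z, p₀) :=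
      (Continuous.tendsto (by fun_prop : Continuous fun z : ℂ => (z, p₀)) z₀).eventually
        hf.eventually_analyticAt
    exact h1.and (hfg.and hg.eventually_analyticAt)
  obtain ⟨r, hr, hball⟩ := Metric.nhds_basis_closedBall.eventually_iff.1 hev
  -- the generic polynomial
  obtain ⟨a', ha'⟩ : ∃ a' : ℕ → E × (Fin k → ℂ) → ℂ, a' = fun j w => if h : j < k then w.2 ⟨j, h⟩ else 0 :=
    ⟨_, rfl⟩
  have ha'an : ∀ j w, AnalyticAt ℂ (a' j) w := by
    intro j w
    rw [ha']
    by_cases h : j < k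
    · simp only [h, dite_true]
      exact ((ContinuousLinearMap.proj (R := ℂ) (φ := fun _ : Fin k => ℂ) ⟨j, h⟩).comp
        (ContinuousLinearMap.snd ℂ E (Fin k → ℂ))).analyticAt w
    · simp only [h, dite_false]
      exact analyticAt_const
  have ha'0 : ∀ p j, a' j (p, 0) = 0 := by
    intro p j; rw [ha']; by_cases h : j < k <;> simp [h]
  have hWP0 : ∀ p s, WP k (fun j => a' j (p, 0)) s = s ^ k := by
    intro p s; rw [WP_eq]; simp [ha'0]
  obtain ⟨q, R, hR, hdiv⟩ := polydiv (c := z₀) z₀ hr k a' (fun w : ℂ × (E × (Fin k → ℂ)) => f (w.1, w.2.1))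
    (p₀, 0) (fun j _ => ha'an j _)
    (fun z hz => AnalyticAt.comp (g := f) (f := fun w : ℂ × (E × (Fin k → ℂ)) => (w.1, w.2.1))
      (hball hz).1 (analyticAt_fst.prod (AnalyticAt.comp (g := Prod.fst) (f := Prod.snd) analyticAt_fst analyticAt_snd)))
    (fun z hz => by
      rw [hWP0]
      refine pow_ne_zero _ (sub_ne_zero.2 fun h => ?_)
      rw [h, mem_sphere, dist_self] at hz
      exact hr.ne hz)
  have hz₀ : z₀ ∈ ball z₀ r := mem_ball_self hr
  have hbs : ∀ z ∈ ball z₀ r, z ∉ sphere z₀ r := fun z hz h => (ne_of_lt hz) h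
  obtain ⟨hqan, hdiv0, -⟩ := hdiv.self_of_nhds
  have hqc : ContinuousOn (fun z => q (z, (p₀, 0))) (ball z₀ r) := fun z hz =>
    ContinuousAt.continuousWithinAt (ContinuousAt.comp (g := q) (hqan z (hbs z hz)).continuousAt
      (by fun_prop))
  have hgc : ContinuousOn g (ball z₀ r) := fun z hz =>
    (hball (ball_subset_closedBall hz)).2.2.continuousAt.continuousWithinAt
  have hR0 : ∀ j < k, R j (p₀, 0) = 0 := by
    refine WP_uniq isOpen_ball k (fun j => a' j (p₀, 0)) z₀ ?_ _
      (fun z => g z - q (z, (p₀, 0))) (hgc.sub hqc) ?_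
    · intro z hz
      rw [hWP0] at hz
      have := sub_eq_zero.1 (eq_zero_of_pow_eq_zero hz)
      rwa [this]
    · intro z hz
      have h1 := hdiv0 z hz
      have h2 := (hball (ball_subset_closedBall hz)).2.1
      simp only [hWP0, smul_eq_mul] at h1 h2 ⊢
      linear_combination h2 - h1
  have hqg : ∀ z ∈ ball z₀ r, z ≠ z₀ → q (z, (p₀, 0)) = g z := by
    intro z hz hzz
    have h1 := hdiv0 z hz
    have h2 := (hball (ball_subset_closedBall hz)).2.1
    rw [Finset.sum_eq_zero fun j hj => by rw [hR0 j (Finset.mem_range.1 hj), zero_mul]] at h1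
    simp only [hWP0, smul_eq_mul] at h1 h2
    have h3 : (z - z₀) ^ k ≠ 0 := pow_ne_zero _ (sub_ne_zero.2 hzz)
    apply mul_right_cancel₀ h3
    linear_combination h2 - h1
  have hq0 : q (z₀, (p₀, 0)) ≠ 0 := by
    have hc1 := (hqc.continuousAt (Metric.isOpen_ball.mem_nhds hz₀)).tendsto.mono_left
      (nhdsWithin_le_nhds (s := {z₀}ᶜ))
    have hc2 := (hgc.continuousAt (Metric.isOpen_ball.mem_nhds hz₀)).tendsto.mono_left
      (nhdsWithin_le_nhds (s := {z₀}ᶜ))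
    have : q (z₀, (p₀, 0)) = g z₀ := by
      refine tendsto_nhds_unique hc1 (hc2.congr' ?_)
      filter_upwards [self_mem_nhdsWithin, mem_nhdsWithin_of_mem_nhds
        (Metric.isOpen_ball.mem_nhds hz₀)] with z h1 h2
      exact (hqg z h2 h1).symm
    rwa [this]
  -- the remainder as a map into `ℂᵏ`
  obtain ⟨Θ, hΘ⟩ : ∃ Θ : E × (Fin k → ℂ) → (Fin k → ℂ), Θ = fun w (j : Fin k) => R j w := ⟨_, rfl⟩
  have hΘan : AnalyticAt ℂ Θ (p₀, 0) := by
    rw [hΘ]; exact AnalyticAt.pi fun j => hR j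
  have hΘ0 : Θ (p₀, 0) = 0 := by
    rw [hΘ]; ext j; exact hR0 j j.2
  have hinj : Function.Injective (fderiv ℂ Θ (p₀, 0) ∘L .inr ℂ E (Fin k → ℂ)) := by
    rw [injective_iff_map_eq_zero]
    intro v hv
    -- differentiate the division identity in the direction `v`
    have hv' : HasDerivAt (fun s : ℂ => Θ (p₀, s • v)) 0 0 := by
      have h1 : HasDerivAt (fun s : ℂ => ((p₀, s • v) : E × (Fin k → ℂ))) (0, v) 0 := by
        refine HasDerivAt.prodMk (hasDerivAt_const _ _) ?_
        simpa using (hasDerivAt_id (0 : ℂ)).smul_const v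
      have h2 : HasFDerivAt Θ (fderiv ℂ Θ (p₀, 0)) (p₀, (0 : ℂ) • v) := by
        rw [zero_smul]; exact hΘan.differentiableAt.hasFDerivAt
      have h3 := h2.comp_hasDerivAt (0 : ℂ) h1
      rwa [show fderiv ℂ Θ (p₀, 0) (0, v) = 0 from hv] at h3
    have hRd : ∀ j < k, HasDerivAt (fun s : ℂ => R j (p₀, s • v)) 0 0 := by
      intro j hj
      have := (hasDerivAt_pi.1 hv') ⟨j, hj⟩
      rw [hΘ] at this
      exact this
    obtain ⟨Q, hQ⟩ : ∃ Q : ℂ → ℂ, Q = fun z => fderiv ℂ q (z, (p₀, 0)) (0, (0, v)) := ⟨_, rfl⟩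
    have hident : ∀ z ∈ ball z₀ r, 0 = Q z * (z - z₀) ^ k +
        q (z, (p₀, 0)) * ∑ j ∈ Finset.range k, (if h : j < k then v ⟨j, h⟩ else 0) * (z - z₀) ^ j := by
      intro z hz
      have hqd : HasDerivAt (fun s : ℂ => q (z, (p₀, s • v))) (Q z) 0 := by
        have h1 : HasDerivAt (fun s : ℂ => ((z, (p₀, s • v)) : ℂ × (E × (Fin k → ℂ)))) (0, (0, v)) 0 := by
          refine HasDerivAt.prodMk (hasDerivAt_const _ _) (HasDerivAt.prodMk (hasDerivAt_const _ _) ?_)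
          simpa using (hasDerivAt_id (0 : ℂ)).smul_const v
        have h2 : HasFDerivAt q (fderiv ℂ q (z, (p₀, 0))) (z, (p₀, (0 : ℂ) • v)) := by
          rw [zero_smul]; exact (hqan z (hbs z hz)).differentiableAt.hasFDerivAt
        rw [hQ]
        exact h2.comp_hasDerivAt (0 : ℂ) h1
      have hWd : HasDerivAt (fun s : ℂ => WP k (fun j => a' j (p₀, s • v)) (z - z₀))
          (∑ j ∈ Finset.range k, (if h : j < k then v ⟨j, h⟩ else 0) * (z - z₀) ^ j) 0 := by
        have h1 : (fun s : ℂ => WP k (fun j => a' j (p₀, s • v)) (z - z₀)) = fun s : ℂ =>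
            (z - z₀) ^ k + s * ∑ j ∈ Finset.range k,
              (if h : j < k then v ⟨j, h⟩ else 0) * (z - z₀) ^ j := by
          ext s
          rw [WP_eq, Finset.mul_sum]
          congr 1
          refine Finset.sum_congr rfl fun j hj => ?_
          rw [ha']
          simp [Finset.mem_range.1 hj, mul_assoc]
        rw [h1]
        simpa using ((hasDerivAt_id (0 : ℂ)).mul_const _).const_add ((z - z₀) ^ k)
      have hSd : HasDerivAt (fun s : ℂ => ∑ j ∈ Finset.range k, R j (p₀, s • v) * (z - z₀) ^ j)
          0 0 := by
        have := HasDerivAt.fun_sum (u := Finset.range k) (x := (0 : ℂ))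
          (A := fun j (s : ℂ) => R j (p₀, s • v) * (z - z₀) ^ j) (A' := fun _ => 0) (by
            intro j hj
            simpa using (hRd j (Finset.mem_range.1 hj)).mul_const ((z - z₀) ^ j))
        simpa using this
      have hall := (hqd.mul hWd).add hSd
      have hconst : (fun s : ℂ => f (z, p₀)) =ᶠ[𝓝 0] ((fun s : ℂ => q (z, (p₀, s • v))) *
          (fun s : ℂ => WP k (fun j => a' j (p₀, s • v)) (z - z₀))) +
          fun s : ℂ => ∑ j ∈ Finset.range k, R j (p₀, s • v) * (z - z₀) ^ j := by
        have ht : Tendsto (fun s : ℂ => ((p₀, s • v) : E × (Fin k → ℂ))) (𝓝 0) (𝓝 (p₀, 0)) := by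
          have : Continuous fun s : ℂ => ((p₀, s • v) : E × (Fin k → ℂ)) := by fun_prop
          simpa using this.tendsto 0
        filter_upwards [ht.eventually hdiv] with s hs
        exact hs.2.1 z hz
      have huniq := (hasDerivAt_const (0 : ℂ) (f (z, p₀))).unique (hall.congr_of_eventuallyEq hconst)
      simp only [zero_smul, hWP0, add_zero] at huniq
      exact huniq
    have hqne : ∀ᶠ z in 𝓝 z₀, q (z, (p₀, 0)) ≠ 0 :=
      (hqc.continuousAt (Metric.isOpen_ball.mem_nhds hz₀)).eventually_ne hq0
    obtain ⟨V, hVe, hV, hVz⟩ := _root_.eventually_nhds_iff.1 (hqne.and (Metric.isOpen_ball.mem_nhds hz₀))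
    have hQc : ContinuousOn Q V := by
      intro z hz
      rw [hQ]
      have h1 := (hqan z (hbs z (hVe z hz).2)).fderiv.continuousAt
      have h2 : ContinuousAt (fun z : ℂ => fderiv ℂ q (z, (p₀, 0))) z :=
        ContinuousAt.comp (g := fderiv ℂ q) h1 (by fun_prop)
      exact (h2.clm_apply continuousAt_const).continuousWithinAt
    have := WP_uniq hV k (fun j => a' j (p₀, 0)) z₀ (by
      intro z hz
      rw [hWP0] at hz
      have := sub_eq_zero.1 (eq_zero_of_pow_eq_zero hz)
      rwa [this]) (fun j => if h : j < k then v ⟨j, h⟩ else 0)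
      (fun z => - Q z / q (z, (p₀, 0))) ((hQc.neg).div (hqc.mono fun z hz => (hVe z hz).2)
        fun z hz => (hVe z hz).1) (by
      intro z hz
      have h1 := hident z (hVe z hz).2
      have h2 := (hVe z hz).1
      rw [hWP0]
      field_simp
      linear_combination -h1)
    ext j
    have h2 := this j j.2
    simpa using h2
  have hinv : (fderiv ℂ Θ (p₀, 0) ∘L .inr ℂ E (Fin k → ℂ)).IsInvertible :=
    ⟨(LinearEquiv.ofInjectiveEndo _ hinj).toContinuousLinearEquiv, by ext v; rfl⟩
  have hcd : ContDiffAt ℂ ω Θ (p₀, 0) := hΘan.contDiffAt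
  have hψ1 := hcd.eventually_apply_implicitFunction (by simp) hinv
  have hψ2 := hcd.implicitFunction_apply_self (by simp) hinv
  have hψ3 := (hcd.contDiffAt_implicitFunction (by simp) hinv).analyticAt
  set ψ := hcd.implicitFunction (by simp) hinv
  simp only at hψ1 hψ2 hψ3
  have hpψ : AnalyticAt ℂ (fun p => (p, ψ p)) p₀ := analyticAt_id.prod hψ3
  refine ⟨k, fun j p => a' j (p, ψ p), fun w => q (w.1, (w.2, ψ w.2)), fun j hj => ⟨?_, ?_⟩, ?_, ?_, ?_⟩
  · exact (ha'an j _).comp hpψ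
  · simp only [hψ2, ha'0]
  · have h1 : AnalyticAt ℂ (fun w : ℂ × E => (w.1, (w.2, ψ w.2))) (z₀, p₀) :=
      analyticAt_fst.prod (AnalyticAt.comp (g := fun p => (p, ψ p)) (f := Prod.snd) hpψ analyticAt_snd)
    refine AnalyticAt.comp_of_eq (g := q) (hqan z₀ (hbs z₀ hz₀)) h1 ?_
    simp only [hψ2]
  · simpa only [hψ2] using hq0
  · have ht : Tendsto (fun w : ℂ × E => (w.2, ψ w.2)) (𝓝 (z₀, p₀)) (𝓝 (p₀, 0)) := by
      have h4 : Tendsto (fun w : ℂ × E => (w.2, ψ w.2)) (𝓝 (z₀, p₀)) (𝓝 (p₀, ψ p₀)) :=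
        hpψ.continuousAt.tendsto.comp (continuous_snd.tendsto (z₀, p₀))
      rwa [hψ2] at h4
    have ht1 : ∀ᶠ w : ℂ × E in 𝓝 (z₀, p₀), w.1 ∈ ball z₀ r :=
      (continuous_fst.tendsto (z₀, p₀)).eventually (Metric.isOpen_ball.mem_nhds hz₀)
    filter_upwards [ht.eventually hdiv, ht1, (continuous_snd.tendsto (z₀, p₀)).eventually hψ1]
      with w hw hw1 hw2
    have h1 := hw.2.1 w.1 hw1
    rw [Finset.sum_eq_zero fun j hj => ?_, add_zero] at h1
    · exact h1
    · have h3 := congrFun (hw2.trans hΘ0) ⟨j, Finset.mem_range.1 hj⟩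
      rw [hΘ] at h3
      simp only at h3
      rw [h3]; simp

end CA

/-! ### Finitely generated modules of germs -/

namespace CA

section defs
variable {E : Type} [NormedAddCommGroup E] [NormedSpace ℂ E]

/-- A tuple of functions is analytic at `y`. -/
def AnV {κ : Type} (c : E → κ → ℂ) (y : E) : Prop := ∀ k, AnalyticAt ℂ (fun z => c z k) y

/-- The germ of `c` at `y` lies in the module generated over the analytic germs by the `t j`. -/
def Gen {κ l : Type} [Fintype l] (t : l → E → κ → ℂ) (y : E) (c : E → κ → ℂ) : Prop :=
  ∃ d : l → E → ℂ, (∀ j, AnalyticAt ℂ (d j) y) ∧ ∀ᶠ z in 𝓝 y, ∀ k, c z k = ∑ j, d j z * t j z k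

/-- The germ of `c` at `y` is an analytic relation between the `s k`. -/
def Rel {κ ι : Type} [Fintype κ] (s : κ → E → ι → ℂ) (y : E) (c : E → κ → ℂ) : Prop :=
  AnV c y ∧ ∀ᶠ z in 𝓝 y, ∀ i, ∑ k, c z k * s k z i = 0

/-- The family of modules of germs `F` is generated by finitely many analytic tuples along the
filter `L` (a neighbourhood filter of a point or of a compact set). -/
def FG {κ : Type} (F : E → (E → κ → ℂ) → Prop) (L : Filter E) : Prop :=
  ∃ (l : Type) (_ : Fintype l) (t : l → E → κ → ℂ), ∀ᶠ y in L, (∀ j, AnV (t j) y) ∧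
    ∀ c, F y c ↔ Gen t y c

theorem Gen.congr {κ l : Type} [Fintype l] {t : l → E → κ → ℂ} {y : E} {c c' : E → κ → ℂ}
    (h : Gen t y c) (hc : ∀ᶠ z in 𝓝 y, ∀ k, c' z k = c z k) : Gen t y c' := by
  obtain ⟨d, hd, h⟩ := h
  exact ⟨d, hd, by filter_upwards [h, hc] with z h1 h2 k; rw [h2, h1]⟩

theorem Gen.anV {κ l : Type} [Fintype l] {t : l → E → κ → ℂ} {y : E} {c : E → κ → ℂ}
    (h : Gen t y c) (ht : ∀ j, AnV (t j) y) : AnV c y := by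
  obtain ⟨d, hd, h⟩ := h
  intro k
  refine AnalyticAt.congr (f := fun z => ∑ j, d j z * t j z k)
    (Finset.analyticAt_fun_sum _ fun j _ => (hd j).mul (ht j k)) ?_
  filter_upwards [h] with z hz
  exact (hz k).symm

theorem Gen.trans {κ l m : Type} [Fintype l] [Fintype m] {t : l → E → κ → ℂ} {u : m → E → κ → ℂ}
    {y : E} {c : E → κ → ℂ} (h : Gen t y c) (ht : ∀ j, Gen u y (t j)) : Gen u y c := by
  obtain ⟨d, hd, h⟩ := h
  choose e he he' using ht
  refine ⟨fun i z => ∑ j, d j z * e j i z, fun i => Finset.analyticAt_fun_sum _ fun j _ =>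
    (hd j).mul (he j i), ?_⟩
  filter_upwards [h, eventually_all.2 he'] with z h1 h2 k
  rw [h1]
  simp_rw [h2, Finset.mul_sum, Finset.sum_mul]
  rw [Finset.sum_comm]
  simp only [mul_assoc]

theorem gen_self {κ l : Type} [Fintype l] (t : l → E → κ → ℂ) (y : E) (j : l) : Gen t y (t j) := by
  classical
  refine ⟨fun i _ => if i = j then 1 else 0, fun i => analyticAt_const, ?_⟩
  refine Eventually.of_forall fun z k => ?_
  simp

theorem rel_of_gen {κ ι l : Type} [Fintype κ] [Fintype l] {s : κ → E → ι → ℂ} {y : E}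
    {t : l → E → κ → ℂ} {c : E → κ → ℂ} (hc : Gen t y c) (ht : ∀ j, Rel s y (t j)) :
    Rel s y c := by
  refine ⟨hc.anV fun j => (ht j).1, ?_⟩
  obtain ⟨d, hd, h⟩ := hc
  filter_upwards [h, eventually_all.2 fun j => (ht j).2] with z h1 h2 i
  simp_rw [h1, Finset.sum_mul]
  rw [Finset.sum_comm]
  refine Finset.sum_eq_zero fun j _ => ?_
  simp_rw [mul_assoc, ← Finset.mul_sum]
  rw [h2 j i, mul_zero]

/-- Criterion for relations to be finitely generated. -/
theorem FG_rel {κ ι l : Type} [Fintype κ] [Fintype l] {s : κ → E → ι → ℂ} {L : Filter E}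
    (t : l → E → κ → ℂ) (ht : ∀ᶠ y in L, ∀ j, Rel s y (t j))
    (h : ∀ᶠ y in L, ∀ c, Rel s y c → Gen t y c) : FG (Rel s) L := by
  refine ⟨l, inferInstance, t, ?_⟩
  filter_upwards [ht, h] with y h1 h2
  exact ⟨fun j => (h1 j).1, fun c => ⟨h2 c, fun h => rel_of_gen h h1⟩⟩

theorem ev_an {f : E → ℂ} {x : E} (h : AnalyticAt ℂ f x) : ∀ᶠ y in 𝓝 x, AnalyticAt ℂ f y :=
  h.eventually_analyticAt

/-- Families generating each other have equivalent relation modules. -/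
theorem FG_rel_change {κ κ' ι : Type} [Fintype κ] [Fintype κ'] {x : E}
    {f : κ → E → ι → ℂ} {g : κ' → E → ι → ℂ} (M : κ → κ' → E → ℂ) (N : κ' → κ → E → ℂ)
    (hM : ∀ k l, AnalyticAt ℂ (M k l) x) (hN : ∀ k l, AnalyticAt ℂ (N k l) x)
    (hf : ∀ᶠ z in 𝓝 x, ∀ k i, f k z i = ∑ l, M k l z * g l z i)
    (hg : ∀ᶠ z in 𝓝 x, ∀ l i, g l z i = ∑ k, N l k z * f k z i)
    (h : FG (Rel g) (𝓝 x)) : FG (Rel f) (𝓝 x) := by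
  classical
  obtain ⟨l, _, t, ht⟩ := h
  have hMe : ∀ᶠ y in 𝓝 x, ∀ k l, AnalyticAt ℂ (M k l) y :=
    eventually_all.2 fun k => eventually_all.2 fun l => ev_an (hM k l)
  have hNe : ∀ᶠ y in 𝓝 x, ∀ k l, AnalyticAt ℂ (N k l) y :=
    eventually_all.2 fun k => eventually_all.2 fun l => ev_an (hN k l)
  have hgen : ∀ (z : E) (c : E → κ → ℂ) , (∀ k i, f k z i = ∑ l, M k l z * g l z i) → ∀ i,
      ∑ k, c z k * f k z i = ∑ l, (∑ k, c z k * M k l z) * g l z i := by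
    intro z c h i
    simp_rw [h, Finset.mul_sum, Finset.sum_mul]
    rw [Finset.sum_comm]; simp only [mul_assoc]
  have hgen' : ∀ (z : E) (c : E → κ' → ℂ) , (∀ l i, g l z i = ∑ k, N l k z * f k z i) → ∀ i,
      ∑ l, c z l * g l z i = ∑ k, (∑ l, c z l * N l k z) * f k z i := by
    intro z c h i
    simp_rw [h, Finset.mul_sum, Finset.sum_mul]
    rw [Finset.sum_comm]; simp only [mul_assoc]
  refine FG_rel (l := l ⊕ κ) (Sum.elim (fun j z k => ∑ a, t j z a * N a k z)
    (fun k₀ z k => (if k = k₀ then 1 else 0) - ∑ a, M k₀ a z * N a k z)) ?_ ?_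
  · filter_upwards [ht, hMe, hNe, hf.eventually_nhds, hg.eventually_nhds] with y h1 h2 h3 h4 h5
    rintro (j | k₀)
    · have hj := (h1.2 (t j)).2 (gen_self t y j)
      refine ⟨fun k => Finset.analyticAt_fun_sum _ fun a _ => (h1.1 j a).mul (h3 a k), ?_⟩
      filter_upwards [hj.2, h5] with z h6 h7 i
      simp only [Sum.elim_inl]
      rw [← hgen' z (t j) h7, h6]
    · refine ⟨fun k => analyticAt_const.sub (Finset.analyticAt_fun_sum _ fun a _ =>
        (h2 k₀ a).mul (h3 a k)), ?_⟩
      filter_upwards [h4, h5] with z h6 h7 i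
      simp only [Sum.elim_inr, sub_mul, Finset.sum_sub_distrib, ite_mul, one_mul, zero_mul,
        Finset.sum_ite_eq', Finset.mem_univ, if_true]
      rw [← hgen' z (fun z a => M k₀ a z) h7, h6, sub_self]
  · filter_upwards [ht, hMe, hNe, hf.eventually_nhds, hg.eventually_nhds] with y h1 h2 h3 h4 h5 c hc
    have hcM : Rel g y (fun z a => ∑ k, c z k * M k a z) := by
      refine ⟨fun a => Finset.analyticAt_fun_sum _ fun k _ => (hc.1 k).mul (h2 k a), ?_⟩
      filter_upwards [hc.2, h4] with z h6 h7 i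
      rw [← hgen z c h7, h6]
    obtain ⟨d, hd, hd'⟩ := (h1.2 _).1 hcM
    refine ⟨Sum.elim d (fun k z => c z k), ?_, ?_⟩
    · rintro (j | k)
      · exact hd j
      · exact hc.1 k
    · filter_upwards [hd'] with z hz k
      rw [Fintype.sum_sum_type]
      simp only [Sum.elim_inl, Sum.elim_inr, mul_sub, Finset.sum_sub_distrib, mul_ite, mul_one,
        mul_zero, Finset.sum_ite_eq, Finset.mem_univ, if_true]
      have : ∑ j, d j z * ∑ a, t j z a * N a k z = ∑ k₀, c z k₀ * ∑ a, M k₀ a z * N a k z := by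
        calc _ = ∑ a, (∑ j, d j z * t j z a) * N a k z := by
              simp_rw [Finset.mul_sum, Finset.sum_mul]
              rw [Finset.sum_comm]; simp only [mul_assoc]
          _ = ∑ a, (∑ k₀, c z k₀ * M k₀ a z) * N a k z := by simp_rw [← hz]
          _ = _ := by
              simp_rw [Finset.mul_sum, Finset.sum_mul]
              rw [Finset.sum_comm]; simp only [mul_assoc]
      rw [this]; ring

/-- Passing from one equation to finitely many. -/
theorem FG_rel_rows {x : E} (h1 : ∀ (κ : Type) [Fintype κ] (f : κ → E → ℂ),
      (∀ k, AnalyticAt ℂ (f k) x) → FG (Rel fun k z (_ : Unit) => f k z) (𝓝 x))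
    {κ ι : Type} [Fintype κ] [Finite ι] (s : κ → E → ι → ℂ) (hs : ∀ k, AnV (s k) x) :
    FG (Rel s) (𝓝 x) := by
  classical
  have := Fintype.ofFinite ι
  suffices H : ∀ S : Finset ι, FG (fun y (c : E → κ → ℂ) => AnV c y ∧ ∀ᶠ z in 𝓝 y, ∀ i ∈ S,
      ∑ k, c z k * s k z i = 0) (𝓝 x) by
    have h := H Finset.univ
    simp only [Finset.mem_univ, true_imp_iff] at h
    exact h
  intro S
  induction S using Finset.induction_on with
  | empty =>
    refine ⟨κ, inferInstance, fun k₀ _ k => if k = k₀ then 1 else 0, Eventually.of_forall fun y =>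
      ⟨fun j k => analyticAt_const, fun c => ⟨fun h => ⟨fun k z => c z k, h.1, ?_⟩, fun h =>
        ⟨h.anV fun j k => analyticAt_const, by simp⟩⟩⟩⟩
    simp
  | insert i₀ S _ ih =>
    obtain ⟨l, _, t, ht⟩ := ih
    have hse : ∀ᶠ y in 𝓝 x, ∀ k i, AnalyticAt ℂ (fun z => s k z i) y :=
      eventually_all.2 fun k => eventually_all.2 fun i => ev_an (hs k i)
    have htx := ht.self_of_nhds.1
    obtain ⟨m, _, u, hu⟩ := h1 l (fun j z => ∑ k, t j z k * s k z i₀)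
      (fun j => Finset.analyticAt_fun_sum _ fun k _ => (htx j k).mul (hs k i₀))
    have hswap : ∀ (z : E) (d : l → ℂ) i, ∑ k, (∑ j, d j * t j z k) * s k z i =
        ∑ j, d j * ∑ k, t j z k * s k z i := by
      intro z d i
      simp_rw [Finset.mul_sum, Finset.sum_mul]
      rw [Finset.sum_comm]; simp only [mul_assoc]
    refine ⟨m, inferInstance, fun a z k => ∑ j, u a z j * t j z k, ?_⟩
    filter_upwards [ht, hu, hse] with y h2 h3 h4
    have han : ∀ a, AnV (fun z k => ∑ j, u a z j * t j z k) y := fun a k =>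
      Finset.analyticAt_fun_sum _ fun j _ => (h3.1 a j).mul (h2.1 j k)
    refine ⟨han, fun c => ⟨fun hc => ?_, fun hc => ⟨hc.anV han, ?_⟩⟩⟩
    · obtain ⟨d, hd, hd'⟩ := (h2.2 c).1 ⟨hc.1, hc.2.mono fun z hz i hi => hz i (by simp [hi])⟩
      have hr : Rel (fun j z (_ : Unit) => ∑ k, t j z k * s k z i₀) y (fun z j => d j z) := by
        refine ⟨hd, ?_⟩
        filter_upwards [hd', hc.2] with z h5 h6 _
        rw [← hswap z (fun j => d j z)]
        simp_rw [← h5]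
        exact h6 i₀ (by simp)
      obtain ⟨e, he, he'⟩ := (h3.2 _).1 hr
      refine ⟨e, he, ?_⟩
      filter_upwards [hd', he'] with z h5 h6 k
      rw [h5]
      simp_rw [h6, Finset.mul_sum, Finset.sum_mul]
      rw [Finset.sum_comm]; simp only [mul_assoc]
    · obtain ⟨e, he, he'⟩ := hc
      have h5 : Gen t y c := by
        refine ⟨fun j z => ∑ a, e a z * u a z j, fun j => Finset.analyticAt_fun_sum _ fun a _ =>
          (he a).mul (h3.1 a j), ?_⟩
        filter_upwards [he'] with z hz k
        rw [hz]
        simp_rw [Finset.mul_sum, Finset.sum_mul]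
        rw [Finset.sum_comm]; simp only [mul_assoc]
      have h6 := ((h2.2 c).2 h5).2
      have h7 : ∀ᶠ z in 𝓝 y, ∀ a, ∑ j, u a z j * ∑ k, t j z k * s k z i₀ = 0 :=
        eventually_all.2 fun a => ((h3.2 (u a)).2 (gen_self u y a)).2.mono fun z hz => hz ()
      filter_upwards [h6, h7, he'] with z h8 h9 h10 i hi
      rcases Finset.mem_insert.1 hi with rfl | hi
      · simp_rw [h10, Finset.sum_mul]
        rw [Finset.sum_comm]
        refine Finset.sum_eq_zero fun a _ => ?_
        simp_rw [mul_assoc, ← Finset.mul_sum]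
        rw [hswap z (fun j => u a z j), h9 a, mul_zero]
      · exact h8 i hi

/-- Transport of finite generation of relations along a linear isomorphism. -/
theorem FG_rel_equiv {E' : Type} [NormedAddCommGroup E'] [NormedSpace ℂ E'] (e : E ≃L[ℂ] E') {x : E}
    {κ ι : Type} [Fintype κ] (s : κ → E → ι → ℂ)
    (h : FG (Rel fun k z => s k (e.symm z)) (𝓝 (e x))) : FG (Rel s) (𝓝 x) := by
  obtain ⟨l, _, t, ht⟩ := h
  have hte : Tendsto e (𝓝 x) (𝓝 (e x)) := e.continuous.tendsto x
  have hane : ∀ {f : E' → ℂ} {y : E}, AnalyticAt ℂ f (e y) → AnalyticAt ℂ (fun z => f (e z)) y :=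
    fun hf => AnalyticAt.comp (f := e) hf (e.toContinuousLinearMap.analyticAt _)
  have hane' : ∀ {f : E → ℂ} {y : E}, AnalyticAt ℂ f y → AnalyticAt ℂ (fun z => f (e.symm z)) (e y) :=
    fun hf => AnalyticAt.comp_of_eq (f := e.symm) hf (e.symm.toContinuousLinearMap.analyticAt _)
      (by simp)
  have hts : ∀ y : E, Tendsto e.symm (𝓝 (e y)) (𝓝 y) := fun y => by
    simpa using e.symm.continuous.tendsto (e y)
  refine FG_rel (fun j z k => t j (e z) k) ?_ ?_
  · filter_upwards [hte.eventually ht] with y hy j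
    have h1 := (hy.2 (t j)).2 (gen_self t _ j)
    refine ⟨fun k => hane (h1.1 k), ?_⟩
    filter_upwards [(e.continuous.tendsto y).eventually h1.2] with z hz
    simpa using hz
  · filter_upwards [hte.eventually ht] with y hy c hc
    have h1 : Rel (fun k z => s k (e.symm z)) (e y) (fun z => c (e.symm z)) :=
      ⟨fun k => hane' (hc.1 k), (hts y).eventually hc.2⟩
    obtain ⟨d, hd, hd'⟩ := (hy.2 _).1 h1
    refine ⟨fun j z => d j (e z), fun j => hane (hd j), ?_⟩
    filter_upwards [(e.continuous.tendsto y).eventually hd'] with z hz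
    simpa using hz

/-- Relations when one of the functions is invertible. -/
theorem FG_rel_unit {κ : Type} [Fintype κ] {x : E} (f : κ → E → ℂ)
    (hf : ∀ k, AnalyticAt ℂ (f k) x) (k₀ : κ) (h0 : f k₀ x ≠ 0) :
    FG (Rel fun k z (_ : Unit) => f k z) (𝓝 x) := by
  classical
  refine FG_rel_change (κ' := Unit) (g := fun _ _ _ => 1) (fun k _ => f k)
    (fun _ k z => if k = k₀ then (f k₀ z)⁻¹ else 0) (fun k _ => hf k) ?_ ?_ ?_ ?_
  · intro _ k
    by_cases h : k = k₀
    · simp only [h, if_true]; exact (hf k₀).inv h0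
    · simp only [h, if_false]; exact analyticAt_const
  · exact Eventually.of_forall fun z k i => by simp
  · filter_upwards [(hf k₀).continuousAt.eventually_ne h0] with z hz l i
    simp [hz]
  · refine FG_rel (l := Empty) (fun j => j.elim) (Eventually.of_forall fun y j => j.elim)
      (Eventually.of_forall fun y c hc => ⟨fun j => j.elim, fun j => j.elim, ?_⟩)
    filter_upwards [hc.2] with z hz k
    simpa using hz ()

theorem exists_line {f : E → ℂ} {x : E} [Nontrivial E] (hf : AnalyticAt ℂ f x)
    (hne : ¬ ∀ᶠ z in 𝓝 x, f z = 0) :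
    ∃ v : E, v ≠ 0 ∧ ¬ ∀ᶠ t : ℂ in 𝓝 0, f (x + t • v) = 0 := by
  by_cases h0 : f x = 0
  · obtain ⟨r, hr, hb⟩ := Metric.nhds_basis_ball.eventually_iff.1 (ev_an hf)
    have : ¬ ∀ z ∈ ball x r, f z = 0 := fun h =>
      hne (Metric.nhds_basis_ball.eventually_iff.2 ⟨r, hr, fun {z} hz => h z hz⟩)
    push Not at this
    obtain ⟨y, hy, hfy⟩ := this
    refine ⟨y - x, fun h => hfy (by rwa [sub_eq_zero.1 h]), fun h => hfy ?_⟩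
    have hc : Continuous fun t : ℂ => x + t • (y - x) := by fun_prop
    have hconv : Convex ℝ ((fun t : ℂ => x + t • (y - x)) ⁻¹' ball x r) := by
      intro s hs t ht a b ha hb' hab
      have h3 := convex_ball x r (x := x + s • (y - x)) hs (y := x + t • (y - x)) ht ha hb' hab
      rw [mem_preimage]
      convert h3 using 1
      have : x = (a + b) • x := by rw [hab, one_smul]
      generalize y - x = w
      conv_lhs => rw [this]
      simp only [smul_add, add_smul, smul_assoc]
      abel
    have := AnalyticOnNhd.eqOn_zero_of_preconnected_of_eventuallyEq_zero (𝕜 := ℂ)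
      (f := fun t : ℂ => f (x + t • (y - x))) (U := (fun t : ℂ => x + t • (y - x)) ⁻¹' ball x r)
      (fun t ht => AnalyticAt.comp (g := f) (hb ht) (analyticAt_const.add
        (analyticAt_id.smul analyticAt_const))) hconv.isPreconnected (z₀ := 0)
      (by simpa using hr) h
    have h1 := this (show (1 : ℂ) ∈ _ by simpa using hy)
    simpa using h1
  · obtain ⟨v, hv⟩ := exists_ne (0 : E)
    refine ⟨v, hv, fun h => h0 ?_⟩
    simpa using h.self_of_nhds

end defs

/-! ### Oka's coherence theorem -/

theorem WP_root_ev (k : ℕ) (a : ℕ → ℂ) (b y : ℂ) : ∀ᶠ z in 𝓝[≠] y, WP k a (z - b) ≠ 0 := by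
  have hfin : {z : ℂ | WP k a (z - b) = 0}.Finite := by
    have h1 : ((WPp k a).rootSet ℂ).Finite := Polynomial.rootSet_finite _ _
    refine (h1.image (fun s => s + b)).subset fun z hz => ⟨z - b, ?_, by simp⟩
    rw [Polynomial.mem_rootSet]
    exact ⟨(WPp_monic k a).ne_zero, by simpa [WPp_eval] using hz⟩
  have := (hfin.subset (sdiff_subset (t := {y}))).isClosed.isOpen_compl.mem_nhds
    (show y ∈ ({z : ℂ | WP k a (z - b) = 0} \ {y})ᶜ by simp)
  filter_upwards [nhdsWithin_le_nhds this, self_mem_nhdsWithin] with z h1 h2 h3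
  exact h1 ⟨h3, h2⟩

theorem WP_roots_small {E : Type} [NormedAddCommGroup E] [NormedSpace ℂ E] {p₀ : E} {k : ℕ}
    {a : ℕ → E → ℂ} (ha : ∀ j < k, AnalyticAt ℂ (a j) p₀ ∧ a j p₀ = 0) {r : ℝ} (hr : 0 < r)
    (b : ℂ) : ∀ᶠ p in 𝓝 p₀, ∀ z, WP k (fun j => a j p) (z - b) = 0 → z ∈ ball b r := by
  have hc : ContinuousAt (fun p => ∑ i ∈ Finset.range k, ‖a i p‖ * (r ^ (k - i))⁻¹) p₀ := by
    refine tendsto_finsetSum _ fun i hi => ?_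
    exact ((ha i (Finset.mem_range.1 hi)).1.continuousAt.norm).mul continuousAt_const
  have h0 : (fun p => ∑ i ∈ Finset.range k, ‖a i p‖ * (r ^ (k - i))⁻¹) p₀ < 1 := by
    have : ∑ i ∈ Finset.range k, ‖a i p₀‖ * (r ^ (k - i))⁻¹ = 0 :=
      Finset.sum_eq_zero fun i hi => by rw [(ha i (Finset.mem_range.1 hi)).2]; simp
    simp [this]
  filter_upwards [hc.eventually_lt continuousAt_const h0] with p hp z hz
  by_contra hzb
  rw [mem_ball, dist_eq_norm, not_lt] at hzb
  set s := z - b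
  have hs : 0 < ‖s‖ := hr.trans_le hzb
  rw [WP_eq] at hz
  have h1 : ‖s‖ ^ k ≤ ∑ i ∈ Finset.range k, ‖a i p‖ * ‖s‖ ^ i := by
    rw [← norm_pow, eq_neg_of_add_eq_zero_left hz, norm_neg]
    refine (norm_sum_le _ _).trans (le_of_eq ?_)
    simp
  have h2 : ∑ i ∈ Finset.range k, ‖a i p‖ * ‖s‖ ^ i ≤
      ∑ i ∈ Finset.range k, ‖a i p‖ * (r ^ (k - i))⁻¹ * ‖s‖ ^ k := by
    refine Finset.sum_le_sum fun i hi => ?_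
    rw [mul_assoc]
    refine mul_le_mul_of_nonneg_left ?_ (norm_nonneg _)
    have hik : k = (k - i) + i := by have := Finset.mem_range.1 hi; omega
    have : ‖s‖ ^ k = ‖s‖ ^ (k - i) * ‖s‖ ^ i := by rw [← pow_add, ← hik]
    rw [this, ← mul_assoc]
    refine le_mul_of_one_le_left (by positivity) ?_
    rw [inv_mul_eq_div, one_le_div (by positivity)]
    gcongr
  rw [← Finset.sum_mul] at h2
  have h3 : (0:ℝ) < ‖s‖ ^ k := by positivity
  nlinarith [h1.trans h2]

theorem analyticAt_fst_comp {E : Type} [NormedAddCommGroup E] [NormedSpace ℂ E] {f : ℂ × E → ℂ}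
    {z : ℂ} {p : E} (h : AnalyticAt ℂ f (z, p)) : AnalyticAt ℂ (fun z => f (z, p)) z :=
  AnalyticAt.comp (g := f) (f := fun z : ℂ => (z, p)) h (analyticAt_id.prod analyticAt_const)

theorem analyticAt_snd_comp {E : Type} [NormedAddCommGroup E] [NormedSpace ℂ E] {f : E → ℂ}
    {w : ℂ × E} (h : AnalyticAt ℂ f w.2) : AnalyticAt ℂ (fun w : ℂ × E => f w.2) w :=
  AnalyticAt.comp (g := f) (f := Prod.snd) h analyticAt_snd

section oka
variable {E : Type} [NormedAddCommGroup E] [NormedSpace ℂ E] [FiniteDimensional ℂ E]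

/-- The relations between finitely many functions and a Weierstrass polynomial `W`: they are
generated by the trivial ones and by those whose coefficients are polynomials of degree less than
the degree of `W`. -/
theorem okaW {p₀ : E} (hO : ∀ (κ ι : Type) [Fintype κ] [Finite ι] (s : κ → E → ι → ℂ),
      (∀ k, AnV (s k) p₀) → FG (Rel s) (𝓝 p₀))
    {κ : Type} [Fintype κ] {z₀ : ℂ} (f : κ → ℂ × E → ℂ) (hf : ∀ i, AnalyticAt ℂ (f i) (z₀, p₀))
    (k : ℕ) (a : ℕ → E → ℂ) (ha : ∀ j < k, AnalyticAt ℂ (a j) p₀ ∧ a j p₀ = 0) :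
    FG (Rel fun (o : Option κ) w (_ : Unit) =>
      o.elim (WP k (fun j => a j w.2) (w.1 - z₀)) (fun i => f i w)) (𝓝 (z₀, p₀)) := by
  classical
  obtain ⟨r₀, hr₀, hfr⟩ : ∃ r₀ > 0, ∀ z ∈ closedBall z₀ r₀, ∀ i, AnalyticAt ℂ (f i) (z, p₀) := by
    have h1 : ∀ᶠ z in 𝓝 z₀, ∀ i, AnalyticAt ℂ (f i) (z, p₀) := eventually_all.2 fun i =>
      ((continuous_id.prodMk continuous_const : Continuous fun z : ℂ => (z, p₀)).tendsto
        z₀).eventually (ev_an (hf i))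
    obtain ⟨r, hr, h⟩ := Metric.nhds_basis_closedBall.eventually_iff.1 h1
    exact ⟨r, hr, fun z hz => h hz⟩
  have hpd : ∀ (i : κ) (j : Fin k), ∃ (q : ℂ × E → ℂ) (R : ℕ → E → ℂ),
      (∀ j, AnalyticAt ℂ (R j) p₀) ∧ ∀ᶠ p in 𝓝 p₀,
      (∀ z ∈ ball z₀ r₀, AnalyticAt ℂ q (z, p)) ∧
      (∀ z ∈ ball z₀ r₀, (z - z₀) ^ (j : ℕ) * f i (z, p) =
        q (z, p) * WP k (fun j => a j p) (z - z₀) +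
          ∑ j ∈ Finset.range k, R j p * (z - z₀) ^ j) := by
    intro i j
    obtain ⟨q, R, hR, h⟩ := polydiv z₀ hr₀ k a (fun w => (w.1 - z₀) ^ (j : ℕ) * f i w) p₀
      (fun j hj => (ha j hj).1) (fun z hz => ((analyticAt_fst.sub analyticAt_const).pow _).mul
        (hfr z hz i)) (by
        intro z hz
        rw [WP_eq, Finset.sum_eq_zero fun i hi => by rw [(ha i (Finset.mem_range.1 hi)).2, zero_mul],
          add_zero]
        refine pow_ne_zero _ fun h => ?_
        rw [sub_eq_zero] at h
        rw [h, mem_sphere, dist_self] at hz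
        exact hr₀.ne hz)
    refine ⟨q, R, hR, h.mono fun p hp => ⟨fun z hz => hp.1 z fun h => ?_, hp.2.1⟩⟩
    exact (Metric.mem_ball.1 hz).ne (Metric.mem_sphere.1 h)
  choose q M hM hqM using hpd
  obtain ⟨l, _, t, ht⟩ := hO (κ × Fin k) (Fin k) (fun ij p m => M ij.1 ij.2 m p)
    (fun ij m => hM ij.1 ij.2 m)
  have hG1 : ∀ᶠ p in 𝓝 p₀, (∀ j < k, AnalyticAt ℂ (a j) p) ∧
      (∀ z ∈ closedBall z₀ r₀, ∀ i, AnalyticAt ℂ (f i) (z, p)) ∧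
      (∀ z, WP k (fun j => a j p) (z - z₀) = 0 → z ∈ ball z₀ r₀) ∧
      (∀ i j, (∀ z ∈ ball z₀ r₀, AnalyticAt ℂ (q i j) (z, p)) ∧
      (∀ z ∈ ball z₀ r₀, (z - z₀) ^ (j : ℕ) * f i (z, p) =
        q i j (z, p) * WP k (fun j => a j p) (z - z₀) +
          ∑ m ∈ Finset.range k, M i j m p * (z - z₀) ^ m)) := by
    refine Eventually.and ?_ (Eventually.and ?_ (Eventually.and ?_ ?_))
    · have : ∀ᶠ p in 𝓝 p₀, ∀ j ∈ Finset.range k, AnalyticAt ℂ (a j) p :=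
        (eventually_all_finset _).2 fun j hj => (ha j (Finset.mem_range.1 hj)).1.eventually_analyticAt
      exact this.mono fun p h j hj => h j (Finset.mem_range.2 hj)
    · exact eventually_nhds_compact (Q := fun w => ∀ i, AnalyticAt ℂ (f i) w)
        (isCompact_closedBall _ _) fun z hz => eventually_all.2 fun i => ev_an (hfr z hz i)
    · exact WP_roots_small ha hr₀ z₀
    · exact eventually_all.2 fun i => eventually_all.2 fun j => hqM i j
  obtain ⟨W, hWdef⟩ : ∃ W : ℂ × E → ℂ, W = fun w => WP k (fun j => a j w.2) (w.1 - z₀) := ⟨_, rfl⟩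
  have hWd : ∀ z p, WP k (fun j => a j p) (z - z₀) = W (z, p) := fun z p => by rw [hWdef]
  have hWan : ∀ p, (∀ j < k, AnalyticAt ℂ (a j) p) → ∀ z, AnalyticAt ℂ W (z, p) := by
    intro p hp z; rw [hWdef]; exact WP_analytic z₀ hp z
  simp only [hWd] at hG1
  have hgood : ∀ᶠ y in 𝓝 (z₀, p₀), y.1 ∈ ball z₀ r₀ ∧
      ((∀ j, AnV (t j) y.2) ∧ ∀ c, Rel (fun (ij : κ × Fin k) p (m : Fin k) => M ij.1 ij.2 m p) y.2 c ↔
        Gen t y.2 c) ∧ _ :=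
    Eventually.and (continuous_fst.tendsto (z₀, p₀) (ball_mem_nhds z₀ hr₀))
      ((continuous_snd.tendsto (z₀, p₀)).eventually (ht.and hG1.eventually_nhds))
  have hrew : (fun (o : Option κ) (w : ℂ × E) (_ : Unit) =>
      o.elim (WP k (fun j => a j w.2) (w.1 - z₀)) (fun i => f i w)) =
      fun o w _ => o.elim (W w) (fun i => f i w) := by rw [hWdef]
  rw [hrew]
  -- the pointwise computation with the division formulas
  have hcomp : ∀ (p : E) (z : ℂ), z ∈ ball z₀ r₀ → (∀ i (j : Fin k),
      (∀ z ∈ ball z₀ r₀, (z - z₀) ^ (j : ℕ) * f i (z, p) =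
        q i j (z, p) * W (z, p) + ∑ m ∈ Finset.range k, M i j m p * (z - z₀) ^ m)) →
      ∀ x : κ → Fin k → ℂ, ∑ i, (∑ j, x i j * (z - z₀) ^ (j : ℕ)) * f i (z, p) =
        (∑ i, ∑ j, x i j * q i j (z, p)) * W (z, p) +
        ∑ m ∈ Finset.range k, (∑ i, ∑ j, x i j * M i j m p) * (z - z₀) ^ m := by
    intro p z hz h x
    simp_rw [Finset.sum_mul]
    rw [Finset.sum_comm (s := Finset.range k)]
    rw [← Finset.sum_add_distrib]
    refine Finset.sum_congr rfl fun i _ => ?_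
    rw [Finset.sum_comm (s := Finset.range k)]
    rw [← Finset.sum_add_distrib]
    refine Finset.sum_congr rfl fun j _ => ?_
    rw [mul_assoc, h i j z hz, mul_add, Finset.mul_sum]
    simp only [mul_assoc]
  refine FG_rel (l := κ ⊕ l) (Sum.elim
    (fun i₀ w o => o.elim (- f i₀ w) (fun i => if i = i₀ then W w else 0))
    (fun b w o => o.elim (- ∑ i, ∑ j, t b w.2 (i, j) * q i j w)
      (fun i => ∑ j, t b w.2 (i, j) * (w.1 - z₀) ^ (j : ℕ)))) ?_ ?_
  · filter_upwards [hgood] with ⟨y₀, y'⟩ ⟨h1, h2, h3⟩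
    have h3' := h3.self_of_nhds
    have hfy := fun i => h3'.2.1 y₀ (ball_subset_closedBall h1) i
    rintro (i₀ | b)
    · refine ⟨?_, ?_⟩
      · rintro (_ | i)
        · exact (hfy i₀).neg
        · by_cases h : i = i₀
          · simpa [h] using hWan y' h3'.1 y₀
          · simpa [h] using analyticAt_const
      · refine Eventually.of_forall fun z _ => ?_
        simp [Fintype.sum_option]
        ring
    · refine ⟨?_, ?_⟩
      · have htb : ∀ i j, AnalyticAt ℂ (fun w : ℂ × E => t b w.2 (i, j)) (y₀, y') := fun i j =>
          analyticAt_snd_comp (w := (y₀, y')) (h2.1 b (i, j))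
        rintro (_ | i)
        · exact (Finset.analyticAt_fun_sum _ fun i _ => Finset.analyticAt_fun_sum _ fun j _ =>
            (htb i j).mul ((h3'.2.2.2 i j).1 y₀ h1)).neg
        · refine Finset.analyticAt_fun_sum (f := fun (j : Fin k) (w : ℂ × E) =>
            t b w.2 (i, j) * (w.1 - z₀) ^ (j : ℕ)) Finset.univ fun j _ => (htb i j).mul
            ((analyticAt_fst.sub analyticAt_const).pow _)
      · have h4 := (h2.2 _).2 (gen_self t y' b)
        have h5 : ∀ᶠ w in 𝓝 (y₀, y'), w.1 ∈ ball z₀ r₀ :=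
          continuous_fst.tendsto (y₀, y') (Metric.isOpen_ball.mem_nhds h1)
        filter_upwards [h5, (continuous_snd.tendsto (y₀, y')).eventually h4.2,
          (continuous_snd.tendsto (y₀, y')).eventually h3] with ⟨z, p⟩ h6 h7 h8 _
        have h9 := hcomp p z h6 (fun i j => (h8.2.2.2 i j).2) (fun i j => t b p (i, j))
        have h10 : ∑ m ∈ Finset.range k, (∑ i, ∑ j, t b p (i, j) * M i j m p) * (z - z₀) ^ m = 0 := by
          refine Finset.sum_eq_zero fun m hm => ?_
          have := h7 ⟨m, Finset.mem_range.1 hm⟩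
          rw [Fintype.sum_prod_type] at this
          simp only at this
          rw [this, zero_mul]
        rw [h10, add_zero] at h9
        simp only [Sum.elim_inr, Fintype.sum_option, Option.elim]
        rw [h9]; ring
  · filter_upwards [hgood] with ⟨y₀, y'⟩ ⟨h1, h2, h3⟩ c hc
    have h3' := h3.self_of_nhds
    -- a small circle around `y₀`
    obtain ⟨r, hr, hcr⟩ : ∃ r > 0, closedBall y₀ r ⊆ ball z₀ r₀ ∧
        (∀ z ∈ closedBall y₀ r, (∀ o, AnalyticAt ℂ (fun w => c w o) (z, y')) ∧
          ∀ᶠ w in 𝓝 (z, y'), c w none * W w + ∑ i, c w (some i) * f i w = 0) ∧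
        ∀ z ∈ sphere y₀ r, W (z, y') ≠ 0 := by
      have e1 : ∀ᶠ z in 𝓝 y₀, z ∈ ball z₀ r₀ := Metric.isOpen_ball.mem_nhds h1
      have e0 : Tendsto (fun z : ℂ => (z, y')) (𝓝 y₀) (𝓝 (y₀, y')) :=
        (continuous_id.prodMk continuous_const : Continuous fun z : ℂ => (z, y')).tendsto y₀
      have e2 : ∀ᶠ z in 𝓝 y₀, ∀ o, AnalyticAt ℂ (fun w => c w o) (z, y') :=
        eventually_all.2 fun o => e0.eventually (ev_an (hc.1 o))
      have e3 : ∀ᶠ z in 𝓝 y₀, ∀ᶠ w in 𝓝 (z, y'), c w none * W w + ∑ i, c w (some i) * f i w = 0 := by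
        refine e0.eventually (Filter.Eventually.eventually_nhds ?_)
        filter_upwards [hc.2] with w hw
        simpa [Fintype.sum_option] using hw ()
      have e4 := eventually_nhdsWithin_iff.1 (WP_root_ev k (fun j => a j y') z₀ y₀)
      obtain ⟨r, hr, h⟩ := Metric.nhds_basis_closedBall.eventually_iff.1 (e1.and (e2.and (e3.and e4)))
      refine ⟨r, hr, fun z hz => (h hz).1, fun z hz => ⟨(h hz).2.1, (h hz).2.2.1⟩, fun z hz => ?_⟩
      rw [← hWd]
      refine (h (sphere_subset_closedBall hz)).2.2.2 fun h => ?_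
      rw [h, mem_sphere, dist_self] at hz
      exact hr.ne hz
    obtain ⟨hb, hca, hWs⟩ := hcr
    have hpd := fun i => polydiv (c := y₀) z₀ hr k a (fun w => c w (some i)) y' h3'.1
      (fun z hz => (hca z hz).1 (some i)) (fun z hz => by rw [hWd]; exact hWs z hz)
    choose Q R hR hQR using hpd
    simp only [hWd] at hQR
    have hev : ∀ᶠ p in 𝓝 y', (∀ z ∈ closedBall y₀ r, AnalyticAt ℂ (fun w => c w none) (z, p) ∧
        c (z, p) none * W (z, p) + ∑ i, c (z, p) (some i) * f i (z, p) = 0) ∧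
        ∀ z ∈ sphere y₀ r, W (z, p) ≠ 0 := by
      refine Eventually.and (eventually_nhds_compact (Q := fun w => AnalyticAt ℂ (fun w => c w none) w ∧
        c w none * W w + ∑ i, c w (some i) * f i w = 0) (isCompact_closedBall _ _) fun z hz =>
          (ev_an ((hca z hz).1 none)).and (hca z hz).2) ?_
      exact eventually_nhds_compact (Q := fun w => W w ≠ 0) (isCompact_sphere _ _) fun z hz =>
        (hWan y' h3'.1 z).continuousAt.eventually_ne (hWs z hz)
    -- evaluation inside of the small circle
    have hin : ∀ᶠ p in 𝓝 y', ∀ z ∈ ball y₀ r,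
        ∑ m ∈ Finset.range k, (∑ i, ∑ j : Fin k, R i j p * M i j m p) * (z - z₀) ^ m =
        (- c (z, p) none - ∑ i, Q i (z, p) * f i (z, p) -
          ∑ i, ∑ j : Fin k, R i j p * q i j (z, p)) * W (z, p) := by
      filter_upwards [h3, hev, eventually_all.2 hQR] with p g1 g2 g3 z hz
      have g4 := hcomp p z (hb (ball_subset_closedBall hz)) (fun i j => (g1.2.2.2 i j).2)
        (fun i j => R i j p)
      have g5 := (g2.1 z (ball_subset_closedBall hz)).2
      have g6 : ∀ i, ∑ j : Fin k, R i j p * (z - z₀) ^ (j : ℕ) =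
          c (z, p) (some i) - Q i (z, p) * W (z, p) := fun i => by
        rw [(g3 i).2.1 z hz, Finset.sum_range]; ring
      simp_rw [g6, sub_mul, Finset.sum_sub_distrib] at g4
      have g7 : ∑ i, Q i (z, p) * W (z, p) * f i (z, p) = (∑ i, Q i (z, p) * f i (z, p)) * W (z, p) := by
        rw [Finset.sum_mul]; exact Finset.sum_congr rfl fun i _ => by ring
      rw [g7] at g4
      linear_combination -g4 + g5
    have hout : ∀ᶠ p in 𝓝 y', ∀ z ∈ ball z₀ r₀, z ∉ closedBall y₀ r →
        ∑ m ∈ Finset.range k, (∑ i, ∑ j : Fin k, R i j p * M i j m p) * (z - z₀) ^ m =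
        (- ∑ i, Q i (z, p) * f i (z, p) -
          ∑ i, ∑ j : Fin k, R i j p * q i j (z, p)) * W (z, p) := by
      filter_upwards [h3, eventually_all.2 hQR] with p g1 g3 z hz hz'
      have g4 := hcomp p z hz (fun i j => (g1.2.2.2 i j).2) (fun i j => R i j p)
      have g6 : ∀ i, ∑ j : Fin k, R i j p * (z - z₀) ^ (j : ℕ) = - (Q i (z, p) * W (z, p)) := fun i => by
        have := (g3 i).2.2 z hz'
        rw [Finset.sum_range] at this
        linear_combination -this
      simp_rw [g6] at g4
      have g7 : ∑ i, -(Q i (z, p) * W (z, p)) * f i (z, p) =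
          -(∑ i, Q i (z, p) * f i (z, p)) * W (z, p) := by
        rw [← Finset.sum_neg_distrib, Finset.sum_mul]
        exact Finset.sum_congr rfl fun i _ => by ring
      rw [g7] at g4
      linear_combination -g4
    have hzero : ∀ᶠ p in 𝓝 y', ∀ m < k, ∑ i, ∑ j : Fin k, R i j p * M i j m p = 0 := by
      filter_upwards [h3, hev, eventually_all.2 hQR, hin, hout] with p g1 g2 g3 g4 g5
      have hVo : IsOpen (ball z₀ r₀ ∩ (ball y₀ r ∪ (closedBall y₀ r)ᶜ)) :=
        Metric.isOpen_ball.inter (Metric.isOpen_ball.union Metric.isClosed_closedBall.isOpen_compl)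
      refine WP_uniq hVo k (fun j => a j p) z₀ ?_ _ (fun z =>
        (if z ∈ ball y₀ r then - c (z, p) none else 0) - ∑ i, Q i (z, p) * f i (z, p) -
          ∑ i, ∑ j : Fin k, R i j p * q i j (z, p)) ?_ ?_
      · intro z hz
        rw [hWd] at hz
        refine ⟨g1.2.2.1 z hz, ?_⟩
        by_contra hn
        rw [mem_union, not_or, mem_compl_iff, not_not, Metric.mem_closedBall, mem_ball] at hn
        exact g2.2 z (Metric.mem_sphere.2 (le_antisymm hn.2 (not_lt.1 hn.1))) hz
      · intro z hz
        refine ContinuousAt.continuousWithinAt ?_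
        have hzs : z ∉ sphere y₀ r := fun h => by
          rcases hz.2 with h' | h'
          · exact (Metric.mem_ball.1 h').ne (Metric.mem_sphere.1 h)
          · exact h' (sphere_subset_closedBall h)
        refine ContinuousAt.sub (ContinuousAt.sub ?_ ?_) ?_
        · rcases hz.2 with h' | h'
          · refine ContinuousAt.congr (f := fun z => - c (z, p) none)
              (analyticAt_fst_comp (g2.1 z (ball_subset_closedBall h')).1).continuousAt.neg ?_
            filter_upwards [Metric.isOpen_ball.mem_nhds h'] with z hz
            rw [if_pos hz]
          · refine ContinuousAt.congr (f := fun z => 0) continuousAt_const ?_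
            filter_upwards [Metric.isClosed_closedBall.isOpen_compl.mem_nhds h'] with z hz
            rw [if_neg fun h => hz (ball_subset_closedBall h)]
        · exact tendsto_finsetSum _ fun i _ =>
            (analyticAt_fst_comp ((g3 i).1 z hzs)).continuousAt.mul
            (analyticAt_fst_comp (g1.2.1 z (ball_subset_closedBall hz.1) i)).continuousAt
        · exact tendsto_finsetSum _ fun i _ => tendsto_finsetSum _ fun j _ =>
            continuousAt_const.mul (analyticAt_fst_comp ((g1.2.2.2 i j).1 z hz.1)).continuousAt
      · intro z hz
        rw [hWd]
        rcases hz.2 with h' | h'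
        · simp only [h', if_true]; exact g4 z h'
        · have : z ∉ ball y₀ r := fun h => h' (ball_subset_closedBall h)
          simp only [this, if_false, zero_sub]; exact g5 z hz.1 h'
    obtain ⟨d, hd, hd'⟩ := (h2.2 (fun p ij => R ij.1 ij.2 p)).1 ⟨fun ij => hR ij.1 ij.2, by
      filter_upwards [hzero] with p hp m
      rw [Fintype.sum_prod_type]
      exact hp m m.2⟩
    refine ⟨Sum.elim Q (fun b w => d b w.2), ?_, ?_⟩
    · rintro (i | b)
      · refine (hQR i).self_of_nhds.1 y₀ fun h => ?_
        rw [mem_sphere, dist_self] at h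
        exact hr.ne h
      · exact analyticAt_snd_comp (w := (y₀, y')) (hd b)
    · have e5 : ∀ᶠ w : ℂ × E in 𝓝 (y₀, y'), w.1 ∈ ball y₀ r :=
        continuous_fst.tendsto (y₀, y') (ball_mem_nhds y₀ hr)
      have hs := continuous_snd.tendsto (y₀, y')
      filter_upwards [e5, hs.eventually hd', hs.eventually hzero, hs.eventually hin,
        hs.eventually hev, hs.eventually h3, hs.eventually (eventually_all.2 hQR)]
        with ⟨z, p⟩ g1 g2 g3 g4 g5 g6 g7 o
      dsimp only at g1 g2 g3 g4 g5 g6 g7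
      rw [Fintype.sum_sum_type]
      simp only [Sum.elim_inl, Sum.elim_inr]
      rcases o with _ | i
      · -- cancel `W`, whose zeros are isolated on the line
        simp only [Option.elim]
        have k0 : ∀ z' ∈ ball y₀ r, (- c (z', p) none - ∑ i, Q i (z', p) * f i (z', p) -
            ∑ i, ∑ j : Fin k, R i j p * q i j (z', p)) * W (z', p) = 0 := by
          intro z' hz'
          rw [← g4 z' hz']
          refine Finset.sum_eq_zero fun m hm => ?_
          rw [g3 m (Finset.mem_range.1 hm), zero_mul]
        have hzs : z ∉ sphere y₀ r := fun h => (Metric.mem_ball.1 g1).ne (Metric.mem_sphere.1 h)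
        have k1 : ContinuousAt (fun z => - c (z, p) none - ∑ i, Q i (z, p) * f i (z, p) -
            ∑ i, ∑ j : Fin k, R i j p * q i j (z, p)) z := by
          have hzb := hb (ball_subset_closedBall g1)
          refine ContinuousAt.sub (ContinuousAt.sub ?_ ?_) ?_
          · exact (analyticAt_fst_comp (g5.1 z (ball_subset_closedBall g1)).1).continuousAt.neg
          · exact tendsto_finsetSum _ fun i _ =>
              (analyticAt_fst_comp ((g7 i).1 z hzs)).continuousAt.mul
              (analyticAt_fst_comp (g6.2.1 z (ball_subset_closedBall hzb) i)).continuousAt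
          · exact tendsto_finsetSum _ fun i _ => tendsto_finsetSum _ fun j _ =>
              continuousAt_const.mul (analyticAt_fst_comp ((g6.2.2.2 i j).1 z hzb)).continuousAt
        have k2 : ∀ᶠ z' in 𝓝[≠] z, (- c (z', p) none - ∑ i, Q i (z', p) * f i (z', p) -
            ∑ i, ∑ j : Fin k, R i j p * q i j (z', p)) = 0 := by
          filter_upwards [WP_root_ev k (fun j => a j p) z₀ z,
            nhdsWithin_le_nhds (Metric.isOpen_ball.mem_nhds g1)] with z' n1 n2
          rw [hWd] at n1
          exact (mul_eq_zero.1 (k0 z' n2)).resolve_right n1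
        have k3 := tendsto_nhds_unique (k1.mono_left nhdsWithin_le_nhds)
          (tendsto_const_nhds.congr' (k2.mono fun _ h => h.symm))
        have k4 : ∑ b, d b p * -∑ i, ∑ j, t b p (i, j) * q i j (z, p) =
            - ∑ i, ∑ j : Fin k, R i j p * q i j (z, p) := by
          simp_rw [g2 (_, _), mul_neg, Finset.sum_neg_distrib, Finset.mul_sum, Finset.sum_mul]
          rw [Finset.sum_comm]
          congr 1
          refine Finset.sum_congr rfl fun i _ => ?_
          rw [Finset.sum_comm]
          simp only [mul_assoc]
        rw [k4]
        simp only [mul_neg, Finset.sum_neg_distrib]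
        linear_combination -k3
      · simp only [Option.elim]
        rw [(g7 i).2.1 z g1, Finset.sum_range]
        congr 1
        · simp
        · simp_rw [g2 (i, _), Finset.mul_sum, Finset.sum_mul]
          rw [Finset.sum_comm]
          simp only [mul_assoc]

end oka

/-- Existence of linear coordinates in which a given vector is the first basis vector. -/
theorem exists_coord {E : Type} [NormedAddCommGroup E] [NormedSpace ℂ E] [FiniteDimensional ℂ E]
    {d : ℕ} (hd : Module.finrank ℂ E = d + 1) {v : E} (hv : v ≠ 0) :
    ∃ e : E ≃L[ℂ] ℂ × (Fin d → ℂ), e v = (1, 0) := by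
  have h1 : Module.finrank ℂ E = Module.finrank ℂ (ℂ × (Fin d → ℂ)) := by
    rw [hd, Module.finrank_prod]; simp [add_comm]
  let e := ContinuousLinearEquiv.ofFinrankEq h1
  obtain ⟨A, hA⟩ := SeparatingDual.exists_continuousLinearEquiv_apply_eq (R := ℂ)
    (x := e v) (y := ((1, 0) : ℂ × (Fin d → ℂ))) (by simpa using hv) (by simp)
  exact ⟨e.trans A, by simpa using hA⟩

/-- **Oka's coherence theorem**: the relations between finitely many analytic tuples are
locally finitely generated. -/
theorem oka (d : ℕ) : ∀ {E : Type} [NormedAddCommGroup E] [NormedSpace ℂ E] [FiniteDimensional ℂ E]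
    (_ : Module.finrank ℂ E = d) (x : E) (κ ι : Type) [Fintype κ] [Finite ι] (s : κ → E → ι → ℂ),
      (∀ k, AnV (s k) x) → FG (Rel s) (𝓝 x) := by
  induction d with
  | zero =>
    intro E _ _ _ hE x κ ι _ _ s hs
    refine FG_rel_rows ?_ s hs
    intro κ _ f hf
    have : Subsingleton E := Module.finrank_zero_iff.1 hE
    by_cases h0 : ∀ k, f k x = 0
    · classical
      refine ⟨κ, inferInstance, fun k₀ _ k => if k = k₀ then 1 else 0, Eventually.of_forall fun y =>
        ⟨fun j k => analyticAt_const, fun c => ⟨fun h => ⟨fun k z => c z k, h.1, ?_⟩, fun h =>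
        ⟨h.anV fun j k => analyticAt_const, Eventually.of_forall fun z _ => ?_⟩⟩⟩⟩
      · simp
      · refine Finset.sum_eq_zero fun k _ => ?_
        rw [Subsingleton.elim z x]; simp only [h0, mul_zero]
    · push Not at h0
      obtain ⟨k₀, h0⟩ := h0
      exact FG_rel_unit f hf k₀ h0
  | succ d ih =>
    intro E _ _ _ hE x κ ι _ _ s hs
    refine FG_rel_rows ?_ s hs
    intro κ _ f hf
    by_cases h0 : ∀ k, ∀ᶠ z in 𝓝 x, f k z = 0
    · classical
      refine ⟨κ, inferInstance, fun k₀ _ k => if k = k₀ then 1 else 0, ?_⟩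
      filter_upwards [(eventually_all.2 h0).eventually_nhds] with y hy
      refine ⟨fun j k => analyticAt_const, fun c => ⟨fun h => ⟨fun k z => c z k, h.1, ?_⟩, fun h =>
        ⟨h.anV fun j k => analyticAt_const, hy.mono fun z hz _ => ?_⟩⟩⟩
      · simp
      · refine Finset.sum_eq_zero fun k _ => ?_
        simp only [hz k, mul_zero]
    · push Not at h0
      obtain ⟨k₀, h0⟩ := h0
      have : Nontrivial E := Module.nontrivial_of_finrank_pos (R := ℂ) (by omega)
      obtain ⟨v, hv, hv'⟩ := exists_line (hf k₀) (by simpa using h0)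
      obtain ⟨e, he⟩ := exists_coord hE hv
      refine FG_rel_equiv e _ ?_
      obtain ⟨z₀, p₀, hx⟩ : ∃ z₀ p₀, e x = (z₀, p₀) := ⟨_, _, rfl⟩
      rw [hx]
      have hg : ∀ k, AnalyticAt ℂ (fun w => f k (e.symm w)) (z₀, p₀) := fun k =>
        AnalyticAt.comp_of_eq (g := f k) (hf k) (e.symm.toContinuousLinearMap.analyticAt _)
          (by rw [← hx]; simp)
      have hne : ¬ ∀ᶠ z in 𝓝 z₀, f k₀ (e.symm (z, p₀)) = 0 := by
        intro h
        apply hv'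
        have ht : Tendsto (fun t : ℂ => z₀ + t) (𝓝 0) (𝓝 z₀) := by
          have : Continuous fun t : ℂ => z₀ + t := by fun_prop
          simpa using this.tendsto 0
        filter_upwards [ht.eventually h] with t ht
        convert ht using 2
        rw [eq_comm, ContinuousLinearEquiv.symm_apply_eq]
        simp [he, hx]
      obtain ⟨k, a, u, ha, hu, hu0, hW⟩ := prep (hg k₀) hne
      have hO := okaW (p₀ := p₀) (fun κ ι _ _ s hs => ih (by simp) p₀ κ ι s hs)
        (fun k w => f k (e.symm w)) hg k a ha
      classical
      refine FG_rel_change (fun k o w => if o = some k then 1 else 0)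
        (fun o k w => o.elim (if k = k₀ then (u w)⁻¹ else 0) fun k' => if k = k' then 1 else 0)
        (fun k o => analyticAt_const) ?_ ?_ ?_ hO
      · rintro (_ | k') k
        · by_cases h : k = k₀
          · simp only [Option.elim, h, if_true]; exact hu.fun_inv hu0
          · simpa [h] using analyticAt_const
        · exact analyticAt_const
      · exact Eventually.of_forall fun w k i => by simp
      · filter_upwards [hW, hu.continuousAt.eventually_ne hu0] with w h1 h2 o i
        rcases o with _ | k'
        · simp [h1, h2]
        · simp

/-! ### Cauchy integrals over segments and rectangles -/

section seg
variable {H : Type} [NormedAddCommGroup H] [NormedSpace ℂ H]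

/-- The Cauchy integral `∫ g(ζ)/(ζ - z) dζ` over the segment from `p` to `q`. -/
noncomputable def segI (g : ℂ → H) (p q z : ℂ) : H :=
  (q - p) • ∫ t in (0:ℝ)..1, (p + t * (q - p) - z)⁻¹ • g (p + t * (q - p))

theorem segI_mul (g : ℂ → H) (p q z : ℂ) {ω : ℂ} (hω : ω ≠ 0) :
    segI (fun ζ => g (ω⁻¹ * ζ)) (ω * p) (ω * q) (ω * z) = segI g p q z := by
  have h1 : ∀ t : ℝ, ω⁻¹ * (ω * p + t * (ω * q - ω * p)) = p + t * (q - p) := by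
    intro t; field_simp
  have h2 : ∀ t : ℝ, (ω * p + t * (ω * q - ω * p) - ω * z)⁻¹ = ω⁻¹ * (p + t * (q - p) - z)⁻¹ := by
    intro t; rw [← mul_inv]; congr 1; ring
  simp only [segI, h1, h2, mul_smul, intervalIntegral.integral_smul]
  rw [← mul_sub, mul_smul, ← smul_comm ω⁻¹, smul_smul, mul_comm, inv_mul_cancel₀ hω, one_smul]

theorem segI_hor (g : ℂ → H) (a b y : ℝ) (z : ℂ) :
    segI g (a + y * Complex.I) (b + y * Complex.I) z =
      ∫ x in a..b, ((x + y * Complex.I : ℂ) - z)⁻¹ • g (x + y * Complex.I) := by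
  have := intervalIntegral.smul_integral_comp_add_mul (a := 0) (b := 1)
    (fun x : ℝ => ((x + y * Complex.I : ℂ) - z)⁻¹ • g (x + y * Complex.I)) (b - a) a
  simp only [mul_zero, add_zero, mul_one, add_sub_cancel] at this
  rw [← this, segI]
  have h1 : ∀ t : ℝ, (a + y * Complex.I + t * (b + y * Complex.I - (a + y * Complex.I)) : ℂ) =
      ((a + (b - a) * t : ℝ) : ℂ) + y * Complex.I := by
    intro t; push_cast; ring
  simp only [h1]
  rw [← Complex.coe_smul]
  congr 1
  push_cast; ring

theorem segI_ver (g : ℂ → H) (a b x : ℝ) (z : ℂ) :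
    segI g (x + a * Complex.I) (x + b * Complex.I) z =
      Complex.I • ∫ y in a..b, ((x + y * Complex.I : ℂ) - z)⁻¹ • g (x + y * Complex.I) := by
  have := intervalIntegral.smul_integral_comp_add_mul (a := 0) (b := 1)
    (fun y : ℝ => ((x + y * Complex.I : ℂ) - z)⁻¹ • g (x + y * Complex.I)) (b - a) a
  simp only [mul_zero, add_zero, mul_one, add_sub_cancel] at this
  rw [← this, segI]
  have h1 : ∀ t : ℝ, (x + a * Complex.I + t * (x + b * Complex.I - (x + a * Complex.I)) : ℂ) =
      x + ((a + (b - a) * t : ℝ) : ℂ) * Complex.I := by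
    intro t; push_cast; ring
  simp only [h1]
  rw [← Complex.coe_smul, smul_smul]
  congr 1
  push_cast; ring

theorem segI_swap (g : ℂ → H) (p q z : ℂ) : segI g q p z = - segI g p q z := by
  rw [segI, segI, ← neg_smul, neg_sub]
  congr 1
  have := intervalIntegral.integral_comp_sub_left (a := 0) (b := 1)
    (fun t : ℝ => (p + t * (q - p) - z)⁻¹ • g (p + t * (q - p))) 1
  simp only [sub_self, sub_zero] at this
  rw [← this]
  refine intervalIntegral.integral_congr fun t _ => ?_
  have : (q + t * (p - q) : ℂ) = p + ((1 - t : ℝ) : ℂ) * (q - p) := by push_cast; ring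
  simp only [this]

theorem segI_log {p q z u : ℂ} (hp : 0 < (u * (p - z)).re) (hq : 0 < (u * (q - z)).re) :
    segI (fun _ => (1 : ℂ)) p q z = Complex.log (u * (q - z)) - Complex.log (u * (p - z)) := by
  have hpos : ∀ t ∈ Icc (0:ℝ) 1, 0 < (u * (p + t * (q - p) - z)).re := by
    intro t ht
    have : u * (p + t * (q - p) - z) = ((1 - t : ℝ) : ℂ) * (u * (p - z)) + (t : ℂ) * (u * (q - z)) := by
      push_cast; ring
    rw [this, Complex.add_re, Complex.re_ofReal_mul, Complex.re_ofReal_mul]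
    rcases eq_or_lt_of_le ht.1 with h | h
    · rw [← h]; simpa using hp
    · have := mul_pos h hq
      have := mul_nonneg (sub_nonneg.2 ht.2) hp.le
      linarith
  have hu : u ≠ 0 := by rintro rfl; simp at hp
  have hne : ∀ t ∈ Icc (0:ℝ) 1, (p + t * (q - p) - z : ℂ) ≠ 0 := fun t ht h => by
    have := hpos t ht; rw [h] at this; simp at this
  have h1 : ∀ t ∈ uIcc (0:ℝ) 1, HasDerivAt (fun t : ℝ => Complex.log (u * (p + t * (q - p) - z)))
      ((q - p) * (p + t * (q - p) - z)⁻¹) t := by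
    intro t ht
    rw [uIcc_of_le zero_le_one] at ht
    have h2 : HasDerivAt (fun t : ℝ => u * (p + t * (q - p) - z)) (u * (q - p)) t := by
      have := (((Complex.ofRealCLM.hasDerivAt (x := t)).mul_const (q - p)).const_add p).sub_const z
        |>.const_mul u
      simpa using this
    have := h2.clog_real (Or.inl (hpos t ht))
    convert this using 1
    field_simp [hne t ht]
  have h2 := intervalIntegral.integral_eq_sub_of_hasDerivAt h1 (by
    refine ContinuousOn.intervalIntegrable ?_
    rw [uIcc_of_le zero_le_one]
    exact continuousOn_const.mul (ContinuousOn.inv₀ (by fun_prop) hne))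
  rw [segI]
  simp only [smul_eq_mul, mul_one]
  rw [← intervalIntegral.integral_const_mul, h2]
  simp

theorem log_corner {p : ℂ} (h2 : 0 < p.im) :
    Complex.log p - Complex.log (-Complex.I * p) = Real.pi / 2 * Complex.I := by
  set w := -Complex.I * p with hw
  have hp : p = Complex.I * w := by rw [hw, ← mul_assoc]; simp
  have hw1 : 0 < w.re := by simpa [hw] using h2
  have hw0 : w ≠ 0 := by rintro h; rw [h] at hw1; simp at hw1
  have ha := Complex.abs_arg_lt_pi_div_two_iff.2 (Or.inl hw1)
  rw [abs_lt] at ha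
  have h3 : p = Complex.exp (Complex.log w + Real.pi / 2 * Complex.I) := by
    rw [Complex.exp_add, Complex.exp_log hw0, Complex.exp_pi_div_two_mul_I, hp, mul_comm]
  have him : (Complex.log w + Real.pi / 2 * Complex.I).im = w.arg + Real.pi / 2 := by
    rw [Complex.add_im, Complex.log_im]
    congr 1
    have : (Real.pi / 2 * Complex.I : ℂ) = ((Real.pi / 2 : ℝ) : ℂ) * Complex.I := by push_cast; ring
    rw [this, Complex.im_ofReal_mul]; simp
  conv_lhs => rw [h3]
  rw [Complex.log_exp (by rw [him]; linarith [Real.pi_pos]) (by rw [him]; linarith [Real.pi_pos])]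
  ring

/-- Cauchy's integral formula for a rectangle. -/
theorem cauchy_rect0 [CompleteSpace H] (g : ℂ → H) {x₀ x₁ y₀ y₁ : ℝ} {z : ℂ} (hx₀ : x₀ < z.re)
    (hx₁ : z.re < x₁) (hy₀ : y₀ < z.im) (hy₁ : z.im < y₁)
    (hg : ∀ ζ : ℂ, ζ.re ∈ Icc x₀ x₁ → ζ.im ∈ Icc y₀ y₁ → AnalyticAt ℂ g ζ) :
    segI g (x₀ + y₀ * Complex.I) (x₁ + y₀ * Complex.I) z +
      segI g (x₁ + y₀ * Complex.I) (x₁ + y₁ * Complex.I) z +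
      segI g (x₁ + y₁ * Complex.I) (x₀ + y₁ * Complex.I) z +
      segI g (x₀ + y₁ * Complex.I) (x₀ + y₀ * Complex.I) z = (2 * Real.pi * Complex.I) • g z := by
  have hxx := hx₀.trans hx₁
  have hyy := hy₀.trans hy₁
  have hnhds : (uIcc x₀ x₁ ×ℂ uIcc y₀ y₁) ∈ 𝓝 z := by
    rw [uIcc_of_le hxx.le, uIcc_of_le hyy.le]
    exact Filter.inter_mem (Complex.continuous_re.continuousAt (Icc_mem_nhds hx₀ hx₁))
      (Complex.continuous_im.continuousAt (Icc_mem_nhds hy₀ hy₁))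
  have hd : DifferentiableOn ℂ (dslope g z) (uIcc x₀ x₁ ×ℂ uIcc y₀ y₁) := by
    rw [Complex.differentiableOn_dslope hnhds]
    intro ζ hζ
    rw [uIcc_of_le hxx.le, uIcc_of_le hyy.le, Complex.mem_reProdIm] at hζ
    exact (hg ζ hζ.1 hζ.2).differentiableAt.differentiableWithinAt
  have h0 := Complex.integral_boundary_rect_eq_zero_of_differentiableOn (dslope g z)
    (x₀ + y₀ * Complex.I) (x₁ + y₁ * Complex.I) (by simpa using hd)
  simp only [Complex.add_re, Complex.ofReal_re, Complex.mul_re, Complex.I_re, mul_zero,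
    Complex.ofReal_im, Complex.I_im, mul_one, sub_self, add_zero, Complex.add_im, Complex.mul_im,
    zero_add] at h0
  -- on a side, split off the constant term
  have hh : ∀ y ∈ Icc y₀ y₁, y ≠ z.im → ∫ x in x₀..x₁, dslope g z (x + y * Complex.I) =
      segI g (x₀ + y * Complex.I) (x₁ + y * Complex.I) z -
        segI (fun _ => (1:ℂ)) (x₀ + y * Complex.I) (x₁ + y * Complex.I) z • g z := by
    intro y hy hyz
    rw [segI_hor, segI_hor, ← intervalIntegral.integral_smul_const, ← intervalIntegral.integral_sub]
    · refine intervalIntegral.integral_congr fun x _ => ?_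
      have hne : (x + y * Complex.I : ℂ) ≠ z := fun h => hyz (by simpa using congrArg Complex.im h)
      simp only [dslope_of_ne _ hne, slope_def_module, smul_sub, smul_eq_mul, mul_one]
    all_goals
      refine ContinuousOn.intervalIntegrable ?_
      rw [uIcc_of_le hxx.le]
      have hinv : ContinuousOn (fun x : ℝ => ((x + y * Complex.I : ℂ) - z)⁻¹) (Icc x₀ x₁) :=
        ContinuousOn.inv₀ (by fun_prop) fun x _ h => hyz (by
          simpa using congrArg Complex.im (sub_eq_zero.1 h))
    · refine hinv.smul fun x hx => ?_
      have hga := (hg (x + y * Complex.I) (by simpa using hx) (by simpa using hy)).continuousAt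
      exact (ContinuousAt.comp (f := fun x : ℝ => (x + y * Complex.I : ℂ)) hga
        (by fun_prop)).continuousWithinAt
    · exact (hinv.smul continuousOn_const).smul continuousOn_const
  have hv : ∀ x ∈ Icc x₀ x₁, x ≠ z.re → Complex.I • ∫ y in y₀..y₁, dslope g z (x + y * Complex.I) =
      segI g (x + y₀ * Complex.I) (x + y₁ * Complex.I) z -
        segI (fun _ => (1:ℂ)) (x + y₀ * Complex.I) (x + y₁ * Complex.I) z • g z := by
    intro x hx hxz
    rw [segI_ver, segI_ver, smul_assoc, ← smul_sub, ← intervalIntegral.integral_smul_const,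
      ← intervalIntegral.integral_sub]
    · congr 1
      refine intervalIntegral.integral_congr fun y _ => ?_
      have hne : (x + y * Complex.I : ℂ) ≠ z := fun h => hxz (by simpa using congrArg Complex.re h)
      simp only [dslope_of_ne _ hne, slope_def_module, smul_sub, smul_eq_mul, mul_one]
    all_goals
      refine ContinuousOn.intervalIntegrable ?_
      rw [uIcc_of_le hyy.le]
      have hinv : ContinuousOn (fun y : ℝ => ((x + y * Complex.I : ℂ) - z)⁻¹) (Icc y₀ y₁) :=
        ContinuousOn.inv₀ (by fun_prop) fun y _ h => hxz (by
          simpa using congrArg Complex.re (sub_eq_zero.1 h))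
    · refine hinv.smul fun y hy => ?_
      have hga := (hg (x + y * Complex.I) (by simpa using hx) (by simpa using hy)).continuousAt
      exact (ContinuousAt.comp (f := fun y : ℝ => (x + y * Complex.I : ℂ)) hga
        (by fun_prop)).continuousWithinAt
    · exact (hinv.smul continuousOn_const).smul continuousOn_const
  rw [hh y₀ (left_mem_Icc.2 hyy.le) hy₀.ne, hh y₁ (right_mem_Icc.2 hyy.le) hy₁.ne',
    hv x₁ (right_mem_Icc.2 hxx.le) hx₁.ne', hv x₀ (left_mem_Icc.2 hxx.le) hx₀.ne] at h0
  -- the winding number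
  have hN : segI (fun _ => (1:ℂ)) (x₀ + y₀ * Complex.I) (x₁ + y₀ * Complex.I) z -
      segI (fun _ => (1:ℂ)) (x₀ + y₁ * Complex.I) (x₁ + y₁ * Complex.I) z +
      segI (fun _ => (1:ℂ)) (x₁ + y₀ * Complex.I) (x₁ + y₁ * Complex.I) z -
      segI (fun _ => (1:ℂ)) (x₀ + y₀ * Complex.I) (x₀ + y₁ * Complex.I) z = 2 * Real.pi * Complex.I := by
    rw [segI_log (p := x₀ + y₀ * Complex.I) (q := x₁ + y₀ * Complex.I) (u := Complex.I)
        (by simp; linarith) (by simp; linarith),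
      segI_log (p := x₀ + y₁ * Complex.I) (q := x₁ + y₁ * Complex.I) (u := -Complex.I)
        (by simp; linarith) (by simp; linarith),
      segI_log (p := x₁ + y₀ * Complex.I) (q := x₁ + y₁ * Complex.I) (u := 1)
        (by simp; linarith) (by simp; linarith),
      segI_log (p := x₀ + y₀ * Complex.I) (q := x₀ + y₁ * Complex.I) (u := -1)
        (by simp; linarith) (by simp; linarith)]
    have c1 := log_corner (p := x₁ + y₁ * Complex.I - z) (by simp; linarith)
    have c2 := log_corner (p := -Complex.I * (x₀ + y₁ * Complex.I - z)) (by simp; linarith)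
    have c3 := log_corner (p := -(x₀ + y₀ * Complex.I - z)) (by simp; linarith)
    have c4 := log_corner (p := Complex.I * (x₁ + y₀ * Complex.I - z)) (by simp; linarith)
    have e2 : -Complex.I * (-Complex.I * (x₀ + y₁ * Complex.I - z)) =
        -1 * (x₀ + y₁ * Complex.I - z) := by rw [← mul_assoc]; simp
    have e3 : -Complex.I * (-(x₀ + y₀ * Complex.I - z)) =
        Complex.I * (x₀ + y₀ * Complex.I - z) := by ring
    have e4 : -Complex.I * (Complex.I * (x₁ + y₀ * Complex.I - z)) =
        1 * (x₁ + y₀ * Complex.I - z) := by rw [← mul_assoc]; simp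
    rw [e2] at c2
    rw [e3] at c3
    rw [e4] at c4
    simp only [one_mul, neg_one_mul] at c1 c2 c3 c4 ⊢
    linear_combination c1 + c2 + c3 + c4
  rw [segI_swap g (x₀ + y₁ * Complex.I) (x₁ + y₁ * Complex.I), segI_swap g (x₀ + y₀ * Complex.I) (x₀ + y₁ * Complex.I), ← hN]
  simp only [sub_smul, add_smul]
  rw [← sub_eq_zero]
  rw [← h0]
  abel

end seg

section sides
variable {n : ℕ} {H : Type} [NormedAddCommGroup H] [NormedSpace ℂ H]

/-- The segment from `p` to `q`, parametrised by the unit interval. -/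
noncomputable def seg (p q : ℂ) : C(unitInterval, ℂ) := ⟨fun t => p + (t : ℝ) * (q - p), by fun_prop⟩

theorem seg_apply (p q : ℂ) (t : unitInterval) : seg p q t = p + (t : ℝ) * (q - p) := rfl

/-- The restriction of `f` to the segment from `p` to `q` in the coordinate `l`. -/
noncomputable def segG (f : (Fin n → ℂ) → H) (l : Fin n) (p q : ℂ) (z : Fin n → ℂ) :
    C(unitInterval, H) := mkC fun t => f (Function.update z l (seg p q t))

theorem segG_apply {f : (Fin n → ℂ) → H} {l : Fin n} {p q : ℂ} {z : Fin n → ℂ}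
    (hf : ∀ t, AnalyticAt ℂ f (Function.update z l (seg p q t))) (t : unitInterval) :
    segG f l p q z t = f (Function.update z l (seg p q t)) := by
  refine mkC_apply (f := fun t => f (Function.update z l (seg p q t))) ?_ t
  rw [continuous_iff_continuousAt]
  intro t
  exact ContinuousAt.comp (f := fun t => Function.update z l (seg p q t)) (hf t).continuousAt
    (by fun_prop)

theorem proj_analytic (l : Fin n) (z : Fin n → ℂ) : AnalyticAt ℂ (fun z : Fin n → ℂ => z l) z :=
  (ContinuousLinearMap.proj (R := ℂ) (φ := fun _ : Fin n => ℂ) l).analyticAt z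

theorem update_analytic_left (l : Fin n) (s : ℂ) (x : Fin n → ℂ) :
    AnalyticAt ℂ (fun z : Fin n → ℂ => Function.update z l s) x := by
  rw [analyticAt_pi_iff]
  intro j
  by_cases h : j = l
  · subst h; simpa using analyticAt_const
  · simp only [Function.update_of_ne h]
    exact proj_analytic j x

theorem segG_analytic [CompleteSpace H] {f : (Fin n → ℂ) → H} {l : Fin n} {p q : ℂ} {z : Fin n → ℂ}
    (hf : ∀ t, AnalyticAt ℂ f (Function.update z l (seg p q t))) :
    AnalyticAt ℂ (segG f l p q) z := by
  have hc : Continuous fun w : (Fin n → ℂ) × unitInterval => Function.update w.1 l (seg p q w.2) := by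
    fun_prop
  have h1 : ∀ᶠ y in 𝓝 z, ∀ t ∈ (univ : Set unitInterval), AnalyticAt ℂ f (Function.update y l (seg p q t)) := by
    refine isCompact_univ.eventually_forall_of_forall_eventually fun t _ => ?_
    exact (hc.continuousAt (x := (z, t))).eventually ((hf t).eventually_analyticAt)
  obtain ⟨U, hU, hUo, hz⟩ := _root_.eventually_nhds_iff.1 h1
  refine curry_analytic (fun t z => f (Function.update z l (seg p q t))) hUo hz ?_ ?_
  · rintro ⟨t, y⟩ ⟨-, hy⟩
    have : ContinuousAt f (Function.update y l (seg p q t)) := (hU y hy t (mem_univ _)).continuousAt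
    exact (ContinuousAt.comp (f := fun w : unitInterval × (Fin n → ℂ) =>
      Function.update w.2 l (seg p q w.1)) (x := (t, y)) this (by fun_prop)).continuousWithinAt
  · intro t y hy
    exact (hU y hy t (mem_univ _)).comp_of_eq (update_analytic_left l _ y) rfl

/-- The Cauchy integral of `f` in the coordinate `l` over the segment from `p` to `q`. -/
noncomputable def SI (f : (Fin n → ℂ) → H) (l : Fin n) (p q : ℂ) (z : Fin n → ℂ) : H :=
  (2 * Real.pi * Complex.I : ℂ)⁻¹ • (q - p) •
    pairI volume H (cker (seg p q) (z l)) (segG f l p q z)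

theorem SI_analytic [CompleteSpace H] {f : (Fin n → ℂ) → H} {l : Fin n} {p q : ℂ} {z : Fin n → ℂ}
    (hf : ∀ t, AnalyticAt ℂ f (Function.update z l (seg p q t))) (hz : z l ∉ range (seg p q)) :
    AnalyticAt ℂ (SI f l p q) z :=
  ((cauchyI_analytic volume _ (proj_analytic l z) hz (segG_analytic hf)).const_smul
    (c := q - p)).const_smul

theorem SI_eq {f : (Fin n → ℂ) → H} {l : Fin n} {p q : ℂ} {z : Fin n → ℂ}
    (hf : ∀ t, AnalyticAt ℂ f (Function.update z l (seg p q t))) (hz : z l ∉ range (seg p q)) :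
    SI f l p q z = (2 * Real.pi * Complex.I : ℂ)⁻¹ •
      segI (fun ζ => f (Function.update z l ζ)) p q (z l) := by
  rw [SI, segI, pairI_apply]
  congr 2
  rw [intervalIntegral.integral_of_le zero_le_one, ← integral_Icc_eq_integral_Ioc]
  refine Eq.trans (integral_congr_ae (Eventually.of_forall fun t => ?_))
    (integral_subtype (s := Icc (0 : ℝ) 1) measurableSet_Icc
    (fun t : ℝ => (p + t * (q - p) - z l)⁻¹ • f (Function.update z l (p + t * (q - p)))))
  simp only [cker_apply _ hz, segG_apply hf, seg_apply]

theorem pairI_unit_le (u : C(unitInterval, ℂ)) (v : C(unitInterval, H)) {a b : ℝ}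
    (ha : ∀ t, ‖u t‖ ≤ a) (hb : ∀ t, ‖v t‖ ≤ b) : ‖pairI volume H u v‖ ≤ a * b := by
  rw [pairI_apply]
  have h0 : 0 ≤ a := (norm_nonneg _).trans (ha 0)
  refine (norm_integral_le_of_norm_le_const (C := a * b) (Eventually.of_forall fun t => ?_)).trans ?_
  · rw [norm_smul]; exact mul_le_mul (ha t) (hb t) (norm_nonneg _) h0
  · simp

theorem two_pi_inv_le : ‖(2 * Real.pi * Complex.I : ℂ)⁻¹‖ ≤ 1 := by
  rw [norm_inv]
  refine inv_le_one_of_one_le₀ ?_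
  simp only [norm_mul, Complex.norm_I, Complex.norm_real, Real.norm_eq_abs, abs_of_pos Real.pi_pos]
  norm_num
  linarith [Real.pi_gt_three]

theorem SIc_le (p q : ℂ) (v : H) {a : ℝ} (hv : ‖v‖ ≤ a) :
    ‖(2 * Real.pi * Complex.I : ℂ)⁻¹ • (q - p) • v‖ ≤ ‖q - p‖ * a := by
  rw [norm_smul, norm_smul]
  calc _ ≤ 1 * (‖q - p‖ * a) := by
        gcongr
        exact two_pi_inv_le
    _ = _ := one_mul _

theorem SI_bound {f : (Fin n → ℂ) → H} {l : Fin n} {p q : ℂ} {z : Fin n → ℂ} {ρ ε : ℝ} (hρ : 0 < ρ)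
    (hf : ∀ t, AnalyticAt ℂ f (Function.update z l (seg p q t)))
    (hz : ∀ t, ρ ≤ ‖seg p q t - z l‖) (hε : ∀ t, ‖f (Function.update z l (seg p q t))‖ ≤ ε) :
    ‖SI f l p q z‖ ≤ ‖q - p‖ * (ρ⁻¹ * ε) := by
  have hz' : z l ∉ range (seg p q) := by
    rintro ⟨t, ht⟩
    have := hz t
    rw [ht] at this; simp at this; linarith
  refine SIc_le p q _ (pairI_unit_le _ _ (fun t => ?_) fun t => ?_)
  · rw [cker_apply _ hz', norm_inv]
    exact inv_anti₀ hρ (hz t)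
  · rw [segG_apply hf]; exact hε t

theorem kernel_tail {ζ z P : ℂ} (h1 : ζ - P ≠ 0) (h2 : ζ - z ≠ 0) (m : ℕ) :
    (ζ - z)⁻¹ - ∑ k ∈ Finset.range m, (z - P) ^ k * ((ζ - P) ^ (k + 1))⁻¹ =
      ((z - P) / (ζ - P)) ^ m * (ζ - z)⁻¹ := by
  induction m with
  | zero => simp
  | succ m ih =>
    rw [Finset.sum_range_succ, ← sub_sub, ih]
    rw [div_pow, div_pow]
    field_simp
    ring

/-- Runge approximation of a Cauchy integral over a segment lying on the line `Re (u ζ) = X`: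
on the half plane to the left the kernel is expanded around a far point. -/
theorem SI_runge [CompleteSpace H] {f : (Fin n → ℂ) → H} {l : Fin n} {p q u : ℂ} (hu : ‖u‖ = 1)
    {X : ℝ} (hX : ∀ t, X = (u * seg p q t).re) {W : Set (Fin n → ℂ)}
    (hf : ∀ z ∈ W, ∀ t, AnalyticAt ℂ f (Function.update z l (seg p q t))) {M : ℝ}
    (hM : ∀ z ∈ W, ∀ t, ‖f (Function.update z l (seg p q t))‖ ≤ M) {τ M0 ε : ℝ} (hτ : 0 < τ)
    (hε : 0 < ε) :
    ∃ g : (Fin n → ℂ) → H, (∀ z ∈ W, AnalyticAt ℂ g z) ∧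
      ∀ z ∈ W, ‖z l‖ ≤ M0 → (u * z l).re ≤ X - τ → ‖SI f l p q z - g z‖ ≤ ε := by
  have hu0 : u ≠ 0 := by rintro rfl; simp at hu
  -- the centre of expansion is `P = -u⁻¹ N`
  obtain ⟨Y, hY1, hY2, hY3⟩ : ∃ Y : ℝ, τ ^ 2 + M0 ^ 2 < 2 * τ * Y ∧ τ < Y ∧ X + M0 < 2 * Y - τ := by
    refine ⟨max (max ((τ ^ 2 + M0 ^ 2) / τ) (τ + 1)) (X + M0 + τ), ?_, ?_, ?_⟩
    · have h1 : (τ ^ 2 + M0 ^ 2) / τ ≤ max (max ((τ ^ 2 + M0 ^ 2) / τ) (τ + 1)) (X + M0 + τ) :=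
        (le_max_left _ _).trans (le_max_left _ _)
      rw [div_le_iff₀ hτ] at h1
      nlinarith [sq_nonneg M0, pow_pos hτ 2]
    · exact lt_of_lt_of_le (by linarith) ((le_max_right _ _).trans (le_max_left _ _))
    · have h1 : X + M0 + τ ≤ max (max ((τ ^ 2 + M0 ^ 2) / τ) (τ + 1)) (X + M0 + τ) := le_max_right _ _
      have h2 : τ + 1 ≤ max (max ((τ ^ 2 + M0 ^ 2) / τ) (τ + 1)) (X + M0 + τ) :=
        ((le_max_right _ _).trans (le_max_left _ _))
      linarith
  set N : ℝ := Y - X with hN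
  set P : ℂ := -(u⁻¹ * N) with hP
  have hY0 : 0 < Y := hτ.trans hY2
  have huP : ∀ s : ℂ, u * (s - P) = u * s + N := by
    intro s; rw [hP]; field_simp; ring
  have hnorm : ∀ s : ℂ, ‖s - P‖ = ‖u * s + N‖ := by
    intro s; rw [← huP, norm_mul, hu, one_mul]
  have hζ : ∀ t, Y ≤ ‖seg p q t - P‖ := by
    intro t
    rw [hnorm]
    refine le_trans ?_ (Complex.re_le_norm _)
    rw [Complex.add_re, ← hX t, Complex.ofReal_re]; linarith
  have hζ0 : ∀ t, seg p q t - P ≠ 0 := fun t h => by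
    have := hζ t; rw [h] at this; simp at this; linarith
  set θ : ℝ := √((Y - τ) ^ 2 + M0 ^ 2) / Y with hθ
  have hθ1 : θ < 1 := by
    rw [hθ, div_lt_one hY0, Real.sqrt_lt' hY0]; nlinarith
  have hθ0 : 0 ≤ θ := by positivity
  have hz : ∀ z : ℂ, ‖z‖ ≤ M0 → (u * z).re ≤ X - τ → ‖z - P‖ ≤ √((Y - τ) ^ 2 + M0 ^ 2) := by
    intro z h1 h2
    rw [hnorm]
    refine Real.le_sqrt_of_sq_le ?_
    rw [← Complex.normSq_eq_norm_sq, Complex.normSq_apply]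
    have h3 : ‖u * z‖ ≤ M0 := by rw [norm_mul, hu, one_mul]; exact h1
    have h4 := (Complex.abs_im_le_norm (u * z)).trans h3
    have h5 := (Complex.abs_re_le_norm (u * z)).trans h3
    rw [abs_le] at h4 h5
    simp only [Complex.add_re, Complex.ofReal_re, Complex.add_im, Complex.ofReal_im, add_zero]
    nlinarith [h4.1, h4.2, h5.1, h5.2]
  obtain ⟨m, hm⟩ : ∃ m : ℕ, ‖q - p‖ * ((θ ^ m * τ⁻¹) * |M|) ≤ ε := by
    have : Tendsto (fun m : ℕ => ‖q - p‖ * ((θ ^ m * τ⁻¹) * |M|)) atTop (𝓝 (‖q - p‖ * ((0 * τ⁻¹) * |M|))) :=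
      ((((tendsto_pow_atTop_nhds_zero_of_lt_one hθ0 hθ1).mul_const _).mul_const _).const_mul _)
    rw [zero_mul, zero_mul, mul_zero] at this
    exact (this.eventually (ge_mem_nhds hε)).exists
  let kr : ℕ → C(unitInterval, ℂ) := fun k => mkC fun t => ((seg p q t - P) ^ (k + 1))⁻¹
  have hkr : ∀ k t, kr k t = ((seg p q t - P) ^ (k + 1))⁻¹ := by
    intro k t
    refine mkC_apply (f := fun t => ((seg p q t - P) ^ (k + 1))⁻¹) ?_ t
    exact Continuous.inv₀ (by fun_prop) fun t => pow_ne_zero _ (hζ0 t)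
  let κ : (Fin n → ℂ) → C(unitInterval, ℂ) := fun z => ∑ k ∈ Finset.range m, (z l - P) ^ k • kr k
  refine ⟨fun z => (2 * Real.pi * Complex.I : ℂ)⁻¹ • (q - p) •
    pairI volume H (κ z) (segG f l p q z), ?_, ?_⟩
  · intro z hzW
    have h1 : AnalyticAt ℂ κ z := by
      refine Finset.analyticAt_fun_sum _ fun k _ => ?_
      exact (((proj_analytic l z).sub analyticAt_const).pow k).smul analyticAt_const
    have h2 := ((pairI (Y := unitInterval) volume H).analyticAt_bilinear (κ z, segG f l p q z)).comp_of_eq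
      (h1.prod (segG_analytic (hf z hzW))) rfl
    exact (h2.const_smul (c := q - p)).const_smul
  · intro z hzW h1 h2
    have hd : ∀ t, τ ≤ ‖seg p q t - z l‖ := by
      intro t
      have : ‖seg p q t - z l‖ = ‖u * (seg p q t - z l)‖ := by rw [norm_mul, hu, one_mul]
      rw [this]
      refine le_trans ?_ (Complex.re_le_norm _)
      rw [mul_sub, Complex.sub_re, ← hX t]; linarith
    have hd0 : ∀ t, seg p q t - z l ≠ 0 := fun t h => by
      have := hd t; rw [h] at this; simp at this; linarith
    have hzr : z l ∉ range (seg p q) := by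
      rintro ⟨t, ht⟩
      exact hd0 t (sub_eq_zero.2 ht)
    rw [SI, ← smul_sub, ← smul_sub, ← sub_apply, ← map_sub]
    refine (SIc_le p q _ (pairI_unit_le (a := θ ^ m * τ⁻¹) (b := |M|) _ _ (fun t => ?_)
      fun t => ?_)).trans hm
    · have : (cker (seg p q) (z l) - κ z) t = ((z l - P) / (seg p q t - P)) ^ m * (seg p q t - z l)⁻¹ := by
        rw [← kernel_tail (hζ0 t) (hd0 t), ContinuousMap.sub_apply, cker_apply _ hzr]
        congr 1
        simp only [κ, ContinuousMap.sum_apply, ContinuousMap.smul_apply, hkr, smul_eq_mul]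
      rw [this, norm_mul, norm_pow, norm_div, norm_inv]
      gcongr
      · rw [hθ]; gcongr
        · exact hz _ h1 h2
        · exact hζ t
      · exact hd t
    · rw [segG_apply (hf z hzW)]; exact (hM z hzW t).trans (le_abs_self _)

end sides

/-! ### Splitting and Runge approximation on rectangles -/

section rect
variable {n : ℕ} {H : Type} [NormedAddCommGroup H] [NormedSpace ℂ H]

/-- Corners of a rotated rectangle. -/
noncomputable def cor (ω : ℂ) (x y : ℝ) : ℂ := ω⁻¹ * (x + y * Complex.I)

theorem mul_seg {ω : ℂ} (hω : ‖ω‖ = 1) (x y x' y' : ℝ) (t : unitInterval) :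
    ω * seg (cor ω x y) (cor ω x' y') t = ((x + t * (x' - x) : ℝ) : ℂ) +
      ((y + t * (y' - y) : ℝ) : ℂ) * Complex.I := by
  have h0 : ω ≠ 0 := by rintro rfl; simp at hω
  rw [seg_apply, cor, cor]
  field_simp
  push_cast
  ring

theorem seg_re {ω : ℂ} (hω : ‖ω‖ = 1) (x y x' y' : ℝ) (t : unitInterval) :
    (ω * seg (cor ω x y) (cor ω x' y') t).re = x + t * (x' - x) := by
  rw [mul_seg hω]; simp

theorem seg_im {ω : ℂ} (hω : ‖ω‖ = 1) (x y x' y' : ℝ) (t : unitInterval) :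
    (ω * seg (cor ω x y) (cor ω x' y') t).im = y + t * (y' - y) := by
  rw [mul_seg hω]; simp

theorem seg_norm {ω : ℂ} (hω : ‖ω‖ = 1) (x y x' y' : ℝ) :
    ‖cor ω x' y' - cor ω x y‖ ≤ |x' - x| + |y' - y| := by
  rw [cor, cor, ← mul_sub, norm_mul, norm_inv, hω, inv_one, one_mul]
  refine (Complex.norm_le_abs_re_add_abs_im _).trans ?_
  simp

theorem conv_mem {a b : ℝ} (h : a ≤ b) (t : unitInterval) : a + t * (b - a) ∈ Icc a b :=
  ⟨by nlinarith [t.2.1], by nlinarith [t.2.2]⟩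

theorem conv_mem' {a b : ℝ} (h : a ≤ b) (t : unitInterval) : b + t * (a - b) ∈ Icc a b :=
  ⟨by nlinarith [t.2.2], by nlinarith [t.2.1]⟩

/-- The closed rotated rectangle. -/
def Rect (ω : ℂ) (x₀ x₁ y₀ y₁ : ℝ) : Set ℂ :=
  {ζ | (ω * ζ).re ∈ Icc x₀ x₁ ∧ (ω * ζ).im ∈ Icc y₀ y₁}

variable {ω : ℂ} {x₀ x₁ y₀ y₁ : ℝ}

theorem sideB_mem (hω : ‖ω‖ = 1) (hx : x₀ ≤ x₁) (hy : y₀ ≤ y₁) (t : unitInterval) :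
    seg (cor ω x₀ y₀) (cor ω x₁ y₀) t ∈ Rect ω x₀ x₁ y₀ y₁ := by
  refine ⟨?_, ?_⟩
  · rw [seg_re hω]; exact conv_mem hx t
  · rw [seg_im hω]; simpa using hy

theorem sideR_mem (hω : ‖ω‖ = 1) (hx : x₀ ≤ x₁) (hy : y₀ ≤ y₁) (t : unitInterval) :
    seg (cor ω x₁ y₀) (cor ω x₁ y₁) t ∈ Rect ω x₀ x₁ y₀ y₁ := by
  refine ⟨?_, ?_⟩
  · rw [seg_re hω]; simpa using hx
  · rw [seg_im hω]; exact conv_mem hy t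

theorem sideT_mem (hω : ‖ω‖ = 1) (hx : x₀ ≤ x₁) (hy : y₀ ≤ y₁) (t : unitInterval) :
    seg (cor ω x₁ y₁) (cor ω x₀ y₁) t ∈ Rect ω x₀ x₁ y₀ y₁ := by
  refine ⟨?_, ?_⟩
  · rw [seg_re hω]; exact conv_mem' hx t
  · rw [seg_im hω]; simpa using hy

theorem sideL_mem (hω : ‖ω‖ = 1) (hx : x₀ ≤ x₁) (hy : y₀ ≤ y₁) (t : unitInterval) :
    seg (cor ω x₀ y₁) (cor ω x₀ y₀) t ∈ Rect ω x₀ x₁ y₀ y₁ := by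
  refine ⟨?_, ?_⟩
  · rw [seg_re hω]; simpa using hx
  · rw [seg_im hω]; exact conv_mem' hy t

theorem far_re (hω : ‖ω‖ = 1) {ζ z : ℂ} : |(ω * ζ).re - (ω * z).re| ≤ ‖ζ - z‖ := by
  have := Complex.abs_re_le_norm (ω * (ζ - z))
  rwa [norm_mul, hω, one_mul, mul_sub, Complex.sub_re] at this

theorem far_im (hω : ‖ω‖ = 1) {ζ z : ℂ} : |(ω * ζ).im - (ω * z).im| ≤ ‖ζ - z‖ := by
  have := Complex.abs_im_le_norm (ω * (ζ - z))
  rwa [norm_mul, hω, one_mul, mul_sub, Complex.sub_im] at this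

theorem farB (hω : ‖ω‖ = 1) {z : ℂ} {τ : ℝ} (h : y₀ + τ ≤ (ω * z).im) (t : unitInterval) :
    τ ≤ ‖seg (cor ω x₀ y₀) (cor ω x₁ y₀) t - z‖ := by
  refine le_trans ?_ (far_im hω)
  rw [seg_im hω, abs_sub_comm]
  refine le_trans ?_ (le_abs_self _)
  rw [sub_self, mul_zero, add_zero]; linarith

theorem farR (hω : ‖ω‖ = 1) {z : ℂ} {τ : ℝ} (h : (ω * z).re ≤ x₁ - τ) (t : unitInterval) :
    τ ≤ ‖seg (cor ω x₁ y₀) (cor ω x₁ y₁) t - z‖ := by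
  refine le_trans ?_ (far_re hω)
  rw [seg_re hω]
  refine le_trans ?_ (le_abs_self _)
  rw [sub_self, mul_zero, add_zero]; linarith

theorem farT (hω : ‖ω‖ = 1) {z : ℂ} {τ : ℝ} (h : (ω * z).im ≤ y₁ - τ) (t : unitInterval) :
    τ ≤ ‖seg (cor ω x₁ y₁) (cor ω x₀ y₁) t - z‖ := by
  refine le_trans ?_ (far_im hω)
  rw [seg_im hω]
  refine le_trans ?_ (le_abs_self _)
  rw [sub_self, mul_zero, add_zero]; linarith

theorem farL (hω : ‖ω‖ = 1) {z : ℂ} {τ : ℝ} (h : x₀ + τ ≤ (ω * z).re) (t : unitInterval) :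
    τ ≤ ‖seg (cor ω x₀ y₁) (cor ω x₀ y₀) t - z‖ := by
  refine le_trans ?_ (far_re hω)
  rw [seg_re hω, abs_sub_comm]
  refine le_trans ?_ (le_abs_self _)
  rw [sub_self, mul_zero, add_zero]; linarith

theorem notMem_of_far {γ : C(unitInterval, ℂ)} {z : ℂ} {τ : ℝ} (hτ : 0 < τ)
    (h : ∀ t, τ ≤ ‖γ t - z‖) : z ∉ range γ := by
  rintro ⟨t, rfl⟩
  have := h t
  simp at this
  linarith

theorem cauchy_rect [CompleteSpace H] (hω : ‖ω‖ = 1) {f : (Fin n → ℂ) → H} {l : Fin n}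
    {z : Fin n → ℂ} (hx₀ : x₀ < (ω * z l).re) (hx₁ : (ω * z l).re < x₁) (hy₀ : y₀ < (ω * z l).im)
    (hy₁ : (ω * z l).im < y₁)
    (hf : ∀ ζ ∈ Rect ω x₀ x₁ y₀ y₁, AnalyticAt ℂ f (Function.update z l ζ)) :
    SI f l (cor ω x₀ y₀) (cor ω x₁ y₀) z + SI f l (cor ω x₁ y₀) (cor ω x₁ y₁) z +
      SI f l (cor ω x₁ y₁) (cor ω x₀ y₁) z + SI f l (cor ω x₀ y₁) (cor ω x₀ y₀) z = f z := by
  have h0 : ω ≠ 0 := by rintro rfl; simp at hω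
  have hx := (hx₀.trans hx₁).le
  have hy := (hy₀.trans hy₁).le
  rw [SI_eq (fun t => hf _ (sideB_mem hω hx hy t)) (notMem_of_far (τ := (ω * z l).im - y₀)
      (by linarith) (farB hω (by linarith))),
    SI_eq (fun t => hf _ (sideR_mem hω hx hy t)) (notMem_of_far (τ := x₁ - (ω * z l).re)
      (by linarith) (farR hω (by linarith))),
    SI_eq (fun t => hf _ (sideT_mem hω hx hy t)) (notMem_of_far (τ := y₁ - (ω * z l).im)
      (by linarith) (farT hω (by linarith))),
    SI_eq (fun t => hf _ (sideL_mem hω hx hy t)) (notMem_of_far (τ := (ω * z l).re - x₀)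
      (by linarith) (farL hω (by linarith)))]
  have hc : ∀ x y, ω * cor ω x y = x + y * Complex.I := by
    intro x y; rw [cor]; field_simp
  have key := cauchy_rect0 (fun ζ => f (Function.update z l (ω⁻¹ * ζ))) hx₀ hx₁ hy₀ hy₁ ?_
  · simp only [← hc] at key
    simp only [segI_mul (fun ζ => f (Function.update z l ζ)) _ _ _ h0] at key
    rw [← smul_add, ← smul_add, ← smul_add, key, smul_smul, inv_mul_cancel₀ (by simp [Real.pi_ne_zero]),
      one_smul, ← mul_assoc, inv_mul_cancel₀ h0, one_mul, Function.update_eq_self]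
  · intro ζ h1 h2
    refine (hf (ω⁻¹ * ζ) ?_).comp_of_eq (f := fun ζ => Function.update z l (ω⁻¹ * ζ))
      ((update_analytic z l (ω⁻¹ * ζ)).comp_of_eq (analyticAt_const.mul analyticAt_id) rfl) rfl
    rw [Rect, mem_ofPred_eq, ← mul_assoc, mul_inv_cancel₀ h0, one_mul]
    exact ⟨h1, h2⟩

/-- Splitting of a function analytic near a rectangle (in one coordinate) into a part extending to
the left and a part extending to the right. -/
theorem split0 [CompleteSpace H] (hω : ‖ω‖ = 1) {f : (Fin n → ℂ) → H} {l : Fin n}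
    {W : Set (Fin n → ℂ)} (hx : x₀ ≤ x₁) (hy : y₀ ≤ y₁)
    (hf : ∀ z ∈ W, ∀ ζ ∈ Rect ω x₀ x₁ y₀ y₁, AnalyticAt ℂ f (Function.update z l ζ)) :
    ∃ f' f'' : (Fin n → ℂ) → H,
      (∀ z ∈ W, (ω * z l).re < x₁ → y₀ < (ω * z l).im → (ω * z l).im < y₁ → AnalyticAt ℂ f' z) ∧
      (∀ z ∈ W, x₀ < (ω * z l).re → AnalyticAt ℂ f'' z) ∧
      (∀ z ∈ W, x₀ < (ω * z l).re → (ω * z l).re < x₁ → y₀ < (ω * z l).im → (ω * z l).im < y₁ →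
        f z = f' z - f'' z) ∧
      ∀ ε τ, 0 < τ → (∀ z ∈ W, ∀ ζ ∈ Rect ω x₀ x₁ y₀ y₁, ‖f (Function.update z l ζ)‖ ≤ ε) →
        (∀ z ∈ W, (ω * z l).re ≤ x₁ - τ → y₀ + τ ≤ (ω * z l).im → (ω * z l).im ≤ y₁ - τ →
          ‖f' z‖ ≤ (2 * (x₁ - x₀) + (y₁ - y₀)) * (τ⁻¹ * ε)) ∧
        ∀ z ∈ W, x₀ + τ ≤ (ω * z l).re → ‖f'' z‖ ≤ (2 * (x₁ - x₀) + (y₁ - y₀)) * (τ⁻¹ * ε) := by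
  refine ⟨fun z => SI f l (cor ω x₀ y₀) (cor ω x₁ y₀) z + SI f l (cor ω x₁ y₀) (cor ω x₁ y₁) z +
      SI f l (cor ω x₁ y₁) (cor ω x₀ y₁) z, fun z => - SI f l (cor ω x₀ y₁) (cor ω x₀ y₀) z,
      ?_, ?_, ?_, ?_⟩
  · intro z hz h1 h2 h3
    refine AnalyticAt.fun_add (AnalyticAt.fun_add ?_ ?_) ?_
    · exact SI_analytic (fun t => hf z hz _ (sideB_mem hω hx hy t)) (notMem_of_far
        (τ := (ω * z l).im - y₀) (by linarith) (farB hω (by linarith)))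
    · exact SI_analytic (fun t => hf z hz _ (sideR_mem hω hx hy t)) (notMem_of_far
        (τ := x₁ - (ω * z l).re) (by linarith) (farR hω (by linarith)))
    · exact SI_analytic (fun t => hf z hz _ (sideT_mem hω hx hy t)) (notMem_of_far
        (τ := y₁ - (ω * z l).im) (by linarith) (farT hω (by linarith)))
  · intro z hz h1
    refine AnalyticAt.fun_neg ?_
    exact SI_analytic (fun t => hf z hz _ (sideL_mem hω hx hy t)) (notMem_of_far
        (τ := (ω * z l).re - x₀) (by linarith) (farL hω (by linarith)))
  · intro z hz h1 h2 h3 h4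
    rw [sub_neg_eq_add, cauchy_rect hω h1 h2 h3 h4 (hf z hz)]
  · intro ε τ hτ hε
    have n1 := seg_norm hω x₀ y₀ x₁ y₀
    have n2 := seg_norm hω x₁ y₀ x₁ y₁
    have n3 := seg_norm hω x₁ y₁ x₀ y₁
    have n4 := seg_norm hω x₀ y₁ x₀ y₀
    simp only [sub_self, abs_zero, add_zero, zero_add] at n1 n2 n3 n4
    rw [abs_of_nonneg (by linarith)] at n1 n2
    rw [abs_sub_comm, abs_of_nonneg (by linarith)] at n3 n4
    have hm : ∀ z ∈ W, 0 ≤ τ⁻¹ * ε := fun z hz => mul_nonneg (by positivity)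
      ((norm_nonneg _).trans (hε z hz _ (sideB_mem hω hx hy 0)))
    constructor
    · intro z hz h1 h2 h3
      have b1 := SI_bound hτ (fun t => hf z hz _ (sideB_mem hω hx hy t)) (farB hω h2)
        (fun t => hε z hz _ (sideB_mem hω hx hy t))
      have b2 := SI_bound hτ (fun t => hf z hz _ (sideR_mem hω hx hy t)) (farR hω h1)
        (fun t => hε z hz _ (sideR_mem hω hx hy t))
      have b3 := SI_bound hτ (fun t => hf z hz _ (sideT_mem hω hx hy t)) (farT hω h3)
        (fun t => hε z hz _ (sideT_mem hω hx hy t))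
      refine (norm_add₃_le).trans ?_
      have := hm z hz
      nlinarith
    · intro z hz h1
      have b4 := SI_bound hτ (fun t => hf z hz _ (sideL_mem hω hx hy t)) (farL hω h1)
        (fun t => hε z hz _ (sideL_mem hω hx hy t))
      rw [norm_neg]
      have := hm z hz
      nlinarith

/-- Runge approximation in one coordinate, on a rectangle. -/
theorem runge0 [CompleteSpace H] (hω : ‖ω‖ = 1) {f : (Fin n → ℂ) → H} {l : Fin n}
    {W : Set (Fin n → ℂ)} (hx : x₀ ≤ x₁) (hy : y₀ ≤ y₁)
    (hf : ∀ z ∈ W, ∀ ζ ∈ Rect ω x₀ x₁ y₀ y₁, AnalyticAt ℂ f (Function.update z l ζ)) {M : ℝ}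
    (hM : ∀ z ∈ W, ∀ ζ ∈ Rect ω x₀ x₁ y₀ y₁, ‖f (Function.update z l ζ)‖ ≤ M) {ε τ : ℝ}
    (hε : 0 < ε) (hτ : 0 < τ) :
    ∃ g : (Fin n → ℂ) → H, (∀ z ∈ W, AnalyticAt ℂ g z) ∧
      ∀ z ∈ W, x₀ + τ ≤ (ω * z l).re → (ω * z l).re ≤ x₁ - τ → y₀ + τ ≤ (ω * z l).im →
        (ω * z l).im ≤ y₁ - τ → ‖f z - g z‖ ≤ ε := by
  have hε4 : 0 < ε / 4 := by positivity
  set M0 := |x₀| + |x₁| + |y₀| + |y₁|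
  obtain ⟨g1, a1, b1⟩ := SI_runge (l := l) (p := cor ω x₀ y₀) (q := cor ω x₁ y₀)
    (u := Complex.I * ω) (by simp [hω]) (X := -y₀)
    (fun t => by rw [mul_assoc, Complex.I_mul_re, seg_im hω]; simp)
    (fun z hz t => hf z hz _ (sideB_mem hω hx hy t)) (fun z hz t => hM z hz _ (sideB_mem hω hx hy t))
    (M0 := M0) hτ hε4
  obtain ⟨g2, a2, b2⟩ := SI_runge (l := l) (p := cor ω x₁ y₀) (q := cor ω x₁ y₁)
    (u := ω) hω (X := x₁) (fun t => by rw [seg_re hω]; simp)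
    (fun z hz t => hf z hz _ (sideR_mem hω hx hy t)) (fun z hz t => hM z hz _ (sideR_mem hω hx hy t))
    (M0 := M0) hτ hε4
  obtain ⟨g3, a3, b3⟩ := SI_runge (l := l) (p := cor ω x₁ y₁) (q := cor ω x₀ y₁)
    (u := -(Complex.I * ω)) (by simp [hω]) (X := y₁)
    (fun t => by rw [neg_mul, mul_assoc, Complex.neg_re, Complex.I_mul_re, seg_im hω]; simp)
    (fun z hz t => hf z hz _ (sideT_mem hω hx hy t)) (fun z hz t => hM z hz _ (sideT_mem hω hx hy t))
    (M0 := M0) hτ hε4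
  obtain ⟨g4, a4, b4⟩ := SI_runge (l := l) (p := cor ω x₀ y₁) (q := cor ω x₀ y₀)
    (u := -ω) (by simp [hω]) (X := -x₀)
    (fun t => by rw [neg_mul, Complex.neg_re, seg_re hω]; simp)
    (fun z hz t => hf z hz _ (sideL_mem hω hx hy t)) (fun z hz t => hM z hz _ (sideL_mem hω hx hy t))
    (M0 := M0) hτ hε4
  refine ⟨fun z => g1 z + g2 z + g3 z + g4 z, fun z hz =>
    (((a1 z hz).fun_add (a2 z hz)).fun_add (a3 z hz)).fun_add (a4 z hz), ?_⟩
  intro z hz h1 h2 h3 h4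
  rw [← cauchy_rect hω (lt_of_lt_of_le (by linarith) h1) (lt_of_le_of_lt h2 (by linarith))
    (lt_of_lt_of_le (by linarith) h3) (lt_of_le_of_lt h4 (by linarith)) (hf z hz)]
  have hz0 : ‖z l‖ ≤ M0 := by
    have : ‖z l‖ = ‖ω * z l‖ := by rw [norm_mul, hω, one_mul]
    rw [this]
    refine (Complex.norm_le_abs_re_add_abs_im _).trans ?_
    have e1 : |(ω * z l).re| ≤ |x₀| + |x₁| := by
      rw [abs_le]; constructor <;>
        linarith [neg_abs_le x₀, le_abs_self x₁, abs_nonneg x₀, abs_nonneg x₁]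
    have e2 : |(ω * z l).im| ≤ |y₀| + |y₁| := by
      rw [abs_le]; constructor <;>
        linarith [neg_abs_le y₀, le_abs_self y₁, abs_nonneg y₀, abs_nonneg y₁]
    simp only [M0]; linarith
  have c1 := b1 z hz hz0 (by rw [mul_assoc, Complex.I_mul_re]; linarith)
  have c2 := b2 z hz hz0 (by linarith)
  have c3 := b3 z hz hz0 (by rw [neg_mul, mul_assoc, Complex.neg_re, Complex.I_mul_re]; linarith)
  have c4 := b4 z hz hz0 (by rw [neg_mul, Complex.neg_re]; linarith)
  rw [add_sub_add_comm, add_sub_add_comm, add_sub_add_comm]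
  have := norm_add₄_le (a := SI f l (cor ω x₀ y₀) (cor ω x₁ y₀) z - g1 z)
    (b := SI f l (cor ω x₁ y₀) (cor ω x₁ y₁) z - g2 z)
    (c := SI f l (cor ω x₁ y₁) (cor ω x₀ y₁) z - g3 z)
    (d := SI f l (cor ω x₀ y₁) (cor ω x₀ y₀) z - g4 z)
  linarith

end rect

/-! ### Splitting and Runge approximation on boxes -/

/-- Real and imaginary part, indexed by `Bool`. -/
def cb (b : Bool) (ζ : ℂ) : ℝ := bif b then ζ.im else ζ.re

section box
variable {n : ℕ}

/-- The real coordinates of `ℂⁿ`. -/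
def co (i : Fin n × Bool) (z : Fin n → ℂ) : ℝ := cb i.2 (z i.1)

/-- Closed boxes. -/
def Bx (α β : Fin n × Bool → ℝ) : Set (Fin n → ℂ) := {z | ∀ i, α i ≤ co i z ∧ co i z ≤ β i}

/-- Open `σ`-enlargements of boxes. -/
def Bn (α β : Fin n × Bool → ℝ) (σ : ℝ) : Set (Fin n → ℂ) :=
  {z | ∀ i, α i - σ < co i z ∧ co i z < β i + σ}

theorem co_continuous (i : Fin n × Bool) : Continuous (co i : (Fin n → ℂ) → ℝ) := by
  obtain ⟨l, b⟩ := i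
  cases b
  · exact Complex.continuous_re.comp (continuous_apply l)
  · exact Complex.continuous_im.comp (continuous_apply l)

theorem Bn_open (α β : Fin n × Bool → ℝ) (σ : ℝ) : IsOpen (Bn α β σ) := by
  rw [Bn]
  simp only [ofPred_forall]
  refine isOpen_iInter_of_finite fun i => ?_
  exact (isOpen_lt continuous_const (co_continuous i)).inter
    (isOpen_lt (co_continuous i) continuous_const)

theorem Bx_closed (α β : Fin n × Bool → ℝ) : IsClosed (Bx α β) := by
  rw [Bx]
  simp only [ofPred_forall]
  refine isClosed_iInter fun i => ?_
  exact (isClosed_le continuous_const (co_continuous i)).inter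
    (isClosed_le (co_continuous i) continuous_const)

theorem Bx_compact (α β : Fin n × Bool → ℝ) : IsCompact (Bx α β) := by
  refine Metric.isCompact_of_isClosed_isBounded (Bx_closed α β) ?_
  rw [isBounded_iff_forall_norm_le]
  refine ⟨∑ i, (|α i| + |β i|), fun z hz => ?_⟩
  have hb : ∀ i, |co i z| ≤ |α i| + |β i| := by
    intro i
    have := hz i
    rw [abs_le]
    constructor <;> linarith [neg_abs_le (α i), le_abs_self (β i), abs_nonneg (α i), abs_nonneg (β i)]
  rw [pi_norm_le_iff_of_nonneg (Finset.sum_nonneg fun i _ => by positivity)]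
  intro l
  refine (Complex.norm_le_abs_re_add_abs_im _).trans ?_
  have h1 := hb (l, false)
  have h2 := hb (l, true)
  simp only [co, cb, cond_true, cond_false] at h1 h2
  rw [Fintype.sum_prod_type]
  refine le_trans ?_ (Finset.single_le_sum (f := fun l => ∑ b, (|α (l, b)| + |β (l, b)|))
    (fun l _ => Finset.sum_nonneg fun i _ => by positivity) (Finset.mem_univ l))
  simp only [Fintype.sum_bool]
  linarith

theorem Bx_subset_Bn (α β : Fin n × Bool → ℝ) {σ : ℝ} (hσ : 0 < σ) : Bx α β ⊆ Bn α β σ :=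
  fun z hz i => ⟨by linarith [(hz i).1], by linarith [(hz i).2]⟩

theorem Bn_mono (α β : Fin n × Bool → ℝ) {σ σ' : ℝ} (h : σ' ≤ σ) : Bn α β σ' ⊆ Bn α β σ :=
  fun z hz i => ⟨by linarith [(hz i).1], by linarith [(hz i).2]⟩

theorem ev_of_Bn {α β : Fin n × Bool → ℝ} {P : (Fin n → ℂ) → Prop} {σ : ℝ} (hσ : 0 < σ)
    (h : ∀ z ∈ Bn α β σ, P z) : ∀ᶠ z in 𝓝ˢ (Bx α β), P z :=
  ((Bn_open α β σ).mem_nhdsSet.2 (Bx_subset_Bn α β hσ)) |> mem_of_superset <| h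

theorem ev_box {α β : Fin n × Bool → ℝ} (hαβ : ∀ i, α i ≤ β i) {P : (Fin n → ℂ) → Prop} :
    (∀ᶠ z in 𝓝ˢ (Bx α β), P z) ↔ ∃ σ > 0, ∀ z ∈ Bn α β σ, P z := by
  refine ⟨fun h => ?_, fun ⟨σ, hσ, h⟩ => ev_of_Bn hσ h⟩
  obtain ⟨U, hU, hKU, hP⟩ := mem_nhdsSet_iff_exists.1 h
  obtain ⟨δ, hδ, hδU⟩ := (Bx_compact α β).exists_thickening_subset_open hU hKU
  refine ⟨δ / 3, by positivity, fun z hz => hP (hδU ?_)⟩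
  rw [Metric.mem_thickening_iff]
  let cl : Fin n × Bool → ℝ := fun i => max (α i) (min (β i) (co i z))
  have hcl : ∀ i, |co i z - cl i| < δ / 3 := by
    intro i
    have := hz i
    simp only [cl]
    have hab := hαβ i
    rw [abs_lt]
    rcases le_total (β i) (co i z) with h2 | h2
    · rw [min_eq_left h2, max_eq_right hab]; constructor <;> linarith
    · rw [min_eq_right h2]
      rcases le_total (α i) (co i z) with h1 | h1
      · rw [max_eq_right h1]; constructor <;> linarith
      · rw [max_eq_left h1]; constructor <;> linarith
  let w : Fin n → ℂ := fun l => ⟨cl (l, false), cl (l, true)⟩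
  refine ⟨w, ?_, ?_⟩
  · rintro ⟨l, b⟩
    have : co (l, b) w = cl (l, b) := by cases b <;> rfl
    rw [this]
    exact ⟨le_max_left _ _, max_le (hαβ _) (min_le_left _ _)⟩
  · rw [dist_pi_lt_iff hδ]
    intro l
    rw [dist_eq_norm]
    refine lt_of_le_of_lt (Complex.norm_le_abs_re_add_abs_im _) ?_
    have h1 := hcl (l, false)
    have h2 := hcl (l, true)
    simp only [co, cb, cond_true, cond_false] at h1 h2
    rw [Complex.sub_re, Complex.sub_im]
    simp only [w]
    linarith

/-- Each real direction in `ℂ` is the real part after a rotation. -/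
theorem dir (b : Bool) (a a' : ℝ) : ∃ (ω : ℂ) (y₀ y₁ : ℝ), ‖ω‖ = 1 ∧ (∀ ζ, (ω * ζ).re = cb b ζ) ∧
    (∀ ζ σ, (y₀ - σ < (ω * ζ).im ∧ (ω * ζ).im < y₁ + σ) ↔ (a - σ < cb (!b) ζ ∧ cb (!b) ζ < a' + σ)) ∧
    (∀ ζ σ, (y₀ - σ ≤ (ω * ζ).im ∧ (ω * ζ).im ≤ y₁ + σ) ↔ (a - σ ≤ cb (!b) ζ ∧ cb (!b) ζ ≤ a' + σ)) ∧
    y₁ - y₀ = a' - a := by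
  cases b
  · exact ⟨1, a, a', by simp, fun ζ => by simp [cb], fun ζ σ => by simp [cb], fun ζ σ => by simp [cb], rfl⟩
  · refine ⟨-Complex.I, -a', -a, by simp, fun ζ => by simp [cb], fun ζ σ => ?_, fun ζ σ => ?_, by ring⟩
    · simp only [cb, Bool.not_true, cond_false]
      have : (-Complex.I * ζ).im = - ζ.re := by simp
      rw [this]
      constructor <;> rintro ⟨h1, h2⟩ <;> constructor <;> linarith
    · simp only [cb, Bool.not_true, cond_false]
      have : (-Complex.I * ζ).im = - ζ.re := by simp
      rw [this]
      constructor <;> rintro ⟨h1, h2⟩ <;> constructor <;> linarith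

/-- Additive splitting with estimates, for a scale of open sets `L σ`, `R σ` with intersection `O σ`. -/
def SplitP (H : Type) [NormedAddCommGroup H] [NormedSpace ℂ H] (O L R : ℝ → Set (Fin n → ℂ))
    (C : ℝ) : Prop :=
  ∀ σ' σ : ℝ, 0 < σ' → σ' < σ → σ ≤ 1 → ∀ f : (Fin n → ℂ) → H, (∀ z ∈ O σ, AnalyticAt ℂ f z) →
    ∃ f' f'' : (Fin n → ℂ) → H, (∀ z ∈ L σ', AnalyticAt ℂ f' z) ∧ (∀ z ∈ R σ', AnalyticAt ℂ f'' z) ∧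
      (∀ z ∈ O σ', f z = f' z - f'' z) ∧ ∀ ε, 0 ≤ ε → (∀ z ∈ O σ, ‖f z‖ ≤ ε) →
        (∀ z ∈ L σ', ‖f' z‖ ≤ C / (σ - σ') * ε) ∧ ∀ z ∈ R σ', ‖f'' z‖ ≤ C / (σ - σ') * ε

theorem SplitP.symm {H : Type} [NormedAddCommGroup H] [NormedSpace ℂ H]
    {O L R : ℝ → Set (Fin n → ℂ)} {C : ℝ} (h : SplitP H O L R C) : SplitP H O R L C := by
  intro σ' σ h1 h2 h3 f hf
  obtain ⟨f', f'', a, b, c, d⟩ := h σ' σ h1 h2 h3 f hf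
  refine ⟨fun z => - f'' z, fun z => - f' z, fun z hz => (b z hz).fun_neg,
    fun z hz => (a z hz).fun_neg, fun z hz => by rw [c z hz, neg_sub_neg], fun ε h0 hε => ?_⟩
  simp only [norm_neg]
  exact (d ε h0 hε).symm

theorem split_box (H : Type) [NormedAddCommGroup H] [NormedSpace ℂ H] [CompleteSpace H]
    {α β : Fin n × Bool → ℝ} (hαβ : ∀ i, α i ≤ β i) (i : Fin n × Bool) (c : ℝ) :
    ∃ C > 0, SplitP H (Bn (Function.update α i c) (Function.update β i c))
      (Bn α (Function.update β i c)) (Bn (Function.update α i c) β) C := by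
  obtain ⟨l, b⟩ := i
  obtain ⟨ω, y₀, y₁, hω, hre, him, him', hyy⟩ := dir b (α (l, !b)) (β (l, !b))
  have hab := hαβ (l, !b)
  refine ⟨2 * (6 + (y₁ - y₀)), by linarith, ?_⟩
  intro σ' σ h0 h1 h2 f hf
  set τ := (σ + σ') / 2 with hτ
  let W : Set (Fin n → ℂ) := {z | ∀ j : Fin n × Bool, j.1 ≠ l → α j - σ' < co j z ∧ co j z < β j + σ'}
  have hcase : ∀ P : Fin n × Bool → Prop, (∀ j, j.1 ≠ l → P j) → P (l, b) → P (l, !b) → ∀ j, P j := by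
    rintro P p1 p2 p3 ⟨j, b'⟩
    by_cases hj : j = l
    · subst hj
      cases b <;> cases b' <;> assumption
    · exact p1 _ hj
  have hne : ∀ j : Fin n × Bool, j.1 ≠ l → j ≠ (l, b) := by rintro j hj rfl; exact hj rfl
  have hne' : ((l, !b) : Fin n × Bool) ≠ (l, b) := by cases b <;> simp
  have key : ∀ z ∈ W, ∀ ζ ∈ Rect ω (c - τ) (c + τ) (y₀ - τ) (y₁ + τ), Function.update z l ζ ∈
      Bn (Function.update α (l, b) c) (Function.update β (l, b) c) σ := by
    intro z hz ζ hζ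
    have h4 := (him' ζ τ).1 hζ.2
    have h5 := hζ.1
    rw [hre] at h5
    refine hcase _ (fun j hj => ?_) ?_ ?_
    · rw [Function.update_of_ne (hne j hj), Function.update_of_ne (hne j hj)]
      have := hz j hj
      rw [co, Function.update_of_ne hj]
      exact ⟨lt_trans (by linarith) this.1, lt_trans this.2 (by linarith)⟩
    · simp only [Function.update_self, co]
      exact ⟨lt_of_lt_of_le (by linarith) h5.1, lt_of_le_of_lt h5.2 (by linarith)⟩
    · rw [Function.update_of_ne hne', Function.update_of_ne hne']
      simp only [Function.update_self, co]
      exact ⟨lt_of_lt_of_le (by linarith) h4.1, lt_of_le_of_lt h4.2 (by linarith)⟩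
  obtain ⟨f', f'', a1, a2, a3, a4⟩ := split0 hω (f := f) (l := l) (W := W) (x₀ := c - τ) (x₁ := c + τ)
    (y₀ := y₀ - τ) (y₁ := y₁ + τ) (by linarith) (by linarith) (fun z hz ζ hζ => hf _ (key z hz ζ hζ))
  simp only [hre] at a1 a2 a3 a4
  -- coordinates of points in the three boxes
  have hL : ∀ z ∈ Bn α (Function.update β (l, b) c) σ', z ∈ W ∧ cb b (z l) < c + σ' ∧
      y₀ - σ' < (ω * z l).im ∧ (ω * z l).im < y₁ + σ' := by
    intro z hz
    refine ⟨fun j hj => ?_, ?_, ?_⟩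
    · have := hz j
      rwa [Function.update_of_ne (hne j hj)] at this
    · have := (hz (l, b)).2
      rwa [Function.update_self] at this
    · have := hz (l, !b)
      rw [Function.update_of_ne hne'] at this
      exact (him _ _).2 this
  have hR : ∀ z ∈ Bn (Function.update α (l, b) c) β σ', z ∈ W ∧ c - σ' < cb b (z l) := by
    intro z hz
    refine ⟨fun j hj => ?_, ?_⟩
    · have := hz j
      rwa [Function.update_of_ne (hne j hj)] at this
    · have := (hz (l, b)).1
      rwa [Function.update_self] at this
  refine ⟨f', f'', fun z hz => ?_, fun z hz => ?_, fun z hz => ?_, fun ε hε0 hε => ?_⟩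
  · obtain ⟨p1, p2, p3, p4⟩ := hL z hz
    exact a1 z p1 (by linarith) (by linarith) (by linarith)
  · obtain ⟨p1, p2⟩ := hR z hz
    exact a2 z p1 (by linarith)
  · have hz1 : z ∈ W := fun j hj => by
      have := hz j
      rwa [Function.update_of_ne (hne j hj), Function.update_of_ne (hne j hj)] at this
    have hz2 := hz (l, b)
    rw [Function.update_self, Function.update_self] at hz2
    have hz3 := hz (l, !b)
    rw [Function.update_of_ne hne', Function.update_of_ne hne'] at hz3
    have hz4 := (him (z l) σ').2 hz3
    simp only [co] at hz2
    exact a3 z hz1 (by linarith) (by linarith) (by linarith) (by linarith)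
  · obtain ⟨c1, c2⟩ := a4 ε ((σ - σ') / 2) (by linarith) (fun z hz ζ hζ => hε _ (key z hz ζ hζ))
    have hd : 0 < σ - σ' := by linarith
    have hle : (2 * (c + τ - (c - τ)) + (y₁ + τ - (y₀ - τ))) * (((σ - σ') / 2)⁻¹ * ε) ≤
        2 * (6 + (y₁ - y₀)) / (σ - σ') * ε := by
      have : 2 * (6 + (y₁ - y₀)) / (σ - σ') * ε = (6 + (y₁ - y₀)) * (((σ - σ') / 2)⁻¹ * ε) := by
        field_simp
      rw [this]
      refine mul_le_mul_of_nonneg_right (by linarith) (mul_nonneg (inv_nonneg.2 (by linarith)) hε0)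
    constructor
    · intro z hz
      obtain ⟨p1, p2, p3, p4⟩ := hL z hz
      exact (c1 z p1 (by linarith) (by linarith) (by linarith)).trans hle
    · intro z hz
      obtain ⟨p1, p2⟩ := hR z hz
      exact (c2 z p1 (by linarith)).trans hle

theorem ev_bounded {X : Type} [TopologicalSpace X] {H : Type} [NormedAddCommGroup H]
    {K : Set X} (hK : IsCompact K) {f : X → H} (hf : ∀ x ∈ K, ContinuousAt f x) :
    ∃ M, ∀ᶠ z in 𝓝ˢ K, ‖f z‖ ≤ M := by
  obtain ⟨M, hM⟩ := hK.exists_bound_of_continuousOn (f := f) fun x hx => (hf x hx).continuousWithinAt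
  refine ⟨M + 1, ?_⟩
  rw [eventually_nhdsSet_iff_forall]
  intro x hx
  exact ((hf x hx).norm.eventually (gt_mem_nhds (lt_of_le_of_lt (hM x hx) (lt_add_one M)))).mono
    fun _ h => h.le

theorem runge1 {H : Type} [NormedAddCommGroup H] [NormedSpace ℂ H] [CompleteSpace H]
    {α β α' β' : Fin n × Bool → ℝ} (hαβ : ∀ i, α i ≤ β i) (l : Fin n)
    (hα : ∀ j : Fin n × Bool, j.1 ≠ l → α' j = α j) (hβ : ∀ j : Fin n × Bool, j.1 ≠ l → β' j = β j)
    {f : (Fin n → ℂ) → H} (hf : ∀ᶠ z in 𝓝ˢ (Bx α β), AnalyticAt ℂ f z) {ε : ℝ} (hε : 0 < ε) :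
    ∃ g : (Fin n → ℂ) → H, (∀ᶠ z in 𝓝ˢ (Bx α' β'), AnalyticAt ℂ g z) ∧
      ∀ᶠ z in 𝓝ˢ (Bx α β), ‖f z - g z‖ ≤ ε := by
  obtain ⟨M, hM⟩ := ev_bounded (Bx_compact α β) (f := f) fun x hx =>
    (subset_of_mem_nhdsSet hf hx : AnalyticAt ℂ f x).continuousAt
  obtain ⟨σ, hσ, h⟩ := (ev_box hαβ).1 (hf.and hM)
  let W : Set (Fin n → ℂ) := {z | ∀ j : Fin n × Bool, j.1 ≠ l → α j - σ / 2 < co j z ∧ co j z < β j + σ / 2}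
  have key : ∀ z ∈ W, ∀ ζ ∈ Rect 1 (α (l, false) - σ / 2) (β (l, false) + σ / 2)
      (α (l, true) - σ / 2) (β (l, true) + σ / 2), Function.update z l ζ ∈ Bn α β σ := by
    rintro z hz ζ hζ ⟨j, b⟩
    simp only [Rect, one_mul] at hζ
    by_cases hj : j = l
    · subst hj
      have h1 := hζ.1
      have h2 := hζ.2
      cases b
      · simp only [Function.update_self, co, cb, cond_false]
        exact ⟨lt_of_lt_of_le (by linarith) h1.1, lt_of_le_of_lt h1.2 (by linarith)⟩
      · simp only [Function.update_self, co, cb, cond_true]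
        exact ⟨lt_of_lt_of_le (by linarith) h2.1, lt_of_le_of_lt h2.2 (by linarith)⟩
    · have := hz (j, b) hj
      rw [co, Function.update_of_ne hj]
      exact ⟨lt_trans (by linarith) this.1, lt_trans this.2 (by linarith)⟩
  have e1 := hαβ (l, false)
  have e2 := hαβ (l, true)
  obtain ⟨g, g1, g2⟩ := runge0 (ω := 1) (by simp) (W := W) (by linarith) (by linarith)
    (fun z hz ζ hζ => (h _ (key z hz ζ hζ)).1) (fun z hz ζ hζ => (h _ (key z hz ζ hζ)).2) hε
    (τ := σ / 4) (by positivity)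
  refine ⟨g, ev_of_Bn (half_pos hσ) fun z hz => g1 z fun j hj => ?_,
    ev_of_Bn (σ := σ / 4) (by positivity) fun z hz => ?_⟩
  · have := hz j
    rwa [hα j hj, hβ j hj] at this
  · have h1 := hz (l, false)
    have h2 := hz (l, true)
    simp only [co, cb, cond_false, cond_true] at h1 h2
    refine g2 z (fun j hj => ⟨?_, ?_⟩) ?_ ?_ ?_ ?_
    · linarith [(hz j).1]
    · linarith [(hz j).2]
    all_goals rw [one_mul]; linarith

theorem runge {H : Type} [NormedAddCommGroup H] [NormedSpace ℂ H] [CompleteSpace H]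
    {α β α' β' : Fin n × Bool → ℝ} (hαβ : ∀ i, α i ≤ β i) (hα : ∀ i, α' i ≤ α i)
    (hβ : ∀ i, β i ≤ β' i) {f : (Fin n → ℂ) → H} (hf : ∀ᶠ z in 𝓝ˢ (Bx α β), AnalyticAt ℂ f z) :
    ∀ ε > 0, ∃ g : (Fin n → ℂ) → H, (∀ᶠ z in 𝓝ˢ (Bx α' β'), AnalyticAt ℂ g z) ∧
      ∀ᶠ z in 𝓝ˢ (Bx α β), ‖f z - g z‖ ≤ ε := by
  classical
  have main : ∀ s : Finset (Fin n), ∀ ε > 0, ∃ g : (Fin n → ℂ) → H,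
      (∀ᶠ z in 𝓝ˢ (Bx (fun i => if i.1 ∈ s then α' i else α i) fun i => if i.1 ∈ s then β' i else β i),
        AnalyticAt ℂ g z) ∧ ∀ᶠ z in 𝓝ˢ (Bx α β), ‖f z - g z‖ ≤ ε := by
    intro s
    induction s using Finset.induction_on with
    | empty =>
      intro ε hε
      refine ⟨f, by simpa using hf, Eventually.of_forall fun z => by simpa using hε.le⟩
    | insert l s hl ih =>
      intro ε hε
      obtain ⟨g, g1, g2⟩ := ih (ε / 2) (half_pos hε)
      obtain ⟨h, h1, h2⟩ := runge1 (α' := fun i => if i.1 ∈ insert l s then α' i else α i)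
        (β' := fun i => if i.1 ∈ insert l s then β' i else β i) (fun i => by
          split_ifs
          · exact (hα i).trans ((hαβ i).trans (hβ i))
          · exact hαβ i) l (fun j hj => by simp [hj]) (fun j hj => by simp [hj]) g1 (half_pos hε)
      refine ⟨h, h1, ?_⟩
      have hsub : Bx α β ⊆ (Bx (fun i => if i.1 ∈ s then α' i else α i)
          fun i => if i.1 ∈ s then β' i else β i) := by
        intro z hz i
        dsimp only
        split_ifs
        · exact ⟨(hα i).trans (hz i).1, (hz i).2.trans (hβ i)⟩
        · exact hz i
      filter_upwards [g2, h2.filter_mono (nhdsSet_mono hsub)] with z e1 e2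
      have := norm_add_le (f z - g z) (g z - h z)
      rw [sub_add_sub_cancel] at this
      linarith
  intro ε hε
  simpa using main Finset.univ ε hε

end box

/-! ### Cartan's lemma on holomorphic matrices -/

theorem analytic_of_limitH {n : ℕ} {H : Type} [NormedAddCommGroup H] [NormedSpace ℂ H]
    [CompleteSpace H] {F : ℕ → (Fin n → ℂ) → H} {g : (Fin n → ℂ) → H}
    {U : Set (Fin n → ℂ)} (hU : IsOpen U) (hF : ∀ k, ∀ x ∈ U, AnalyticAt ℂ (F k) x)
    (hl : TendstoLocallyUniformlyOn F g atTop U) {x : Fin n → ℂ} (hx : x ∈ U) :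
    AnalyticAt ℂ g x := by
  refine osgood univ ?_ g U x hU hx (hl.continuousOn (Frequently.of_forall fun k y hy =>
    (hF k y hy).continuousAt.continuousWithinAt)) (fun φ _ y hy i => ?_)
  · intro u hu
    by_contra hne
    obtain ⟨φ, hφ⟩ := SeparatingDual.exists_ne_zero (R := ℂ) hne
    exact hφ (hu _ (mem_univ _))
  have hc : Continuous fun s : ℂ => Function.update y i s := continuous_const.update i continuous_id
  have hV : IsOpen ((fun s : ℂ => Function.update y i s) ⁻¹' U) := hU.preimage hc
  have hl' := hl.comp (fun s : ℂ => Function.update y i s) (mapsTo_preimage _ _) hc.continuousOn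
  refine φ.differentiableAt.comp _ ((hl'.differentiableOn
    (Eventually.of_forall fun k s hs => ?_) hV).differentiableAt (hV.mem_nhds (by simpa using hy)))
  exact ((hF k _ hs).comp (update_analytic y i s)).differentiableAt.differentiableWithinAt

section factor
variable {n : ℕ} {A : Type} [NormedRing A] [NormedAlgebra ℂ A] [CompleteSpace A] [NormOneClass A]

/-- Infinite products with geometrically small factors converge to a unit. -/
theorem prod_limit {U : Set (Fin n → ℂ)} (hU : IsOpen U) (P : ℕ → (Fin n → ℂ) → A)
    (h0 : ∀ z, P 0 z = 1) (hP : ∀ k, ∀ z ∈ U, AnalyticAt ℂ (P k) z)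
    (hd : ∀ k, ∀ z ∈ U, ‖P (k + 1) z - P k z‖ ≤ ‖P k z‖ * (1 / 8 * (1 / 8) ^ k)) :
    ∃ Q : (Fin n → ℂ) → A, (∀ z ∈ U, AnalyticAt ℂ Q z) ∧ (∀ z ∈ U, IsUnit (Q z)) ∧
      ∀ z ∈ U, Tendsto (fun k => P k z) atTop (𝓝 (Q z)) := by
  have hb : ∀ z ∈ U, ∀ k, ‖P k z - 1‖ ≤ 1 / 2 * (1 - (1 / 8) ^ k) := by
    intro z hz k
    induction k with
    | zero => simp [h0]
    | succ k ih =>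
      have h1 := hd k z hz
      have hp : (0:ℝ) < (1 / 8) ^ k := by positivity
      have h2 : ‖P k z‖ ≤ 2 := by
        have := norm_add_le (P k z - 1) 1
        rw [sub_add_cancel, norm_one] at this
        nlinarith
      have h3 := norm_add_le (P (k + 1) z - P k z) (P k z - 1)
      rw [sub_add_sub_cancel] at h3
      rw [pow_succ]
      nlinarith
  have hd' : ∀ z ∈ U, ∀ k, dist (P k z) (P (k + 1) z) ≤ 1 * (1 / 8) ^ k := by
    intro z hz k
    rw [dist_comm, dist_eq_norm]
    have h1 := hd k z hz
    have hp : (0:ℝ) < (1 / 8) ^ k := by positivity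
    have h2 : ‖P k z‖ ≤ 2 := by
      have := norm_add_le (P k z - 1) 1
      rw [sub_add_cancel, norm_one] at this
      nlinarith [hb z hz k]
    nlinarith
  have hex : ∀ z, ∃ Q, z ∈ U → Tendsto (fun k => P k z) atTop (𝓝 Q) := by
    intro z
    by_cases hz : z ∈ U
    · obtain ⟨Q, hQ⟩ := cauchySeq_tendsto_of_complete
        (cauchySeq_of_le_geometric (1 / 8) 1 (by norm_num) (hd' z hz))
      exact ⟨Q, fun _ => hQ⟩
    · exact ⟨0, fun h => absurd h hz⟩
  choose Q hQ using hex
  refine ⟨Q, ?_, ?_, hQ⟩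
  · intro z hz
    refine analytic_of_limitH hU hP (TendstoUniformlyOn.tendstoLocallyUniformlyOn ?_) hz
    rw [Metric.tendstoUniformlyOn_iff]
    intro ε hε
    have ht : Tendsto (fun k : ℕ => 1 * (1 / 8 : ℝ) ^ k / (1 - 1 / 8)) atTop (𝓝 (1 * 0 / (1 - 1 / 8))) :=
      ((tendsto_pow_atTop_nhds_zero_of_lt_one (by norm_num) (by norm_num)).const_mul 1).div_const _
    rw [mul_zero, zero_div] at ht
    filter_upwards [ht.eventually (gt_mem_nhds hε)] with k hk y hy
    rw [dist_comm]
    exact (dist_le_of_le_geometric_of_tendsto (1 / 8) 1 (by norm_num) (hd' y hy) (hQ y hy) k).trans_lt hk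
  · intro z hz
    have h1 : ‖Q z - 1‖ ≤ 1 / 2 := by
      refine le_of_tendsto ((hQ z hz).sub_const 1).norm (Eventually.of_forall fun k => ?_)
      have hp : (0:ℝ) < (1 / 8) ^ k := by positivity
      linarith [hb z hz k]
    have := (Units.oneSub (1 - Q z) (by rw [norm_sub_rev]; linarith)).isUnit
    rwa [Units.val_oneSub, sub_sub_cancel] at this

/-- One step of the Newton iteration of Cartan's lemma. -/
theorem newton_bound {a b κ : A} {η : ℝ} (h : κ = b - a) (ha : ‖a‖ ≤ η) (hb : ‖b‖ ≤ η) (hη : η ≤ 1) :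
    ‖1 - (1 - a) * (1 - κ) * (1 + b)‖ ≤ 7 * η ^ 2 := by
  have h0 : 0 ≤ η := (norm_nonneg _).trans ha
  have hκ : ‖κ‖ ≤ 2 * η := by rw [h]; linarith [norm_sub_le b a]
  have e : 1 - (1 - a) * (1 - κ) * (1 + b) = a * b + κ * b - a * κ - a * κ * b := by
    have : b = κ + a := by rw [h]; abel
    rw [this]
    noncomm_ring
  rw [e]
  have h1 : ‖a * b‖ ≤ η * η := (norm_mul_le _ _).trans (by gcongr)
  have h2 : ‖κ * b‖ ≤ 2 * η * η := (norm_mul_le _ _).trans (by gcongr)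
  have h3 : ‖a * κ‖ ≤ η * (2 * η) := (norm_mul_le _ _).trans (by gcongr)
  have h4 : ‖a * κ * b‖ ≤ η * (2 * η) * η := (norm_mul_le _ _).trans (by gcongr)
  have := norm_sub_le (a * b + κ * b - a * κ) (a * κ * b)
  have := norm_sub_le (a * b + κ * b) (a * κ)
  have := norm_add_le (a * b) (κ * b)
  nlinarith

/-- Cartan's lemma on holomorphic matrices, for matrices close to the identity. -/
theorem cartan_factor {O L R : ℝ → Set (Fin n → ℂ)} {C : ℝ} (hC : 0 < C) (hS : SplitP A O L R C)
    (hOL : ∀ σ, O σ ⊆ L σ) (hOR : ∀ σ, O σ ⊆ R σ) (mO : Monotone O) (mL : Monotone L)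
    (mR : Monotone R) (oL : ∀ σ, IsOpen (L σ)) (oR : ∀ σ, IsOpen (R σ)) {s : ℝ} (hs : 0 < s)
    (hs2 : 2 * s ≤ 1) : ∃ ρ > 0, ∀ κ : (Fin n → ℂ) → A, (∀ z ∈ O (2 * s), AnalyticAt ℂ κ z) →
      (∀ z ∈ O (2 * s), ‖κ z‖ ≤ ρ) → ∃ H' H'' : (Fin n → ℂ) → A,
        (∀ z ∈ L s, AnalyticAt ℂ H' z ∧ IsUnit (H' z)) ∧
        (∀ z ∈ R s, AnalyticAt ℂ H'' z ∧ IsUnit (H'' z)) ∧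
        ∀ z ∈ O s, H'' z * (1 - κ z) = H' z := by
  set ρ : ℝ := min (s / (16 * C)) (s ^ 2 / (448 * C ^ 2)) with hρ
  have hρ0 : 0 < ρ := by positivity
  have hρ1 : 2 * C / s * ρ ≤ 1 / 8 := by
    calc 2 * C / s * ρ ≤ 2 * C / s * (s / (16 * C)) := by gcongr; exact min_le_left _ _
      _ = 1 / 8 := by field_simp; norm_num
  have hρ2 : 7 * (2 * C / s * ρ) ^ 2 ≤ ρ / 16 := by
    have h1 : ρ ≤ s ^ 2 / (448 * C ^ 2) := min_le_right _ _
    rw [le_div_iff₀ (by positivity)] at h1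
    have : 7 * (2 * C / s * ρ) ^ 2 = 28 * C ^ 2 * ρ ^ 2 / s ^ 2 := by field_simp; ring
    rw [this, div_le_iff₀ (by positivity)]
    nlinarith
  refine ⟨ρ, hρ0, fun κ hκ hκρ => ?_⟩
  let σ : ℕ → ℝ := fun k => s * (1 + (1 / 2) ^ k)
  have hσs : ∀ k, s ≤ σ k := fun k => by
    have : (0:ℝ) < (1 / 2) ^ k := by positivity
    simp only [σ]; nlinarith
  have hσg : ∀ k, σ k - σ (k + 1) = s / 2 * (1 / 2) ^ k := fun k => by
    simp only [σ]; rw [pow_succ]; ring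
  have hσl : ∀ k, σ (k + 1) < σ k := fun k => by
    have : 0 < s / 2 * (1 / 2) ^ k := by positivity
    linarith [hσg k]
  have hσ1 : ∀ k, σ k ≤ 1 := fun k => by
    have : (1 / 2 : ℝ) ^ k ≤ 1 := pow_le_one₀ (by norm_num) (by norm_num)
    simp only [σ]; nlinarith
  let η : ℕ → ℝ := fun k => 2 * C / s * ρ * (1 / 8) ^ k
  have hη0 : ∀ k, 0 ≤ η k := fun k => by simp only [η]; positivity
  have hη : ∀ k, η k ≤ 1 / 8 * (1 / 8) ^ k := fun k => by simp only [η]; gcongr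
  have hη1 : ∀ k, η k ≤ 1 := fun k => by
    have : (1 / 8 : ℝ) ^ k ≤ 1 := pow_le_one₀ (by norm_num) (by norm_num)
    linarith [hη k]
  let Pr : ℕ → ((Fin n → ℂ) → A) → Prop := fun k κ =>
    (∀ z ∈ O (σ k), AnalyticAt ℂ κ z) ∧ ∀ z ∈ O (σ k), ‖κ z‖ ≤ ρ * (1 / 16) ^ k
  have step : ∀ k κ, Pr k κ → ∃ f' f'' : (Fin n → ℂ) → A, (∀ z ∈ L (σ (k + 1)), AnalyticAt ℂ f' z) ∧
      (∀ z ∈ R (σ (k + 1)), AnalyticAt ℂ f'' z) ∧ (∀ z ∈ L (σ (k + 1)), ‖f' z‖ ≤ η k) ∧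
      (∀ z ∈ R (σ (k + 1)), ‖f'' z‖ ≤ η k) ∧
      Pr (k + 1) fun z => 1 - (1 - f'' z) * (1 - κ z) * (1 + f' z) := by
    rintro k κ ⟨h1, h2⟩
    obtain ⟨f', f'', a, b, c, d⟩ := hS (σ (k + 1)) (σ k) (hs.trans_le (hσs _)) (hσl k) (hσ1 k) κ h1
    obtain ⟨d1, d2⟩ := d _ (by positivity) h2
    have he : C / (σ k - σ (k + 1)) * (ρ * (1 / 16) ^ k) = η k := by
      rw [hσg]
      simp only [η]
      have : ((1 / 16 : ℝ)) ^ k = (1 / 8) ^ k * (1 / 2) ^ k := by rw [← mul_pow]; norm_num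
      rw [this]
      field_simp
    rw [he] at d1 d2
    refine ⟨f', f'', a, b, d1, d2, ?_, ?_⟩
    · intro z hz
      have hz' := mO (hσl k).le hz
      exact analyticAt_const.fun_sub (((analyticAt_const.fun_sub (b z (hOR _ hz))).fun_mul
        (analyticAt_const.fun_sub (h1 z hz'))).fun_mul (analyticAt_const.fun_add (a z (hOL _ hz))))
    · intro z hz
      refine (newton_bound (c z hz) (d2 z (hOR _ hz)) (d1 z (hOL _ hz)) (hη1 k)).trans ?_
      simp only [η]
      calc 7 * (2 * C / s * ρ * (1 / 8) ^ k) ^ 2 = 7 * (2 * C / s * ρ) ^ 2 * (1 / 64) ^ k := by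
            rw [mul_pow _ ((1 / 8 : ℝ) ^ k), ← pow_mul, mul_comm k, pow_mul]; norm_num; ring
        _ ≤ ρ / 16 * (1 / 16) ^ k := by gcongr; norm_num
        _ = ρ * (1 / 16) ^ (k + 1) := by rw [pow_succ]; ring
  choose! f' f'' s1 s2 s3 s4 s5 using step
  let X : ∀ k, {κ : (Fin n → ℂ) → A // Pr k κ} := fun k => Nat.rec (motive := fun k => {κ : (Fin n → ℂ) → A // Pr k κ})
    ⟨κ, by
      have : σ 0 = 2 * s := by simp only [σ]; ring
      simp only [Pr, this, pow_zero, mul_one]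
      exact ⟨hκ, hκρ⟩⟩
    (fun k x => ⟨fun z => 1 - (1 - f'' k x.1 z) * (1 - x.1 z) * (1 + f' k x.1 z), s5 k x.1 x.2⟩) k
  have hX : ∀ k z, (X (k + 1)).1 z = 1 - (1 - f'' k (X k).1 z) * (1 - (X k).1 z) * (1 + f' k (X k).1 z) :=
    fun k z => rfl
  let P' : ℕ → (Fin n → ℂ) → A := fun k z => Nat.rec 1 (fun k p => p * (1 + f' k (X k).1 z)) k
  let P'' : ℕ → (Fin n → ℂ) → A := fun k z => Nat.rec 1 (fun k p => (1 - f'' k (X k).1 z) * p) k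
  have hP' : ∀ k z, P' (k + 1) z = P' k z * (1 + f' k (X k).1 z) := fun k z => rfl
  have hP'' : ∀ k z, P'' (k + 1) z = (1 - f'' k (X k).1 z) * P'' k z := fun k z => rfl
  have hprod : ∀ k z, P'' k z * (1 - κ z) * P' k z = 1 - (X k).1 z := by
    intro k z
    induction k with
    | zero => show 1 * (1 - κ z) * 1 = 1 - κ z; simp
    | succ k ih =>
      rw [hP', hP'', hX, sub_sub_cancel, ← ih]
      simp only [mul_assoc]
  obtain ⟨Q', q1, q2, q3⟩ := prod_limit (oL s) P' (fun _ => rfl) (fun k z hz => by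
      induction k with
      | zero => exact analyticAt_const
      | succ k ih => exact ih.fun_mul (analyticAt_const.fun_add (s1 k _ (X k).2 z (mL (hσs _) hz))))
    (fun k z hz => by
      have : P' (k + 1) z - P' k z = P' k z * f' k (X k).1 z := by rw [hP']; noncomm_ring
      rw [this]
      refine (norm_mul_le _ _).trans ?_
      gcongr
      exact (s3 k _ (X k).2 z (mL (hσs _) hz)).trans (hη k))
  obtain ⟨Q'', r1, r2, r3⟩ := prod_limit (oR s) P'' (fun _ => rfl) (fun k z hz => by
      induction k with
      | zero => exact analyticAt_const
      | succ k ih => exact (analyticAt_const.fun_sub (s2 k _ (X k).2 z (mR (hσs _) hz))).fun_mul ih)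
    (fun k z hz => by
      have : P'' (k + 1) z - P'' k z = - (f'' k (X k).1 z * P'' k z) := by rw [hP'']; noncomm_ring
      rw [this, norm_neg]
      refine (norm_mul_le _ _).trans ?_
      rw [mul_comm]
      gcongr
      exact (s4 k _ (X k).2 z (mR (hσs _) hz)).trans (hη k))
  refine ⟨fun z => Ring.inverse (Q' z), Q'', ?_, fun z hz => ⟨r1 z hz, r2 z hz⟩, ?_⟩
  · intro z hz
    obtain ⟨u, hu⟩ := q2 z hz
    refine ⟨?_, ?_⟩
    · have := analyticAt_inverse (𝕜 := ℂ) u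
      rw [hu] at this
      exact this.comp_of_eq (q1 z hz) rfl
    · change IsUnit (Ring.inverse (Q' z))
      rw [← hu, Ring.inverse_unit]; exact (u⁻¹).isUnit
  · intro z hz
    have h1 : Tendsto (fun k => P'' k z * (1 - κ z) * P' k z) atTop (𝓝 (Q'' z * (1 - κ z) * Q' z)) :=
      ((r3 z (hOR _ hz)).mul_const _).mul (q3 z (hOL _ hz))
    have h2 : Tendsto (fun k => P'' k z * (1 - κ z) * P' k z) atTop (𝓝 (1 - 0)) := by
      simp only [hprod]
      refine tendsto_const_nhds.sub ?_
      refine squeeze_zero_norm (fun k => (X k).2.2 z (mO (hσs k) hz)) ?_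
      simpa using (tendsto_pow_atTop_nhds_zero_of_lt_one (r := (1 / 16 : ℝ)) (by norm_num)
        (by norm_num)).const_mul ρ
    have h3 := tendsto_nhds_unique h1 h2
    rw [sub_zero] at h3
    obtain ⟨u, hu⟩ := q2 z (hOL _ hz)
    dsimp only
    rw [← hu, Ring.inverse_unit]
    rw [← hu] at h3
    calc Q'' z * (1 - κ z) = Q'' z * (1 - κ z) * (↑u * ↑u⁻¹) := by rw [u.mul_inv, mul_one]
      _ = ↑u⁻¹ := by rw [← mul_assoc, h3, one_mul]

end factor

theorem ev2 {X : Type} [TopologicalSpace X] {K : Set X} {p : X → Prop} (h : ∀ᶠ z in 𝓝ˢ K, p z) :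
    ∀ᶠ z in 𝓝ˢ K, ∀ᶠ y in 𝓝 z, p y := by
  rw [eventually_nhdsSet_iff_forall] at h ⊢
  exact fun x hx => eventually_eventually_nhds.2 (h x hx)

section op

/-- Operators on `ℂˡ`. -/
abbrev Op (l : Type) [Fintype l] := (l → ℂ) →L[ℂ] (l → ℂ)

variable {l : Type} [Fintype l]

/-- Matrix entries of an operator. -/
noncomputable def ent (T : Op l) (j k : l) : ℂ :=
  T (open Classical in Pi.single k 1) j

theorem op_apply (T : Op l) (v : l → ℂ) (j : l) : T v j = ∑ k, ent T j k * v k := by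
  classical
  have h : v = ∑ k, v k • (Pi.single k (1 : ℂ) : l → ℂ) := by
    ext j
    simp [Finset.sum_apply, Pi.single_apply]
  conv_lhs => rw [h]
  rw [map_sum, Finset.sum_apply]
  refine Finset.sum_congr rfl fun k _ => ?_
  rw [map_smul, Pi.smul_apply, smul_eq_mul, mul_comm, ent]

theorem ent_mul (S T : Op l) (j k : l) : ent (S * T) j k = ∑ m, ent S j m * ent T m k := by
  classical
  rw [ent, ContinuousLinearMap.mul_def, ContinuousLinearMap.comp_apply, op_apply]
  rfl

theorem ent_sub (S T : Op l) (j k : l) : ent (S - T) j k = ent S j k - ent T j k := rfl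

open Classical in
theorem ent_one (j k : l) : ent (1 : Op l) j k = if j = k then 1 else 0 := by
  rw [ent, ContinuousLinearMap.one_def, ContinuousLinearMap.id_apply, Pi.single_apply]

/-- The operator with given matrix entries. -/
noncomputable def mop : (l → l → ℂ) →L[ℂ] Op l :=
  LinearMap.toContinuousLinearMap
    { toFun := fun M => LinearMap.toContinuousLinearMap
        { toFun := fun v j => ∑ k, M j k * v k
          map_add' := fun v w => by ext; simp [mul_add, Finset.sum_add_distrib]
          map_smul' := fun a v => by ext; simp [Finset.mul_sum, mul_left_comm] }
      map_add' := fun M N => by ext; simp [add_mul, Finset.sum_add_distrib]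
      map_smul' := fun a M => by ext; simp [Finset.mul_sum, mul_assoc] }

theorem ent_mop (M : l → l → ℂ) (j k : l) : ent (mop M) j k = M j k := by
  classical
  simp [ent, mop, Pi.single_apply]

theorem ent_analytic {E : Type} [NormedAddCommGroup E] [NormedSpace ℂ E] {f : E → Op l} {z : E}
    (h : AnalyticAt ℂ f z) (j k : l) : AnalyticAt ℂ (fun y => ent (f y) j k) z := by
  classical
  have : (fun y => ent (f y) j k) =
      fun y => ((ContinuousLinearMap.proj j).comp (ContinuousLinearMap.apply ℂ (l → ℂ) (Pi.single k (1:ℂ)))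
        : Op l →L[ℂ] ℂ) (f y) := by
    ext y
    simp only [ent, ContinuousLinearMap.comp_apply, ContinuousLinearMap.apply_apply,
      ContinuousLinearMap.proj_apply]
  rw [this]
  exact (ContinuousLinearMap.analyticAt _ _).comp h

end op

variable {n : ℕ}

theorem fac0 {l₁ l₂ : Type} [Fintype l₁] [Fintype l₂] {O L R : ℝ → Set (Fin n → ℂ)}
    (hS : ∃ C > 0, SplitP (Op l₁) O L R C)
    (hOL : ∀ σ, O σ ⊆ L σ) (hOR : ∀ σ, O σ ⊆ R σ) (mO : Monotone O) (mL : Monotone L)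
    (mR : Monotone R) (oL : ∀ σ, IsOpen (L σ)) (oR : ∀ σ, IsOpen (R σ)) {K : Set (Fin n → ℂ)}
    (hru : ∀ σ' σ : ℝ, 0 < σ' → σ' < σ → ∀ f : (Fin n → ℂ) → (l₁ → l₂ → ℂ),
      (∀ z ∈ O σ, AnalyticAt ℂ f z) → ∀ ε > 0, ∃ g : (Fin n → ℂ) → (l₁ → l₂ → ℂ),
        (∀ᶠ z in 𝓝ˢ K, AnalyticAt ℂ g z) ∧ ∀ z ∈ O σ', AnalyticAt ℂ g z ∧ ‖f z - g z‖ ≤ ε)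
    {σ B : ℝ} (hσ : 0 < σ) {M₁ : (Fin n → ℂ) → (l₁ → l₂ → ℂ)} {M₂ : (Fin n → ℂ) → (l₂ → l₁ → ℂ)}
    (h₁ : ∀ z ∈ O σ, AnalyticAt ℂ M₁ z) (h₂ : ∀ z ∈ O σ, AnalyticAt ℂ M₂ z)
    (hB : ∀ z ∈ O σ, ‖M₂ z‖ ≤ B) :
    ∃ s > 0, s ≤ σ ∧ ∃ N : (Fin n → ℂ) → (l₁ → l₂ → ℂ), (∀ᶠ z in 𝓝ˢ K, AnalyticAt ℂ N z) ∧
      ∃ H' H'' : (Fin n → ℂ) → Op l₁, (∀ z ∈ L s, AnalyticAt ℂ H' z ∧ IsUnit (H' z)) ∧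
        (∀ z ∈ R s, AnalyticAt ℂ H'' z ∧ IsUnit (H'' z)) ∧
        ∀ z ∈ O s, H'' z * (1 - mop fun j k => ∑ m, (M₁ z j m - N z j m) * M₂ z m k) = H' z := by
  rcases isEmpty_or_nonempty l₁ with hl | hl
  · obtain ⟨N, hN, -⟩ := hru (σ / 2) σ (by positivity) (by linarith) M₁ h₁ 1 one_pos
    exact ⟨σ, hσ, le_rfl, N, hN, fun _ => 1, fun _ => 1, fun z _ => ⟨analyticAt_const, isUnit_one⟩,
      fun z _ => ⟨analyticAt_const, isUnit_one⟩, fun z _ => Subsingleton.elim _ _⟩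
  obtain ⟨C, hC, hS⟩ := hS
  set s : ℝ := min (σ / 4) (1 / 2) with hs
  have hs0 : 0 < s := by positivity
  have hs1 : s ≤ σ / 4 := min_le_left _ _
  have hs2 : s ≤ 1 / 2 := min_le_right _ _
  obtain ⟨ρ, hρ, hfac⟩ := cartan_factor hC hS hOL hOR mO mL mR oL oR hs0 (by linarith)
  set D : ℝ := ‖(mop : (l₁ → l₁ → ℂ) →L[ℂ] Op l₁)‖ with hD
  have hD0 : 0 ≤ D := by positivity
  set B' : ℝ := |B| + 1 with hB'
  have hB0 : 0 < B' := by positivity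
  set ε : ℝ := ρ / ((D + 1) * (Fintype.card l₂ + 1) * B') with hε
  have hε0 : 0 < ε := by positivity
  obtain ⟨N, hN, hN'⟩ := hru (2 * s) σ (by positivity) (by linarith) M₁ h₁ ε hε0
  have hsub : O (2 * s) ⊆ O σ := mO (by linarith)
  obtain ⟨H', H'', a, b, c⟩ := hfac (fun z => mop fun j k => ∑ m, (M₁ z j m - N z j m) * M₂ z m k)
    (by
      intro z hz
      refine (mop.analyticAt _).comp (f := fun z j k => ∑ m, (M₁ z j m - N z j m) * M₂ z m k) ?_
      have e1 := h₁ z (hsub hz)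
      have e2 := h₂ z (hsub hz)
      have e3 := (hN' z hz).1
      refine AnalyticAt.pi fun j => AnalyticAt.pi fun k => Finset.analyticAt_fun_sum _ fun m _ => ?_
      exact ((analyticAt_pi_iff.1 (analyticAt_pi_iff.1 e1 j) m).fun_sub
        (analyticAt_pi_iff.1 (analyticAt_pi_iff.1 e3 j) m)).mul
        (analyticAt_pi_iff.1 (analyticAt_pi_iff.1 e2 m) k))
    (by
      intro z hz
      refine ((mop : (l₁ → l₁ → ℂ) →L[ℂ] Op l₁).le_opNorm _).trans ?_
      have e1 : ∀ j k, ‖∑ m, (M₁ z j m - N z j m) * M₂ z m k‖ ≤ Fintype.card l₂ * (ε * B') := by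
        intro j k
        refine (norm_sum_le _ _).trans ((Finset.sum_le_card_nsmul _ _ (ε * B') fun m _ => ?_).trans
          (by simp))
        rw [norm_mul]
        gcongr
        · exact ((norm_le_pi_norm ((M₁ z - N z) j) m).trans (norm_le_pi_norm (M₁ z - N z) j)).trans
            (hN' z hz).2
        · refine ((norm_le_pi_norm (M₂ z m) k).trans (norm_le_pi_norm (M₂ z) m)).trans
            ((hB z (hsub hz)).trans ?_)
          rw [hB']
          linarith [le_abs_self B]
      have e2 : ‖fun j k => ∑ m, (M₁ z j m - N z j m) * M₂ z m k‖ ≤ Fintype.card l₂ * (ε * B') :=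
        (pi_norm_le_iff_of_nonneg (by positivity)).2 fun j =>
          (pi_norm_le_iff_of_nonneg (by positivity)).2 fun k => e1 j k
      calc D * _ ≤ (D + 1) * ((Fintype.card l₂ + 1) * (ε * B')) := by
            gcongr
            · linarith
            · exact e2.trans (by gcongr; linarith)
        _ = ρ := by
            have : D + 1 ≠ 0 := by positivity
            rw [hε]; field_simp)
  exact ⟨s, hs0, by linarith, N, hN, H', H'', a, b, c⟩

/-- The factorisation in the form in which generators on two adjacent boxes are patched. -/
theorem patch0 {l₁ l₂ κ : Type} [Fintype l₁] [Fintype l₂] {K₀ K₁ K₂ : Set (Fin n → ℂ)}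
    (hglue : ∀ (X : Type) (f f' : (Fin n → ℂ) → X), (∀ᶠ z in 𝓝ˢ K₀, f z = f' z) →
      ∃ g : (Fin n → ℂ) → X, (∀ᶠ z in 𝓝ˢ K₁, g z = f z) ∧ ∀ᶠ z in 𝓝ˢ K₂, g z = f' z)
    {s₁ : l₁ → (Fin n → ℂ) → κ → ℂ} {s₂ : l₂ → (Fin n → ℂ) → κ → ℂ}
    {M₁ N : (Fin n → ℂ) → (l₁ → l₂ → ℂ)} {M₂ : (Fin n → ℂ) → (l₂ → l₁ → ℂ)}
    (e₁ : ∀ᶠ z in 𝓝ˢ K₀, ∀ j k, s₁ j z k = ∑ m, M₁ z j m * s₂ m z k)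
    (e₂ : ∀ᶠ z in 𝓝ˢ K₀, ∀ j k, s₂ j z k = ∑ m, M₂ z j m * s₁ m z k)
    (hN : ∀ᶠ z in 𝓝ˢ K₂, AnalyticAt ℂ N z) {H' H'' : (Fin n → ℂ) → Op l₁}
    (h' : ∀ᶠ z in 𝓝ˢ K₁, AnalyticAt ℂ H' z ∧ IsUnit (H' z))
    (h'' : ∀ᶠ z in 𝓝ˢ K₂, AnalyticAt ℂ H'' z)
    (hH : ∀ᶠ z in 𝓝ˢ K₀,
      H'' z * (1 - mop fun j k => ∑ m, (M₁ z j m - N z j m) * M₂ z m k) = H' z) :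
    ∃ t : l₁ → (Fin n → ℂ) → κ → ℂ,
      (∀ᶠ z in 𝓝ˢ K₁, ∀ j, Gen s₁ z (t j) ∧ Gen t z (s₁ j)) ∧ ∀ᶠ z in 𝓝ˢ K₂, ∀ j, Gen s₂ z (t j) := by
  classical
  obtain ⟨t, t1, t2⟩ := hglue (l₁ → κ → ℂ) (fun z j k => ∑ m, ent (H' z) j m * s₁ m z k)
    (fun z j k => ∑ m, ent (H'' z) j m * ∑ p, N z m p * s₂ p z k) (by
      filter_upwards [e₁, e₂, hH] with z a b c
      ext j k
      rw [← c]
      simp_rw [ent_mul, ent_sub, ent_one, ent_mop, Finset.sum_mul]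
      rw [Finset.sum_comm]
      refine Finset.sum_congr rfl fun m _ => ?_
      simp_rw [mul_assoc, ← Finset.mul_sum]
      congr 1
      simp_rw [sub_mul, Finset.sum_sub_distrib, ite_mul, one_mul, zero_mul]
      rw [Finset.sum_ite_eq Finset.univ m]
      simp only [Finset.mem_univ, if_true]
      have : ∑ x, (∑ y, (M₁ z m y * M₂ z y x - N z m y * M₂ z y x)) * s₁ x z k
          = ∑ y, (M₁ z m y - N z m y) * s₂ y z k := by
        simp_rw [b, Finset.sum_mul]
        rw [Finset.sum_comm]
        refine Finset.sum_congr rfl fun y _ => ?_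
        rw [Finset.mul_sum]
        refine Finset.sum_congr rfl fun x _ => ?_
        ring
      simp_rw [Finset.sum_sub_distrib] at this
      rw [this, a]
      simp_rw [sub_mul, Finset.sum_sub_distrib]
      ring)
  refine ⟨fun j z => t z j, ?_, ?_⟩
  · filter_upwards [ev2 t1, ev2 h', h'] with z a b c j
    refine ⟨⟨fun m y => ent (H' y) j m, fun m => ent_analytic c.1 j m, ?_⟩,
      ⟨fun m y => ent (Ring.inverse (H' y)) j m, fun m => ent_analytic ?_ j m, ?_⟩⟩
    · filter_upwards [a] with y hy k
      rw [hy]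
    · obtain ⟨u, hu⟩ := c.2
      have := analyticAt_inverse (𝕜 := ℂ) u
      rw [hu] at this
      exact this.comp c.1
    · filter_upwards [a, b] with y hy hy' k
      simp only [hy]
      simp_rw [Finset.mul_sum]
      rw [Finset.sum_comm]
      simp_rw [← mul_assoc, ← Finset.sum_mul, ← ent_mul, Ring.inverse_mul_cancel _ hy'.2, ent_one]
      simp
  · filter_upwards [ev2 t2, hN, h''] with z a b c j
    refine ⟨fun p y => ∑ m, ent (H'' y) j m * N y m p, fun p => Finset.analyticAt_fun_sum _ fun m _ =>
      (ent_analytic c j m).mul (analyticAt_pi_iff.1 (analyticAt_pi_iff.1 b m) p), ?_⟩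
    filter_upwards [a] with y hy k
    rw [hy]
    simp_rw [Finset.mul_sum, Finset.sum_mul]
    rw [Finset.sum_comm]
    simp only [mul_assoc]

end CA

/-! ### Theorems A and B on boxes -/

namespace CA

section boxes
variable {n : ℕ}

theorem runge_box {H : Type} [NormedAddCommGroup H] [NormedSpace ℂ H] [CompleteSpace H]
    {α₀ β₀ : Fin n × Bool → ℝ} (h₀ : ∀ i, α₀ i ≤ β₀ i) (α₂ β₂ : Fin n × Bool → ℝ) :
    ∀ σ' σ : ℝ, 0 < σ' → σ' < σ → ∀ f : (Fin n → ℂ) → H,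
      (∀ z ∈ Bn α₀ β₀ σ, AnalyticAt ℂ f z) → ∀ ε > 0, ∃ g : (Fin n → ℂ) → H,
        (∀ᶠ z in 𝓝ˢ (Bx α₂ β₂), AnalyticAt ℂ g z) ∧
          ∀ z ∈ Bn α₀ β₀ σ', AnalyticAt ℂ g z ∧ ‖f z - g z‖ ≤ ε := by
  intro σ' σ hσ' hσ f hf ε hε
  have hs : Bx (fun i => α₀ i - σ') (fun i => β₀ i + σ') ⊆ Bn α₀ β₀ σ := by
    intro z hz i
    have := hz i
    constructor <;> linarith [this.1, this.2]
  obtain ⟨g, g1, g2⟩ := runge (α := fun i => α₀ i - σ') (β := fun i => β₀ i + σ')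
    (α' := fun i => min (α₂ i) (α₀ i - σ')) (β' := fun i => max (β₂ i) (β₀ i + σ'))
    (fun i => by linarith [h₀ i]) (fun i => min_le_right _ _) (fun i => le_max_right _ _)
    (f := f) (Filter.mem_of_superset ((Bn_open α₀ β₀ σ).mem_nhdsSet.2 hs) hf) ε hε
  refine ⟨g, g1.filter_mono (nhdsSet_mono fun z hz i =>
    ⟨(min_le_left _ _).trans (hz i).1, (hz i).2.trans (le_max_left _ _)⟩), fun z hz => ⟨?_, ?_⟩⟩
  · exact subset_of_mem_nhdsSet g1 fun i =>
      ⟨(min_le_right _ _).trans (hz i).1.le, (hz i).2.le.trans (le_max_right _ _)⟩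
  · exact subset_of_mem_nhdsSet g2 fun i => ⟨(hz i).1.le, (hz i).2.le⟩

theorem Bn_sub {α β α' β' : Fin n × Bool → ℝ} (hα : ∀ i, α' i ≤ α i) (hβ : ∀ i, β i ≤ β' i) (σ : ℝ) :
    Bn α β σ ⊆ Bn α' β' σ := fun z hz i => by
  have := hz i
  constructor <;> linarith [hα i, hβ i, this.1, this.2]

theorem Bx_sub {α β α' β' : Fin n × Bool → ℝ} (hα : ∀ i, α' i ≤ α i) (hβ : ∀ i, β i ≤ β' i) :
    Bx α β ⊆ Bx α' β' := fun _ hz i => ⟨(hα i).trans (hz i).1, (hz i).2.trans (hβ i)⟩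

variable {α β : Fin n × Bool → ℝ} {i : Fin n × Bool} {c : ℝ}

theorem le_upd (h : α i ≤ c) : ∀ j, α j ≤ Function.update α i c j := fun j => by
  by_cases hj : j = i
  · subst hj; simpa
  · simp [hj]

theorem upd_le (h : c ≤ β i) : ∀ j, Function.update β i c j ≤ β j := fun j => by
  by_cases hj : j = i
  · subst hj; simpa
  · simp [hj]

theorem upd_mono {c' : ℝ} (hαβ : ∀ i, α i ≤ β i) (h : c ≤ c') :
    ∀ j, Function.update α i c j ≤ Function.update β i c' j := fun j => by
  by_cases hj : j = i
  · subst hj; simpa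
  · simp [hj, hαβ j]

theorem mem_slice {z : Fin n → ℂ} (hz : ∀ j ≠ i, α j ≤ co j z ∧ co j z ≤ β j) (h : co i z = c) :
    z ∈ Bx (Function.update α i c) (Function.update β i c) := fun j => by
  by_cases hj : j = i
  · subst hj; simp [h]
  · simpa [hj] using hz j hj

theorem glue_box (X : Type) (f f' : (Fin n → ℂ) → X)
    (h : ∀ᶠ z in 𝓝ˢ (Bx (Function.update α i c) (Function.update β i c)), f z = f' z) :
    ∃ g : (Fin n → ℂ) → X, (∀ᶠ z in 𝓝ˢ (Bx α (Function.update β i c)), g z = f z) ∧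
      ∀ᶠ z in 𝓝ˢ (Bx (Function.update α i c) β), g z = f' z := by
  classical
  refine ⟨fun z => if co i z < c then f z else f' z, ?_, ?_⟩
  · rw [eventually_nhdsSet_iff_forall] at h ⊢
    intro x hx
    have hi := (hx i).2
    rw [Function.update_self] at hi
    rcases hi.lt_or_eq with hi | hi
    · filter_upwards [(co_continuous i).continuousAt.eventually (gt_mem_nhds hi)] with z hz
      rw [if_pos hz]
    · filter_upwards [h x (mem_slice (fun j hj => by simpa [hj] using hx j) hi)] with z hz
      split_ifs
      · rfl
      · exact hz.symm
  · rw [eventually_nhdsSet_iff_forall] at h ⊢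
    intro x hx
    have hi := (hx i).1
    rw [Function.update_self] at hi
    rcases hi.lt_or_eq with hi | hi
    · filter_upwards [(co_continuous i).continuousAt.eventually (lt_mem_nhds hi)] with z hz
      rw [if_neg (by linarith)]
    · filter_upwards [h x (mem_slice (fun j hj => by simpa [hj] using hx j) hi.symm)] with z hz
      split_ifs
      · exact hz
      · rfl

theorem box_union (h1 : α i ≤ c) (h2 : c ≤ β i) :
    𝓝ˢ (Bx α β) = 𝓝ˢ (Bx α (Function.update β i c)) ⊔ 𝓝ˢ (Bx (Function.update α i c) β) := by
  rw [← nhdsSet_union]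
  congr 1
  refine Subset.antisymm (fun z hz => ?_) (union_subset (Bx_sub (fun _ => le_rfl) (upd_le h2))
    (Bx_sub (le_upd h1) fun _ => le_rfl))
  rcases le_total (co i z) c with h | h
  · refine Or.inl fun j => ⟨(hz j).1, ?_⟩
    by_cases hj : j = i
    · subst hj; simpa
    · simpa [hj] using (hz j).2
  · refine Or.inr fun j => ⟨?_, (hz j).2⟩
    by_cases hj : j = i
    · subst hj; simpa
    · simpa [hj] using (hz j).1

/-- Theorem B for the compact set `K`: sections of a module generated by finitely many tuples near
`K` have coefficients that are analytic near `K`. -/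
def PB (K : Set (Fin n → ℂ)) : Prop :=
  ∀ (κ l : Type) [Finite κ] [Fintype l] (s : l → (Fin n → ℂ) → κ → ℂ) (f : (Fin n → ℂ) → κ → ℂ),
    (∀ᶠ y in 𝓝ˢ K, (∀ j, AnV (s j) y) ∧ Gen s y f) →
    ∃ d : l → (Fin n → ℂ) → ℂ, ∀ᶠ y in 𝓝ˢ K, (∀ j, AnalyticAt ℂ (d j) y) ∧
      ∀ k, f y k = ∑ j, d j y * s j y k

/-- Theorem A for the compact set `K`: a coherent module is generated near `K` by finitely many
sections. -/
def PA (K : Set (Fin n → ℂ)) : Prop :=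
  ∀ (κ : Type) [Finite κ] (F : (Fin n → ℂ) → ((Fin n → ℂ) → κ → ℂ) → Prop),
    (∀ y ∈ K, FG F (𝓝 y)) → FG F (𝓝ˢ K)

theorem gen_inl {E κ l m : Type} [NormedAddCommGroup E] [NormedSpace ℂ E] [Fintype l] [Fintype m]
    {t : l → E → κ → ℂ} {u : m → E → κ → ℂ} {y : E} {c : E → κ → ℂ} (h : Gen t y c) :
    Gen (Sum.elim t u) y c := h.trans fun j => gen_self (Sum.elim t u) y (Sum.inl j)

theorem gen_inr {E κ l m : Type} [NormedAddCommGroup E] [NormedSpace ℂ E] [Fintype l] [Fintype m]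
    {t : l → E → κ → ℂ} {u : m → E → κ → ℂ} {y : E} {c : E → κ → ℂ} (h : Gen u y c) :
    Gen (Sum.elim t u) y c := h.trans fun j => gen_self (Sum.elim t u) y (Sum.inr j)

theorem patch_box {κ l₁ l₂ : Type} [Fintype l₁] [Fintype l₂] (hαβ : ∀ i, α i ≤ β i) (h1 : α i ≤ c)
    (h2 : c ≤ β i) {s₁ : l₁ → (Fin n → ℂ) → κ → ℂ} {s₂ : l₂ → (Fin n → ℂ) → κ → ℂ}
    {d₁ : l₁ → l₂ → (Fin n → ℂ) → ℂ} {d₂ : l₂ → l₁ → (Fin n → ℂ) → ℂ}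
    (e₁ : ∀ᶠ z in 𝓝ˢ (Bx (Function.update α i c) (Function.update β i c)), ∀ j,
      (∀ m, AnalyticAt ℂ (d₁ j m) z) ∧ ∀ k, s₁ j z k = ∑ m, d₁ j m z * s₂ m z k)
    (e₂ : ∀ᶠ z in 𝓝ˢ (Bx (Function.update α i c) (Function.update β i c)), ∀ j,
      (∀ m, AnalyticAt ℂ (d₂ j m) z) ∧ ∀ k, s₂ j z k = ∑ m, d₂ j m z * s₁ m z k) :
    (∃ t : l₁ → (Fin n → ℂ) → κ → ℂ, (∀ᶠ z in 𝓝ˢ (Bx α (Function.update β i c)),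
      ∀ j, Gen s₁ z (t j) ∧ Gen t z (s₁ j)) ∧
        ∀ᶠ z in 𝓝ˢ (Bx (Function.update α i c) β), ∀ j, Gen s₂ z (t j)) ∧
    (∃ t : l₂ → (Fin n → ℂ) → κ → ℂ, (∀ᶠ z in 𝓝ˢ (Bx (Function.update α i c) β),
      ∀ j, Gen s₂ z (t j) ∧ Gen t z (s₂ j)) ∧
        ∀ᶠ z in 𝓝ˢ (Bx α (Function.update β i c)), ∀ j, Gen s₁ z (t j)) := by
  let M₁ : (Fin n → ℂ) → (l₁ → l₂ → ℂ) := fun z j m => d₁ j m z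
  let M₂ : (Fin n → ℂ) → (l₂ → l₁ → ℂ) := fun z j m => d₂ j m z
  have m1 : ∀ᶠ z in 𝓝ˢ (Bx (Function.update α i c) (Function.update β i c)), AnalyticAt ℂ M₁ z :=
    e₁.mono fun z hz => AnalyticAt.pi fun j => AnalyticAt.pi fun m => (hz j).1 m
  have m2 : ∀ᶠ z in 𝓝ˢ (Bx (Function.update α i c) (Function.update β i c)), AnalyticAt ℂ M₂ z :=
    e₂.mono fun z hz => AnalyticAt.pi fun j => AnalyticAt.pi fun m => (hz j).1 m
  obtain ⟨B₁, hB₁⟩ := ev_bounded (Bx_compact _ _) fun x hx =>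
    (subset_of_mem_nhdsSet m1 hx : AnalyticAt ℂ M₁ x).continuousAt
  obtain ⟨B₂, hB₂⟩ := ev_bounded (Bx_compact _ _) fun x hx =>
    (subset_of_mem_nhdsSet m2 hx : AnalyticAt ℂ M₂ x).continuousAt
  have hs := upd_mono (i := i) hαβ (le_refl c)
  obtain ⟨σ, hσ, h⟩ := (ev_box hs).1 ((m1.and m2).and (hB₁.and hB₂))
  have i1 : ∀ σ, Bn (Function.update α i c) (Function.update β i c) σ ⊆ Bn α (Function.update β i c) σ :=
    Bn_sub (le_upd h1) fun _ => le_rfl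
  have i2 : ∀ σ, Bn (Function.update α i c) (Function.update β i c) σ ⊆ Bn (Function.update α i c) β σ :=
    Bn_sub (fun _ => le_rfl) (upd_le h2)
  constructor
  · obtain ⟨s, hs0, -, N, hN, H', H'', a, b, e⟩ := fac0 (split_box (Op l₁) hαβ i c) i1 i2
      (fun _ _ => Bn_mono _ _) (fun _ _ => Bn_mono _ _) (fun _ _ => Bn_mono _ _) (Bn_open _ _)
      (Bn_open _ _) (runge_box hs (Function.update α i c) β) hσ (fun z hz => (h z hz).1.1)
      (fun z hz => (h z hz).1.2) (fun z hz => (h z hz).2.2)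
    exact patch0 (glue_box (α := α) (β := β) (i := i) (c := c)) (e₁.mono fun z hz j k => (hz j).2 k)
      (e₂.mono fun z hz j k => (hz j).2 k) hN (ev_of_Bn hs0 a)
      ((ev_of_Bn hs0 b).mono fun z hz => hz.1) (ev_of_Bn hs0 e)
  · obtain ⟨C, hC, hS⟩ := split_box (Op l₂) hαβ i c
    obtain ⟨s, hs0, -, N, hN, H', H'', a, b, e⟩ := fac0 ⟨C, hC, hS.symm⟩ i2 i1
      (fun _ _ => Bn_mono _ _) (fun _ _ => Bn_mono _ _) (fun _ _ => Bn_mono _ _) (Bn_open _ _)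
      (Bn_open _ _) (runge_box hs α (Function.update β i c)) hσ (fun z hz => (h z hz).1.2)
      (fun z hz => (h z hz).1.1) (fun z hz => (h z hz).2.1)
    refine patch0 (fun X f f' hf => ?_) (e₂.mono fun z hz j k => (hz j).2 k)
      (e₁.mono fun z hz j k => (hz j).2 k) hN (ev_of_Bn hs0 a)
      ((ev_of_Bn hs0 b).mono fun z hz => hz.1) (ev_of_Bn hs0 e)
    obtain ⟨g, g1, g2⟩ := glue_box (α := α) (β := β) (i := i) (c := c) X f' f (hf.mono fun z h => h.symm)
    exact ⟨g, g2, g1⟩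

theorem glueA {κ : Type} [Finite κ] {F : (Fin n → ℂ) → ((Fin n → ℂ) → κ → ℂ) → Prop}
    (hαβ : ∀ i, α i ≤ β i) (h1 : α i ≤ c) (h2 : c ≤ β i)
    (hB : PB (Bx (Function.update α i c) (Function.update β i c)))
    (hL : FG F (𝓝ˢ (Bx α (Function.update β i c)))) (hR : FG F (𝓝ˢ (Bx (Function.update α i c) β))) :
    FG F (𝓝ˢ (Bx α β)) := by
  obtain ⟨l₁, _, s₁, hs₁⟩ := hL
  obtain ⟨l₂, _, s₂, hs₂⟩ := hR
  have o1 := hs₁.filter_mono (nhdsSet_mono (Bx_sub (le_upd h1) fun _ => le_rfl :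
    Bx (Function.update α i c) (Function.update β i c) ⊆ _))
  have o2 := hs₂.filter_mono (nhdsSet_mono (Bx_sub (fun _ => le_rfl) (upd_le h2) :
    Bx (Function.update α i c) (Function.update β i c) ⊆ _))
  have a1 := fun j => hB κ l₂ s₂ (s₁ j) (by
    filter_upwards [o1, o2] with y p q
    exact ⟨q.1, (q.2 _).1 ((p.2 _).2 (gen_self s₁ y j))⟩)
  have a2 := fun j => hB κ l₁ s₁ (s₂ j) (by
    filter_upwards [o1, o2] with y p q
    exact ⟨p.1, (p.2 _).1 ((q.2 _).2 (gen_self s₂ y j))⟩)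
  choose d₁ hd₁ using a1
  choose d₂ hd₂ using a2
  obtain ⟨⟨t, t1, t2⟩, u, u1, u2⟩ := patch_box hαβ h1 h2 (eventually_all.2 hd₁) (eventually_all.2 hd₂)
  refine ⟨l₁ ⊕ l₂, inferInstance, Sum.elim t u, ?_⟩
  rw [box_union h1 h2]
  refine eventually_sup.2 ⟨?_, ?_⟩
  · filter_upwards [t1, u2, hs₁] with y p q r
    have : ∀ j, Gen s₁ y (Sum.elim t u j) := by
      rintro (j | j)
      · exact (p j).1
      · exact q j
    refine ⟨fun j => (this j).anV r.1, fun f => (r.2 f).trans ⟨fun hf => ?_, fun hf => hf.trans this⟩⟩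
    exact hf.trans fun j => gen_inl (p j).2
  · filter_upwards [u1, t2, hs₂] with y p q r
    have : ∀ j, Gen s₂ y (Sum.elim t u j) := by
      rintro (j | j)
      · exact q j
      · exact (p j).1
    refine ⟨fun j => (this j).anV r.1, fun f => (r.2 f).trans ⟨fun hf => ?_, fun hf => hf.trans this⟩⟩
    exact hf.trans fun j => gen_inr (p j).2

end boxes

section boxes
variable {n : ℕ} {α β : Fin n × Bool → ℝ} {i : Fin n × Bool} {c : ℝ}

theorem split_ev {H : Type} [NormedAddCommGroup H] [NormedSpace ℂ H] [CompleteSpace H]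
    (hαβ : ∀ i, α i ≤ β i) {f : (Fin n → ℂ) → H}
    (hf : ∀ᶠ z in 𝓝ˢ (Bx (Function.update α i c) (Function.update β i c)), AnalyticAt ℂ f z) :
    ∃ f' f'' : (Fin n → ℂ) → H, (∀ᶠ z in 𝓝ˢ (Bx α (Function.update β i c)), AnalyticAt ℂ f' z) ∧
      (∀ᶠ z in 𝓝ˢ (Bx (Function.update α i c) β), AnalyticAt ℂ f'' z) ∧
      ∀ᶠ z in 𝓝ˢ (Bx (Function.update α i c) (Function.update β i c)), f z = f' z - f'' z := by
  obtain ⟨C, hC, hS⟩ := split_box H hαβ i c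
  obtain ⟨σ, hσ, h⟩ := (ev_box (upd_mono (i := i) hαβ (le_refl c))).1 hf
  set τ := min σ 1 with hτ
  have hτ0 : 0 < τ := by positivity
  obtain ⟨f', f'', a, b, e, -⟩ := hS (τ / 2) τ (by positivity) (by linarith) (min_le_right _ _) f
    fun z hz => h z (Bn_mono _ _ (min_le_left _ _) hz)
  exact ⟨f', f'', ev_of_Bn (half_pos hτ0) a, ev_of_Bn (half_pos hτ0) b, ev_of_Bn (half_pos hτ0) e⟩

theorem glueB {κ l : Type} [Finite κ] [Fintype l] {s : l → (Fin n → ℂ) → κ → ℂ}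
    {f : (Fin n → ℂ) → κ → ℂ} (hαβ : ∀ i, α i ≤ β i) (h1 : α i ≤ c) (h2 : c ≤ β i)
    (hA : PA (Bx α β)) (hB : PB (Bx (Function.update α i c) (Function.update β i c)))
    (hs : ∀ᶠ y in 𝓝ˢ (Bx α β), ∀ j, AnV (s j) y)
    (hL : ∃ d : l → (Fin n → ℂ) → ℂ, ∀ᶠ y in 𝓝ˢ (Bx α (Function.update β i c)),
      (∀ j, AnalyticAt ℂ (d j) y) ∧ ∀ k, f y k = ∑ j, d j y * s j y k)
    (hR : ∃ d : l → (Fin n → ℂ) → ℂ, ∀ᶠ y in 𝓝ˢ (Bx (Function.update α i c) β),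
      (∀ j, AnalyticAt ℂ (d j) y) ∧ ∀ k, f y k = ∑ j, d j y * s j y k) :
    ∃ d : l → (Fin n → ℂ) → ℂ, ∀ᶠ y in 𝓝ˢ (Bx α β),
      (∀ j, AnalyticAt ℂ (d j) y) ∧ ∀ k, f y k = ∑ j, d j y * s j y k := by
  obtain ⟨d', hd'⟩ := hL
  obtain ⟨d'', hd''⟩ := hR
  have su1 : Bx (Function.update α i c) (Function.update β i c) ⊆ Bx α (Function.update β i c) :=
    Bx_sub (le_upd h1) fun _ => le_rfl
  have su2 : Bx (Function.update α i c) (Function.update β i c) ⊆ Bx (Function.update α i c) β :=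
    Bx_sub (fun _ => le_rfl) (upd_le h2)
  have su3 : Bx α (Function.update β i c) ⊆ Bx α β := Bx_sub (fun _ => le_rfl) (upd_le h2)
  have su4 : Bx (Function.update α i c) β ⊆ Bx α β := Bx_sub (le_upd h1) fun _ => le_rfl
  obtain ⟨m, _, t, ht⟩ := hA l (Rel s) fun y hy => oka _ rfl y l κ s (subset_of_mem_nhdsSet hs hy)
  obtain ⟨e, he⟩ := hB l m t (fun z j => d' j z - d'' j z) (by
    filter_upwards [hd'.filter_mono (nhdsSet_mono su1), hd''.filter_mono (nhdsSet_mono su2),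
      ht.filter_mono (nhdsSet_mono (su1.trans su3)), ev2 (hd'.filter_mono (nhdsSet_mono su1)),
      ev2 (hd''.filter_mono (nhdsSet_mono su2))] with y p q r p' q'
    refine ⟨r.1, (r.2 _).1 ⟨fun j => (p.1 j).fun_sub (q.1 j), ?_⟩⟩
    filter_upwards [p', q'] with z a b k
    simp_rw [sub_mul, Finset.sum_sub_distrib]
    rw [← a.2, ← b.2, sub_self])
  obtain ⟨e', e'', a, b, hee⟩ := split_ev (f := fun z j => e j z) hαβ (he.mono fun z hz => AnalyticAt.pi hz.1)
  obtain ⟨g, g1, g2⟩ := glue_box (α := α) (β := β) (i := i) (c := c) (l → ℂ)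
    (fun z j => d' j z - ∑ q, e' z q * t q z j) (fun z j => d'' j z - ∑ q, e'' z q * t q z j) (by
      filter_upwards [he, hee] with z p q
      ext j
      have := p.2 j
      have q' : ∀ m, e m z = e' z m - e'' z m := fun m => congrFun q m
      simp_rw [q', sub_mul, Finset.sum_sub_distrib] at this
      linear_combination this)
  have rel0 : ∀ᶠ y in 𝓝ˢ (Bx α β), (∀ q, AnV (t q) y) ∧ ∀ q k, ∑ j, t q y j * s j y k = 0 := by
    filter_upwards [ht] with y hy
    exact ⟨hy.1, fun q => ((hy.2 _).2 (gen_self t y q)).2.self_of_nhds⟩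
  have fin : ∀ (K : Set (Fin n → ℂ)) (d : l → (Fin n → ℂ) → ℂ) (e : (Fin n → ℂ) → m → ℂ), K ⊆ Bx α β →
      (∀ᶠ y in 𝓝ˢ K, (∀ j, AnalyticAt ℂ (d j) y) ∧ ∀ k, f y k = ∑ j, d j y * s j y k) →
      (∀ᶠ z in 𝓝ˢ K, AnalyticAt ℂ e z) →
      (∀ᶠ z in 𝓝ˢ K, g z = fun j => d j z - ∑ q, e z q * t q z j) →
      ∀ᶠ y in 𝓝ˢ K, (∀ j, AnalyticAt ℂ (fun z => g z j) y) ∧ ∀ k, f y k = ∑ j, g y j * s j y k := by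
    intro K d e hK hd he hg
    filter_upwards [hd, he, hg, ev2 hg, rel0.filter_mono (nhdsSet_mono hK)] with y p q r r' o
    refine ⟨fun j => ?_, fun k => ?_⟩
    · refine AnalyticAt.congr (f := fun z => d j z - ∑ q, e z q * t q z j) ?_ ?_
      · exact (p.1 j).fun_sub (Finset.analyticAt_fun_sum _ fun a _ =>
          (analyticAt_pi_iff.1 q a).mul (o.1 a j))
      · filter_upwards [r'] with z hz
        rw [hz]
    · rw [r]
      simp_rw [sub_mul, Finset.sum_sub_distrib, ← p.2, Finset.sum_mul]
      rw [Finset.sum_comm]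
      simp_rw [mul_assoc, ← Finset.mul_sum, o.2]
      simp
  refine ⟨fun j z => g z j, ?_⟩
  rw [box_union h1 h2]
  exact eventually_sup.2 ⟨fin _ d' e' su3 hd' a g1, fin _ d'' e'' su4 hd'' b g2⟩

theorem interval_ind {a b : ℝ} (hab : a ≤ b) (Q : ℝ → ℝ → Prop)
    (loc : ∀ x, a ≤ x → x ≤ b → ∃ ε > 0, ∀ c c', x - ε < c → c ≤ c' → c' < x + ε → a ≤ c → c' ≤ b → Q c c')
    (gl : ∀ c d e, a ≤ c → c ≤ d → d ≤ e → e ≤ b → Q c d → Q d e → Q c e) : Q a b := by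
  have loc' : ∀ x : Icc a b, ∃ ε : ℝ, ε > 0 ∧ ∀ c c' : ℝ, (x:ℝ) - ε < c → c ≤ c' → c' < (x:ℝ) + ε →
      a ≤ c → c' ≤ b → Q c c' :=
    fun x => loc x x.2.1 x.2.2
  choose ε hε h using loc'
  obtain ⟨t, t0, tm, ⟨m, hm⟩, ht⟩ := exists_monotone_Icc_subset_open_cover_Icc hab
    (c := fun x : Icc a b => {y : Icc a b | (x:ℝ) - ε x < (y:ℝ) ∧ (y:ℝ) < (x:ℝ) + ε x})
    (fun x => (isOpen_lt continuous_const continuous_subtype_val).inter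
      (isOpen_lt continuous_subtype_val continuous_const))
    (fun x _ => mem_iUnion.2 ⟨x, ⟨by linarith [hε x], by linarith [hε x]⟩⟩)
  have step : ∀ k, Q (t k) (t (k + 1)) := by
    intro k
    obtain ⟨x, hx⟩ := ht k
    have hle : t k ≤ t (k + 1) := tm (Nat.le_succ k)
    exact h x _ _ (hx ⟨le_rfl, hle⟩).1 hle (hx ⟨hle, le_rfl⟩).2 (t k).2.1 (t (k+1)).2.2
  have main : ∀ k, Q a (t (k + 1)) := by
    intro k
    induction k with
    | zero => have := step 0; rwa [t0] at this
    | succ k ih => exact gl a _ _ le_rfl (t (k+1)).2.1 (tm (Nat.le_succ _)) (t (k+2)).2.2 ih (step (k+1))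
  have := main m
  rwa [hm (m + 1) (Nat.le_succ m)] at this

theorem slice_loc (hαβ : ∀ i, α i ≤ β i) {P : (Fin n → ℂ) → Prop}
    (h : ∀ᶠ z in 𝓝ˢ (Bx (Function.update α i c) (Function.update β i c)), P z) :
    ∃ ε > 0, ∀ a b, c - ε < a → b < c + ε →
      ∀ᶠ z in 𝓝ˢ (Bx (Function.update α i a) (Function.update β i b)), P z := by
  obtain ⟨σ, hσ, h⟩ := (ev_box (upd_mono (i := i) hαβ (le_refl c))).1 h
  refine ⟨σ, hσ, fun a b ha hb => ?_⟩
  refine Filter.mem_of_superset ((Bn_open _ _ σ).mem_nhdsSet.2 fun z hz j => ?_) h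
  have := hz j
  by_cases hj : j = i
  · subst hj
    simp only [Function.update_self] at this ⊢
    constructor <;> linarith [this.1, this.2]
  · simp only [Function.update_of_ne hj] at this ⊢
    constructor <;> linarith [this.1, this.2]

open Classical in
theorem card_slice (h : α i < β i) :
    (Finset.univ.filter fun j => Function.update α i c j < Function.update β i c j).card <
      (Finset.univ.filter fun j => α j < β j).card := by
  refine Finset.card_lt_card (Finset.ssubset_iff.2 ⟨i, by simp, fun j hj => ?_⟩)
  rcases Finset.mem_insert.1 hj with rfl | hj
  · simpa
  · simp only [Finset.mem_filter, Finset.mem_univ, true_and] at hj ⊢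
    by_cases hji : j = i
    · subst hji; exact h
    · simpa [hji] using hj

open Classical in
theorem card_sub {a b : ℝ} (h : α i < β i) :
    (Finset.univ.filter fun j => Function.update α i a j < Function.update β i b j).card ≤
      (Finset.univ.filter fun j => α j < β j).card := by
  refine Finset.card_le_card fun j hj => ?_
  simp only [Finset.mem_filter, Finset.mem_univ, true_and] at hj ⊢
  by_cases hji : j = i
  · subst hji; exact h
  · simpa [hji] using hj

open Classical in
theorem cartan_aux (m : ℕ) : ∀ α β : Fin n × Bool → ℝ, (∀ i, α i ≤ β i) →
    (Finset.univ.filter fun j => α j < β j).card ≤ m → PA (Bx α β) ∧ PB (Bx α β) := by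
  induction m with
  | zero =>
    intro α β hαβ hc
    have heq : ∀ i, α i = β i := by
      intro i
      by_contra hne
      have : i ∈ Finset.univ.filter fun j => α j < β j := by
        simpa using lt_of_le_of_ne (hαβ i) hne
      rw [Finset.card_eq_zero.1 (Nat.le_zero.1 hc)] at this
      simp at this
    have hK : Bx α β = {fun l => ⟨α (l, false), α (l, true)⟩} := by
      ext z
      simp only [Bx, mem_ofPred_eq, mem_singleton_iff]
      constructor
      · intro h
        ext l
        have h1 := h (l, false)
        have h2 := h (l, true)
        rw [← heq] at h1 h2
        simp only [co, cb, cond_false, cond_true] at h1 h2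
        exact Complex.ext (le_antisymm h1.2 h1.1) (le_antisymm h2.2 h2.1)
      · rintro rfl ⟨l, b⟩
        cases b <;> simp [co, cb, heq]
    rw [hK]
    refine ⟨fun κ _ F hF => by rw [nhdsSet_singleton]; exact hF _ rfl, fun κ l _ _ s f hf => ?_⟩
    rw [nhdsSet_singleton] at hf ⊢
    obtain ⟨d, d1, d2⟩ := hf.self_of_nhds.2
    exact ⟨d, (eventually_all.2 fun j => ev_an (d1 j)).and d2⟩
  | succ m ih =>
    have hA : ∀ α β : Fin n × Bool → ℝ, (∀ i, α i ≤ β i) →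
        (Finset.univ.filter fun j => α j < β j).card ≤ m + 1 → PA (Bx α β) := by
      intro α β hαβ hc
      by_cases hex : ∃ i, α i < β i
      swap
      · refine (ih α β hαβ ?_).1
        rw [Finset.filter_false_of_mem fun j _ hj => hex ⟨j, hj⟩]
        simp
      obtain ⟨i, hi⟩ := hex
      intro κ _ F hF
      have hsl : ∀ c, PA (Bx (Function.update α i c) (Function.update β i c)) ∧
          PB (Bx (Function.update α i c) (Function.update β i c)) := fun c =>
        ih _ _ (upd_mono hαβ le_rfl) (Nat.lt_succ_iff.1 ((card_slice hi).trans_le hc))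
      have := interval_ind hi.le
        (fun a b => FG F (𝓝ˢ (Bx (Function.update α i a) (Function.update β i b)))) ?_ ?_
      · simpa using this
      · intro x hx1 hx2
        obtain ⟨l, _, t, ht⟩ := (hsl x).1 κ F fun y hy => hF y
          (Bx_sub (le_upd hx1) (upd_le hx2) hy)
        obtain ⟨ε, hε, h⟩ := slice_loc hαβ ht
        exact ⟨ε, hε, fun a b h1 _ h2 _ _ => ⟨l, inferInstance, t, h a b h1 h2⟩⟩
      · intro a d b _ had hdb _ h1 h2
        refine glueA (α := Function.update α i a) (β := Function.update β i b) (i := i) (c := d)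
          (upd_mono hαβ (had.trans hdb)) (by simpa) (by simpa) ?_ ?_ ?_
        · simpa using (hsl d).2
        · simpa using h1
        · simpa using h2
    intro α β hαβ hc
    refine ⟨hA α β hαβ hc, ?_⟩
    by_cases hex : ∃ i, α i < β i
    swap
    · refine (ih α β hαβ ?_).2
      rw [Finset.filter_false_of_mem fun j _ hj => hex ⟨j, hj⟩]
      simp
    obtain ⟨i, hi⟩ := hex
    intro κ l _ _ s f hf
    have hsl : ∀ c, PB (Bx (Function.update α i c) (Function.update β i c)) := fun c =>
      (ih _ _ (upd_mono hαβ le_rfl) (Nat.lt_succ_iff.1 ((card_slice hi).trans_le hc))).2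
    have := interval_ind hi.le
      (fun a b => ∃ d : l → (Fin n → ℂ) → ℂ,
        ∀ᶠ y in 𝓝ˢ (Bx (Function.update α i a) (Function.update β i b)),
          (∀ j, AnalyticAt ℂ (d j) y) ∧ ∀ k, f y k = ∑ j, d j y * s j y k) ?_ ?_
    · simpa using this
    · intro x hx1 hx2
      obtain ⟨d, hd⟩ := hsl x κ l s f (hf.filter_mono (nhdsSet_mono (Bx_sub (le_upd hx1) (upd_le hx2))))
      obtain ⟨ε, hε, h⟩ := slice_loc hαβ hd
      exact ⟨ε, hε, fun a b h1 _ h2 _ _ => ⟨d, h a b h1 h2⟩⟩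
    · intro a d b ha had hdb hb h1 h2
      refine glueB (α := Function.update α i a) (β := Function.update β i b) (i := i) (c := d)
        (upd_mono hαβ (had.trans hdb)) (by simpa) (by simpa)
        (hA _ _ (upd_mono hαβ (had.trans hdb)) ((card_sub hi).trans hc)) ?_ ?_ ?_ ?_
      · simpa using hsl d
      · exact (hf.filter_mono (nhdsSet_mono (Bx_sub (le_upd ha) (upd_le hb)))).mono fun y hy => hy.1
      · simpa using h1
      · simpa using h2

/-- Theorems A and B on closed boxes. -/
theorem cartan_box (hαβ : ∀ i, α i ≤ β i) : PA (Bx α β) ∧ PB (Bx α β) := by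
  classical exact cartan_aux _ α β hαβ le_rfl

end boxes

/-! ### Exhaustion by boxes -/

section ML
variable {n : ℕ} {κ : Type} [Finite κ]

theorem nhdsSet_self {X : Type} [TopologicalSpace X] {K : Set X} {p : X → Prop}
    (h : ∀ᶠ z in 𝓝ˢ K, p z) : ∀ z ∈ K, p z :=
  fun _ hz => (h.filter_mono (nhds_le_nhdsSet hz)).self_of_nhds

/-- One step of the Mittag-Leffler construction: a section over `K m`, given by its coefficients
`d` with respect to the generators `t m`, is approximated by a section over `K (m + 1)`, the error
being measured by coefficients with respect to all earlier generators `t k`. -/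
theorem ml_step {α β : ℕ → Fin n × Bool → ℝ} (hαβ : ∀ m i, α m i ≤ β m i)
    (hα : Antitone α) (hβ : Monotone β)
    {F : (Fin n → ℂ) → ((Fin n → ℂ) → κ → ℂ) → Prop} {l : ℕ → Type} [∀ m, Fintype (l m)]
    {t : ∀ m, l m → (Fin n → ℂ) → κ → ℂ}
    (ht : ∀ m, ∀ᶠ y in 𝓝ˢ (Bx (α m) (β m)), (∀ j, AnV (t m j) y) ∧ ∀ c, F y c ↔ Gen (t m) y c)
    (m : ℕ) (d : l m → (Fin n → ℂ) → ℂ)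
    (hd : ∀ᶠ y in 𝓝ˢ (Bx (α m) (β m)), ∀ j, AnalyticAt ℂ (d j) y) {ε : ℝ} (hε : 0 < ε) :
    ∃ d' : l (m + 1) → (Fin n → ℂ) → ℂ,
      (∀ᶠ y in 𝓝ˢ (Bx (α (m + 1)) (β (m + 1))), ∀ j, AnalyticAt ℂ (d' j) y) ∧
      ∀ k ≤ m, ∃ r : l k → (Fin n → ℂ) → ℂ, ∀ᶠ y in 𝓝ˢ (Bx (α k) (β k)),
        (∀ i, AnalyticAt ℂ (r i) y ∧ ‖r i y‖ ≤ ε) ∧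
        ∀ q, ∑ j, d' j y * t (m + 1) j y q - ∑ j, d j y * t m j y q = ∑ i, r i y * t k i y q := by
  have hsub : ∀ {k m}, k ≤ m → Bx (α k) (β k) ⊆ Bx (α m) (β m) := fun h =>
    Bx_sub (hα h) (hβ h)
  -- generators over a larger box in terms of those over a smaller one, and conversely
  have tr : ∀ k a b, k ≤ a → k ≤ b → ∀ j : l b, ∃ E : l a → (Fin n → ℂ) → ℂ,
      ∀ᶠ y in 𝓝ˢ (Bx (α k) (β k)), (∀ i, AnalyticAt ℂ (E i) y) ∧
        ∀ q, t b j y q = ∑ i, E i y * t a i y q := by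
    intro k a b ha hb j
    refine (cartan_box (hαβ k)).2 κ (l a) (t a) (t b j) ?_
    filter_upwards [(ht a).filter_mono (nhdsSet_mono (hsub ha)),
      (ht b).filter_mono (nhdsSet_mono (hsub hb))] with y h1 h2
    exact ⟨h1.1, (h1.2 _).1 ((h2.2 _).2 (gen_self _ _ j))⟩
  choose B hB using tr m (m + 1) m (Nat.le_succ m) le_rfl
  choose E hE using fun k : Fin (m + 1) =>
    tr k k (m + 1) le_rfl ((Nat.lt_succ_iff.1 k.2).trans (Nat.le_succ m))
  have bd : ∀ k : Fin (m + 1), ∃ M > 0, ∀ᶠ y in 𝓝ˢ (Bx (α k) (β k)), ∀ i, ∑ j, ‖E k j i y‖ ≤ M := by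
    intro k
    have : ∀ i j, ∃ M, ∀ᶠ y in 𝓝ˢ (Bx (α k) (β k)), ‖E k j i y‖ ≤ M := fun i j =>
      ev_bounded (Bx_compact _ _) fun y hy => (nhdsSet_self ((hE k j).mono fun y h => h.1 i) y hy).continuousAt
    choose M hM using this
    have hM0 : ∀ i j, 0 ≤ |M i j| := fun i j => abs_nonneg _
    refine ⟨1 + ∑ i, ∑ j, |M i j|, by positivity, ?_⟩
    filter_upwards [eventually_all.2 fun i => eventually_all.2 fun j => hM i j] with y h i
    calc ∑ j, ‖E k j i y‖ ≤ ∑ j, |M i j| := Finset.sum_le_sum fun j _ => (h i j).trans (le_abs_self _)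
      _ ≤ ∑ i, ∑ j, |M i j| := Finset.single_le_sum (f := fun i => ∑ j, |M i j|)
          (fun i _ => Finset.sum_nonneg fun j _ => hM0 i j) (Finset.mem_univ i)
      _ ≤ _ := by linarith
  choose M hM0 hM using bd
  have hS : 0 < ∑ k, M k := Finset.sum_pos (fun k _ => hM0 k) ⟨0, Finset.mem_univ _⟩
  set e : l (m + 1) → (Fin n → ℂ) → ℂ := fun j y => ∑ i, d i y * B i j y with he
  have hean : ∀ᶠ y in 𝓝ˢ (Bx (α m) (β m)), ∀ j, AnalyticAt ℂ (e j) y := by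
    filter_upwards [hd, eventually_all.2 hB] with y h1 h2 j
    exact Finset.analyticAt_fun_sum _ fun i _ => (h1 i).mul ((h2 i).1 j)
  choose d' hd' hdd using fun j => runge (hαβ m) (hα (Nat.le_succ m)) (hβ (Nat.le_succ m))
    (hean.mono fun y h => h j) (ε / ∑ k, M k) (by positivity)
  refine ⟨d', eventually_all.2 hd', fun k hk => ?_⟩
  set K : Fin (m + 1) := ⟨k, Nat.lt_succ_iff.2 hk⟩
  refine ⟨fun i y => ∑ j, (d' j y - e j y) * E K j i y, ?_⟩
  have hkm := nhdsSet_mono (hsub hk)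
  filter_upwards [eventually_all.2 fun j => hE K j, hM K, (eventually_all.2 hdd).filter_mono hkm,
    hean.filter_mono hkm, (eventually_all.2 hd').filter_mono (nhdsSet_mono (hsub (hk.trans (Nat.le_succ m)))),
    (eventually_all.2 hB).filter_mono hkm] with y h1 h2 h3 h4 h5 h6
  refine ⟨fun i => ⟨Finset.analyticAt_fun_sum _ fun j _ => ((h5 j).sub (h4 j)).mul ((h1 j).1 i), ?_⟩, ?_⟩
  · calc ‖∑ j, (d' j y - e j y) * E K j i y‖ ≤ ∑ j, ‖(d' j y - e j y) * E K j i y‖ := norm_sum_le _ _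
      _ ≤ ∑ j, (ε / ∑ k, M k) * ‖E K j i y‖ := Finset.sum_le_sum fun j _ => by
          rw [norm_mul, norm_sub_rev]
          exact mul_le_mul_of_nonneg_right (h3 j) (norm_nonneg _)
      _ = (ε / ∑ k, M k) * ∑ j, ‖E K j i y‖ := by rw [Finset.mul_sum]
      _ ≤ (ε / ∑ k, M k) * ∑ k, M k := mul_le_mul_of_nonneg_left ((h2 i).trans
          (Finset.single_le_sum (f := M) (fun k _ => (hM0 k).le) (Finset.mem_univ K))) (by positivity)
      _ = ε := by field_simp
  · intro q
    have e1 : ∑ j, d j y * t m j y q = ∑ j, e j y * t (m + 1) j y q := by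
      simp_rw [he, Finset.sum_mul]
      rw [Finset.sum_comm]
      refine Finset.sum_congr rfl fun i _ => ?_
      rw [(h6 i).2 q, Finset.mul_sum]
      exact Finset.sum_congr rfl fun j _ => by ring
    rw [e1, ← Finset.sum_sub_distrib]
    simp_rw [Finset.sum_mul]
    rw [Finset.sum_comm]
    refine Finset.sum_congr rfl fun j _ => ?_
    rw [(h1 j).2 q, ← sub_mul, Finset.mul_sum]
    exact Finset.sum_congr rfl fun i _ => by ring

/-- Weak form of Theorem A on an increasing union of boxes: the value at a point of a local section
of a coherent module is approximated by values of global sections. -/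
theorem weakA {α β : ℕ → Fin n × Bool → ℝ} (hαβ : ∀ m i, α m i ≤ β m i)
    (hα : Antitone α) (hβ : Monotone β)
    {F : (Fin n → ℂ) → ((Fin n → ℂ) → κ → ℂ) → Prop}
    (hF : ∀ m, ∀ y ∈ Bx (α m) (β m), FG F (𝓝 y)) {x : Fin n → ℂ} (hx : x ∈ Bx (α 0) (β 0))
    {c : (Fin n → ℂ) → κ → ℂ} (hc : F x c) {ε : ℝ} (hε : 0 < ε) :
    ∃ h : (Fin n → ℂ) → κ → ℂ, (∀ m, ∀ y ∈ interior (Bx (α m) (β m)), F y h) ∧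
      ∀ q, ‖h x q - c x q‖ ≤ ε := by
  have hA := fun m => (cartan_box (hαβ m)).1 κ F (hF m)
  choose l il t ht using hA
  have hsub : ∀ {k m}, k ≤ m → Bx (α k) (β k) ⊆ Bx (α m) (β m) := fun h =>
    Bx_sub (hα h) (hβ h)
  obtain ⟨d0, -, hd0⟩ := ((nhdsSet_self (ht 0) x hx).2 c).1 hc
  have hd0 := hd0.self_of_nhds
  obtain ⟨T, hT⟩ : ∃ T : ℝ, ∀ q, ∑ i, ‖t 0 i x q‖ ≤ T := by
    cases nonempty_fintype κ
    exact ⟨∑ q, ∑ i, ‖t 0 i x q‖, fun q => Finset.single_le_sum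
      (f := fun q => ∑ i, ‖t 0 i x q‖) (fun q _ => Finset.sum_nonneg fun i _ => norm_nonneg _)
      (Finset.mem_univ q)⟩
  set η : ℝ := ε / (|T| + 1) with hη
  have hη0 : 0 < η := by positivity
  choose! D hD hDr using fun m d hd => ml_step hαβ hα hβ ht m d hd
    (ε := η * (1 / 2 / 2 ^ m)) (by positivity)
  let d : ∀ m, l m → (Fin n → ℂ) → ℂ := fun m => Nat.rec (fun j _ => d0 j x) (fun m d => D m d) m
  have hd : ∀ m, ∀ᶠ y in 𝓝ˢ (Bx (α m) (β m)), ∀ j, AnalyticAt ℂ (d m j) y := by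
    intro m
    induction m with
    | zero => exact Eventually.of_forall fun y j => analyticAt_const
    | succ m ih => exact hD m _ ih
  have hr := fun m => hDr m (d m) (hd m)
  choose! r hr using hr
  let f : ℕ → (Fin n → ℂ) → κ → ℂ := fun m y q => ∑ j, d m j y * t m j y q
  have hf : ∀ k m, k ≤ m → ∀ y ∈ Bx (α k) (β k), ∀ q,
      f (m + 1) y q - f m y q = ∑ i, r m k i y * t k i y q := fun k m hkm y hy q =>
    (nhdsSet_self (hr m k hkm) y hy).2 q
  have hrb : ∀ k m, k ≤ m → ∀ y ∈ Bx (α k) (β k), ∀ i,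
      AnalyticAt ℂ (r m k i) y ∧ ‖r m k i y‖ ≤ η * (1 / 2 / 2 ^ m) := fun k m hkm y hy i =>
    (nhdsSet_self (hr m k hkm) y hy).1 i
  have hsum : ∀ k, Summable fun m : ℕ => η * (1 / 2 / 2 ^ (k + m)) := by
    intro k
    have := (summable_geometric_two' (1:ℝ)).mul_left η
    exact ((summable_nat_add_iff k).2 this).congr fun m => by rw [add_comm]
  -- partial sums of the coefficients over `K k`
  let R : ∀ k, l k → ℕ → (Fin n → ℂ) → ℂ := fun k i N y =>
    d k i y + ∑ m ∈ Finset.range N, r (k + m) k i y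
  have hR : ∀ k N, ∀ y ∈ Bx (α k) (β k), ∀ q, f (k + N) y q = ∑ i, R k i N y * t k i y q := by
    intro k N y hy q
    induction N with
    | zero => simp [R, f]
    | succ N ih =>
      have := hf k (k + N) (Nat.le_add_right _ _) y hy q
      rw [← add_assoc, ← sub_add_cancel (f (k + N + 1) y q) (f (k + N) y q), this, ih,
        ← Finset.sum_add_distrib]
      refine Finset.sum_congr rfl fun i _ => ?_
      simp only [R, Finset.sum_range_succ]
      ring
  have hlim : ∀ k i, TendstoUniformlyOn (R k i) (fun y => d k i y + ∑' m, r (k + m) k i y) atTop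
      (Bx (α k) (β k)) := by
    intro k i
    have := tendstoUniformlyOn_tsum_nat (f := fun m => r (k + m) k i) (hsum k)
      (s := Bx (α k) (β k)) fun m y hy => (hrb k (k + m) (Nat.le_add_right _ _) y hy i).2
    rw [Metric.tendstoUniformlyOn_iff] at this ⊢
    intro ε hε
    filter_upwards [this ε hε] with N hN y hy
    simpa [R] using hN y hy
  let Q : ∀ k, l k → (Fin n → ℂ) → ℂ := fun k i y => d k i y + ∑' m, r (k + m) k i y
  have hQ : ∀ k i, ∀ y ∈ interior (Bx (α k) (β k)), AnalyticAt ℂ (Q k i) y := by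
    intro k i y hy
    refine analytic_of_limit isOpen_interior (F := R k i) (fun N z hz => ?_)
      ((hlim k i).mono interior_subset).tendstoLocallyUniformlyOn hy
    exact (nhdsSet_self (hd k) z (interior_subset hz) i).add (Finset.analyticAt_fun_sum _ fun m _ =>
      (hrb k (k + m) (Nat.le_add_right _ _) z (interior_subset hz) i).1)
  have hft : ∀ k, ∀ y ∈ Bx (α k) (β k), ∀ q,
      Tendsto (fun m => f m y q) atTop (𝓝 (∑ i, Q k i y * t k i y q)) := by
    intro k y hy q
    rw [← tendsto_add_atTop_iff_nat k]
    have : Tendsto (fun N => ∑ i, R k i N y * t k i y q) atTop (𝓝 (∑ i, Q k i y * t k i y q)) :=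
      tendsto_finsetSum _ fun i _ => ((hlim k i).tendsto_at hy).mul_const _
    exact this.congr fun N => by rw [← hR k N y hy q, add_comm]
  refine ⟨fun y q => limUnder atTop fun m => f m y q, fun k y hy => ?_, fun q => ?_⟩
  · refine ((nhdsSet_self (ht k) y (interior_subset hy)).2 _).2 ⟨Q k, fun i => hQ k i y hy, ?_⟩
    filter_upwards [isOpen_interior.mem_nhds hy] with z hz q
    exact (hft k z (interior_subset hz) q).limUnder_eq
  · beta_reduce
    rw [(hft 0 x hx q).limUnder_eq, hd0 q, ← Finset.sum_sub_distrib]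
    have hQb : ∀ i, ‖Q 0 i x - d0 i x‖ ≤ η := by
      intro i
      have : Q 0 i x - d0 i x = ∑' m, r (0 + m) 0 i x := by
        show d0 i x + _ - _ = _
        ring
      rw [this]
      refine tsum_of_norm_bounded (a := η) (g := fun m : ℕ => η * (1 / 2 / 2 ^ m)) ?_ fun m => ?_
      · simpa using (hasSum_geometric_two' (1:ℝ)).mul_left η
      · have := (hrb 0 (0 + m) (Nat.zero_le _) x hx i).2
        rwa [zero_add] at this ⊢
    calc ‖∑ i, (Q 0 i x * t 0 i x q - d0 i x * t 0 i x q)‖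
        ≤ ∑ i, η * ‖t 0 i x q‖ := norm_sum_le_of_le _ fun i _ => by
          rw [← sub_mul, norm_mul]
          exact mul_le_mul_of_nonneg_right (hQb i) (norm_nonneg _)
      _ = η * ∑ i, ‖t 0 i x q‖ := by rw [Finset.mul_sum]
      _ ≤ η * (|T| + 1) := mul_le_mul_of_nonneg_left
          ((hT q).trans ((le_abs_self T).trans (by linarith))) hη0.le
      _ = ε := by rw [hη]; field_simp

end ML

/-! ### Shrinking a tube into a neighbourhood of real space -/

section theta

/-- The slowly decaying function `ρ ↦ ∑ 1 / (ρ + a k)` on the right half plane. -/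
noncomputable def Th (a : ℕ → ℝ) (ρ : ℂ) : ℂ := ∑' k, (ρ + a k)⁻¹

/-- The growth rate of the sequence `a`; the tail of `∑ 1 / (X + a k)` is then geometric. -/
structure Fast (a : ℕ → ℝ) : Prop where
  one : ∀ k, 1 ≤ a k
  dbl : ∀ k, 2 * a k ≤ a (k + 1)

variable {a : ℕ → ℝ}

theorem Fast.le (ha : Fast a) (m k : ℕ) : 2 ^ k * a m ≤ a (m + k) := by
  induction k with
  | zero => simp
  | succ k ih => have := ha.dbl (m + k); rw [pow_succ, ← add_assoc]; linarith

theorem Fast.tail (ha : Fast a) (m : ℕ) {X : ℝ} (hX : 0 < X) :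
    Summable (fun k => (X + a (m + k))⁻¹) ∧ ∑' k, (X + a (m + k))⁻¹ ≤ 2 / a m := by
  have hg : HasSum (fun k : ℕ => 2 / a m / 2 / 2 ^ k) (2 / a m) := hasSum_geometric_two' _
  have h0 : ∀ k, 0 < a k := fun k => by linarith [ha.one k]
  have hle : ∀ k, (X + a (m + k))⁻¹ ≤ 2 / a m / 2 / 2 ^ k := by
    intro k
    have h1 : (X + a (m + k))⁻¹ ≤ (2 ^ k * a m)⁻¹ := by
      have := h0 m
      exact inv_anti₀ (by positivity) (by linarith [ha.le m k])
    refine h1.trans (le_of_eq ?_)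
    have := (h0 m).ne'
    field_simp
  have hs : Summable (fun k => (X + a (m + k))⁻¹) :=
    Summable.of_nonneg_of_le (fun k => by have := h0 (m + k); positivity) hle hg.summable
  exact ⟨hs, (hs.tsum_le_tsum hle hg.summable).trans_eq hg.tsum_eq⟩

theorem Fast.summable (ha : Fast a) {X : ℝ} (hX : 0 < X) : Summable fun k => (X + a k)⁻¹ := by
  simpa using (ha.tail 0 hX).1

theorem Fast.summable' (ha : Fast a) : Summable fun k => (a k)⁻¹ := by
  refine ((ha.summable one_pos).mul_left 2).of_nonneg_of_le
    (fun k => by have := ha.one k; positivity) fun k => ?_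
  have h1 := ha.one k
  have h0 : 0 < a k := by linarith
  rw [← div_eq_mul_inv, inv_eq_one_div, div_le_div_iff₀ h0 (by linarith)]
  linarith

theorem norm_add_ge {ρ : ℂ} {b : ℝ} : ρ.re + b ≤ ‖ρ + b‖ :=
  (by simpa using Complex.re_le_norm (ρ + b))

theorem norm_inv_le {ρ : ℂ} {b : ℝ} (hρ : 0 < ρ.re) (hb : 1 ≤ b) : ‖(ρ + b)⁻¹‖ ≤ (ρ.re + b)⁻¹ := by
  rw [norm_inv]
  exact inv_anti₀ (by linarith) norm_add_ge

theorem ne_add {ρ : ℂ} {b : ℝ} (hρ : 0 < ρ.re) (hb : 1 ≤ b) : ρ + b ≠ 0 := fun h => by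
  have := congrArg Complex.re h
  simp at this
  linarith

theorem Th_deriv (ha : Fast a) {ρ : ℂ} (hρ : 0 < ρ.re) :
    AnalyticAt ℂ (Th a) ρ ∧ HasDerivAt (Th a) (∑' k, -((ρ + a k) ^ 2)⁻¹) ρ ∧
      Summable (fun k => -((ρ + a k) ^ 2)⁻¹) := by
  have hU : IsOpen {z : ℂ | 0 < z.re} := isOpen_lt continuous_const Complex.continuous_re
  have hd : ∀ k, ∀ z ∈ {z : ℂ | 0 < z.re}, HasDerivAt (fun z : ℂ => (z + a k)⁻¹) (-((z + a k) ^ 2)⁻¹) z := by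
    intro k z hz
    have := ((hasDerivAt_id z).add_const (a k : ℂ)).inv (ne_add hz (ha.one k))
    refine (this.congr_deriv ?_)
    simp [neg_div]
  have hb : ∀ k, ∀ z ∈ {z : ℂ | 0 < z.re}, ‖(z + a k)⁻¹‖ ≤ (a k)⁻¹ := by
    intro k z hz
    have h1 := ha.one k
    exact (norm_inv_le hz h1).trans (inv_anti₀ (by linarith) (by have : 0 < z.re := hz; linarith))
  have hD := Complex.differentiableOn_tsum_of_summable_norm ha.summable'
    (fun k z hz => (hd k z hz).differentiableAt.differentiableWithinAt) hU hb
  have hS := Complex.hasSum_deriv_of_summable_norm ha.summable'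
    (fun k z hz => (hd k z hz).differentiableAt.differentiableWithinAt) hU hb hρ
  simp_rw [(hd _ ρ hρ).deriv] at hS
  refine ⟨hD.analyticAt (hU.mem_nhds hρ), ?_, hS.summable⟩
  rw [hS.tsum_eq]
  exact (hD.differentiableAt (hU.mem_nhds hρ)).hasDerivAt

/-- The square of the radius `|Φ(w)|` as a function of `ρ = √(1 + |w|²)`. -/
noncomputable def MM (a : ℕ → ℝ) (ρ : ℂ) : ℂ := (ρ ^ 2 - 1) * Th a ρ ^ 2

theorem Th_real (ρ : ℝ) : Th a ρ = ((∑' k, (ρ + a k)⁻¹ : ℝ) : ℂ) := by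
  simp [Th, Complex.ofReal_tsum]

theorem Th_pos (ha : Fast a) {ρ : ℝ} (hρ : 0 < ρ) : 0 < ∑' k, (ρ + a k)⁻¹ := by
  have h0 : ∀ k, 0 < (ρ + a k)⁻¹ := fun k => by have := ha.one k; positivity
  exact (ha.summable hρ).tsum_pos (fun k => (h0 k).le) 0 (h0 0)

theorem Th_ne (ha : Fast a) {ρ : ℝ} (hρ : 0 < ρ) : Th a ρ ≠ 0 := by
  rw [Th_real]; exact_mod_cast (Th_pos ha hρ).ne'

theorem MM_real (ρ : ℝ) : MM a ρ = (((ρ ^ 2 - 1) * (∑' k, (ρ + a k)⁻¹) ^ 2 : ℝ) : ℂ) := by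
  simp [MM, Th_real]

theorem MM_deriv (ha : Fast a) {ρ : ℝ} (hρ : 1 ≤ ρ) :
    ∃ D : ℝ, 0 < D ∧ HasDerivAt (MM a) D ρ := by
  have hρ0 : 0 < ρ := by linarith
  obtain ⟨-, hT, hS⟩ := Th_deriv ha (ρ := ρ) (by simpa)
  have h2 : ((∑' k, -((ρ + a k) ^ 2)⁻¹ : ℝ) : ℂ) = ∑' k, -((ρ + a k : ℂ) ^ 2)⁻¹ := by
    simp [Complex.ofReal_tsum]
  have hS' : Summable fun k => -((ρ + a k) ^ 2)⁻¹ := by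
    have : Summable fun k => ((-((ρ + a k) ^ 2)⁻¹ : ℝ) : ℂ) := hS.congr fun k => by push_cast; rfl
    exact Complex.summable_ofReal.1 this
  rw [← h2] at hT
  set T := ∑' k, (ρ + a k)⁻¹ with hTd
  set T' := ∑' k, -((ρ + a k) ^ 2)⁻¹ with hT'
  have key : 0 < ρ * T + (ρ ^ 2 - 1) * T' := by
    rw [hTd, hT', ← tsum_mul_left, ← tsum_mul_left, ← ((ha.summable hρ0).mul_left ρ).tsum_add (hS'.mul_left _)]
    have e : ∀ k, ρ * (ρ + a k)⁻¹ + (ρ ^ 2 - 1) * -((ρ + a k) ^ 2)⁻¹ = (a k * ρ + 1) / (ρ + a k) ^ 2 := by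
      intro k
      have : ρ + a k ≠ 0 := by have := ha.one k; positivity
      field_simp
      ring
    have h0 : ∀ k, 0 < ρ * (ρ + a k)⁻¹ + (ρ ^ 2 - 1) * -((ρ + a k) ^ 2)⁻¹ := fun k => by
      rw [e]; have := ha.one k; positivity
    exact (((ha.summable hρ0).mul_left ρ).add (hS'.mul_left _)).tsum_pos (fun k => (h0 k).le) 0 (h0 0)
  have hTp := Th_pos ha hρ0
  refine ⟨2 * T * (ρ * T + (ρ ^ 2 - 1) * T'), by positivity, ?_⟩
  have h := (((hasDerivAt_id (ρ : ℂ)).pow 2).sub_const 1).mul (hT.pow 2)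
  refine h.congr_deriv ?_
  simp only [id, Pi.pow_apply]
  rw [Th_real, ← hTd]
  push_cast
  ring

/-- The real inverse of `MM`, with its local holomorphic extensions. -/
theorem MM_inv (ha : Fast a) : ∃ g : ℝ → ℝ, (∀ u : ℝ, 0 ≤ u → 1 ≤ g u ∧ MM a (g u) = u) ∧
    ∀ u : ℝ, 0 ≤ u → ∃ m : ℂ → ℂ, AnalyticAt ℂ m u ∧ m u = g u ∧ (∀ᶠ z in 𝓝 (u : ℂ), MM a (m z) = z) ∧
      ∀ᶠ v : ℝ in 𝓝 u, 0 ≤ v → m (v : ℂ) = g v := by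
  let N : ℝ → ℝ := fun ρ => (ρ ^ 2 - 1) * (∑' k, (ρ + a k)⁻¹) ^ 2
  have hN : ∀ ρ : ℝ, MM a ρ = N ρ := fun ρ => MM_real ρ
  have hNd : ∀ ρ : ℝ, 1 ≤ ρ → ∃ D, 0 < D ∧ HasDerivAt N D ρ := by
    intro ρ hρ
    obtain ⟨D, hD, h⟩ := MM_deriv ha hρ
    refine ⟨D, hD, ?_⟩
    have := h.real_of_complex
    simp only [hN, Complex.ofReal_re] at this
    exact this
  have hNc : ContinuousOn N (Ici 1) := fun ρ hρ =>
    let ⟨_, _, h⟩ := hNd ρ hρ; h.continuousAt.continuousWithinAt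
  have hNm : StrictMonoOn N (Ici 1) := by
    refine strictMonoOn_of_deriv_pos (convex_Ici 1) hNc fun ρ hρ => ?_
    obtain ⟨D, hD, h⟩ := hNd ρ (interior_subset hρ)
    rwa [h.deriv]
  have hbig : ∀ u, ∃ ρ, 1 ≤ ρ ∧ u ≤ N ρ := by
    intro u
    obtain ⟨m, hm⟩ := exists_nat_gt (max u 1)
    have hm1 : 1 < (m : ℝ) := (le_max_right u 1).trans_lt hm
    have ham : (2 : ℝ) ≤ a (2 * m) := by
      have h1 := ha.le 0 (2 * m)
      have h2 := ha.one 0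
      have h3 : (2:ℝ) ^ 1 ≤ 2 ^ (2 * m) := pow_le_pow_right₀ one_le_two (by
        have : 1 < m := by exact_mod_cast hm1
        omega)
      rw [zero_add] at h1
      nlinarith
    have hpos : ∀ k, 0 ≤ (a (2 * m) + a k)⁻¹ := fun k => by
      have := ha.one k; have := ha.one (2 * m); positivity
    have hS := ((ha.summable (show 0 < a (2 * m) by linarith)).sum_le_tsum (Finset.range (2 * m))
      fun k _ => hpos k)
    have hmono : ∀ k ∈ Finset.range (2 * m), (2 * a (2 * m))⁻¹ ≤ (a (2 * m) + a k)⁻¹ := by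
      intro k hk
      have h1 := ha.one k
      have h2 : a k ≤ a (2 * m) := by
        have := ha.le k (2 * m - k)
        rw [Nat.add_sub_cancel' (Finset.mem_range.1 hk).le] at this
        have h3 : (1:ℝ) ≤ 2 ^ (2 * m - k) := one_le_pow₀ one_le_two
        nlinarith
      exact inv_anti₀ (by linarith) (by linarith)
    have hS2 := Finset.card_nsmul_le_sum _ _ _ hmono
    rw [Finset.card_range, nsmul_eq_mul] at hS2
    refine ⟨a (2 * m), by linarith, ?_⟩
    set A := a (2 * m)
    set S := ∑' k, (A + a k)⁻¹ with hSd
    have hA0 : (0:ℝ) < A := by linarith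
    have h4 : (m : ℝ) ≤ A * S := by
      have : ((2 * m : ℕ) : ℝ) * (2 * A)⁻¹ ≤ S := hS2.trans hS
      have h5 := mul_le_mul_of_nonneg_left this hA0.le
      have h6 : A * (((2 * m : ℕ) : ℝ) * (2 * A)⁻¹) = m := by push_cast; field_simp
      linarith
    show u ≤ (A ^ 2 - 1) * S ^ 2
    have h7 : (m:ℝ) ^ 2 ≤ (A * S) ^ 2 := pow_le_pow_left₀ (by linarith) h4 2
    have h8 : u < m := (le_max_left u 1).trans_lt hm
    have h9 : 3 / 4 * A ^ 2 ≤ A ^ 2 - 1 := by nlinarith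
    have h10 : 3 / 4 * A ^ 2 * S ^ 2 ≤ (A ^ 2 - 1) * S ^ 2 := mul_le_mul_of_nonneg_right h9 (sq_nonneg S)
    have hm2 : 2 ≤ (m : ℝ) := by exact_mod_cast (show 1 < m by exact_mod_cast hm1)
    nlinarith
  have hN1 : N 1 = 0 := by simp [N]
  have hex : ∀ u, 0 ≤ u → ∃ ρ, 1 ≤ ρ ∧ N ρ = u := by
    intro u hu
    obtain ⟨R, hR, h⟩ := hbig u
    obtain ⟨ρ, hρ, e⟩ := intermediate_value_Icc hR (hNc.mono Icc_subset_Ici_self)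
      (show u ∈ Icc (N 1) (N R) from ⟨by rwa [hN1], h⟩)
    exact ⟨ρ, hρ.1, e⟩
  choose! g hg1 hg using hex
  refine ⟨g, fun u hu => ⟨hg1 u hu, by rw [hN, hg u hu]⟩, fun u hu => ?_⟩
  obtain ⟨D, hD, hMd⟩ := MM_deriv ha (hg1 u hu)
  have hMa : AnalyticAt ℂ (MM a) (g u) := by
    have := (Th_deriv ha (ρ := g u) (by simpa using one_pos.trans_le (hg1 u hu))).1
    exact ((analyticAt_id.pow 2).sub analyticAt_const).mul (this.pow 2)
  have hne : deriv (MM a) (g u) ≠ 0 := by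
    rw [hMd.deriv]; exact_mod_cast hD.ne'
  have hMu : MM a (g u) = u := by rw [hN, hg u hu]
  have hcont : ∀ᶠ (p : ℂ) in 𝓝 (g u : ℂ), hMa.hasStrictDerivAt.localInverse _ _ _ hne (MM a p) = p :=
    HasStrictDerivAt.eventually_left_inverse _ hne
  refine ⟨hMa.hasStrictDerivAt.localInverse _ _ _ hne, ?_, ?_, ?_, ?_⟩
  · have := hMa.analyticAt_localInverse hne
    rwa [hMu] at this
  · have := hcont.self_of_nhds
    rwa [hMu] at this
  · have := HasStrictDerivAt.eventually_right_inverse hMa.hasStrictDerivAt hne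
    rwa [hMu] at this
  · have hgc : Tendsto g (𝓝[Ici 0] u) (𝓝 (g u)) := by
      have hmem : ∀ᶠ v in 𝓝[Ici 0] u, 0 ≤ v := self_mem_nhdsWithin
      rw [tendsto_order]
      constructor
      · intro b hb
        by_cases hb1 : 1 ≤ b
        · have : N b < u := by rw [← hg u hu]; exact hNm hb1 (hg1 u hu) hb
          filter_upwards [hmem, nhdsWithin_le_nhds (lt_mem_nhds this)] with v hv hv2
          have hv2 : N b < v := hv2
          rw [← hg v hv] at hv2
          exact (hNm.lt_iff_lt hb1 (hg1 v hv)).1 hv2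
        · filter_upwards [hmem] with v hv
          exact (not_le.1 hb1).trans_le (hg1 v hv)
      · intro b hb
        have hb1 : 1 ≤ b := (hg1 u hu).trans hb.le
        have : u < N b := by rw [← hg u hu]; exact hNm (hg1 u hu) hb1 hb
        filter_upwards [hmem, nhdsWithin_le_nhds (gt_mem_nhds this)] with v hv hv2
        have hv2 : v < N b := hv2
        rw [← hg v hv] at hv2
        exact (hNm.lt_iff_lt (hg1 v hv) hb1).1 hv2
    have h2 := (Complex.continuous_ofReal.continuousAt.tendsto.comp hgc).eventually hcont
    rw [eventually_nhdsWithin_iff] at h2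
    filter_upwards [h2] with v hv hv0
    have := hv hv0
    simp only [Function.comp, hN, hg v hv0] at this
    exact this

end theta

section shrink
variable {n : ℕ}

/-- The embedding of `ℝⁿ` into `ℂⁿ`. -/
noncomputable def rc (x : Fin n → ℝ) : Fin n → ℂ := fun i => (x i : ℂ)

/-- The branch of `√(1 + ∑ wᵢ²)` with positive real part. -/
noncomputable def rho (w : Fin n → ℂ) : ℂ := Complex.exp (Complex.log (1 + ∑ i, w i ^ 2) / 2)

/-- The radial map `w ↦ Θ(ρ(w)) w`. -/
noncomputable def Ph (a : ℕ → ℝ) (w : Fin n → ℂ) : Fin n → ℂ := fun i => w i * Th a (rho w)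

theorem sqrt_re_pos {s : ℂ} (hs : 0 < s.re) : 0 < (Complex.exp (Complex.log s / 2)).re := by
  rw [Complex.exp_re]
  refine mul_pos (Real.exp_pos _) (Real.cos_pos_of_mem_Ioo ?_)
  have h : |s.arg| < Real.pi / 2 := Complex.abs_arg_lt_pi_div_two_iff.2 (Or.inl hs)
  have him : (Complex.log s / 2).im = s.arg / 2 := by simp [Complex.log_im]
  rw [him]
  have := abs_lt.1 h
  constructor <;> linarith [Real.pi_pos]

theorem sqrt_sq {s : ℂ} (hs : s ≠ 0) : Complex.exp (Complex.log s / 2) ^ 2 = s := by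
  rw [← Complex.exp_nat_mul]
  push_cast
  rw [mul_div_cancel₀ _ two_ne_zero, Complex.exp_log hs]

theorem sqrt_unique {r : ℂ} (hr : 0 < r.re) {s : ℂ} (hs : 0 < s.re) (h : r ^ 2 = s) :
    Complex.exp (Complex.log s / 2) = r := by
  have hs0 : s ≠ 0 := fun h => by simp [h] at hs
  have := sqrt_sq hs0
  rw [← h, sq_eq_sq_iff_eq_or_eq_neg] at this
  rcases this with e | e
  · rwa [h] at e
  · have h1 := sqrt_re_pos hs
    rw [← h, e, Complex.neg_re] at h1
    linarith

/-- The basic estimates for `ρ` on the tube `|Im w| ≤ δ`. -/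
theorem rho_est {δ : ℝ} (hδ0 : 0 ≤ δ) (hδ : n * δ ≤ 1 / 2) (hδ1 : δ ≤ 1) {w : Fin n → ℂ} (hw : ∀ i, |(w i).im| ≤ δ) :
    0 < (1 + ∑ i, w i ^ 2).re ∧ 0 < (rho w).re ∧ (∀ i, |(w i).re| ≤ (rho w).re) ∧ |(rho w).im| ≤ 1 := by
  have hre : (1 + ∑ i, w i ^ 2).re = 1 + ∑ i, ((w i).re ^ 2 - (w i).im ^ 2) := by
    simp [sq]
  have him : (1 + ∑ i, w i ^ 2).im = 2 * ∑ i, (w i).re * (w i).im := by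
    simp [sq, Finset.mul_sum]
    exact Finset.sum_congr rfl fun i _ => by ring
  have hy : ∑ i, (w i).im ^ 2 ≤ 1 / 2 := by
    calc ∑ i, (w i).im ^ 2 ≤ ∑ i : Fin n, δ := Finset.sum_le_sum fun i _ => by
          rw [← sq_abs]
          nlinarith [hw i, abs_nonneg (w i).im]
      _ = n * δ := by simp
      _ ≤ _ := hδ
  have hx0 : 0 ≤ ∑ i, (w i).re ^ 2 := Finset.sum_nonneg fun i _ => sq_nonneg _
  rw [Finset.sum_sub_distrib] at hre
  have hs : 0 < (1 + ∑ i, w i ^ 2).re := by rw [hre]; linarith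
  have hs0 : 1 + ∑ i, w i ^ 2 ≠ 0 := fun h => by simp [h] at hs
  have hρ : 0 < (rho w).re := sqrt_re_pos hs
  have hsq : rho w ^ 2 = 1 + ∑ i, w i ^ 2 := sqrt_sq hs0
  have e1 : (rho w).re ^ 2 - (rho w).im ^ 2 = 1 + ∑ i, (w i).re ^ 2 - ∑ i, (w i).im ^ 2 := by
    have := congrArg Complex.re hsq
    rw [hre] at this
    rw [add_sub_assoc, ← this]; simp [sq]
  have e2 : (rho w).re * (rho w).im = ∑ i, (w i).re * (w i).im := by
    have := congrArg Complex.im hsq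
    rw [him] at this
    simp [sq] at this
    linarith
  have h3 : ∀ i, |(w i).re| ≤ (rho w).re := by
    intro i
    refine abs_le_of_sq_le_sq ?_ hρ.le
    have := Finset.single_le_sum (f := fun i => (w i).re ^ 2) (fun i _ => sq_nonneg _) (Finset.mem_univ i)
    nlinarith [sq_nonneg (rho w).im]
  refine ⟨hs, hρ, h3, ?_⟩
  have h4 : |(rho w).re * (rho w).im| ≤ n * δ * (rho w).re := by
    rw [e2]
    calc |∑ i, (w i).re * (w i).im| ≤ ∑ i, |(w i).re * (w i).im| := Finset.abs_sum_le_sum_abs _ _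
      _ ≤ ∑ i : Fin n, (rho w).re * δ := Finset.sum_le_sum fun i _ => by
          rw [abs_mul]
          exact mul_le_mul (h3 i) (hw i) (abs_nonneg _) hρ.le
      _ = _ := by simp; ring
  rw [abs_mul, abs_of_pos hρ] at h4
  nlinarith

theorem rho_analytic {w : Fin n → ℂ} (h : 0 < (1 + ∑ i, w i ^ 2).re) : AnalyticAt ℂ rho w := by
  have h1 : AnalyticAt ℂ (fun w : Fin n → ℂ => 1 + ∑ i, w i ^ 2) w :=
    analyticAt_const.add (Finset.analyticAt_fun_sum _ fun i _ =>
      ((ContinuousLinearMap.proj (R := ℂ) (φ := fun _ : Fin n => ℂ) i).analyticAt w).pow 2)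
  exact ((h1.clog (Or.inl h)).div_const).cexp

theorem Ph_analytic {a : ℕ → ℝ} (ha : Fast a) {w : Fin n → ℂ} (h : 0 < (1 + ∑ i, w i ^ 2).re) :
    AnalyticAt ℂ (Ph a) w := by
  have hT : AnalyticAt ℂ (fun w : Fin n → ℂ => Th a (rho w)) w :=
    AnalyticAt.comp (g := Th a) (Th_deriv ha (ρ := rho w) (sqrt_re_pos h)).1 (rho_analytic h)
  exact AnalyticAt.pi fun i => ((ContinuousLinearMap.proj (R := ℂ) (φ := fun _ : Fin n => ℂ) i).analyticAt w).mul hT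

theorem Th_est {a : ℕ → ℝ} (ha : Fast a) {ρ : ℂ} (hρ : 0 < ρ.re) (hi : |ρ.im| ≤ 1) :
    ‖Th a ρ‖ ≤ ∑' k, (ρ.re + a k)⁻¹ ∧ ρ.re * |(Th a ρ).im| ≤ ∑' k, (ρ.re + a k)⁻¹ := by
  have hs := ha.summable hρ
  have hsc : Summable fun k => (ρ + a k)⁻¹ := Summable.of_norm_bounded hs fun k => norm_inv_le hρ (ha.one k)
  refine ⟨tsum_of_norm_bounded hs.hasSum fun k => norm_inv_le hρ (ha.one k), ?_⟩
  have him : (Th a ρ).im = ∑' k, ((ρ + a k)⁻¹).im := Complex.im_tsum hsc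
  rw [← abs_of_pos hρ, ← abs_mul, abs_of_pos hρ, him, ← tsum_mul_left]
  refine tsum_of_norm_bounded (f := fun k => ρ.re * ((ρ + a k)⁻¹).im) hs.hasSum fun k => ?_
  have h1 := ha.one k
  rw [Complex.inv_im, norm_mul, Real.norm_eq_abs, Real.norm_eq_abs, abs_of_pos hρ, abs_div, abs_neg,
    abs_of_nonneg (Complex.normSq_nonneg _), Complex.normSq_eq_norm_sq]
  have h2 : ρ.re + a k ≤ ‖ρ + a k‖ := norm_add_ge
  have h3 : (ρ.re + a k) ^ 2 ≤ ‖ρ + a k‖ ^ 2 := pow_le_pow_left₀ (by linarith) h2 2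
  have h4 : (0:ℝ) < ρ.re + a k := by linarith
  have h5 : |(ρ + a k).im| ≤ 1 := by simpa using hi
  calc ρ.re * (|(ρ + a k).im| / ‖ρ + a k‖ ^ 2) ≤ (ρ.re + a k) * (1 / (ρ.re + a k) ^ 2) := by
        gcongr; linarith
    _ = (ρ.re + a k)⁻¹ := by field_simp

/-- A radial map shrinking a tube of constant width around `ℝⁿ` into a given neighbourhood `Ω` of
`ℝⁿ`; on `ℝⁿ` it has an inverse with local holomorphic extensions. -/
theorem shrink {Ω : Set (Fin n → ℂ)} (hΩ : IsOpen Ω) (hR : ∀ x : Fin n → ℝ, rc x ∈ Ω) :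
    ∃ (Φ : (Fin n → ℂ) → Fin n → ℂ) (δ : ℝ), 0 < δ ∧
      (∀ w, (∀ i, |(w i).im| ≤ δ) → AnalyticAt ℂ Φ w ∧ Φ w ∈ Ω) ∧
      ∃ Ψ : (Fin n → ℝ) → Fin n → ℝ, ∀ x, ∃ G : (Fin n → ℂ) → Fin n → ℂ, AnalyticAt ℂ G (rc x) ∧
        (∀ᶠ z in 𝓝 (rc x), Φ (G z) = z) ∧ ∀ᶠ x' in 𝓝 x, G (rc x') = rc (Ψ x') := by
  have hη : ∀ k : ℕ, ∃ η > 0, ∀ z : Fin n → ℂ, (∀ i, |(z i).re| ≤ k) → (∀ i, |(z i).im| ≤ η) → z ∈ Ω := by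
    intro k
    have hc : IsCompact (rc '' {x : Fin n → ℝ | ∀ i, x i ∈ Icc (-(k:ℝ)) k}) := by
      have h1 : IsCompact {x : Fin n → ℝ | ∀ i, x i ∈ Icc (-(k:ℝ)) k} := by
        have := isCompact_univ_pi (fun _ : Fin n => isCompact_Icc (a := -(k:ℝ)) (b := k))
        simpa [Set.pi] using this
      exact h1.image (continuous_pi fun i => Complex.continuous_ofReal.comp (continuous_apply i))
    obtain ⟨η, hη, h⟩ := hc.exists_cthickening_subset_open hΩ (by rintro _ ⟨x, _, rfl⟩; exact hR x)
    refine ⟨η, hη, fun z h1 h2 => h ?_⟩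
    refine Metric.mem_cthickening_of_dist_le z (rc fun i => (z i).re) η _ ⟨_, fun i => abs_le.1 (h1 i), rfl⟩ ?_
    rw [dist_pi_le_iff hη.le]
    intro i
    refine le_trans (le_of_eq ?_) (h2 i)
    rw [Complex.dist_eq, show z i - rc (fun i => (z i).re) i = ((z i).im : ℂ) * Complex.I by
      apply Complex.ext <;> simp [rc]]
    simp
  choose η hη0 hη using hη
  obtain ⟨a, ha, hab⟩ : ∃ a : ℕ → ℝ, Fast a ∧ ∀ m, 2 * (m + 3) / η (2 * m + 6) ≤ a m := by
    have hb0 : ∀ m : ℕ, 0 < 1 + 2 * ((m:ℝ) + 3) / η (2 * m + 6) := fun m => by have := hη0 (2 * m + 6); positivity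
    refine ⟨fun m => 2 ^ m * ∑ k ∈ Finset.range (m + 1), (1 + 2 * ((k:ℝ) + 3) / η (2 * k + 6)), ⟨fun m => ?_, fun m => ?_⟩,
      fun m => ?_⟩
    · have h1 := Finset.single_le_sum (f := fun k : ℕ => (1 + 2 * ((k:ℝ) + 3) / η (2 * k + 6)))
        (fun k _ => (hb0 k).le) (Finset.mem_range.2 (Nat.succ_pos m))
      have h2 : (1:ℝ) ≤ 2 ^ m := one_le_pow₀ one_le_two
      have h3 : 1 ≤ 1 + 2 * (((0:ℕ):ℝ) + 3) / η (2 * 0 + 6) := by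
        have := hη0 (2 * 0 + 6)
        have : 0 ≤ 2 * (((0:ℕ):ℝ) + 3) / η (2 * 0 + 6) := by positivity
        linarith
      nlinarith
    · rw [Finset.sum_range_succ _ (m + 1), pow_succ]
      have := hb0 (m + 1)
      have h2 : (0:ℝ) < 2 ^ m := by positivity
      nlinarith
    · have h1 := Finset.single_le_sum (f := fun k : ℕ => (1 + 2 * ((k:ℝ) + 3) / η (2 * k + 6)))
        (fun k _ => (hb0 k).le) (Finset.mem_range.2 (Nat.lt_succ_self m))
      have h2 : (1:ℝ) ≤ 2 ^ m := one_le_pow₀ one_le_two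
      have h3 := hb0 m
      nlinarith
  have hS : ∀ X : ℝ, 0 < X → ∃ k : ℕ, (1 + X) * ∑' j, (X + a j)⁻¹ ≤ k ∧ 2 * ∑' j, (X + a j)⁻¹ ≤ η k := by
    intro X hX
    have hex : ∃ m, X ≤ a m := by
      obtain ⟨m, hm⟩ := pow_unbounded_of_one_lt X one_lt_two
      refine ⟨m, hm.le.trans ?_⟩
      have h1 := ha.le 0 m
      rw [zero_add] at h1
      have h2 := ha.one 0
      have h3 : (0:ℝ) < 2 ^ m := by positivity
      nlinarith
    classical
    have hm := Nat.find_spec hex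
    have hmin := fun k => Nat.find_min (m := k) hex
    set m := Nat.find hex
    have hdec : ∑' j, (X + a j)⁻¹ ≤ m * X⁻¹ + 2 / a m := by
      rw [← (ha.summable hX).sum_add_tsum_nat_add m]
      have h1 : ∑ j ∈ Finset.range m, (X + a j)⁻¹ ≤ m * X⁻¹ := by
        have := Finset.sum_le_card_nsmul (Finset.range m) (fun j => (X + a j)⁻¹) X⁻¹
          fun j _ => inv_anti₀ hX (by linarith [ha.one j])
        simpa using this
      have h2 := (ha.tail m hX).2
      simp_rw [add_comm m] at h2
      linarith
    have ham := ha.one m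
    rcases Nat.eq_zero_or_pos m with h0 | hpos
    · refine ⟨6, ?_, ?_⟩
      · rw [h0] at hdec hm ham
        have h4 : (1 + X) * ∑' j, (X + a j)⁻¹ ≤ (1 + a 0) * (2 / a 0) :=
          mul_le_mul (by linarith) (by simpa using hdec) (tsum_nonneg fun k => by
            have := ha.one k; positivity) (by linarith)
        refine h4.trans ?_
        rw [mul_div_assoc', div_le_iff₀ (by linarith)]
        push_cast
        linarith
      · rw [h0] at hdec hm ham
        have h4 := hab 0
        have h5 := hη0 6
        simp only [Nat.cast_zero, zero_mul, zero_add, mul_zero] at h4 hdec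
        rw [div_le_iff₀ h5] at h4
        refine (mul_le_mul_of_nonneg_left hdec two_pos.le).trans ?_
        rw [mul_div_assoc', div_le_iff₀ (by linarith)]
        linarith
    · obtain ⟨p, hp⟩ : ∃ p, m = p + 1 := ⟨m - 1, by omega⟩
      have hpX : a p < X := not_le.1 (hmin p (by omega))
      have hp1 := ha.one p
      have h2 : 2 / a m ≤ 2 * X⁻¹ := by
        rw [← div_eq_mul_inv]
        exact div_le_div_of_nonneg_left two_pos.le hX hm
      have h3 : ∑' j, (X + a j)⁻¹ ≤ (p + 3) * X⁻¹ := by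
        have : (m:ℝ) = p + 1 := by exact_mod_cast hp
        rw [this] at hdec
        linarith
      refine ⟨2 * p + 6, ?_, ?_⟩
      · refine (mul_le_mul_of_nonneg_left h3 (by linarith)).trans ?_
        rw [← div_eq_mul_inv, mul_div_assoc', div_le_iff₀ hX]
        push_cast
        nlinarith [(Nat.cast_nonneg p : (0:ℝ) ≤ p)]
      · refine (mul_le_mul_of_nonneg_left h3 two_pos.le).trans ?_
        have h4 := hab p
        have h5 := hη0 (2 * p + 6)
        rw [div_le_iff₀ h5] at h4
        rw [← div_eq_mul_inv, mul_div_assoc', div_le_iff₀ hX]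
        nlinarith
  obtain ⟨g, hg, hgl⟩ := MM_inv ha
  refine ⟨Ph a, 1 / (2 * (n + 1)), by positivity, fun w hw => ?_, ?_⟩
  · have hd1 : (1:ℝ) / (2 * (n + 1)) ≤ 1 := by
      rw [div_le_iff₀ (by positivity)]; nlinarith [(Nat.cast_nonneg n : (0:ℝ) ≤ n)]
    obtain ⟨h1, h2, h3, h4⟩ := rho_est (δ := 1 / (2 * (n + 1))) (by positivity)
      (by rw [mul_one_div, div_le_div_iff₀ (by positivity) two_pos]; linarith) hd1 hw
    refine ⟨Ph_analytic ha h1, ?_⟩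
    obtain ⟨h5, h6⟩ := Th_est ha h2 h4
    obtain ⟨k, hk1, hk2⟩ := hS _ h2
    set S := ∑' j, ((rho w).re + a j)⁻¹
    have hS0 : 0 ≤ S := (norm_nonneg _).trans h5
    have hre := (Complex.abs_re_le_norm (Th a (rho w))).trans h5
    have him := (Complex.abs_im_le_norm (Th a (rho w))).trans h5
    refine hη k _ (fun i => ?_) fun i => ?_
    · refine le_trans ?_ hk1
      have e : (Ph a w i).re = (w i).re * (Th a (rho w)).re - (w i).im * (Th a (rho w)).im := by simp [Ph]
      rw [e]
      refine (abs_sub _ _).trans ?_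
      rw [abs_mul, abs_mul, add_comm, add_mul]
      exact add_le_add (mul_le_mul ((hw i).trans hd1) him (abs_nonneg _) zero_le_one)
        (mul_le_mul (h3 i) hre (abs_nonneg _) h2.le)
    · refine le_trans ?_ hk2
      have e : (Ph a w i).im = (w i).re * (Th a (rho w)).im + (w i).im * (Th a (rho w)).re := by simp [Ph]
      rw [e]
      refine (abs_add_le _ _).trans ?_
      rw [abs_mul, abs_mul, two_mul]
      refine add_le_add ((mul_le_mul_of_nonneg_right (h3 i) (abs_nonneg _)).trans h6) ?_
      have := mul_le_mul ((hw i).trans hd1) hre (abs_nonneg _) zero_le_one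
      rwa [one_mul] at this
  · -- the inverse is `x ↦ x / Θ(m(x·x))`, where `m` is the inverse of `MM`
    refine ⟨fun x i => x i / ∑' k, (g (∑ j, x j ^ 2) + a k)⁻¹, fun x => ?_⟩
    set u : ℝ := ∑ j, x j ^ 2 with hu
    have hu0 : 0 ≤ u := Finset.sum_nonneg fun j _ => sq_nonneg _
    obtain ⟨m, hm, hmu, hMm, hmg⟩ := hgl u hu0
    have hq : AnalyticAt ℂ (fun z : Fin n → ℂ => ∑ i, z i ^ 2) (rc x) :=
      Finset.analyticAt_fun_sum _ fun i _ =>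
        ((ContinuousLinearMap.proj (R := ℂ) (φ := fun _ : Fin n => ℂ) i).analyticAt _).pow 2
    have hqx : ∑ i, rc x i ^ 2 = (u : ℂ) := by simp [rc, hu]
    have hmq : AnalyticAt ℂ (fun z : Fin n → ℂ => m (∑ i, z i ^ 2)) (rc x) :=
      AnalyticAt.comp (g := m) (by rwa [hqx]) hq
    have hmx : m (∑ i, rc x i ^ 2) = g u := by rw [hqx, hmu]
    have hg1 := (hg u hu0).1
    have hT : AnalyticAt ℂ (fun z : Fin n → ℂ => Th a (m (∑ i, z i ^ 2))) (rc x) :=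
      AnalyticAt.comp (g := Th a) (by
        rw [hmx]
        exact (Th_deriv ha (by simpa using one_pos.trans_le hg1)).1) hmq
    have hTx : Th a (m (∑ i, rc x i ^ 2)) ≠ 0 := by
      rw [hmx]; exact Th_ne ha (by linarith)
    refine ⟨fun z i => z i / Th a (m (∑ i, z i ^ 2)), ?_, ?_, ?_⟩
    · exact AnalyticAt.pi fun i => ((ContinuousLinearMap.proj (R := ℂ)
        (φ := fun _ : Fin n => ℂ) i).analyticAt _).div hT hTx
    · have h1 : ∀ᶠ z in 𝓝 (rc x), MM a (m (∑ i, z i ^ 2)) = ∑ i, z i ^ 2 := by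
        have := hq.continuousAt.tendsto
        simp only [hqx] at this
        exact this.eventually hMm
      have h2 : ∀ᶠ z in 𝓝 (rc x), 0 < (m (∑ i, z i ^ 2) ^ 2).re := by
        have hc : ContinuousAt (fun z : Fin n → ℂ => (m (∑ i, z i ^ 2) ^ 2).re) (rc x) :=
          Complex.continuous_re.continuousAt.comp (hmq.pow 2).continuousAt
        refine hc.eventually (lt_mem_nhds ?_)
        simp only [hmx]
        rw [← Complex.ofReal_pow, Complex.ofReal_re]
        positivity
      have h3 : ∀ᶠ z in 𝓝 (rc x), 0 < (m (∑ i, z i ^ 2)).re := by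
        have hc : ContinuousAt (fun z : Fin n → ℂ => (m (∑ i, z i ^ 2)).re) (rc x) :=
          Complex.continuous_re.continuousAt.comp hmq.continuousAt
        refine hc.eventually (lt_mem_nhds ?_)
        simp only [hmx, Complex.ofReal_re]
        linarith
      filter_upwards [h1, h2, h3, hT.continuousAt.eventually_ne hTx] with z h1 h2 h3 h4
      have hs : 1 + ∑ i, (z i / Th a (m (∑ i, z i ^ 2))) ^ 2 = m (∑ i, z i ^ 2) ^ 2 := by
        simp_rw [div_pow]
        rw [← Finset.sum_div, eq_comm, ← sub_eq_iff_eq_add', eq_div_iff (pow_ne_zero 2 h4)]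
        exact h1
      have hr : rho (fun i => z i / Th a (m (∑ i, z i ^ 2))) = m (∑ i, z i ^ 2) := by
        rw [rho, hs]
        exact sqrt_unique h3 h2 rfl
      funext i
      simp only [Ph, hr]
      exact div_mul_cancel₀ _ h4
    · have hc : ContinuousAt (fun x : Fin n → ℝ => ∑ j, x j ^ 2) x :=
        (continuous_finsetSum _ fun j _ => (continuous_apply j).pow 2).continuousAt
      filter_upwards [hc.tendsto.eventually hmg] with y hy
      have hy := hy (Finset.sum_nonneg fun j _ => sq_nonneg _)
      have hqy : ∑ i, rc y i ^ 2 = ((∑ i, y i ^ 2 : ℝ) : ℂ) := by simp [rc]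
      funext i
      rw [hqy, hy, Th_real]
      simp [rc]

end shrink

/-! ### Complexification -/

section cplx
variable {n : ℕ}

theorem rc_continuous : Continuous (rc : (Fin n → ℝ) → Fin n → ℂ) :=
  continuous_pi fun i => Complex.continuous_ofReal.comp (continuous_apply i)

theorem rc_dist (x y : Fin n → ℝ) : dist (rc x) (rc y) = dist x y := by
  have : Isometry (rc : (Fin n → ℝ) → Fin n → ℂ) :=
    (Isometry.piMap (fun (_ : Fin n) (t : ℝ) => (t : ℂ)) fun _ => Complex.isometry_ofReal)
  exact this.dist_eq x y

/-- Identity theorem: an analytic function on a product of convex domains symmetric about the real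
axis vanishes as soon as it vanishes at the real points. -/
theorem real_zero {D : Fin n → Set ℂ} (hD : ∀ i, IsOpen (D i)) (hc : ∀ i, Convex ℝ (D i))
    (hr : ∀ i, ∀ z ∈ D i, ((z.re : ℝ) : ℂ) ∈ D i) {g : (Fin n → ℂ) → ℂ}
    (hg : ∀ z, (∀ i, z i ∈ D i) → AnalyticAt ℂ g z)
    (h0 : ∀ x : Fin n → ℝ, (∀ i, (x i : ℂ) ∈ D i) → g (rc x) = 0) :
    ∀ z, (∀ i, z i ∈ D i) → g z = 0 := by
  have main : ∀ s : Finset (Fin n), ∀ z, (∀ i, z i ∈ D i) → (∀ i ∉ s, (z i).im = 0) → g z = 0 := by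
    intro s
    induction s using Finset.induction_on with
    | empty =>
      intro z hz h
      have e : z = rc fun i => (z i).re := by
        funext i
        exact Complex.ext (by simp [rc]) (by simpa [rc] using h i (by simp))
      rw [e]
      exact h0 _ fun i => hr i _ (hz i)
    | insert i s his ih =>
      intro z hz h
      have han : AnalyticOnNhd ℂ (fun t => g (Function.update z i t)) (D i) := by
        intro t ht
        refine AnalyticAt.fun_comp (hg _ fun j => ?_) (update_analytic z i t)
        by_cases hj : j = i
        · subst hj; simpa
        · simpa [hj] using hz j
      have hz0 : ∀ t : ℝ, (t : ℂ) ∈ D i → g (Function.update z i t) = 0 := by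
        intro t ht
        refine ih _ (fun j => ?_) fun j hj => ?_
        · by_cases hj : j = i
          · subst hj; simpa
          · simpa [hj] using hz j
        · by_cases hji : j = i
          · subst hji; simp
          · simpa [hji] using h j (by simp [hji, hj])
      have h1 := hr i _ (hz i)
      have := han.eqOn_zero_of_preconnected_of_frequently_eq_zero (hc i).isPreconnected h1 (by
        have hT : Tendsto (fun t : ℝ => ((t : ℝ) : ℂ)) (𝓝[≠] (z i).re) (𝓝[≠] (((z i).re : ℝ) : ℂ)) :=
          tendsto_nhdsWithin_of_tendsto_nhds_of_eventually_within _
            (Complex.continuous_ofReal.continuousAt.tendsto.mono_left nhdsWithin_le_nhds)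
            (by filter_upwards [self_mem_nhdsWithin] with t ht
                simpa using ht)
        refine hT.frequently (Eventually.frequently ?_)
        filter_upwards [nhdsWithin_le_nhds (Complex.continuous_ofReal.continuousAt.preimage_mem_nhds ((hD i).mem_nhds h1))] with t ht
        exact hz0 t ht) (hz i)
      simpa using this
  exact fun z hz => main Finset.univ z hz fun i hi => absurd (Finset.mem_univ i) hi

theorem re_mem_ball {x : ℝ} {r : ℝ} {z : ℂ} (hz : z ∈ ball (x : ℂ) r) :
    ((z.re : ℝ) : ℂ) ∈ ball (x : ℂ) r := by
  rw [mem_ball, Complex.dist_eq] at hz ⊢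
  refine lt_of_le_of_lt ?_ hz
  rw [← Complex.ofReal_sub, Complex.norm_real]
  simpa using Complex.abs_re_le_norm (z - x)

theorem real_near {x : Fin n → ℝ} {g : (Fin n → ℂ) → ℂ} (hg : AnalyticAt ℂ g (rc x))
    (h0 : ∀ᶠ y in 𝓝 x, g (rc y) = 0) : ∀ᶠ z in 𝓝 (rc x), g z = 0 := by
  obtain ⟨r, hr, h⟩ := Metric.eventually_nhds_iff_ball.1 hg.eventually_analyticAt
  obtain ⟨r', hr', h'⟩ := Metric.eventually_nhds_iff_ball.1 h0
  have hm : 0 < min r r' := lt_min hr hr'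
  refine Metric.eventually_nhds_iff_ball.2 ⟨min r r', hm, fun z hz => ?_⟩
  refine real_zero (D := fun i => ball (x i : ℂ) (min r r')) (fun i => isOpen_ball)
    (fun i => convex_ball _ _) (fun i z hz => re_mem_ball hz) (fun z hz => h z ?_) (fun y hy => h' y ?_) z
    fun i => (dist_le_pi_dist z (rc x) i).trans_lt hz
  · rw [mem_ball, dist_pi_lt_iff hr]
    exact fun i => (hz i).trans_le (min_le_left _ _)
  · rw [mem_ball, ← rc_dist, dist_pi_lt_iff hr']
    exact fun i => (hy i).trans_le (min_le_right _ _)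

/-- Local complexification of a real-analytic function. -/
theorem ext_ball {f : (Fin n → ℝ) → ℝ} {x : Fin n → ℝ} (hf : AnalyticAt ℝ f x) :
    ∃ r > 0, ∃ F : (Fin n → ℂ) → ℂ, (∀ z ∈ ball (rc x) r, AnalyticAt ℂ F z) ∧
      ∀ y ∈ ball x r, F (rc y) = f y := by
  classical
  obtain ⟨p, R, hp⟩ := hf
  obtain ⟨ρ, hρ0, hρ⟩ := ENNReal.lt_iff_exists_nnreal_btwn.1 hp.r_pos
  have hρ0 : 0 < (ρ : ℝ) := by exact_mod_cast hρ0
  obtain ⟨C, hC0, hC⟩ := p.norm_mul_pow_le_of_lt_radius (hρ.trans_le hp.r_le)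
  set e : Fin n → Fin n → ℝ := fun j => Pi.single j 1
  let P : ℕ → (Fin n → ℂ) → ℂ := fun k z =>
    ∑ s : Fin k → Fin n, (p k (fun i => e (s i)) : ℂ) * ∏ i, (z (s i) - x (s i))
  have hPan : ∀ k z, AnalyticAt ℂ (P k) z := fun k z =>
    Finset.analyticAt_fun_sum _ fun s _ => analyticAt_const.mul (Finset.analyticAt_fun_prod _ fun i _ =>
      ((ContinuousLinearMap.proj (R := ℂ) (φ := fun _ : Fin n => ℂ) (s i)).analyticAt z).sub analyticAt_const)
  set r : ℝ := ρ / (2 * (n + 1)) with hr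
  have hr0 : 0 < r := by positivity
  have hrρ : r ≤ ρ := by
    rw [hr, div_le_iff₀ (by positivity)]; nlinarith [(Nat.cast_nonneg n : (0:ℝ) ≤ n)]
  have he : ∀ j, ‖e j‖ ≤ 1 := fun j => by
    rw [pi_norm_le_iff_of_nonneg zero_le_one]
    intro i
    by_cases h : i = j
    · subst h; simp [e]
    · simp [e, h]
  have hb : ∀ k, ∀ z ∈ ball (rc x) r, ‖P k z‖ ≤ 2 * C / 2 / 2 ^ k := by
    intro k z hz
    have h1 : ∀ s : Fin k → Fin n, ‖(p k (fun i => e (s i)) : ℂ) * ∏ i, (z (s i) - x (s i))‖ ≤ ‖p k‖ * r ^ k := by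
      intro s
      rw [norm_mul, Complex.norm_real, norm_prod]
      refine mul_le_mul ?_ ?_ (Finset.prod_nonneg fun _ _ => norm_nonneg _) (norm_nonneg _)
      · refine ((p k).le_opNorm _).trans (mul_le_of_le_one_right (norm_nonneg _) ?_)
        exact Finset.prod_le_one (fun _ _ => norm_nonneg _) fun i _ => he _
      · refine (Finset.prod_le_prod (g := fun _ => r) (fun _ _ => norm_nonneg _) fun i _ => ?_).trans_eq (by simp)
        have := (dist_le_pi_dist z (rc x) (s i)).trans (Metric.mem_ball.1 hz).le
        rwa [Complex.dist_eq] at this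
    calc ‖P k z‖ ≤ ∑ s : Fin k → Fin n, ‖p k‖ * r ^ k := norm_sum_le_of_le _ fun s _ => h1 s
      _ = (n:ℝ) ^ k * (‖p k‖ * r ^ k) := by simp
      _ = (‖p k‖ * ρ ^ k) * (n / (2 * (n + 1))) ^ k := by rw [hr, div_pow, div_pow]; ring
      _ ≤ C * (1 / 2) ^ k := by
          refine mul_le_mul (hC k) (pow_le_pow_left₀ (by positivity) ?_ k) (by positivity) hC0.le
          rw [div_le_div_iff₀ (by positivity) two_pos]; linarith
      _ = _ := by rw [one_div, inv_pow]; field_simp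
  have hlim := tendstoUniformlyOn_tsum_nat (summable_geometric_two' (2 * C)) hb
  refine ⟨r, hr0, fun z => ∑' k, P k z, fun z hz => ?_, fun y hy => ?_⟩
  · exact analytic_of_limit isOpen_ball
      (F := fun N z => ∑ k ∈ Finset.range N, P k z)
      (fun N z _ => Finset.analyticAt_fun_sum _ fun k _ => hPan k z)
      hlim.tendstoLocallyUniformlyOn hz
  · have hy' : y - x ∈ Metric.eball (0 : Fin n → ℝ) R := by
      rw [Metric.mem_eball, edist_zero_right]
      refine lt_of_lt_of_le ?_ hρ.le
      rw [mem_ball, dist_eq_norm] at hy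
      rw [← ofReal_norm]
      have := hy.trans_le hrρ
      rw [ENNReal.ofReal_lt_iff_lt_toReal (norm_nonneg _) ENNReal.coe_ne_top]
      simpa using this
    have hs := hp.hasSum hy'
    rw [add_sub_cancel] at hs
    have hPy : ∀ k, P k (rc y) = ((p k fun _ => y - x : ℝ) : ℂ) := by
      intro k
      have e1 : (fun _ : Fin k => y - x) = fun i => ∑ j, (y j - x j) • e j := by
        funext i
        ext t
        simp [e, Finset.sum_apply, Pi.single_apply]
      rw [e1, ContinuousMultilinearMap.map_sum]
      simp only [P, rc]
      push_cast
      refine Finset.sum_congr rfl fun s _ => ?_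
      rw [ContinuousMultilinearMap.map_smul_univ, smul_eq_mul, mul_comm]
      push_cast
      rfl
    simp_rw [hPy]
    rw [← Complex.ofReal_tsum, hs.tsum_eq]

/-- Global complexification of a real-analytic function. -/
theorem ext_glob {f : (Fin n → ℝ) → ℝ} (hf : ∀ x, AnalyticAt ℝ f x) :
    ∃ (Ω : Set (Fin n → ℂ)) (F : (Fin n → ℂ) → ℂ), IsOpen Ω ∧ (∀ x, rc x ∈ Ω) ∧
      (∀ z ∈ Ω, AnalyticAt ℂ F z) ∧ ∀ x, F (rc x) = f x := by
  choose r hr F hF hFf using fun x => ext_ball (hf x)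
  have hex : ∀ z ∈ ⋃ x, ball (rc x) (r x), ∃ x, z ∈ ball (rc x) (r x) := fun z hz => mem_iUnion.1 hz
  choose! c hc using hex
  have agree : ∀ x y z, z ∈ ball (rc x) (r x) → z ∈ ball (rc y) (r y) → F x z = F y z := by
    intro x y z hx hy
    have hmx : ∀ x z, z ∈ ball (rc x) (r x) ↔ ∀ i, z i ∈ ball (x i : ℂ) (r x) := fun x z => by
      rw [mem_ball, dist_pi_lt_iff (hr x)]; rfl
    have := real_zero (D := fun i => ball (x i : ℂ) (r x) ∩ ball (y i : ℂ) (r y))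
      (fun i => Metric.isOpen_ball.inter isOpen_ball)
      (fun i => (convex_ball _ _).inter (convex_ball _ _))
      (fun i z hz => ⟨re_mem_ball hz.1, re_mem_ball hz.2⟩) (g := fun z => F x z - F y z)
      (fun z hz => (hF x z ((hmx x z).2 fun i => (hz i).1)).sub (hF y z ((hmx y z).2 fun i => (hz i).2)))
      (fun w hw => by
        have h1 := (hmx x (rc w)).2 fun i => (hw i).1
        have h2 := (hmx y (rc w)).2 fun i => (hw i).2
        rw [mem_ball, rc_dist] at h1 h2
        rw [hFf x w h1, hFf y w h2, sub_self]) z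
      fun i => ⟨(hmx x z).1 hx i, (hmx y z).1 hy i⟩
    exact sub_eq_zero.1 this
  have hself : ∀ x, rc x ∈ ball (rc x) (r x) := fun x => mem_ball_self (hr x)
  refine ⟨⋃ x, ball (rc x) (r x), fun z => F (c z) z, isOpen_iUnion fun x => isOpen_ball,
    fun x => mem_iUnion.2 ⟨x, hself x⟩, fun z hz => ?_, fun x => ?_⟩
  · refine (hF _ z (hc z hz)).congr ?_
    filter_upwards [Metric.isOpen_ball.mem_nhds (hc z hz)] with w hw
    exact agree _ _ _ hw (hc w (mem_iUnion.2 ⟨_, hw⟩))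
  · have := hc (rc x) (mem_iUnion.2 ⟨x, hself x⟩)
    show F (c (rc x)) (rc x) = f x
    rw [agree _ x _ this (hself x), hFf x x (mem_ball_self (hr x))]

theorem rc_analytic (x : Fin n → ℝ) : AnalyticAt ℝ (rc : (Fin n → ℝ) → Fin n → ℂ) x :=
  AnalyticAt.pi fun i => (Complex.ofRealCLM.comp
    (ContinuousLinearMap.proj (R := ℝ) (φ := fun _ : Fin n => ℝ) i)).analyticAt x

theorem re_analytic {F : (Fin n → ℂ) → ℂ} {x : Fin n → ℝ} (hF : AnalyticAt ℂ F (rc x)) :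
    AnalyticAt ℝ (fun y => (F (rc y)).re) x :=
  (Complex.reCLM.analyticAt _).comp (hF.restrictScalars.comp (rc_analytic x))

end cplx

/-! ### Theorem A near real space -/

theorem Gen.pull {E E' : Type} [NormedAddCommGroup E] [NormedSpace ℂ E] [NormedAddCommGroup E']
    [NormedSpace ℂ E'] {κ l : Type} [Fintype l] {t : l → E → κ → ℂ} {Φ : E' → E} {w : E'}
    (hΦ : AnalyticAt ℂ Φ w) {c : E → κ → ℂ} (h : Gen t (Φ w) c) :
    Gen (fun j z => t j (Φ z)) w (fun z => c (Φ z)) := by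
  obtain ⟨d, hd, h⟩ := h
  exact ⟨fun j z => d j (Φ z), fun j => AnalyticAt.fun_comp (hd j) hΦ,
    hΦ.continuousAt.eventually h⟩

theorem FG.gen {E : Type} [NormedAddCommGroup E] [NormedSpace ℂ E] {κ l : Type} [Fintype l]
    {F : E → (E → κ → ℂ) → Prop} {y : E} (h : FG F (𝓝 y)) {t : l → E → κ → ℂ} {c : E → κ → ℂ}
    (ht : ∀ j, F y (t j)) (hc : Gen t y c) : F y c := by
  obtain ⟨m, _, s, hs⟩ := h
  have hs := hs.self_of_nhds
  exact (hs.2 c).2 (hc.trans fun j => (hs.2 _).1 (ht j))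

variable {n : ℕ}

/-- Cartan's Theorem A in approximate form: near `ℝⁿ`, the germ at `x₀` of a section of a coherent
module is approximated at `x₀` by a section defined along all of `ℝⁿ`. -/
theorem globA {κ : Type} [Finite κ] {Ω : Set (Fin n → ℂ)} (hΩ : IsOpen Ω)
    (hR : ∀ x : Fin n → ℝ, rc x ∈ Ω) {F : (Fin n → ℂ) → ((Fin n → ℂ) → κ → ℂ) → Prop}
    (hF : ∀ z ∈ Ω, FG F (𝓝 z)) {x₀ : Fin n → ℝ} {c₀ : (Fin n → ℂ) → κ → ℂ} (hc₀ : F (rc x₀) c₀)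
    {ε : ℝ} (hε : 0 < ε) :
    ∃ H : (Fin n → ℝ) → κ → ℂ, (∀ x, ∃ c, F (rc x) c ∧ ∀ᶠ x' in 𝓝 x, ∀ q, H x' q = c (rc x') q) ∧
      ∀ q, ‖H x₀ q - c₀ (rc x₀) q‖ ≤ ε := by
  obtain ⟨Φ, δ, hδ, hΦ, Ψ, hΨ⟩ := shrink hΩ hR
  have hΨ0 : ∀ x, Φ (rc (Ψ x)) = rc x := fun x => by
    obtain ⟨G, _, h1, h2⟩ := hΨ x
    rw [← h2.self_of_nhds, h1.self_of_nhds]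
  let F' : (Fin n → ℂ) → ((Fin n → ℂ) → κ → ℂ) → Prop := fun w c =>
    ∃ (l : Type) (_ : Fintype l) (t : l → (Fin n → ℂ) → κ → ℂ), (∀ j, F (Φ w) (t j)) ∧
      Gen (fun j z => t j (Φ z)) w c
  have hF' : ∀ w, (∀ i, |(w i).im| ≤ δ) → FG F' (𝓝 w) := by
    intro w hw
    obtain ⟨ha, hm⟩ := hΦ w hw
    obtain ⟨l, _, t, ht⟩ := hF _ hm
    refine ⟨l, inferInstance, fun j z => t j (Φ z), ?_⟩
    filter_upwards [ha.continuousAt.eventually ht, ha.eventually_analyticAt] with y h1 h2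
    refine ⟨fun j k => AnalyticAt.fun_comp (h1.1 j k) h2, fun c => ⟨?_, fun h => ?_⟩⟩
    · rintro ⟨m, _, s, hs, hc⟩
      exact hc.trans fun j => Gen.pull h2 ((h1.2 _).1 (hs j))
    · exact ⟨l, inferInstance, t, fun j => (h1.2 _).2 (gen_self t _ j), h⟩
  set A : ℝ := ‖Ψ x₀‖
  have hA : 0 ≤ A := norm_nonneg _
  let β : ℕ → Fin n × Bool → ℝ := fun m i => if i.2 then δ else m + A
  have hβ0 : ∀ m i, 0 ≤ β m i := fun m i => by
    dsimp only [β]; split_ifs <;> positivity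
  have hβ : Monotone β := by
    intro m m' h i
    dsimp only [β]
    split_ifs
    · exact le_rfl
    · simpa using h
  have hre : ∀ x : Fin n → ℝ, ∀ i : Fin n, co (i, false) (rc x) = x i := fun x i => by
    simp [co, cb, rc]
  have him : ∀ x : Fin n → ℝ, ∀ i : Fin n, co (i, true) (rc x) = 0 := fun x i => by
    simp [co, cb, rc]
  have hx : rc (Ψ x₀) ∈ Bx (fun i => -β 0 i) (β 0) := by
    rintro ⟨i, _ | _⟩
    · have := norm_le_pi_norm (Ψ x₀) i
      rw [Real.norm_eq_abs, abs_le] at this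
      simpa [hre, β] using this
    · simp [him, β, hδ.le]
  have hc : F' (rc (Ψ x₀)) (fun z => c₀ (Φ z)) :=
    ⟨Unit, inferInstance, fun _ => c₀, fun _ => by rwa [hΨ0], gen_self (fun _ : Unit => fun z => c₀ (Φ z)) _ ()⟩
  obtain ⟨h, h1, h2⟩ := weakA (α := fun m i => -β m i) (β := β) (fun m i => by linarith [hβ0 m i])
    (fun m m' h i => neg_le_neg (hβ h i)) hβ (fun m y hy => hF' y fun i => abs_le.2 (by
      simpa [β, co, cb] using hy (i, true))) hx hc hε
  refine ⟨fun x => h (rc (Ψ x)), fun x => ?_, fun q => by simpa [hΨ0] using h2 q⟩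
  obtain ⟨G, hG, hG1, hG2⟩ := hΨ x
  have hGx := hG2.self_of_nhds
  refine ⟨fun z => h (G z), ?_, by filter_upwards [hG2] with x' hx' q; rw [hx']⟩
  obtain ⟨m, hm⟩ := exists_nat_gt ‖Ψ x‖
  have h_int : rc (Ψ x) ∈ interior (Bx (fun i => -β m i) (β m)) := by
    rw [mem_interior_iff_mem_nhds]
    have : ∀ᶠ z in 𝓝 (rc (Ψ x)), ∀ i, -β m i < co i z ∧ co i z < β m i := by
      refine eventually_all.2 fun i => ?_
      have hlt : -β m i < co i (rc (Ψ x)) ∧ co i (rc (Ψ x)) < β m i := by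
        obtain ⟨i, _ | _⟩ := i
        · have := (norm_le_pi_norm (Ψ x) i).trans_lt (hm.trans_le (le_add_of_nonneg_right hA))
          rw [Real.norm_eq_abs, abs_lt] at this
          simpa [hre, β] using this
        · simp [him, β, hδ]
      exact ((co_continuous i).continuousAt.eventually_const_lt hlt.1).and
        ((co_continuous i).continuousAt.eventually_lt_const hlt.2)
    filter_upwards [this] with z hz i
    exact ⟨(hz i).1.le, (hz i).2.le⟩
  obtain ⟨l, _, t, ht, hg⟩ := h1 m _ h_int
  rw [hΨ0] at ht
  refine (hF _ (hR x)).gen ht ?_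
  rw [← hGx] at hg
  refine (Gen.pull hG hg).trans fun j => (gen_self t _ j).congr ?_
  filter_upwards [hG1] with z hz k
  rw [hz]

theorem re_sum_mul {ι : Type} [Fintype ι] (c : ι → ℂ) (b : ι → ℝ) :
    (∑ i, c i * (b i : ℂ)).re = ∑ i, (c i).re * b i := by
  simp [Complex.re_sum]

/-- Simultaneous complexification of finitely many functions. -/
theorem ext_globs {ι : Type} [Finite ι] {f : ι → (Fin n → ℝ) → ℝ} (hf : ∀ i x, AnalyticAt ℝ (f i) x) :
    ∃ (Ω : Set (Fin n → ℂ)) (F : ι → (Fin n → ℂ) → ℂ), IsOpen Ω ∧ (∀ x, rc x ∈ Ω) ∧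
      (∀ i, ∀ z ∈ Ω, AnalyticAt ℂ (F i) z) ∧ ∀ i x, F i (rc x) = f i x := by
  choose Ω F h1 h2 h3 h4 using fun i => ext_glob (hf i)
  exact ⟨⋂ i, Ω i, F, isOpen_iInter_of_finite h1, fun x => mem_iInter.2 fun i => h2 i x,
    fun i z hz => h3 i z (mem_iInter.1 hz i), h4⟩

/-- A relation at one point between globally defined functions extends, up to a denominator not
vanishing at the point. -/
theorem clear_den {r : ℕ} (b : Fin r → (Fin n → ℝ) → ℝ) (hb : ∀ i x, AnalyticAt ℝ (b i) x)
    {g : (Fin n → ℝ) → ℝ} (hg : ∀ x, AnalyticAt ℝ g x) {x₀ : Fin n → ℝ} (c : Fin r → (Fin n → ℝ) → ℝ)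
    (hc : ∀ i, AnalyticAt ℝ (c i) x₀) (h : ∀ᶠ y in 𝓝 x₀, g y = ∑ i, c i y * b i y) :
    ∃ (h : (Fin n → ℝ) → ℝ) (C : Fin r → (Fin n → ℝ) → ℝ), (∀ x, AnalyticAt ℝ h x) ∧
      (∀ i x, AnalyticAt ℝ (C i) x) ∧ h x₀ ≠ 0 ∧ ∀ y, h y * g y = ∑ i, C i y * b i y := by
  let f : Option (Fin r) → (Fin n → ℝ) → ℝ := fun o => o.elim (fun y => - g y) b
  have hf : ∀ o x, AnalyticAt ℝ (f o) x := by
    rintro (_ | i) x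
    · exact (hg x).neg
    · exact hb i x
  obtain ⟨Ω, F, hΩ, hR, hF, hFf⟩ := ext_globs hf
  choose ρ hρ K hK hKc using fun i => ext_ball (hc i)
  let s : Option (Fin r) → (Fin n → ℂ) → Unit → ℂ := fun o z _ => F o z
  let c₀ : (Fin n → ℂ) → Option (Fin r) → ℂ := fun z o => o.elim 1 fun i => K i z
  have hKa : ∀ i, AnalyticAt ℂ (K i) (rc x₀) := fun i => hK i _ (mem_ball_self (hρ i))
  have hc₀ : Rel s (rc x₀) c₀ := by
    constructor
    · rintro (_ | i)
      · exact analyticAt_const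
      · exact hKa i
    · have hs : AnalyticAt ℂ (fun z => ∑ o, c₀ z o * F o z) (rc x₀) := by
        refine Finset.analyticAt_fun_sum _ fun o _ => AnalyticAt.mul ?_ (hF o _ (hR _))
        rcases o with _ | i
        · exact analyticAt_const
        · exact hKa i
      have := real_near hs ?_
      · filter_upwards [this] with z hz _ using hz
      · filter_upwards [h, eventually_all.2 fun i => ball_mem_nhds x₀ (hρ i)] with y h1 h2
        simp only [Fintype.sum_option, c₀, Option.elim, hFf, f, h1]
        push_cast
        simp [hKc _ y (h2 _)]
  obtain ⟨H, hH, hH0⟩ := globA hΩ hR (F := Rel s) (fun z hz => oka n (by simp) z _ _ s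
    fun o _ => hF o z hz) hc₀ (ε := 1 / 2) (by norm_num)
  have han : ∀ o x, AnalyticAt ℝ (fun y => (H y o).re) x := by
    intro o x
    obtain ⟨c, hc, hHc⟩ := hH x
    refine (re_analytic (hc.1 o)).congr ?_
    filter_upwards [hHc] with y hy
    rw [hy]
  refine ⟨fun y => (H y none).re, fun i y => (H y (some i)).re, fun x => han _ x, fun i x => han _ x, ?_,
    fun y => ?_⟩
  · intro h0
    have h1 := (Complex.abs_re_le_norm _).trans (hH0 none)
    simp only [Complex.sub_re, h0, c₀, Option.elim] at h1
    norm_num at h1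
  · obtain ⟨c, hc, hHc⟩ := hH y
    have h1 := hc.2.self_of_nhds ()
    simp only [← hHc.self_of_nhds, s, hFf] at h1
    have h2 := re_sum_mul (H y) fun o => f o y
    rw [h1] at h2
    simp only [Fintype.sum_option, f, Option.elim, Complex.zero_re] at h2
    linarith
end CA

/-! ### The ring of germs -/

namespace CA

section germ
variable {E : Type} [NormedAddCommGroup E] [NormedSpace ℂ E]

/-- The ring of germs of analytic functions at `x`. -/
def An (x : E) : Subring ((𝓝 x).Germ ℂ) where
  carrier := {f | ∃ g : E → ℂ, AnalyticAt ℂ g x ∧ (g : (𝓝 x).Germ ℂ) = f}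
  mul_mem' := by rintro _ _ ⟨f, hf, rfl⟩ ⟨g, hg, rfl⟩; exact ⟨f * g, hf.mul hg, rfl⟩
  one_mem' := ⟨fun _ => 1, analyticAt_const, rfl⟩
  add_mem' := by rintro _ _ ⟨f, hf, rfl⟩ ⟨g, hg, rfl⟩; exact ⟨f + g, hf.add hg, rfl⟩
  zero_mem' := ⟨fun _ => 0, analyticAt_const, rfl⟩
  neg_mem' := by rintro _ ⟨f, hf, rfl⟩; exact ⟨-f, hf.neg, rfl⟩

/-- The germ of an analytic function. -/
def mk {x : E} {f : E → ℂ} (h : AnalyticAt ℂ f x) : An x := ⟨(f : (𝓝 x).Germ ℂ), f, h, rfl⟩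

theorem mk_eq {x : E} {f g : E → ℂ} {hf : AnalyticAt ℂ f x} {hg : AnalyticAt ℂ g x} :
    mk hf = mk hg ↔ ∀ᶠ z in 𝓝 x, f z = g z :=
  Subtype.ext_iff.trans Filter.Germ.coe_eq

theorem exists_rep {x : E} (a : An x) : ∃ (f : E → ℂ) (h : AnalyticAt ℂ f x), mk h = a := by
  obtain ⟨_, f, h, rfl⟩ := a
  exact ⟨f, h, rfl⟩

theorem mk_add {x : E} {f g : E → ℂ} (hf : AnalyticAt ℂ f x) (hg : AnalyticAt ℂ g x) :
    mk (hf.fun_add hg) = mk hf + mk hg := rfl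

theorem mk_sub {x : E} {f g : E → ℂ} (hf : AnalyticAt ℂ f x) (hg : AnalyticAt ℂ g x) :
    mk (hf.fun_sub hg) = mk hf - mk hg := rfl

theorem mk_mul {x : E} {f g : E → ℂ} (hf : AnalyticAt ℂ f x) (hg : AnalyticAt ℂ g x) :
    mk (hf.fun_mul hg) = mk hf * mk hg := rfl

theorem mk_pow {x : E} {f : E → ℂ} (hf : AnalyticAt ℂ f x) (k : ℕ) :
    mk (hf.fun_pow k) = mk hf ^ k := rfl

theorem mk_zero (x : E) : mk (analyticAt_const : AnalyticAt ℂ (fun _ => (0:ℂ)) x) = 0 := rfl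

theorem mk_one (x : E) : mk (analyticAt_const : AnalyticAt ℂ (fun _ => (1:ℂ)) x) = 1 := rfl

theorem mk_eq_zero {x : E} {f : E → ℂ} {hf : AnalyticAt ℂ f x} :
    mk hf = 0 ↔ ∀ᶠ z in 𝓝 x, f z = 0 := by
  rw [← mk_zero, mk_eq]

theorem mk_sum {x : E} {ι : Type} (s : Finset ι) {f : ι → E → ℂ} (hf : ∀ i, AnalyticAt ℂ (f i) x) :
    mk (Finset.analyticAt_fun_sum s fun i _ => hf i) = ∑ i ∈ s, mk (hf i) := by
  classical
  induction s using Finset.induction_on with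
  | empty => simp only [Finset.sum_empty]; rfl
  | insert i s hi ih =>
    rw [Finset.sum_insert hi, ← ih, ← mk_add]
    exact mk_eq.2 (Eventually.of_forall fun z => Finset.sum_insert hi)

theorem mk_isUnit {x : E} {f : E → ℂ} {hf : AnalyticAt ℂ f x} : IsUnit (mk hf) ↔ f x ≠ 0 := by
  constructor
  · rintro h h0
    obtain ⟨b, hb⟩ := h.exists_right_inv
    obtain ⟨g, hg, rfl⟩ := exists_rep b
    rw [← mk_mul, ← mk_one, mk_eq] at hb
    have := hb.self_of_nhds
    simp [h0] at this
  · intro h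
    refine IsUnit.of_mul_eq_one (mk (hf.fun_inv h)) ?_
    rw [← mk_mul, ← mk_one, mk_eq]
    filter_upwards [hf.continuousAt.eventually_ne h] with z hz
    exact mul_inv_cancel₀ hz

instance (x : E) : Nontrivial (An x) :=
  ⟨⟨0, 1, fun h => by
    rw [← mk_zero, ← mk_one, mk_eq] at h
    simpa using h.self_of_nhds⟩⟩

instance (x : E) : IsLocalRing (An x) := by
  refine IsLocalRing.of_nonunits_add fun a b ha hb => ?_
  obtain ⟨f, hf, rfl⟩ := exists_rep a
  obtain ⟨g, hg, rfl⟩ := exists_rep b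
  rw [mem_nonunits_iff, mk_isUnit, not_not] at ha hb
  rw [mem_nonunits_iff, ← mk_add, mk_isUnit, not_not, ha, hb, add_zero]

theorem An_natCast (x : E) {k : ℕ} (hk : k ≠ 0) : IsUnit (k : An x) := by
  have h : (k : An x) = mk (analyticAt_const : AnalyticAt ℂ (fun _ => (k : ℂ)) x) := by
    clear hk
    induction k with
    | zero => rw [Nat.cast_zero, ← mk_zero]; exact mk_eq.2 (by simp)
    | succ k ih =>
      rw [Nat.cast_succ, ih, ← mk_one, ← mk_add]
      exact mk_eq.2 (by simp)
  rw [h, mk_isUnit]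
  exact_mod_cast hk

/-- A representative of a germ. -/
noncomputable def rep {x : E} (a : An x) : E → ℂ := (exists_rep a).choose

theorem rep_an {x : E} (a : An x) : AnalyticAt ℂ (rep a) x := (exists_rep a).choose_spec.choose

theorem mk_rep {x : E} (a : An x) : mk (rep_an a) = a := (exists_rep a).choose_spec.choose_spec

theorem rep_ev {x : E} {a : An x} {f : E → ℂ} (hf : AnalyticAt ℂ f x) (h : mk hf = a) :
    ∀ᶠ z in 𝓝 x, rep a z = f z := mk_eq.1 ((mk_rep a).trans h.symm)

theorem rep_add {x : E} (a b : An x) : ∀ᶠ z in 𝓝 x, rep (a + b) z = rep a z + rep b z :=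
  rep_ev ((rep_an a).fun_add (rep_an b)) (by rw [mk_add (rep_an a) (rep_an b), mk_rep, mk_rep])

theorem rep_mul {x : E} (a b : An x) : ∀ᶠ z in 𝓝 x, rep (a * b) z = rep a z * rep b z :=
  rep_ev ((rep_an a).fun_mul (rep_an b)) (by rw [mk_mul (rep_an a) (rep_an b), mk_rep, mk_rep])

/-- Pullback of germs. -/
noncomputable def pb {E' : Type} [NormedAddCommGroup E'] [NormedSpace ℂ E'] {φ : E → E'} {x : E}
    (hφ : AnalyticAt ℂ φ x) : An (φ x) →+* An x where
  toFun a := mk (AnalyticAt.fun_comp (rep_an a) hφ)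
  map_one' := (mk_eq (hg := analyticAt_const)).2 (hφ.continuousAt.eventually (rep_ev _ (mk_one _)))
  map_zero' := (mk_eq (hg := analyticAt_const)).2 (hφ.continuousAt.eventually (rep_ev _ (mk_zero _)))
  map_mul' a b := (mk_eq (hg := (AnalyticAt.fun_comp (rep_an a) hφ).fun_mul
    (AnalyticAt.fun_comp (rep_an b) hφ))).2 (hφ.continuousAt.eventually (rep_mul a b))
  map_add' a b := (mk_eq (hg := (AnalyticAt.fun_comp (rep_an a) hφ).fun_add
    (AnalyticAt.fun_comp (rep_an b) hφ))).2 (hφ.continuousAt.eventually (rep_add a b))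

theorem pb_mk {E' : Type} [NormedAddCommGroup E'] [NormedSpace ℂ E'] {φ : E → E'} {x : E}
    (hφ : AnalyticAt ℂ φ x) {f : E' → ℂ} (hf : AnalyticAt ℂ f (φ x)) :
    pb hφ (mk hf) = mk (AnalyticAt.fun_comp hf hφ) :=
  (mk_eq (hf := AnalyticAt.fun_comp (rep_an (mk hf)) hφ) (hg := AnalyticAt.fun_comp hf hφ)).2 (hφ.continuousAt.eventually (rep_ev hf rfl))

end germ

section wd
variable {E : Type} [NormedAddCommGroup E] [NormedSpace ℂ E] {d : ℕ}
  (e : E ≃L[ℂ] ℂ × (Fin d → ℂ)) (x : E)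

theorem pr_an : AnalyticAt ℂ (fun z => (e z).2) x :=
  AnalyticAt.fun_comp analyticAt_snd (e.toContinuousLinearMap.analyticAt x)

theorem pbf_an {e : E ≃L[ℂ] ℂ × (Fin d → ℂ)} {x : E} {f : (Fin d → ℂ) → ℂ} (hf : AnalyticAt ℂ f (e x).2) :
    AnalyticAt ℂ (fun z => f (e z).2) x :=
  AnalyticAt.fun_comp (g := f) (f := fun z => (e z).2) hf (pr_an e x)

theorem zc_an : AnalyticAt ℂ (fun z => (e z).1 - (e x).1) x :=
  (AnalyticAt.fun_comp analyticAt_fst (e.toContinuousLinearMap.analyticAt x)).sub analyticAt_const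

/-- Evaluation of polynomials over the germs in the last coordinates at the first coordinate. -/
noncomputable def ev : Polynomial (An (e x).2) →+* An x :=
  Polynomial.eval₂RingHom (pb (pr_an e x)) (mk (zc_an e x))

theorem ev_sum {k : ℕ} {R : ℕ → (Fin d → ℂ) → ℂ} (hR : ∀ j, AnalyticAt ℂ (R j) (e x).2) :
    ev e x (∑ j ∈ Finset.range k, Polynomial.C (mk (hR j)) * Polynomial.X ^ j) =
    mk (Finset.analyticAt_fun_sum (Finset.range k) fun j _ =>
      (pbf_an (hR j)).fun_mul ((zc_an e x).fun_pow j)) := by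
  rw [map_sum, mk_sum _ fun j => (pbf_an (hR j)).fun_mul ((zc_an e x).fun_pow j)]
  refine Finset.sum_congr rfl fun j _ => ?_
  rw [mk_mul (pbf_an (hR j)) ((zc_an e x).fun_pow j), mk_pow (zc_an e x)]
  have : mk (pbf_an (hR j)) = pb (pr_an e x) (mk (hR j)) := (pb_mk (pr_an e x) (hR j)).symm
  rw [this]
  simp [ev]

/-- Weierstrass preparation and division in the germ ring. -/
theorem wd {f : E → ℂ} (hf : AnalyticAt ℂ f x)
    (hne : ¬ ∀ᶠ t : ℂ in 𝓝 0, f (x + t • e.symm (1, 0)) = 0) :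
    ∃ W : Polynomial (An (e x).2), W.Monic ∧ ev e x W ∈ Ideal.span {mk hf} ∧
      ∀ a, ∃ q R, a = q * ev e x W + ev e x R := by
  obtain ⟨z₀, p₀, hx⟩ : ∃ z₀ p₀, e x = (z₀, p₀) := ⟨_, _, rfl⟩
  have hx1 : (e x).1 = z₀ := by rw [hx]
  have hx2 : (e x).2 = p₀ := by rw [hx]
  have hsx : e.symm (z₀, p₀) = x := by rw [← hx]; simp
  have hg : ∀ {g : E → ℂ}, AnalyticAt ℂ g x → AnalyticAt ℂ (fun w => g (e.symm w)) (z₀, p₀) := fun h =>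
    AnalyticAt.comp_of_eq h (e.symm.toContinuousLinearMap.analyticAt _) hsx
  have hne' : ¬ ∀ᶠ z in 𝓝 z₀, f (e.symm (z, p₀)) = 0 := by
    intro h
    apply hne
    have ht : Tendsto (fun t : ℂ => z₀ + t) (𝓝 0) (𝓝 z₀) := by
      have : Continuous fun t : ℂ => z₀ + t := by fun_prop
      simpa using this.tendsto 0
    filter_upwards [ht.eventually h] with t ht
    convert ht using 2
    rw [eq_comm, ContinuousLinearEquiv.symm_apply_eq]
    simp [hx]
  obtain ⟨k, a, u, ha, hu, hu0, hW⟩ := prep (hg hf) hne'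
  have ha' : ∀ j, AnalyticAt ℂ (fun p => if j < k then a j p else 0) (e x).2 := by
    intro j
    rw [hx2]
    by_cases h : j < k
    · simpa [h] using (ha j h).1
    · simpa [h] using analyticAt_const
  have hxt : Tendsto e (𝓝 x) (𝓝 (z₀, p₀)) := by rw [← hx]; exact e.continuous.tendsto x
  have hex : AnalyticAt ℂ e x := e.toContinuousLinearMap.analyticAt x
  let W : Polynomial (An (e x).2) := Polynomial.X ^ k +
    ∑ j ∈ Finset.range k, Polynomial.C (mk (ha' j)) * Polynomial.X ^ j
  have hWan : AnalyticAt ℂ (fun z => WP k (fun j => a j (e z).2) ((e z).1 - z₀)) x := by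
    have := WP_analytic (k := k) (a := a) (p := p₀) z₀ (fun j hj => (ha j hj).1) z₀
    exact AnalyticAt.comp_of_eq (g := fun w : ℂ × (Fin d → ℂ) => WP k (fun j => a j w.2) (w.1 - z₀)) this hex hx
  have hWev : ev e x W = mk hWan := by
    have h1 : ev e x (Polynomial.X ^ k) = mk ((zc_an e x).fun_pow k) := by
      rw [mk_pow (zc_an e x)]; simp [ev]
    rw [map_add, h1, ev_sum, ← mk_add, mk_eq]
    refine Eventually.of_forall fun z => ?_
    rw [WP_eq, hx1]
    congr 1
    exact Finset.sum_congr rfl fun j hj => by simp [Finset.mem_range.1 hj]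
  have hu' : AnalyticAt ℂ (fun z => u (e z)) x := AnalyticAt.comp_of_eq hu hex hx
  refine ⟨W, ?_, ?_, fun b => ?_⟩
  · refine Polynomial.monic_X_pow_add ((Polynomial.degree_sum_le _ _).trans_lt ?_)
    rw [Finset.sup_lt_iff (by exact WithBot.bot_lt_coe k)]
    intro i hi
    exact (Polynomial.degree_C_mul_X_pow_le i _).trans_lt (by exact_mod_cast Finset.mem_range.1 hi)
  · have hux : u (e x) ≠ 0 := by rwa [hx]
    rw [Ideal.mem_span_singleton, hWev]
    refine ⟨mk (hu'.fun_inv hux), ?_⟩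
    rw [← mk_mul, mk_eq]
    filter_upwards [hxt.eventually hW, hu'.continuousAt.eventually_ne hux] with z h1 h2
    simp only [ContinuousLinearEquiv.symm_apply_apply] at h1
    rw [h1]; field_simp
  · obtain ⟨g, hga, rfl⟩ := exists_rep b
    obtain ⟨r, hr, hr1, hr2⟩ : ∃ r : ℝ, 0 < r ∧ (∀ z ∈ closedBall z₀ r,
        AnalyticAt ℂ (fun w => g (e.symm w)) (z, p₀)) ∧ ∀ z ∈ sphere z₀ r,
        WP k (fun j => a j p₀) (z - z₀) ≠ 0 := by
      have h1 : ∀ᶠ z in 𝓝 z₀, AnalyticAt ℂ (fun w => g (e.symm w)) (z, p₀) :=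
        (Continuous.prodMk_left p₀).continuousAt.eventually (hg hga).eventually_analyticAt
      obtain ⟨r, hr, h⟩ := Metric.nhds_basis_closedBall.mem_iff.1 h1
      refine ⟨r, hr, fun z hz => h hz, fun z hz => ?_⟩
      rw [WP_eq, Finset.sum_eq_zero fun i hi => by rw [(ha i (Finset.mem_range.1 hi)).2, zero_mul], add_zero]
      refine pow_ne_zero _ (norm_pos_iff.1 ?_)
      rw [mem_sphere, dist_eq_norm] at hz
      rwa [hz]
    obtain ⟨q, R, hR, hq⟩ := polydiv z₀ hr k a (fun w => g (e.symm w)) p₀ (fun j hj => (ha j hj).1)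
      hr1 hr2
    have hqx : AnalyticAt ℂ q (z₀, p₀) := hq.self_of_nhds.1 z₀ (by simp [hr.ne])
    have hq' : AnalyticAt ℂ (fun z => q (e z)) x := AnalyticAt.comp_of_eq hqx hex hx
    have hR' : ∀ j, AnalyticAt ℂ (R j) (e x).2 := fun j => by rw [hx2]; exact hR j
    refine ⟨mk hq', ∑ j ∈ Finset.range k, Polynomial.C (mk (hR' j)) * Polynomial.X ^ j, ?_⟩
    rw [hWev, ev_sum, ← mk_mul, ← mk_add, mk_eq]
    have hb : ∀ᶠ w : ℂ × (Fin d → ℂ) in 𝓝 (z₀, p₀), w.1 ∈ ball z₀ r :=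
      continuous_fst.continuousAt.eventually (ball_mem_nhds _ hr)
    filter_upwards [hxt.eventually hb, hxt.eventually (continuous_snd.continuousAt.eventually hq)] with z h1 h2
    have := h2.2.1 _ h1
    simp only [Prod.mk.eta, ContinuousLinearEquiv.symm_apply_apply] at this
    rw [this, hx1]

theorem coord_line {v : E} (he : e v = (1, 0)) : e.symm (1, 0) = v := by rw [← he]; simp
end wd

/-- Rückert: the ring of analytic germs is Noetherian. -/
theorem noeth (d : ℕ) : ∀ {E : Type} [NormedAddCommGroup E] [NormedSpace ℂ E] [FiniteDimensional ℂ E]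
    (_ : Module.finrank ℂ E = d) (x : E), IsNoetherianRing (An x) := by
  induction d with
  | zero =>
    intro E _ _ _ hE x
    have hs : Subsingleton E := Module.finrank_zero_iff.1 hE
    refine (isNoetherianRing_iff_ideal_fg _).2 fun I => ?_
    by_cases hI : I = ⊥
    · rw [hI]; exact Submodule.fg_bot
    · obtain ⟨a, ha, h0⟩ := Submodule.exists_mem_ne_zero_of_ne_bot hI
      obtain ⟨f, hf, rfl⟩ := exists_rep a
      have : f x ≠ 0 := fun h => h0 (mk_eq_zero.2 (Eventually.of_forall fun z => by
        rw [Subsingleton.elim z x, h]))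
      rw [Ideal.eq_top_of_isUnit_mem I ha (mk_isUnit.2 this)]
      exact ⟨{1}, by simp⟩
  | succ d ih =>
    intro E _ _ _ hE x
    refine (isNoetherianRing_iff_ideal_fg _).2 fun I => ?_
    by_cases hI : I = ⊥
    · rw [hI]; exact Submodule.fg_bot
    · obtain ⟨a, ha, h0⟩ := Submodule.exists_mem_ne_zero_of_ne_bot hI
      obtain ⟨f, hf, rfl⟩ := exists_rep a
      have : Nontrivial E := Module.nontrivial_of_finrank_pos (R := ℂ) (by omega)
      obtain ⟨v, hv, hv'⟩ := exists_line hf (by rwa [← mk_eq_zero (hf := hf)])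
      obtain ⟨e, he⟩ := exists_coord hE hv
      obtain ⟨W, -, hW, hdiv⟩ := wd e x hf (by rwa [coord_line e he])
      have hWI : ev e x W ∈ I := (Ideal.span_singleton_le_iff_mem I).2 ha hW
      have := ih (E := Fin d → ℂ) (by simp) (e x).2
      have hfg : (I.comap (ev e x)).FG := (isNoetherianRing_iff_ideal_fg _).1 inferInstance _
      have : I = (I.comap (ev e x)).map (ev e x) := by
        refine le_antisymm (fun b hb => ?_) Ideal.map_comap_le
        obtain ⟨q, R, rfl⟩ := hdiv b
        refine Ideal.add_mem _ (Ideal.mul_mem_left _ _ (Ideal.mem_map_of_mem _ hWI))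
          (Ideal.mem_map_of_mem _ ?_)
        have := I.sub_mem hb (I.mul_mem_left q hWI)
        rwa [add_sub_cancel_left] at this
      rw [this]
      exact hfg.map _

instance {E : Type} [NormedAddCommGroup E] [NormedSpace ℂ E] [FiniteDimensional ℂ E] (x : E) :
    IsNoetherianRing (An x) := noeth _ rfl x

/-! ### Derivations and prime ideals -/

/-- Extension of a tangent derivation through a Weierstrass polynomial: `D₁` lifts a derivation of
the base ring preserving the contracted prime and `D₂` is differentiation in the new variable.
Taking for `G` a polynomial of minimal degree in the prime, the combination
`D₂ G • D₁ - D₁ G • D₂` preserves the prime. -/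
theorem lift_der {A₀ A : Type} [CommRing A₀] [CommRing A] (φ : A₀ →+* A) (t : A) (P : Ideal A)
    [hP : P.IsPrime] {W : Polynomial A₀} (hWm : W.Monic) (hW : W.eval₂ φ t ∈ P)
    (hdiv : ∀ a, ∃ q R, a = q * W.eval₂ φ t + Polynomial.eval₂ φ t R)
    (hu : ∀ k : ℕ, k ≠ 0 → IsUnit (k : A)) (D₀ : A₀ → A₀) (hD₀ : ∀ s, φ s ∈ P → φ (D₀ s) ∈ P)
    (D₁ D₂ : Derivation ℤ A A) (h1 : ∀ s, D₁ (φ s) = φ (D₀ s)) (h1t : D₁ t = 0)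
    (h2 : ∀ s, D₂ (φ s) = 0) (h2t : D₂ t = 1) :
    ∃ α β, α ∉ P ∧ ∀ a ∈ P, α * D₁ a - β * D₂ a ∈ P := by
  set ev := Polynomial.eval₂RingHom φ t with hev
  change ev W ∈ P at hW
  change ∀ a, ∃ q R, a = q * ev W + ev R at hdiv
  have evC : ∀ s, ev (Polynomial.C s) = φ s := fun s => by simp [hev]
  have evX : ev Polynomial.X = t := by simp [hev]
  have hder : ∀ H, D₂ (ev H) = ev (Polynomial.derivative H) := by
    intro H
    induction H using Polynomial.induction_on' with
    | add p q hp hq => simp [hp, hq]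
    | monomial k a =>
      rw [← Polynomial.C_mul_X_pow_eq_monomial, Polynomial.derivative_C_mul_X_pow]
      simp only [map_mul, map_pow, evC, evX, Derivation.leibniz, Derivation.leibniz_pow, h2, h2t,
        smul_eq_mul, nsmul_eq_mul, map_natCast]
      ring
  have hcoef : ∀ H : Polynomial A₀, (∀ i, φ (H.coeff i) ∈ P) →
      ev H ∈ P ∧ D₁ (ev H) ∈ P ∧ D₂ (ev H) ∈ P := by
    intro H hH
    have e1 : ev H = ∑ i ∈ Finset.range (H.natDegree + 1), φ (H.coeff i) * t ^ i := by
      simp [hev, Polynomial.eval₂_eq_sum_range]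
    rw [e1, map_sum, map_sum]
    refine ⟨P.sum_mem fun i _ => P.mul_mem_right _ (hH i), P.sum_mem fun i _ => ?_,
      P.sum_mem fun i _ => ?_⟩
    · simp only [Derivation.leibniz, Derivation.leibniz_pow, h1, h1t, smul_eq_mul, smul_zero,
        mul_zero, zero_add]
      exact P.mul_mem_left _ (hD₀ _ (hH i))
    · simp only [Derivation.leibniz, h2, smul_eq_mul, mul_zero, add_zero]
      exact P.mul_mem_right _ (hH i)
  have h1P : (1 : A) ∉ P := fun h => hP.ne_top ((Ideal.eq_top_iff_one _).2 h)
  let T : Set (Polynomial A₀) := {G | ev G ∈ P ∧ ∃ i, φ (G.coeff i) ∉ P}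
  have hT : T.Nonempty := ⟨W, hW, W.natDegree, by
    rw [Polynomial.coeff_natDegree, hWm.leadingCoeff, map_one]; exact h1P⟩
  obtain ⟨G, ⟨hG, i, hi⟩, hmin⟩ := exists_minimalFor_of_wellFoundedLT (· ∈ T) Polynomial.degree hT
  have hmin : ∀ H, ev H ∈ P → H.degree < G.degree → ∀ i, φ (H.coeff i) ∈ P := by
    intro H hH hlt
    by_contra! h
    exact absurd (hmin ⟨hH, h⟩ hlt.le) (not_le.2 hlt)
  have hG0 : G ≠ 0 := by rintro rfl; simp at hi
  have hl : φ G.leadingCoeff ∉ P := by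
    intro hl
    have h3 : ev (Polynomial.C G.leadingCoeff * Polynomial.X ^ G.natDegree) ∈ P := by
      rw [map_mul, evC]; exact P.mul_mem_right _ hl
    have h4 : ev G.eraseLead ∈ P := by
      have := P.sub_mem hG h3
      rwa [← map_sub, Polynomial.self_sub_C_mul_X_pow] at this
    have h5 := hmin _ h4 (Polynomial.degree_eraseLead_lt hG0) i
    rw [Polynomial.eraseLead_coeff] at h5
    by_cases h : i = G.natDegree
    · exact hi (h ▸ hl)
    · rw [if_neg h] at h5; exact hi h5
  have hα : D₂ (ev G) ∉ P := by
    intro h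
    rw [hder] at h
    have h3 := hmin _ h (Polynomial.degree_derivative_lt hG0) (G.natDegree - 1)
    have hd : G.natDegree ≠ 0 := by
      intro hd
      rw [Polynomial.eq_C_of_natDegree_eq_zero hd, evC] at hG
      apply hl
      rwa [Polynomial.leadingCoeff, hd]
    have h4 : G.natDegree - 1 + 1 = G.natDegree := by omega
    rw [Polynomial.coeff_derivative, h4, map_mul] at h3
    have h6 : φ (((G.natDegree - 1 : ℕ) : A₀) + 1) = (G.natDegree : A) := by
      rw [← Nat.cast_succ, map_natCast, Nat.succ_eq_add_one, h4]
    rw [h6] at h3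
    rcases hP.mem_or_mem h3 with h | h
    · exact hl h
    · exact hP.ne_top (Ideal.eq_top_of_isUnit_mem _ h (hu _ hd))
  refine ⟨D₂ (ev G), D₁ (ev G), hα, ?_⟩
  let d : Derivation ℤ A A := D₂ (ev G) • D₁ - D₁ (ev G) • D₂
  have hd : ∀ a, D₂ (ev G) * D₁ a - D₁ (ev G) * D₂ a = d a := fun a => by simp [d]
  have hdG : d (ev G) = 0 := by rw [← hd]; ring
  have key : ∀ (k : ℕ) (H : Polynomial A₀), H.natDegree < k → ev H ∈ P → d (ev H) ∈ P := by
    intro k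
    induction k with
    | zero => intro H h; omega
    | succ k ih =>
      intro H hk hH
      by_cases hc : ∀ i, φ (H.coeff i) ∈ P
      · rw [← hd]
        exact P.sub_mem (P.mul_mem_left _ (hcoef H hc).2.1) (P.mul_mem_left _ (hcoef H hc).2.2)
      · have hle : G.degree ≤ H.degree := by
          by_contra h; exact hc (hmin H hH (not_le.1 h))
        have hH0 : H ≠ 0 := by rintro rfl; simp at hc
        have hle' := Polynomial.natDegree_le_natDegree hle
        set m := H.natDegree - G.natDegree
        set H₁ := Polynomial.C G.leadingCoeff * H -
          Polynomial.C H.leadingCoeff * Polynomial.X ^ m * G with hH₁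
        have e1 : ev H₁ = φ G.leadingCoeff * ev H - φ H.leadingCoeff * t ^ m * ev G := by
          simp [hH₁, evC, evX]
        have hH₁P : d (ev H₁) ∈ P := by
          have hP1 : ev H₁ ∈ P := by
            rw [e1]; exact P.sub_mem (P.mul_mem_left _ hH) (P.mul_mem_left _ hG)
          by_cases hz : H₁ = 0
          · rw [hz]; simp
          have hle1 : H₁.natDegree ≤ H.natDegree := by
            refine (Polynomial.natDegree_sub_le _ _).trans (max_le (Polynomial.natDegree_C_mul_le _ _) ?_)
            refine Polynomial.natDegree_mul_le.trans ?_
            have := Polynomial.natDegree_C_mul_X_pow_le H.leadingCoeff m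
            omega
          by_cases h0 : H.natDegree = 0
          · have hg0 : G.natDegree = 0 := by omega
            exfalso
            rw [Polynomial.eq_C_of_natDegree_eq_zero hg0, evC] at hG
            apply hl
            rwa [Polynomial.leadingCoeff, hg0]
          · refine ih H₁ ?_ hP1
            have hc0 : H₁.coeff H.natDegree = 0 := by
              rw [hH₁, Polynomial.coeff_sub, Polynomial.coeff_C_mul, mul_assoc, Polynomial.coeff_C_mul,
                Polynomial.coeff_X_pow_mul', if_pos (by omega), show H.natDegree - m = G.natDegree by omega,
                Polynomial.coeff_natDegree, Polynomial.coeff_natDegree]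
              ring
            have : H₁.natDegree ≠ H.natDegree := by
              intro h
              rw [← h, Polynomial.coeff_natDegree, Polynomial.leadingCoeff_eq_zero] at hc0
              exact hz hc0
            omega
        rw [e1, map_sub, Derivation.leibniz, Derivation.leibniz, hdG] at hH₁P
        simp only [smul_eq_mul, mul_zero, zero_add] at hH₁P
        have h3 : φ G.leadingCoeff * d (ev H) ∈ P := by
          have h5 := P.add_mem hH₁P (P.sub_mem (P.mul_mem_right (d (φ H.leadingCoeff * t ^ m)) hG)
            (P.mul_mem_right (d (φ G.leadingCoeff)) hH))
          convert h5 using 1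
          ring
        exact (hP.mem_or_mem h3).resolve_left hl
  intro a ha
  rw [hd]
  obtain ⟨q, R, rfl⟩ := hdiv a
  have hR : ev R ∈ P := by
    have := P.sub_mem ha (P.mul_mem_left q hW)
    rwa [add_sub_cancel_left] at this
  rw [map_add, Derivation.leibniz, smul_eq_mul, smul_eq_mul]
  exact P.add_mem (P.add_mem (P.mul_mem_left _ (key _ _ (Nat.lt_succ_self _) hW)) (P.mul_mem_right _ hW))
    (key _ _ (Nat.lt_succ_self _) hR)

/-- Seidenberg: a derivation preserving an ideal preserves its associated primes. -/
theorem seidenberg {A : Type} [CommRing A] [IsNoetherianRing A] (hu : ∀ k : ℕ, k ≠ 0 → IsUnit (k : A))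
    (D : Derivation ℤ A A) {I p : Ideal A} (hD : ∀ a ∈ I, D a ∈ I) [hp : p.IsPrime] (s : A)
    (hs : ∀ a, a ∈ p ↔ a * s ∈ I) {a : A} (ha : a ∈ p) : D a ∈ p := by
  have h1 : ∀ k : ℕ, a ^ (k + 1) * D^[k] s ∈ I := by
    intro k
    induction k with
    | zero => simpa using (hs a).1 ha
    | succ k ih =>
      have h := I.sub_mem (I.mul_mem_left a (hD _ ih)) (I.mul_mem_left ((k + 1) * D a) ih)
      rw [Function.iterate_succ_apply']
      rw [Derivation.leibniz, Derivation.leibniz_pow] at h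
      simp only [smul_eq_mul, nsmul_eq_mul, Nat.add_sub_cancel] at h
      push_cast at h
      convert h using 1
      ring
  have h2 : ∀ k : ℕ, (k.factorial : A) * D a ^ k * s - (-1) ^ k * a ^ k * D^[k] s ∈ I := by
    intro k
    induction k with
    | zero => simp
    | succ k ih =>
      have h := I.sub_mem (I.mul_mem_left ((k + 1) * D a) ih)
        (I.mul_mem_left ((-1) ^ (k + 1)) (hD _ (h1 k)))
      rw [Function.iterate_succ_apply']
      rw [Derivation.leibniz (a := a ^ (k + 1)), Derivation.leibniz_pow] at h
      simp only [smul_eq_mul, nsmul_eq_mul, Nat.add_sub_cancel] at h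
      push_cast [Nat.factorial_succ] at h ⊢
      convert h using 1
      ring
  let J : ℕ →o Ideal A := ⟨fun k => Submodule.comap (LinearMap.mulLeft A (a ^ k)) I, by
    refine monotone_nat_of_le_succ fun k w hw => ?_
    rw [Submodule.mem_comap, LinearMap.mulLeft_apply] at hw ⊢
    rw [pow_succ', mul_assoc]
    exact I.mul_mem_left _ hw⟩
  obtain ⟨N, hN⟩ := monotone_stabilizes_iff_noetherian.2 (inferInstance : IsNoetherian A A) J
  have h3 : a ^ N * D^[N] s ∈ I := by
    have h4 : D^[N] s ∈ J (N + 1) := h1 N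
    rw [← hN (N + 1) (by omega)] at h4
    exact h4
  have h5 : (N.factorial : A) * (D a ^ N * s) ∈ I := by
    have := I.add_mem (h2 N) (I.mul_mem_left ((-1) ^ N) h3)
    convert this using 1
    ring
  have h6 := (Ideal.unit_mul_mem_iff_mem I (hu _ (Nat.factorial_ne_zero N))).1 h5
  exact hp.mem_of_pow_mem N ((hs _).2 h6)

/-- A prime containing a monic polynomial in the new variable and contracting to a maximal ideal is
maximal. -/
theorem lift_max {A₀ A : Type} [CommRing A₀] [CommRing A] (φ : A₀ →+* A) (t : A) (P : Ideal A)
    [hP : P.IsPrime] {W : Polynomial A₀} (hWm : W.Monic) (hW : W.eval₂ φ t ∈ P)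
    (hdiv : ∀ a, ∃ q R, a = q * W.eval₂ φ t + Polynomial.eval₂ φ t R)
    (hm : (P.comap φ).IsMaximal) : P.IsMaximal := by
  let ψ : A₀ ⧸ P.comap φ →+* A ⧸ P := Ideal.quotientMap P φ le_rfl
  let π := Ideal.Quotient.mk P
  have hψ : ∀ s, ψ (Ideal.Quotient.mk _ s) = π (φ s) := fun s => Ideal.quotientMap_mk
  have hmap : ∀ R : Polynomial A₀, π (R.eval₂ φ t) =
      (R.map (Ideal.Quotient.mk (P.comap φ))).eval₂ ψ (π t) := by
    intro R
    rw [Polynomial.eval₂_map, Polynomial.hom_eval₂]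
    congr 1
  have ht : ψ.IsIntegralElem (π t) := ⟨_, hWm.map _, by
    rw [← hmap]; exact Ideal.Quotient.eq_zero_iff_mem.2 hW⟩
  have h_int : ψ.IsIntegral := by
    intro y
    obtain ⟨a, rfl⟩ := Ideal.Quotient.mk_surjective y
    obtain ⟨q, R, rfl⟩ := hdiv a
    change ψ.IsIntegralElem (π _)
    rw [map_add, map_mul, show π (W.eval₂ φ t) = 0 from Ideal.Quotient.eq_zero_iff_mem.2 hW, mul_zero,
      zero_add, Polynomial.eval₂_eq_sum_range, map_sum]
    have hs : ∀ s : Finset ℕ, ψ.IsIntegralElem (∑ i ∈ s, π (φ (R.coeff i) * t ^ i)) := by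
      intro s
      induction s using Finset.cons_induction with
      | empty => rw [Finset.sum_empty]; exact ψ.isIntegralElem_zero
      | cons i s hi ih =>
        rw [Finset.sum_cons]
        refine RingHom.IsIntegralElem.add _ ?_ ih
        rw [map_mul, map_pow, ← hψ]
        refine RingHom.IsIntegralElem.mul _ (ψ.isIntegralElem_map) ?_
        clear hi ih
        induction i with
        | zero => rw [pow_zero]; exact ψ.isIntegralElem_one
        | succ i ih => rw [pow_succ]; exact RingHom.IsIntegralElem.mul _ ih ht
    exact hs _
  let _ := ψ.toAlgebra
  have : Algebra.IsIntegral (A₀ ⧸ P.comap φ) (A ⧸ P) := ⟨h_int⟩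
  rw [Ideal.Quotient.maximal_ideal_iff_isField_quotient] at hm ⊢
  exact isField_of_isIntegral_of_isField' hm

/-! ### Tangent vector fields -/

section vf
variable {E : Type} [NormedAddCommGroup E] [NormedSpace ℂ E] {x : E}

/-- The derivative of `f` along the vector field `v`. -/
noncomputable def Dv (v : E → E) (f : E → ℂ) (z : E) : ℂ := fderiv ℂ f z (v z)

theorem Dv_an {v : E → E} (hv : AnalyticAt ℂ v x) {f : E → ℂ} (hf : AnalyticAt ℂ f x) :
    AnalyticAt ℂ (Dv v f) x :=
  AnalyticAt.fun_comp (g := fun p : (E →L[ℂ] ℂ) × E => p.1 p.2) (f := fun z => (fderiv ℂ f z, v z))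
    ((ContinuousLinearMap.id ℂ (E →L[ℂ] ℂ)).analyticAt_bilinear _) (hf.fderiv.prod hv)

theorem Dv_congr (v : E → E) {f g : E → ℂ} (h : ∀ᶠ z in 𝓝 x, f z = g z) :
    ∀ᶠ z in 𝓝 x, Dv v f z = Dv v g z := by
  filter_upwards [h.eventually_nhds] with z hz
  rw [Dv, Dv, Filter.EventuallyEq.fderiv_eq hz]

/-- The derivation of the ring of germs given by an analytic vector field. -/
noncomputable def vf {v : E → E} (hv : AnalyticAt ℂ v x) : Derivation ℤ (An x) (An x) :=
  Derivation.mk' (AddMonoidHom.toIntLinearMap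
    { toFun := fun a => mk (Dv_an hv (rep_an a))
      map_zero' := by
        rw [mk_eq_zero]
        filter_upwards [Dv_congr v (rep_ev _ (mk_zero x))] with z hz
        rw [hz]; simp [Dv]
      map_add' := fun a b => by
        rw [← mk_add (Dv_an hv (rep_an a)) (Dv_an hv (rep_an b)), mk_eq]
        filter_upwards [Dv_congr v (rep_add a b), (rep_an a).eventually_analyticAt,
          (rep_an b).eventually_analyticAt] with z hz h1 h2
        rw [hz, Dv, fderiv_fun_add h1.differentiableAt h2.differentiableAt]; rfl }) fun a b => by
    change mk (Dv_an hv (rep_an (a * b))) = a • mk (Dv_an hv (rep_an b)) + b • mk (Dv_an hv (rep_an a))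
    have h : mk (Dv_an hv (rep_an (a * b))) =
        mk (rep_an a) * mk (Dv_an hv (rep_an b)) + mk (rep_an b) * mk (Dv_an hv (rep_an a)) := by
      rw [← mk_mul (rep_an a) (Dv_an hv (rep_an b)), ← mk_mul (rep_an b) (Dv_an hv (rep_an a)),
        ← mk_add, mk_eq]
      filter_upwards [Dv_congr v (rep_mul a b), (rep_an a).eventually_analyticAt,
        (rep_an b).eventually_analyticAt] with z hz h1 h2
      rw [hz, Dv, fderiv_fun_mul h1.differentiableAt h2.differentiableAt]; rfl
    rwa [mk_rep, mk_rep] at h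

theorem vf_mk {v : E → E} (hv : AnalyticAt ℂ v x) {f : E → ℂ} (hf : AnalyticAt ℂ f x) :
    vf hv (mk hf) = mk (Dv_an hv hf) :=
  (mk_eq (hf := Dv_an hv (rep_an (mk hf)))).2 (Dv_congr v (rep_ev hf rfl))

end vf

theorem isLocal_mem {E : Type} [NormedAddCommGroup E] [NormedSpace ℂ E] {x : E} {f : E → ℂ}
    (hf : AnalyticAt ℂ f x) : mk hf ∈ IsLocalRing.maximalIdeal (An x) ↔ f x = 0 := by
  rw [IsLocalRing.mem_maximalIdeal, mem_nonunits_iff, mk_isUnit, not_not]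

/-- A non-maximal prime of the ring of germs is preserved by a vector field that does not vanish
modulo the prime. -/
theorem tangent (d : ℕ) : ∀ {E : Type} [NormedAddCommGroup E] [NormedSpace ℂ E] [FiniteDimensional ℂ E]
    (_ : Module.finrank ℂ E = d) (x : E) (P : Ideal (An x)) (_ : P.IsPrime) (_ : ¬ P.IsMaximal),
    ∃ (v : E → E) (hv : AnalyticAt ℂ v x) (ℓ : E →L[ℂ] ℂ), (∀ a ∈ P, vf hv a ∈ P) ∧
      mk (AnalyticAt.fun_comp (ℓ.analyticAt (v x)) hv) ∉ P := by
  induction d with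
  | zero =>
    intro E _ _ _ hE x P hP hm
    exfalso
    have hs : Subsingleton E := Module.finrank_zero_iff.1 hE
    have : P = IsLocalRing.maximalIdeal (An x) := by
      refine le_antisymm (IsLocalRing.le_maximalIdeal hP.ne_top) fun a ha => ?_
      obtain ⟨f, hf, rfl⟩ := exists_rep a
      have h0 : mk hf = 0 := mk_eq_zero.2 (Eventually.of_forall fun z => by
        rw [Subsingleton.elim z x]; exact (isLocal_mem hf).1 ha)
      rw [h0]; exact P.zero_mem
    rw [this] at hm
    exact hm inferInstance
  | succ d ih =>
    intro E _ _ _ hE x P hP hm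
    have : Nontrivial E := Module.nontrivial_of_finrank_pos (R := ℂ) (by omega)
    have h1P : (1 : An x) ∉ P := fun h => hP.ne_top ((Ideal.eq_top_iff_one _).2 h)
    by_cases hbot : P = ⊥
    · obtain ⟨v, hv⟩ := exists_ne (0 : E)
      obtain ⟨e, he⟩ := exists_coord hE hv
      refine ⟨fun _ => v, analyticAt_const,
        (ContinuousLinearMap.fst ℂ ℂ (Fin d → ℂ)).comp e.toContinuousLinearMap, ?_, ?_⟩
      · intro a ha
        rw [hbot, Ideal.mem_bot] at ha
        rw [ha, map_zero]; exact P.zero_mem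
      · convert h1P
        rw [← mk_one]
        exact mk_eq.2 (Eventually.of_forall fun z => by simp [he])
    obtain ⟨a, ha, h0⟩ := Submodule.exists_mem_ne_zero_of_ne_bot hbot
    obtain ⟨f, hf, rfl⟩ := exists_rep a
    obtain ⟨v, hv, hv'⟩ := exists_line hf (by rwa [← mk_eq_zero (hf := hf)])
    obtain ⟨e, he⟩ := exists_coord hE hv
    obtain ⟨W, hWm, hW, hdiv⟩ := wd e x hf (by rwa [coord_line e he])
    have hWP : ev e x W ∈ P := (Ideal.span_singleton_le_iff_mem P).2 ha hW
    have hm' : ¬ (P.comap (pb (pr_an e x))).IsMaximal := fun h =>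
      hm (lift_max (pb (pr_an e x)) (mk (zc_an e x)) P hWm hWP hdiv h)
    obtain ⟨v', hv', ℓ, hT, hℓ⟩ := ih (E := Fin d → ℂ) (by simp) (e x).2 (P.comap (pb (pr_an e x)))
      inferInstance hm'
    let v₁ : E → E := fun z => e.symm (0, v' (e z).2)
    have hv₁ : AnalyticAt ℂ v₁ x :=
      AnalyticAt.fun_comp (e.symm.toContinuousLinearMap.analyticAt _)
        (analyticAt_const.prod (AnalyticAt.fun_comp (g := v') (f := fun z => (e z).2) hv' (pr_an e x)))
    have hv₂ : AnalyticAt ℂ (fun _ : E => v) x := analyticAt_const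
    have hfd : ∀ z, HasFDerivAt (fun z => (e z).2)
        ((ContinuousLinearMap.snd ℂ ℂ (Fin d → ℂ)).comp e.toContinuousLinearMap) z := fun z =>
      ((ContinuousLinearMap.snd ℂ ℂ (Fin d → ℂ)).comp e.toContinuousLinearMap).hasFDerivAt
    have hfz : ∀ z, HasFDerivAt (fun z => (e z).1 - (e x).1)
        ((ContinuousLinearMap.fst ℂ ℂ (Fin d → ℂ)).comp e.toContinuousLinearMap) z := fun z =>
      ((ContinuousLinearMap.fst ℂ ℂ (Fin d → ℂ)).comp e.toContinuousLinearMap).hasFDerivAt.sub_const _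
    have hpb : ∀ {g : (Fin d → ℂ) → ℂ}, AnalyticAt ℂ g (e x).2 → ∀ᶠ z in 𝓝 x,
        HasFDerivAt (fun z => g (e z).2) ((fderiv ℂ g (e z).2).comp
          ((ContinuousLinearMap.snd ℂ ℂ (Fin d → ℂ)).comp e.toContinuousLinearMap)) z := by
      intro g hg
      filter_upwards [(pr_an e x).continuousAt.eventually hg.eventually_analyticAt] with z hz
      exact HasFDerivAt.comp z hz.differentiableAt.hasFDerivAt (hfd z)
    obtain ⟨α, β, hα, hαβ⟩ := lift_der (pb (pr_an e x)) (mk (zc_an e x)) P hWm hWP hdiv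
      (fun k hk => An_natCast x hk) (vf hv') (fun s hs => hT s hs) (vf hv₁) (vf hv₂) (by
        intro s
        obtain ⟨g, hg, rfl⟩ := exists_rep s
        rw [vf_mk hv' hg, pb_mk (pr_an e x) hg, pb_mk (pr_an e x) (Dv_an hv' hg), vf_mk, mk_eq]
        filter_upwards [hpb hg] with z hz
        rw [Dv, hz.fderiv]
        simp [v₁, Dv]) (by
        rw [vf_mk, mk_eq_zero]
        refine Eventually.of_forall fun z => ?_
        rw [Dv, (hfz z).fderiv]; simp [v₁]) (by
        intro s
        obtain ⟨g, hg, rfl⟩ := exists_rep s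
        rw [pb_mk (pr_an e x) hg, vf_mk, mk_eq_zero]
        filter_upwards [hpb hg] with z hz
        rw [Dv, hz.fderiv]
        simp [he]) (by
        rw [vf_mk, ← mk_one, mk_eq]
        refine Eventually.of_forall fun z => ?_
        rw [Dv, (hfz z).fderiv]; simp [he])
    obtain ⟨a, han, rfl⟩ := exists_rep α
    obtain ⟨b, hbn, rfl⟩ := exists_rep β
    have hw : AnalyticAt ℂ (fun z => a z • v₁ z - b z • v) x :=
      (han.fun_smul hv₁).fun_sub (hbn.fun_smul hv₂)
    refine ⟨_, hw, ℓ.comp ((ContinuousLinearMap.snd ℂ ℂ (Fin d → ℂ)).comp e.toContinuousLinearMap),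
      fun s hs => ?_, fun h => ?_⟩
    · obtain ⟨g, hg, rfl⟩ := exists_rep s
      have := hαβ _ hs
      rw [vf_mk, vf_mk, ← mk_mul han (Dv_an hv₁ hg), ← mk_mul hbn (Dv_an hv₂ hg), ← mk_sub] at this
      rw [vf_mk]
      convert this using 1
      exact mk_eq.2 (Eventually.of_forall fun z => by simp [Dv])
    · have h2 : mk han * pb (pr_an e x) (mk (AnalyticAt.fun_comp (ℓ.analyticAt (v' (e x).2)) hv')) ∈ P := by
        convert h using 1
        rw [pb_mk (pr_an e x) (AnalyticAt.fun_comp (ℓ.analyticAt (v' (e x).2)) hv'),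
          ← mk_mul han (AnalyticAt.fun_comp (g := fun z => ℓ (v' z)) (f := fun z => (e z).2) (AnalyticAt.fun_comp (ℓ.analyticAt (v' (e x).2)) hv') (pr_an e x))]
        exact mk_eq.2 (Eventually.of_forall fun z => by simp [he, v₁])
      exact (hP.mem_or_mem h2).elim hα hℓ

/-! ### Ideals of germs and sections of quotient sheaves -/

section inn
variable {E : Type} [NormedAddCommGroup E] [NormedSpace ℂ E] {l m : Type} [Fintype l] [Fintype m]

/-- The germ of `f` at `z` lies in the ideal generated by the germs of the `b j`. -/
def In (b : l → E → ℂ) (z : E) (f : E → ℂ) : Prop :=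
  ∃ d : l → E → ℂ, (∀ j, AnalyticAt ℂ (d j) z) ∧ ∀ᶠ w in 𝓝 z, f w = ∑ j, d j w * b j w

variable {b : l → E → ℂ} {z : E} {f g : E → ℂ}

theorem In.congr (h : In b z f) (hfg : ∀ᶠ w in 𝓝 z, g w = f w) : In b z g := by
  obtain ⟨d, hd, h⟩ := h
  exact ⟨d, hd, by filter_upwards [h, hfg] with w h1 h2; rw [h2, h1]⟩

theorem In.add (hf : In b z f) (hg : In b z g) : In b z (fun w => f w + g w) := by
  obtain ⟨d, hd, h⟩ := hf
  obtain ⟨d', hd', h'⟩ := hg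
  refine ⟨fun j w => d j w + d' j w, fun j => (hd j).add (hd' j), ?_⟩
  filter_upwards [h, h'] with w h1 h2
  simp only [h1, h2, add_mul, Finset.sum_add_distrib]

theorem In.mul {a : E → ℂ} (ha : AnalyticAt ℂ a z) (hf : In b z f) : In b z (fun w => a w * f w) := by
  obtain ⟨d, hd, h⟩ := hf
  refine ⟨fun j w => a w * d j w, fun j => ha.mul (hd j), ?_⟩
  filter_upwards [h] with w h1
  simp only [h1, Finset.mul_sum, mul_assoc]

theorem In.sub (hf : In b z f) (hg : In b z g) : In b z (fun w => f w - g w) :=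
  (hf.add (hg.mul (a := fun _ => -1) analyticAt_const)).congr
    (Eventually.of_forall fun w => by ring)

theorem in_zero (b : l → E → ℂ) (z : E) : In b z (fun _ => 0) :=
  ⟨fun _ _ => 0, fun _ => analyticAt_const, by simp⟩

theorem in_self (b : l → E → ℂ) (z : E) (j : l) : In b z (b j) := by
  classical
  exact ⟨fun i _ => if i = j then 1 else 0, fun i => analyticAt_const, by simp⟩

theorem In.trans {c : m → E → ℂ} (hf : In b z f) (h : ∀ j, In c z (b j)) : In c z f := by
  obtain ⟨d, hd, hf⟩ := hf
  choose d' hd' h' using h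
  refine ⟨fun i w => ∑ j, d j w * d' j i w, fun i =>
    Finset.analyticAt_fun_sum _ fun j _ => (hd j).mul (hd' j i), ?_⟩
  filter_upwards [hf, eventually_all.2 h'] with w h1 h2
  rw [h1]
  simp_rw [h2, Finset.mul_sum, Finset.sum_mul]
  rw [Finset.sum_comm]
  simp only [mul_assoc]

theorem In.ev (h : In b z f) : ∀ᶠ z' in 𝓝 z, In b z' f := by
  obtain ⟨d, hd, h⟩ := h
  filter_upwards [eventually_all.2 fun j => (hd j).eventually_analyticAt, h.eventually_nhds] with z' h1 h2
  exact ⟨d, h1, h2⟩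

theorem In.an (h : In b z f) (hb : ∀ j, AnalyticAt ℂ (b j) z) : AnalyticAt ℂ f z := by
  obtain ⟨d, hd, h⟩ := h
  exact AnalyticAt.congr (f := fun w => ∑ j, d j w * b j w)
    (Finset.analyticAt_fun_sum _ fun j _ => (hd j).mul (hb j)) (h.mono fun _ h => h.symm)

theorem In.zero (h : In b z f) (hb : ∀ j, b j z = 0) : f z = 0 := by
  obtain ⟨d, hd, h⟩ := h
  rw [h.self_of_nhds]; simp [hb]

theorem in_of_ne (hb : ∀ j, AnalyticAt ℂ (b j) z) (hg : In b z g) (h0 : g z ≠ 0)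
    (hf : AnalyticAt ℂ f z) : In b z f := by
  have hgn := hg.an hb
  refine (hg.mul (hf.fun_mul (hgn.fun_inv h0))).congr ?_
  filter_upwards [hgn.continuousAt.eventually_ne h0] with w hw
  field_simp

theorem in_iff (hb : ∀ j, AnalyticAt ℂ (b j) z) (hf : AnalyticAt ℂ f z) :
    In b z f ↔ mk hf ∈ Ideal.span (range fun j => mk (hb j)) := by
  rw [Ideal.mem_span_range_iff_exists_fun]
  constructor
  · rintro ⟨d, hd, h⟩
    refine ⟨fun j => mk (hd j), ?_⟩
    simp only [← mk_mul (hd _) (hb _)]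
    rw [← mk_sum Finset.univ fun j => (hd j).fun_mul (hb j), mk_eq]
    exact h.mono fun _ h => h.symm
  · rintro ⟨d, hd⟩
    refine ⟨fun j => rep (d j), fun j => rep_an (d j), ?_⟩
    have h : ∑ j, mk (rep_an (d j)) * mk (hb j) = mk hf := by simpa only [mk_rep] using hd
    simp only [← mk_mul (rep_an (d _)) (hb _)] at h
    rw [← mk_sum Finset.univ fun j => (rep_an (d j)).fun_mul (hb j), mk_eq] at h
    exact h.mono fun _ h => h.symm

theorem in_iff_ev {c : m → E → ℂ} (h1 : ∀ j, In c z (b j)) (h2 : ∀ j, In b z (c j)) :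
    ∀ᶠ z' in 𝓝 z, ∀ f, In b z' f ↔ In c z' f := by
  filter_upwards [eventually_all.2 fun j => (h1 j).ev, eventually_all.2 fun j => (h2 j).ev] with z' h1 h2 f
  exact ⟨fun h => h.trans h1, fun h => h.trans h2⟩

/-- Coherence of ideal quotients, a case of Oka's theorem. -/
theorem colon [FiniteDimensional ℂ E] {a : E → ℂ} (hb : ∀ j, AnalyticAt ℂ (b j) z)
    (ha : AnalyticAt ℂ a z) : ∃ (k : Type) (_ : Fintype k) (c : k → E → ℂ), ∀ᶠ w in 𝓝 z,
      (∀ i, AnalyticAt ℂ (c i) w) ∧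
      ∀ f, (AnalyticAt ℂ f w ∧ In b w (fun y => a y * f y)) ↔ In c w f := by
  let s : Option l → E → Unit → ℂ := fun o w _ => o.elim (a w) (fun j => b j w)
  obtain ⟨k, hk, t, ht⟩ := oka _ rfl z (Option l) Unit s (by rintro (_ | j) _ <;> [exact ha; exact hb j])
  refine ⟨k, hk, fun i y => t i y none, ?_⟩
  filter_upwards [ht] with w ⟨h1, h2⟩
  refine ⟨fun i => h1 i none, fun f => ⟨?_, ?_⟩⟩
  · rintro ⟨hf, d, hd, h⟩
    have hrel : Rel s w (fun y o => o.elim (f y) (fun j => - d j y)) := by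
      refine ⟨by rintro (_ | j) <;> [exact hf; exact (hd j).neg], ?_⟩
      filter_upwards [h] with y hy i
      simp only [Fintype.sum_option, Option.elim, s, neg_mul, Finset.sum_neg_distrib, mul_comm (f y), hy]
      ring
    obtain ⟨e, he, h'⟩ := (h2 _).1 hrel
    exact ⟨e, he, h'.mono fun y hy => hy none⟩
  · rintro ⟨e, he, h⟩
    have hgen : Gen t w (fun y o => ∑ i, e i y * t i y o) := ⟨e, he, by simp⟩
    obtain ⟨h3, h4⟩ := (h2 _).2 hgen
    have hf : AnalyticAt ℂ f w := (h3 none).congr (h.mono fun _ h => h.symm)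
    refine ⟨hf, fun j y => - ∑ i, e i y * t i y (some j), fun j => (h3 (some j)).neg, ?_⟩
    filter_upwards [h4, h] with y hy h5
    have := hy ()
    simp only [Fintype.sum_option, Option.elim, s, ← h5] at this
    simp only [neg_mul, Finset.sum_neg_distrib]
    linear_combination this

/-- Krull's intersection theorem for a principal ideal. -/
theorem krull [FiniteDimensional ℂ E] {w : E → ℂ} (hb : ∀ j, AnalyticAt ℂ (b j) z)
    (hw : AnalyticAt ℂ w z) (h0 : w z = 0) (hf : AnalyticAt ℂ f z)
    (h : ∀ N : ℕ, ∃ v, AnalyticAt ℂ v z ∧ In b z (fun y => f y - w y ^ N * v y)) : In b z f := by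
  rw [in_iff hb hf]
  set I := Ideal.span (range fun j => mk (hb j))
  have hJ : Ideal.span {mk hw} ≠ ⊤ := by
    rw [Ne, Ideal.span_singleton_eq_top, mk_isUnit]; exact not_not.2 h0
  rw [← Ideal.Quotient.eq_zero_iff_mem, ← Submodule.mem_bot (An z),
    ← Ideal.iInf_pow_smul_eq_bot_of_isLocalRing (M := An z ⧸ I) _ hJ, Submodule.mem_iInf]
  intro N
  obtain ⟨v, hv, hN⟩ := h N
  have h1 := (in_iff hb (hf.fun_sub ((hw.fun_pow N).fun_mul hv))).1 hN
  rw [mk_sub hf ((hw.fun_pow N).fun_mul hv), mk_mul (hw.fun_pow N) hv, mk_pow hw] at h1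
  have h2 := Ideal.Quotient.eq.2 h1
  rw [h2]
  exact Submodule.smul_mem_smul (r := mk hw ^ N) (n := Ideal.Quotient.mk I (mk hv))
    (Ideal.pow_mem_pow (Ideal.mem_span_singleton_self _) N) Submodule.mem_top

end inn

section inj
variable {n : ℕ} {l m : Type} [Fintype l] [Fintype m]

/-- The open Euclidean ball about `x` of squared radius `r`. -/
def Bq (x : Fin n → ℝ) (r : ℝ) : Set (Fin n → ℝ) := {y | ∑ i, (y i - x i) ^ 2 < r}

theorem Bq_open (x : Fin n → ℝ) (r : ℝ) : IsOpen (Bq x r) :=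
  isOpen_lt (by fun_prop) continuous_const

theorem Bq_self (x : Fin n → ℝ) {r : ℝ} (hr : 0 < r) : x ∈ Bq x r := by simpa [Bq] using hr

theorem Bq_dist {x y : Fin n → ℝ} {r : ℝ} (h : ∑ i, (y i - x i) ^ 2 ≤ r) :
    dist y x ≤ Real.sqrt r := by
  rw [dist_pi_le_iff (Real.sqrt_nonneg r)]
  intro i
  rw [Real.dist_eq]
  refine Real.le_sqrt_of_sq_le ?_
  rw [sq_abs]
  exact (Finset.single_le_sum (f := fun i => (y i - x i) ^ 2) (fun _ _ => sq_nonneg _)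
    (Finset.mem_univ i)).trans h

theorem Bq_ev {x : Fin n → ℝ} {Φ : (Fin n → ℂ) → Prop} (h : ∀ᶠ z in 𝓝 (rc x), Φ z) :
    ∀ᶠ r in 𝓝[>] (0 : ℝ), ∀ y ∈ Bq x r, Φ (rc y) := by
  obtain ⟨δ, hδ, h⟩ := Metric.eventually_nhds_iff.1 h
  filter_upwards [self_mem_nhdsWithin, mem_nhdsWithin_of_mem_nhds (Iio_mem_nhds (pow_pos hδ 2))] with r hr hr'
  intro y hy
  apply h
  rw [rc_dist]
  exact (Bq_dist (le_of_lt hy)).trans_lt ((Real.sqrt_lt' hδ).2 hr')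

/-- A section, over the subset `V` of real space, of the quotient of the sheaf of analytic germs by
the ideal sheaf generated by the `b j`, given by a representative at each point. -/
def Sec (b : l → (Fin n → ℂ) → ℂ) (V : Set (Fin n → ℝ)) (u : (Fin n → ℝ) → (Fin n → ℂ) → ℂ) : Prop :=
  ∀ y ∈ V, AnalyticAt ℂ (u y) (rc y) ∧ ∀ᶠ y' in 𝓝 y, In b (rc y') (fun w => u y w - u y' w)

/-- Sections over the ball that vanish at the centre vanish. -/
def Inj (x : Fin n → ℝ) (b : l → (Fin n → ℂ) → ℂ) (r : ℝ) : Prop :=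
  ∀ u, Sec b (Bq x r) u → In b (rc x) (u x) → ∀ y ∈ Bq x r, In b (rc y) (u y)

/-- Division of a section by `a`. -/
theorem divide {x : Fin n → ℝ} {b : l → (Fin n → ℂ) → ℂ} {c : m → (Fin n → ℂ) → ℂ}
    {a : (Fin n → ℂ) → ℂ} {r : ℝ} (hr : 0 < r)
    (hc : ∀ y ∈ Bq x r, AnalyticAt ℂ a (rc y) ∧
      ∀ f, (AnalyticAt ℂ f (rc y) ∧ In b (rc y) (fun w => a w * f w)) ↔ In c (rc y) f)
    (hI : Inj x (fun o : Option l => o.elim a b) r) {u : (Fin n → ℝ) → (Fin n → ℂ) → ℂ}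
    (hu : Sec b (Bq x r) u) (hx : In b (rc x) (u x)) :
    ∃ v, Sec c (Bq x r) v ∧ In c (rc x) (v x) ∧
      ∀ y ∈ Bq x r, In b (rc y) (fun w => u y w - a w * v y w) := by
  have hbo : ∀ {z f}, In b z f → In (fun o : Option l => o.elim a b) z f := fun h =>
    h.trans fun j => in_self (fun o : Option l => o.elim a b) _ (some j)
  have h1 := hI u (fun y hy => ⟨(hu y hy).1, (hu y hy).2.mono fun _ h => hbo h⟩) (hbo hx)
  have h2 : ∀ y, ∃ v, y ∈ Bq x r → AnalyticAt ℂ v (rc y) ∧ In b (rc y) (fun w => u y w - a w * v w) := by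
    intro y
    by_cases hy : y ∈ Bq x r
    · obtain ⟨d, hd, h⟩ := h1 y hy
      refine ⟨d none, fun _ => ⟨hd none, fun j => d (some j), fun j => hd (some j), ?_⟩⟩
      filter_upwards [h] with w hw
      rw [hw, Fintype.sum_option]
      simp only [Option.elim]
      ring
    · exact ⟨0, fun h => absurd h hy⟩
  choose v hv using h2
  have hxr := Bq_self x hr
  refine ⟨v, fun y hy => ⟨(hv y hy).1, ?_⟩, ((hc x hxr).2 _).1 ⟨(hv x hxr).1, ?_⟩, fun y hy => (hv y hy).2⟩
  · filter_upwards [(hu y hy).2, rc_continuous.continuousAt.eventually (hv y hy).2.ev,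
      rc_continuous.continuousAt.eventually (hv y hy).1.eventually_analyticAt,
      (Bq_open x r).mem_nhds hy] with y' h3 h4 h5 h6
    refine ((hc y' h6).2 _).1 ⟨h5.sub (hv y' h6).1, ?_⟩
    exact ((h3.sub h4).add (hv y' h6).2).congr (Eventually.of_forall fun w => by ring)
  · exact (hx.sub (hv x hxr).2).congr (Eventually.of_forall fun w => by ring)

end inj

/-! ### Real tangent vector fields and their flows -/

variable {n : ℕ}

/-- The inclusion of real in complex space as a continuous linear map. -/
noncomputable def rcL : (Fin n → ℝ) →L[ℝ] (Fin n → ℂ) :=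
  ContinuousLinearMap.pi fun i => Complex.ofRealCLM.comp (ContinuousLinearMap.proj i)

theorem rcL_apply (y : Fin n → ℝ) : rcL y = rc y := rfl

theorem rc_hasFDerivAt {f : (Fin n → ℂ) → ℂ} {y : Fin n → ℝ} (hf : AnalyticAt ℂ f (rc y)) :
    HasFDerivAt (fun y => f (rc y)) (((fderiv ℂ f (rc y)).restrictScalars ℝ).comp rcL) y :=
  HasFDerivAt.comp (f := fun y => rc y) y (hf.differentiableAt.hasFDerivAt.restrictScalars ℝ)
    (rcL.hasFDerivAt)

theorem real_part {f : (Fin n → ℂ) → ℂ} {x : Fin n → ℝ} (hf : AnalyticAt ℂ f (rc x)) :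
    ∃ g, AnalyticAt ℂ g (rc x) ∧ ∀ᶠ y in 𝓝 x, g (rc y) = ((f (rc y)).re : ℂ) := by
  obtain ⟨r, hr, F, hF, h⟩ := ext_ball (re_analytic hf)
  exact ⟨F, hF _ (mem_ball_self hr), Filter.mem_of_superset (ball_mem_nhds x hr) h⟩

theorem fderiv_real {f : (Fin n → ℂ) → ℂ} {y : Fin n → ℝ} (hf : AnalyticAt ℂ f (rc y))
    (hr : ∀ᶠ y' in 𝓝 y, (f (rc y')).im = 0) (V : Fin n → ℝ) : (fderiv ℂ f (rc y) (rc V)).im = 0 := by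
  have h1 := (Complex.imCLM.hasFDerivAt).comp y (rc_hasFDerivAt hf)
  have h2 : HasFDerivAt (Complex.imCLM ∘ fun y => f (rc y)) (0 : (Fin n → ℝ) →L[ℝ] ℝ) y :=
    (hasFDerivAt_const (0 : ℝ) y).congr_of_eventuallyEq hr
  have h3 := h1.unique h2
  have := congrArg (fun L : (Fin n → ℝ) →L[ℝ] ℝ => L V) h3
  simpa [rcL_apply] using this

theorem real_eq {x : Fin n → ℝ} {f g : (Fin n → ℂ) → ℂ} (hf : AnalyticAt ℂ f (rc x))
    (hg : AnalyticAt ℂ g (rc x)) (h : ∀ᶠ y in 𝓝 x, f (rc y) = g (rc y)) : mk hf = mk hg := by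
  rw [← sub_eq_zero, ← mk_sub hf hg, mk_eq_zero]
  exact real_near (hf.fun_sub hg) (h.mono fun y hy => sub_eq_zero.2 hy)

/-- A prime closed under taking real parts and not maximal is preserved by a vector field that is
real on real space and does not vanish modulo the prime. -/
theorem real_tangent {x : Fin n → ℝ} (P : Ideal (An (rc x))) [hP : P.IsPrime] (hm : ¬ P.IsMaximal)
    (hre : ∀ f g, ∀ (hf : AnalyticAt ℂ f (rc x)) (hg : AnalyticAt ℂ g (rc x)), mk hf ∈ P →
      (∀ᶠ y in 𝓝 x, g (rc y) = ((f (rc y)).re : ℂ)) → mk hg ∈ P) :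
    ∃ (v : (Fin n → ℂ) → Fin n → ℂ) (hv : AnalyticAt ℂ v (rc x)) (i : Fin n),
      (∀ a ∈ P, vf hv a ∈ P) ∧ mk (analyticAt_pi_iff.1 hv i) ∉ P ∧
      ∀ᶠ y in 𝓝 x, ∃ V, v (rc y) = rc V := by
  obtain ⟨v, hv, ℓ, hT, hℓ⟩ := tangent n (by simp) (rc x) P hP hm
  have hvi : ∀ i, AnalyticAt ℂ (fun z => v z i) (rc x) := fun i => analyticAt_pi_iff.1 hv i
  obtain ⟨i, hi⟩ : ∃ i, mk (hvi i) ∉ P := by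
    by_contra! h
    apply hℓ
    have h1 : ∑ i, mk (hvi i) * mk (analyticAt_const : AnalyticAt ℂ (fun _ => ℓ (Pi.single i 1)) (rc x)) ∈ P :=
      P.sum_mem fun i _ => P.mul_mem_right _ (h i)
    simp only [← mk_mul (hvi _) analyticAt_const] at h1
    rw [← mk_sum Finset.univ fun i => (hvi i).fun_mul analyticAt_const] at h1
    convert h1 using 1
    refine mk_eq.2 (Eventually.of_forall fun z => ?_)
    have h2 := LinearMap.pi_apply_eq_sum_univ ℓ.toLinearMap (v z)
    simp only [ContinuousLinearMap.coe_coe, smul_eq_mul] at h2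
    rw [h2]
    refine Finset.sum_congr rfl fun j _ => ?_
    congr 2
    ext k
    simp [Pi.single_apply, eq_comm]
  have key : ∀ c : ℂ, ∃ (w : (Fin n → ℂ) → Fin n → ℂ) (hw : AnalyticAt ℂ w (rc x)),
      (∀ a ∈ P, vf hw a ∈ P) ∧ ∀ᶠ y in 𝓝 x, w (rc y) = rc (fun i => (c * v (rc y) i).re) := by
    intro c
    choose w hw hwr using fun i => real_part (analyticAt_const.fun_mul (hvi i) (f := fun _ => c))
    have hw' : AnalyticAt ℂ (fun z i => w i z) (rc x) := analyticAt_pi_iff.2 hw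
    have hwv : ∀ᶠ y in 𝓝 x, (fun i => w i (rc y)) = rc (fun i => (c * v (rc y) i).re) := by
      filter_upwards [eventually_all.2 hwr] with y hy
      exact funext fun i => hy i
    have hreal : ∀ p (hp : AnalyticAt ℂ p (rc x)), mk hp ∈ P → (∀ᶠ y in 𝓝 x, (p (rc y)).im = 0) →
        vf hw' (mk hp) ∈ P := by
      intro p hp hpP him
      have h1 := P.mul_mem_left (mk (analyticAt_const : AnalyticAt ℂ (fun _ => c) (rc x))) (hT _ hpP)
      rw [vf_mk, ← mk_mul analyticAt_const (Dv_an hv hp)] at h1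
      rw [vf_mk]
      refine hre _ _ _ _ h1 ?_
      filter_upwards [hwv, him.eventually_nhds, rc_continuous.continuousAt.eventually hp.eventually_analyticAt]
        with y h2 h3 h4
      have e1 : c * Dv v p (rc y) = fderiv ℂ p (rc y) (rc fun i => (c * v (rc y) i).re) +
          Complex.I * fderiv ℂ p (rc y) (rc fun i => (c * v (rc y) i).im) := by
        rw [Dv, ← smul_eq_mul, ← map_smul, ← smul_eq_mul, ← map_smul, ← map_add]
        congr 1
        ext i
        simp only [Pi.smul_apply, Pi.add_apply, smul_eq_mul, rc]
        rw [mul_comm Complex.I]; exact (Complex.re_add_im _).symm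
      have e2 := fderiv_real h4 h3 fun i => (c * v (rc y) i).re
      have e3 := fderiv_real h4 h3 fun i => (c * v (rc y) i).im
      rw [e1]
      simp only [Dv, h2]
      generalize fderiv ℂ p (rc y) (rc fun i => (c * v (rc y) i).re) = X at e2 ⊢
      generalize fderiv ℂ p (rc y) (rc fun i => (c * v (rc y) i).im) = Y at e3 ⊢
      apply Complex.ext <;> simp [e2, e3]
    refine ⟨_, hw', fun a ha => ?_, hwv⟩
    obtain ⟨p, hp, rfl⟩ := exists_rep a
    obtain ⟨p₁, hp₁, hr₁⟩ := real_part hp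
    obtain ⟨p₂, hp₂, hr₂⟩ := real_part (analyticAt_const.fun_mul hp (f := fun _ => -Complex.I))
    have hI : AnalyticAt ℂ (fun _ : Fin n → ℂ => Complex.I) (rc x) := analyticAt_const
    have e : mk hp = mk hp₁ + mk hI * mk hp₂ := by
      rw [← mk_mul hI hp₂, ← mk_add hp₁ (hI.fun_mul hp₂)]
      refine real_eq _ _ ?_
      filter_upwards [hr₁, hr₂] with y h1 h2
      rw [h1, h2]
      apply Complex.ext <;> simp
    have hP₁ : mk hp₁ ∈ P := hre _ _ hp hp₁ ha hr₁
    have hP₂ : mk hp₂ ∈ P := hre _ _ (analyticAt_const.fun_mul hp) hp₂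
      (P.mul_mem_left (mk (analyticAt_const : AnalyticAt ℂ (fun _ => -Complex.I) (rc x))) ha) hr₂
    rw [e, map_add, Derivation.leibniz]
    exact P.add_mem (hreal _ _ hP₁ (hr₁.mono fun y h => by simp [h]))
      (P.add_mem (P.mul_mem_left _ (hreal _ _ hP₂ (hr₂.mono fun y h => by rw [h]; simp))) (P.mul_mem_right _ hP₂))
  obtain ⟨w₁, hw₁, hT₁, hr₁⟩ := key 1
  obtain ⟨w₂, hw₂, hT₂, hr₂⟩ := key (-Complex.I)
  by_cases h1 : mk (analyticAt_pi_iff.1 hw₁ i) ∈ P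
  · refine ⟨w₂, hw₂, i, hT₂, fun h2 => hi ?_, hr₂.mono fun y h => ⟨_, h⟩⟩
    have hI : AnalyticAt ℂ (fun _ : Fin n → ℂ => Complex.I) (rc x) := analyticAt_const
    have e : mk (hvi i) = mk (analyticAt_pi_iff.1 hw₁ i) + mk hI * mk (analyticAt_pi_iff.1 hw₂ i) := by
      rw [← mk_mul hI (analyticAt_pi_iff.1 hw₂ i), ← mk_add (analyticAt_pi_iff.1 hw₁ i)
        (hI.fun_mul (analyticAt_pi_iff.1 hw₂ i))]
      refine real_eq _ _ ?_
      filter_upwards [hr₁, hr₂] with y h1 h2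
      rw [h1, h2]
      apply Complex.ext <;> simp [rc]
    rw [e]
    exact P.add_mem h1 (P.mul_mem_left _ h2)
  · exact ⟨w₁, hw₁, i, hT₁, h1, hr₁.mono fun y h => ⟨_, h⟩⟩

/-- In a Noetherian ring, some multiple of an element outside the ideal has prime annihilator modulo
the ideal. -/
theorem exists_prime_colon {A : Type} [CommRing A] [IsNoetherianRing A] {I : Ideal A} {u : A}
    (hu : u ∉ I) : ∃ (s : A) (p : Ideal A), p.IsPrime ∧ ∀ a, a ∈ p ↔ a * (s * u) ∈ I := by
  let J : A → Ideal A := fun s => Submodule.comap (LinearMap.mulRight A (s * u)) I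
  have hJ : ∀ s a, a ∈ J s ↔ a * (s * u) ∈ I := fun s a => Iff.rfl
  obtain ⟨-, ⟨⟨s, hs, rfl⟩, hmax⟩⟩ := set_has_maximal_iff_noetherian.2 (inferInstance : IsNoetherian A A)
    (J '' {s | s * u ∉ I}) ⟨_, 1, by simpa using hu, rfl⟩
  refine ⟨s, J s, Ideal.isPrime_iff.2 ⟨?_, ?_⟩, hJ s⟩
  · rw [Ne, Ideal.eq_top_iff_one, hJ, one_mul]; exact hs
  · intro a b hab
    by_contra! h
    have h1 : a * s * u ∉ I := by rw [mul_assoc]; exact h.1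
    refine hmax _ ⟨a * s, h1, rfl⟩ (lt_of_le_of_ne (fun y hy => ?_) fun e => h.2 ?_)
    · rw [hJ] at hy ⊢
      have := I.mul_mem_left a hy
      convert this using 1
      ring
    · rw [e, hJ]
      rw [hJ] at hab
      convert hab using 1
      ring

/-- The support of a section is invariant under the flow of a tangent vector field. -/
theorem flow {l : Type} [Fintype l] {y₀ : Fin n → ℝ} {v : (Fin n → ℂ) → Fin n → ℂ}
    (hv : AnalyticAt ℂ v (rc y₀)) (hr : ∀ᶠ y in 𝓝 y₀, ∃ V, v (rc y) = rc V)
    {b : l → (Fin n → ℂ) → ℂ} (hb : ∀ j, AnalyticAt ℂ (b j) (rc y₀))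
    (hbv : ∀ j, In b (rc y₀) (Dv v (b j))) {g : (Fin n → ℂ) → ℂ} (hg : AnalyticAt ℂ g (rc y₀))
    (hgb : ¬ In b (rc y₀) g) :
    ∃ γ : ℝ → Fin n → ℝ, γ 0 = y₀ ∧ ∀ᶠ t in 𝓝 (0 : ℝ), (∃ V, HasDerivAt γ V t ∧ v (rc (γ t)) = rc V) ∧
      ¬ In b (rc (γ t)) g := by
  set I := Ideal.span (range fun j => mk (hb j)) with hI
  have hbI : ∀ j, mk (hb j) ∈ I := fun j => Ideal.subset_span ⟨j, rfl⟩
  have hgI : mk hg ∉ I := fun h => hgb ((in_iff hb hg).2 h)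
  obtain ⟨s, p, hp, hps⟩ := exists_prime_colon hgI
  obtain ⟨σ, hσ, rfl⟩ := exists_rep s
  obtain ⟨k, _, c, hc⟩ := colon hb (hσ.fun_mul hg)
  have hcan := hc.self_of_nhds.1
  have hcol := hc.self_of_nhds.2
  have hcp : ∀ {f} (hf : AnalyticAt ℂ f (rc y₀)), mk hf ∈ p ↔ In c (rc y₀) f := by
    intro f hf
    rw [← hcol, hps, ← mk_mul hσ hg, ← mk_mul hf (hσ.fun_mul hg), in_iff hb ((hσ.fun_mul hg).fun_mul hf)]
    simp only [hf, true_and]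
    rw [mk_mul hf (hσ.fun_mul hg), mk_mul (hσ.fun_mul hg) hf, mul_comm]
  have hDI : ∀ a ∈ I, vf hv a ∈ I := by
    intro a ha
    refine Submodule.span_induction ?_ (by simp) (fun a b _ _ h1 h2 => by rw [map_add]; exact I.add_mem h1 h2)
      (fun q a ha h => ?_) ha
    · rintro _ ⟨j, rfl⟩
      rw [vf_mk]; exact (in_iff hb _).1 (hbv j)
    · rw [smul_eq_mul, Derivation.leibniz]
      exact I.add_mem (I.mul_mem_left _ h) (I.mul_mem_right _ ha)
  have hcD : ∀ j, In c (rc y₀) (Dv v (c j)) := fun j => by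
    rw [← hcp (Dv_an hv (hcan j)), ← vf_mk hv (hcan j)]
    exact seidenberg (fun k hk => An_natCast _ hk) _ hDI _ hps ((hcp (hcan j)).2 (in_self c _ j))
  have hc0 : ∀ j, c j (rc y₀) = 0 := fun j => by
    by_contra h
    exact hp.ne_top (Ideal.eq_top_of_isUnit_mem _ ((hcp (hcan j)).2 (in_self c _ j)) (mk_isUnit.2 h))
  choose M hM hMc using hcD
  have hVan : AnalyticAt ℝ (fun y i => (v (rc y) i).re) y₀ :=
    analyticAt_pi_iff.2 fun i => re_analytic (analyticAt_pi_iff.1 hv i)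
  obtain ⟨γ, hγ0, ε, hε, hγ⟩ :=
    ContDiffAt.exists_forall_mem_closedBall_exists_eq_forall_mem_Ioo_hasDerivAt₀ (hVan.contDiffAt (n := 1)) 0
  have hγ' : ∀ᶠ t in 𝓝 (0 : ℝ), HasDerivAt γ (fun i => (v (rc (γ t)) i).re) t :=
    Filter.mem_of_superset (Ioo_mem_nhds (by linarith) (by linarith)) hγ
  have hγc : Tendsto γ (𝓝 0) (𝓝 y₀) := hγ0 ▸ hγ'.self_of_nhds.continuousAt
  have hγr : Tendsto (fun t => rc (γ t)) (𝓝 0) (𝓝 (rc y₀)) := (rc_continuous.tendsto y₀).comp hγc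
  have hV : ∀ᶠ t in 𝓝 (0 : ℝ), ∃ V, HasDerivAt γ V t ∧ v (rc (γ t)) = rc V := by
    filter_upwards [hγ', hγc.eventually hr] with t h1 ⟨V, hV⟩
    refine ⟨V, ?_, hV⟩
    convert h1 using 1
    ext i
    rw [hV]; simp [rc]
  have hzero : (fun t j => c j (rc (γ t))) =ᶠ[𝓝 0] fun _ _ => (0 : ℂ) := by
    let K : NNReal := ∑ j, ∑ i, (‖M j i (rc y₀)‖₊ + 1)
    refine ODE_solution_unique_of_eventually (K := K) (s := fun _ => univ)
      (v := fun t f j => ∑ i, M j i (rc (γ t)) * f i) ?_ ?_ ?_ ?_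
    · have hMb : ∀ᶠ t in 𝓝 (0 : ℝ), ∀ j i, ‖M j i (rc (γ t))‖ ≤ ‖M j i (rc y₀)‖ + 1 :=
        eventually_all.2 fun j => eventually_all.2 fun i =>
          (((hM j i).continuousAt.tendsto.comp hγr).norm.eventually (gt_mem_nhds (lt_add_one _))).mono
            fun _ h => h.le
      filter_upwards [hMb] with t ht
      refine LipschitzOnWith.of_dist_le_mul fun f _ g _ => ?_
      rw [dist_pi_le_iff (by positivity)]
      intro j
      rw [dist_eq_norm, ← Finset.sum_sub_distrib]
      have h1 : ∀ i, ‖M j i (rc (γ t)) * f i - M j i (rc (γ t)) * g i‖ ≤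
          (‖M j i (rc y₀)‖ + 1) * dist f g := by
        intro i
        rw [← mul_sub, norm_mul, ← dist_eq_norm]
        exact mul_le_mul (ht j i) (dist_le_pi_dist f g i) dist_nonneg (by positivity)
      refine (norm_sum_le _ _).trans ((Finset.sum_le_sum fun i _ => h1 i).trans ?_)
      rw [← Finset.sum_mul]
      refine mul_le_mul_of_nonneg_right ?_ dist_nonneg
      have := Finset.single_le_sum (f := fun j => ∑ i, (‖M j i (rc y₀)‖₊ + 1)) (fun _ _ => zero_le)
        (Finset.mem_univ j)
      have h2 : ((∑ i, (‖M j i (rc y₀)‖₊ + 1) : NNReal) : ℝ) ≤ K := by exact_mod_cast this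
      push_cast at h2
      exact h2
    · filter_upwards [hV, hγr.eventually (eventually_all.2 hMc),
        hγr.eventually (eventually_all.2 fun j => (hcan j).eventually_analyticAt)] with t ⟨V, h1, h2⟩ h3 h4
      refine ⟨hasDerivAt_pi.2 fun j => ?_, mem_univ _⟩
      rw [← h3 j]
      have h5 := (rc_hasFDerivAt (h4 j)).comp_hasDerivAt t h1
      convert h5 using 1
      · rfl
      · rw [Dv, h2]; rfl
    · refine Eventually.of_forall fun t => ⟨?_, mem_univ _⟩
      convert hasDerivAt_const t (fun _ : k => (0 : ℂ)) using 1
      ext j; simp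
    · ext j; simp [hγ0, hc0]
  refine ⟨γ, hγ0, ?_⟩
  filter_upwards [hV, hzero, hγr.eventually hc, hγr.eventually hσ.eventually_analyticAt] with t h1 h2 h3 h4
  refine ⟨h1, fun h => ?_⟩
  have h5 : In c (rc (γ t)) (fun _ => 1) := (h3.2 _).1 ⟨analyticAt_const,
    (h.mul h4).congr (Eventually.of_forall fun w => by ring)⟩
  exact one_ne_zero (h5.zero fun j => congrFun h2 j)

end CA

/-! ### Sections vanishing at the centre of a ball -/

namespace CA
variable {n : ℕ} {l : Type} [Fintype l] {x : Fin n → ℝ} {b : l → (Fin n → ℂ) → ℂ}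

theorem Bq_evR {Φ : (Fin n → ℝ) → Prop} (h : ∀ᶠ y in 𝓝 x, Φ y) :
    ∀ᶠ r in 𝓝[>] (0 : ℝ), ∀ y ∈ Bq x r, Φ y := by
  have hc : Continuous fun (z : Fin n → ℂ) i => (z i).re := by fun_prop
  have h1 : ∀ᶠ z in 𝓝 (rc x), Φ (fun i => (z i).re) :=
    (hc.tendsto (rc x)).eventually (by simpa [rc] using h)
  simpa [rc] using Bq_ev h1

/-- Sections vanishing at the centre vanish at the zeros of a function `w` that is not a zero
divisor modulo the ideal: they are divisible by all powers of `w`. -/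
theorem vanish_zeros (hb : ∀ j, AnalyticAt ℂ (b j) (rc x)) {w : (Fin n → ℂ) → ℂ}
    (hw : AnalyticAt ℂ w (rc x)) (hI : ∀ᶠ r in 𝓝[>] (0 : ℝ), Inj x (fun o : Option l => o.elim w b) r)
    (hcol : ∀ f, AnalyticAt ℂ f (rc x) → In b (rc x) (fun z => w z * f z) → In b (rc x) f) :
    ∀ᶠ r in 𝓝[>] (0 : ℝ), ∀ u, Sec b (Bq x r) u → In b (rc x) (u x) →
      ∀ y ∈ Bq x r, w (rc y) = 0 → In b (rc y) (u y) := by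
  obtain ⟨k, _, c, hc⟩ := colon hb hw
  have hc0 := hc.self_of_nhds
  have hcb := in_iff_ev (b := b) (c := c) (z := rc x)
    (fun j => (hc0.2 _).1 ⟨hb j, (in_self b _ j).mul hw⟩)
    (fun j => hcol _ (hc0.1 j) ((hc0.2 _).2 (in_self c _ j)).2)
  filter_upwards [hI, Bq_ev hc, Bq_ev hcb, Bq_ev hw.eventually_analyticAt, self_mem_nhdsWithin,
    Bq_ev (eventually_all.2 fun j => (hb j).eventually_analyticAt)] with r h1 h2 h3 h4 hr h5 u hu hx y hy hwy
  have key : ∀ N : ℕ, ∃ v, Sec b (Bq x r) v ∧ In b (rc x) (v x) ∧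
      ∀ y ∈ Bq x r, In b (rc y) (fun z => u y z - w z ^ N * v y z) := by
    intro N
    induction N with
    | zero => exact ⟨u, hu, hx, fun y _ => (in_zero b _).congr (Eventually.of_forall fun z => by ring)⟩
    | succ N ih =>
      obtain ⟨v, hv, hvx, h⟩ := ih
      obtain ⟨v', hv', hvx', h'⟩ := divide (c := b) hr (fun y hy => ⟨h4 y hy, fun f =>
        ((h2 y hy).2 f).trans (h3 y hy f).symm⟩) h1 hv hvx
      refine ⟨v', hv', hvx', fun y hy => ((h y hy).add ((h' y hy).mul ((h4 y hy).fun_pow N))).congr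
        (Eventually.of_forall fun z => by ring)⟩
  refine krull (h5 y hy) (h4 y hy) hwy (hu y hy).1 fun N => ?_
  obtain ⟨v, hv, _, h⟩ := key N
  exact ⟨v y, (hv y hy).1, h y hy⟩

theorem q_deriv {γ : ℝ → Fin n → ℝ} {V : Fin n → ℝ} {t : ℝ} (h : HasDerivAt γ V t) :
    HasDerivAt (fun t => ∑ j, (γ t j - x j) ^ 2) (∑ j, 2 * (γ t j - x j) * V j) t := by
  refine HasDerivAt.fun_sum fun j _ => ?_
  simpa using ((hasDerivAt_pi.1 h j).sub_const (x j)).fun_pow 2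

/-- The case of a prime ideal. -/
theorem inj_prime (hb : ∀ j, AnalyticAt ℂ (b j) (rc x)) {P : Ideal (An (rc x))} [hP : P.IsPrime]
    (hPb : Ideal.span (range fun j => mk (hb j)) = P)
    (hIH : ∀ w, ∀ hw : AnalyticAt ℂ w (rc x), mk hw ∉ P →
      ∀ᶠ r in 𝓝[>] (0 : ℝ), Inj x (fun o : Option l => o.elim w b) r) :
    ∀ᶠ r in 𝓝[>] (0 : ℝ), Inj x b r := by
  have hin : ∀ {f} (hf : AnalyticAt ℂ f (rc x)), In b (rc x) f ↔ mk hf ∈ P := fun hf => by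
    rw [in_iff hb hf, hPb]
  have hK := fun w (hw : AnalyticAt ℂ w (rc x)) (h : mk hw ∉ P) =>
    vanish_zeros hb hw (hIH w hw h) fun f hf h1 => by
      rw [hin (hw.fun_mul hf), mk_mul hw hf] at h1
      exact (hin hf).2 ((hP.mem_or_mem h1).resolve_left h)
  have hzi : ∀ i, AnalyticAt ℂ (fun z : Fin n → ℂ => z i - rc x i) (rc x) := fun i =>
    ((ContinuousLinearMap.proj (R := ℂ) (φ := fun _ : Fin n => ℂ) i).analyticAt _).fun_sub analyticAt_const
  have hban := Bq_ev (eventually_all.2 fun j => (hb j).eventually_analyticAt)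
  by_cases hre : ∀ f g, ∀ (hf : AnalyticAt ℂ f (rc x)) (hg : AnalyticAt ℂ g (rc x)), mk hf ∈ P →
      (∀ᶠ y in 𝓝 x, g (rc y) = ((f (rc y)).re : ℂ)) → mk hg ∈ P
  swap
  · push Not at hre
    obtain ⟨f, g, hf, hg, hfP, hfg, hgP⟩ := hre
    filter_upwards [hK g hg hgP, hban, Bq_ev ((hin hf).2 hfP).ev, Bq_evR hfg] with r h1 h2 h3 h4 u hu hx y hy
    by_cases h0 : ∀ j, b j (rc y) = 0
    · exact h1 u hu hx y hy (by rw [h4 y hy, (h3 y hy).zero h0]; simp)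
    · push Not at h0
      obtain ⟨j, hj⟩ := h0
      exact in_of_ne (h2 y hy) (in_self b _ j) hj (hu y hy).1
  by_cases hm : P.IsMaximal
  · have h1 : ∀ i, In b (rc x) (fun z => z i - rc x i) := fun i => by
      rw [hin (hzi i), IsLocalRing.eq_maximalIdeal hm, isLocal_mem, sub_self]
    filter_upwards [hban, Bq_ev (eventually_all.2 fun i => (h1 i).ev)] with r h2 h3 u hu hx y hy
    by_cases hxy : y = x
    · rw [hxy]; exact hx
    · obtain ⟨i, hi⟩ := Function.ne_iff.1 hxy
      refine in_of_ne (h2 y hy) (h3 y hy i) ?_ (hu y hy).1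
      simpa [rc, sub_eq_zero] using hi
  obtain ⟨v, hv, i, hvP, hvi, hvr⟩ := real_tangent P hm hre
  have hDb : ∀ j, In b (rc x) (Dv v (b j)) := fun j => by
    rw [hin (Dv_an hv (hb j)), ← vf_mk hv (hb j)]
    exact hvP _ ((hin (hb j)).1 (in_self b _ j))
  -- along the flow of `v` the support of a section stays invariant
  have hflow : ∀ᶠ r in 𝓝[>] (0 : ℝ), ∀ u, Sec b (Bq x r) u → ∀ y ∈ Bq x r, ¬ In b (rc y) (u y) →
      ∃ γ : ℝ → Fin n → ℝ, γ 0 = y ∧ ContinuousAt γ 0 ∧ ∀ᶠ t in 𝓝 (0 : ℝ),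
        (∃ V, HasDerivAt γ V t ∧ v (rc (γ t)) = rc V) ∧ γ t ∈ Bq x r ∧ ¬ In b (rc (γ t)) (u (γ t)) := by
    filter_upwards [hban, Bq_ev hv.eventually_analyticAt, Bq_evR hvr.eventually_nhds,
      Bq_ev (eventually_all.2 fun j => (hDb j).ev)] with r h1 h2 h3 h4 u hu y hy hyS
    obtain ⟨γ, h0, h⟩ := flow (h2 y hy) (h3 y hy) (h1 y hy) (h4 y hy) (hu y hy).1 hyS
    obtain ⟨⟨V, hV, -⟩, -⟩ := h.self_of_nhds
    have hγ : Tendsto γ (𝓝 0) (𝓝 y) := h0 ▸ hV.continuousAt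
    refine ⟨γ, h0, hV.continuousAt, ?_⟩
    filter_upwards [h, hγ.eventually (hu y hy).2, hγ.eventually ((Bq_open x r).mem_nhds hy)] with t h5 h6 h7
    exact ⟨h5.1, h7, fun h8 => h5.2 ((h6.add h8).congr (Eventually.of_forall fun z => by ring))⟩
  have hopen : ∀ r u, Sec b (Bq x r) u → IsOpen {y ∈ Bq x r | In b (rc y) (u y)} := by
    intro r u hu
    refine isOpen_iff_mem_nhds.2 fun y hy => ?_
    filter_upwards [(Bq_open x r).mem_nhds hy.1, (hu y hy.1).2,
      rc_continuous.continuousAt.eventually hy.2.ev] with y' h1 h2 h3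
    exact ⟨h1, (h3.sub h2).congr (Eventually.of_forall fun z => by ring)⟩
  have hqc : Continuous fun y : Fin n → ℝ => ∑ j, (y j - x j) ^ 2 := by fun_prop
  have hcpt : ∀ ρ, IsCompact {y : Fin n → ℝ | ∑ j, (y j - x j) ^ 2 ≤ ρ} := fun ρ =>
    (isCompact_closedBall x (√ρ)).of_isClosed_subset (isClosed_le hqc continuous_const) fun y hy => Bq_dist hy
  have hvan : ∀ j, AnalyticAt ℂ (fun z => v z j) (rc x) := analyticAt_pi_iff.1 hv
  have hθ : AnalyticAt ℂ (fun z => ∑ j, 2 * (z j - rc x j) * v z j) (rc x) :=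
    Finset.analyticAt_fun_sum _ fun j _ => (analyticAt_const.fun_mul (hzi j)).fun_mul (hvan j)
  have hθr : ∀ {y V : Fin n → ℝ}, v (rc y) = rc V →
      ∑ j, 2 * (rc y j - rc x j) * v (rc y) j = ((∑ j, 2 * (y j - x j) * V j : ℝ) : ℂ) := by
    intro y V h
    rw [h]; simp [rc]
  by_cases hθP : mk hθ ∈ P
  · -- the flow preserves spheres: maximise the coordinate `i` over the support on a sphere
    filter_upwards [hflow, hK _ _ hvi, hban, Bq_ev ((hin hθ).2 hθP).ev] with r h1 h2 h3 h4 u hu hx y hy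
    by_contra hyS
    have hθ0 : ∀ y ∈ Bq x r, ¬ In b (rc y) (u y) → ∑ j, 2 * (rc y j - rc x j) * v (rc y) j = 0 := by
      intro y hy hyS
      refine (h4 y hy).zero fun j => ?_
      by_contra hj
      exact hyS (in_of_ne (h3 y hy) (in_self b _ j) hj (hu y hy).1)
    have hcK := ((hcpt (∑ j, (y j - x j) ^ 2)).inter_right (isClosed_eq hqc continuous_const
      (g := fun _ => ∑ j, (y j - x j) ^ 2))).diff (hopen r u hu)
    obtain ⟨y₀, ⟨⟨-, hy₀⟩, hy₀S⟩, hmax⟩ := hcK.exists_isMaxOn ⟨y, ⟨le_refl (∑ j, (y j - x j) ^ 2), rfl⟩, fun h => hyS h.2⟩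
      (continuous_apply i).continuousOn
    simp only [mem_ofPred_eq] at hy₀
    have hy₀B : y₀ ∈ Bq x r := by simp only [Bq, mem_ofPred_eq, hy₀]; exact hy
    have hy₀N : ¬ In b (rc y₀) (u y₀) := fun h => hy₀S ⟨hy₀B, h⟩
    obtain ⟨γ, h0, -, hγ⟩ := h1 u hu y₀ hy₀B hy₀N
    obtain ⟨ε, hε, hγε⟩ := Metric.eventually_nhds_iff_ball.1 hγ
    have hd : ∀ t ∈ ball (0 : ℝ) ε, HasDerivAt (fun t => ∑ j, (γ t j - x j) ^ 2) 0 t := by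
      intro t ht
      obtain ⟨⟨V, hV, hV'⟩, hB, hS⟩ := hγε t ht
      have := hθ0 _ hB hS
      rw [hθr hV', Complex.ofReal_eq_zero] at this
      exact this ▸ q_deriv hV
    have hconst : ∀ t ∈ ball (0 : ℝ) ε, ∑ j, (γ t j - x j) ^ 2 = ∑ j, (y j - x j) ^ 2 := by
      intro t ht
      have := Metric.isOpen_ball.is_const_of_deriv_eq_zero (convex_ball (0 : ℝ) ε).isPreconnected
        (fun t ht => (hd t ht).differentiableAt.differentiableWithinAt) (fun t ht => (hd t ht).deriv) ht
        (mem_ball_self hε)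
      simp only [h0] at this
      rw [this, hy₀]
    obtain ⟨⟨V, hV, hV'⟩, -⟩ := hγ.self_of_nhds
    have hloc : IsLocalMax (fun t => γ t i) 0 := by
      filter_upwards [ball_mem_nhds 0 hε] with t ht
      rw [h0]
      exact hmax ⟨⟨(hconst t ht).le, hconst t ht⟩, fun h => (hγε t ht).2.2 h.2⟩
    have := hloc.hasDerivAt_eq_zero (hasDerivAt_pi.1 hV i)
    refine hy₀N (h2 u hu hx y₀ hy₀B ?_)
    rw [← h0, hV']
    simp [rc, this]
  · filter_upwards [hflow, hK _ hθ hθP] with r h1 h2 u hu hx y hy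
    by_contra hyS
    obtain ⟨y₀, ⟨hy₀, hy₀S⟩, hmin⟩ := ((hcpt (∑ j, (y j - x j) ^ 2)).diff (hopen r u hu)).exists_isMinOn
      ⟨y, le_refl (∑ j, (y j - x j) ^ 2), fun h => hyS h.2⟩ hqc.continuousOn
    have hy₀B : y₀ ∈ Bq x r := by
      simp only [Bq, mem_ofPred_eq] at hy hy₀ ⊢
      exact hy₀.trans_lt hy
    have hy₀N : ¬ In b (rc y₀) (u y₀) := fun h => hy₀S ⟨hy₀B, h⟩
    obtain ⟨γ, h0, -, hγ⟩ := h1 u hu y₀ hy₀B hy₀N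
    obtain ⟨⟨V, hV, hV'⟩, -⟩ := hγ.self_of_nhds
    have hloc : IsLocalMin (fun t => ∑ j, (γ t j - x j) ^ 2) 0 := by
      filter_upwards [hγ] with t ht
      rw [h0]
      rcases le_total (∑ j, (γ t j - x j) ^ 2) (∑ j, (y j - x j) ^ 2) with h | h
      · exact hmin ⟨h, fun h' => ht.2.2 h'.2⟩
      · exact le_trans hy₀ h
    have := hloc.hasDerivAt_eq_zero (q_deriv hV)
    refine hy₀N (h2 u hu hx y₀ hy₀B ?_)
    rw [h0] at hV' this
    rw [hθr hV', this, Complex.ofReal_zero]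

/-- Over small balls, sections of the quotient sheaf vanish as soon as they vanish at the centre. -/
theorem inj (x : Fin n → ℝ) (I : Ideal (An (rc x))) : ∀ (l : Type) [Fintype l] (b : l → (Fin n → ℂ) → ℂ)
    (hb : ∀ j, AnalyticAt ℂ (b j) (rc x)), Ideal.span (range fun j => mk (hb j)) = I →
    ∀ᶠ r in 𝓝[>] (0 : ℝ), Inj x b r := by
  induction I using IsNoetherian.induction with
  | hgt I ih =>
  change Ideal (An (rc x)) at I
  intro l _ b hb hI
  have hin : ∀ {f} (hf : AnalyticAt ℂ f (rc x)), In b (rc x) f ↔ mk hf ∈ I := fun hf => by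
    rw [in_iff hb hf, hI]
  have hopt : ∀ w, ∀ hw : AnalyticAt ℂ w (rc x), mk hw ∉ I →
      ∀ᶠ r in 𝓝[>] (0 : ℝ), Inj x (fun o : Option l => o.elim w b) r := by
    intro w hw hwI
    have ho : ∀ o : Option l, AnalyticAt ℂ (o.elim w b) (rc x) := by
      rintro (_ | j) <;> [exact hw; exact hb j]
    refine ih _ (lt_of_le_of_ne ?_ fun e => hwI ?_) _ _ ho rfl
    · rw [← hI, Ideal.span_le]
      rintro _ ⟨j, rfl⟩
      exact Ideal.subset_span ⟨some j, rfl⟩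
    · rw [e]; exact Ideal.subset_span ⟨none, rfl⟩
  by_cases hP : I.IsPrime
  · exact inj_prime hb hI hopt
  rcases Ideal.not_isPrime_iff.1 hP with h | ⟨a, ha, a', ha', haa⟩
  · have h1 : In b (rc x) (fun _ => 1) := by rw [hin analyticAt_const, h]; trivial
    filter_upwards [Bq_ev h1.ev, Bq_ev (eventually_all.2 fun j => (hb j).eventually_analyticAt)]
      with r h2 h3 u hu _ y hy
    exact in_of_ne (h3 y hy) (h2 y hy) one_ne_zero (hu y hy).1
  · obtain ⟨a, han, rfl⟩ := exists_rep a
    obtain ⟨a', han', rfl⟩ := exists_rep a'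
    obtain ⟨k, _, c, hc⟩ := colon hb han
    obtain ⟨hc1, hc2⟩ := hc.self_of_nhds
    have hIc : ∀ᶠ r in 𝓝[>] (0 : ℝ), Inj x c r := by
      refine ih _ (lt_of_le_of_ne ?_ fun e => ha' ?_) _ _ hc1 rfl
      · rw [← hI, Ideal.span_le]
        rintro _ ⟨j, rfl⟩
        exact (in_iff hc1 (hb j)).1 ((hc2 _).1 ⟨hb j, (in_self b _ j).mul han⟩)
      · rw [e]
        refine (in_iff hc1 han').1 ((hc2 _).1 ⟨han', ?_⟩)
        rw [hin (han.fun_mul han'), mk_mul han han']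
        exact haa
    filter_upwards [hIc, hopt a han ha, self_mem_nhdsWithin, Bq_ev hc, Bq_ev han.eventually_analyticAt]
      with r h1 h2 hr h3 h4 u hu hx y hy
    obtain ⟨v, hv, hvx, huv⟩ := divide hr (fun y hy => ⟨h4 y hy, (h3 y hy).2⟩) h2 hu hx
    exact ((huv y hy).add (((h3 y hy).2 _).2 (h1 v hv hvx y hy)).2).congr
      (Eventually.of_forall fun z => by ring)

end CA

/-! ### Primary ideals -/

namespace CA
variable {n : ℕ} {q : Ideal (ORn n)}

/-- A holomorphic extension of a real-analytic function to a neighbourhood of real space. -/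
noncomputable def cx (f : ORn n) : (Fin n → ℂ) → ℂ := (ext_glob f.2).choose_spec.choose

theorem cx_an (f : ORn n) (x : Fin n → ℝ) : AnalyticAt ℂ (cx f) (rc x) :=
  let h := (ext_glob f.2).choose_spec.choose_spec
  h.2.2.1 _ (h.2.1 x)

theorem cx_eq (f : ORn n) (x : Fin n → ℝ) : cx f (rc x) = (f.1 x : ℂ) :=
  (ext_glob f.2).choose_spec.choose_spec.2.2.2 x

/-- Near every point the ideal sheaf generated by `q` is generated by finitely many elements. -/
theorem fin_gen_local (q : Ideal (ORn n)) (x : Fin n → ℝ) : ∃ s : Finset (ORn n), (s : Set (ORn n)) ⊆ q ∧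
    ∃ r > 0, ∀ f ∈ q, ∀ y ∈ Bq x r, In (fun g : s => cx g.1) (rc y) (cx f) := by
  obtain ⟨s', hs', hsp⟩ := Submodule.fg_span_iff_fg_span_finset_subset _ |>.1
    (IsNoetherian.noetherian (Submodule.span (An (rc x)) ((fun f => mk (cx_an f x)) '' (q : Set (ORn n)))))
  classical
  obtain ⟨s, hs, rfl⟩ := Finset.subset_set_image_iff.1 hs'
  obtain ⟨r, hr, hr0⟩ := ((inj x _ _ (fun g : s => cx g.1) (fun g => cx_an g.1 x) rfl).and
    self_mem_nhdsWithin).exists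
  refine ⟨s, hs, r, hr0, fun f hf y hy => hr (fun _ => cx f) (fun y _ => ⟨cx_an f y,
    Eventually.of_forall fun y' => (in_zero _ _).congr (by simp)⟩) ?_ y hy⟩
  rw [in_iff (fun g : s => cx_an g.1 x) (cx_an f x)]
  have h1 : mk (cx_an f x) ∈ Submodule.span (An (rc x)) ((fun f => mk (cx_an f x)) '' (q : Set (ORn n))) :=
    Submodule.subset_span ⟨f, hf, rfl⟩
  rw [hsp] at h1
  rwa [Finset.coe_image, image_eq_range] at h1

theorem fin_gen (q : Ideal (ORn n)) (m : ℕ) : ∃ s : Finset (ORn n), (s : Set (ORn n)) ⊆ q ∧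
    ∀ f ∈ q, ∀ y, ‖y‖ ≤ m → In (fun g : s => cx g.1) (rc y) (cx f) := by
  classical
  have h := (isCompact_closedBall (0 : Fin n → ℝ) m).induction_on (p := fun K => ∃ s : Finset (ORn n),
    (s : Set (ORn n)) ⊆ q ∧ ∀ f ∈ q, ∀ y ∈ K, In (fun g : s => cx g.1) (rc y) (cx f))
    ⟨∅, by simp, by simp⟩ (fun K L hKL ⟨s, h1, h2⟩ => ⟨s, h1, fun f hf y hy => h2 f hf y (hKL hy)⟩)
    (fun K L ⟨s, h1, h2⟩ ⟨t, h3, h4⟩ => ⟨s ∪ t, by simp [h1, h3], ?_⟩)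
    (fun x _ => ?_)
  · obtain ⟨s, h1, h2⟩ := h
    exact ⟨s, h1, fun f hf y hy => h2 f hf y (by simpa using hy)⟩
  · rintro f hf y (hy | hy)
    · exact (h2 f hf y hy).trans fun g =>
        in_self (fun g : ↥(s ∪ t) => cx g.1) _ ⟨g.1, Finset.mem_union_left _ g.2⟩
    · exact (h4 f hf y hy).trans fun g =>
        in_self (fun g : ↥(s ∪ t) => cx g.1) _ ⟨g.1, Finset.mem_union_right _ g.2⟩
  · obtain ⟨s, h1, r, hr, h2⟩ := fin_gen_local q x
    exact ⟨_, mem_nhdsWithin_of_mem_nhds ((Bq_open x r).mem_nhds (Bq_self x hr)), s, h1, h2⟩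

/-- A function lying in a primary ideal locally at one zero of the ideal lies in the ideal. -/
theorem mem_of_local (hq : q.IsPrimary) {x : Fin n → ℝ} (hx : x ∈ ZR n q) {ι : Type} [Fintype ι]
    {g : ORn n} (A : ι → ORn n) (hA : ∀ i, A i ∈ q) (c : ι → (Fin n → ℝ) → ℝ)
    (hc : ∀ i, AnalyticAt ℝ (c i) x) (h : ∀ᶠ y in 𝓝 x, g.1 y = ∑ i, c i y * (A i).1 y) : g ∈ q := by
  let e := Fintype.equivFin ι
  obtain ⟨h, C, hh, hC, hx0, hrel⟩ := clear_den (fun i => (A (e.symm i)).1) (fun i => (A _).2) g.2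
    (fun i => c (e.symm i)) (fun i => hc _) (h.mono fun y hy => by
      rw [hy]; exact (e.symm.sum_comp fun i => c i y * (A i).1 y).symm)
  have h1 : g * (⟨h, hh⟩ : ORn n) ∈ q := by
    have e1 : g * (⟨h, hh⟩ : ORn n) = ∑ i, (⟨C i, hC i⟩ : ORn n) * A (e.symm i) := by
      apply Subtype.ext
      ext y
      simp only [Subring.coe_mul, AddSubmonoidClass.coe_finsetSum, Finset.sum_apply, Pi.mul_apply]
      rw [mul_comm]
      exact hrel y
    rw [e1]
    exact q.sum_mem fun i _ => q.mul_mem_left _ (hA _)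
  rcases (Ideal.isPrimary_iff.1 hq).2 h1 with h2 | ⟨k, hk⟩
  · exact h2
  · have := hx _ hk
    simp only [Subring.coe_pow, Pi.pow_apply] at this
    exact absurd (eq_zero_of_pow_eq_zero this) hx0

theorem preconn (hq : q.IsPrimary) : IsPreconnected (ZR n q) := by
  intro u v hu hv huv ⟨a, haZ, hau⟩ ⟨b, hbZ, hbv⟩
  by_contra hne
  have hZc : IsClosed (ZR n q) := by
    simp only [ZR, ofPred_forall]
    exact isClosed_iInter fun f => isClosed_iInter fun _ =>
      isClosed_eq (continuous_iff_continuousAt.2 fun x => (f.2 x).continuousAt) continuous_const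
  have hsep : ∀ y ∈ ZR n q, ¬ (y ∈ u ∧ y ∈ v) := fun y hy h => hne ⟨y, hy, h⟩
  obtain ⟨U, V, hU, hV, hAU, hBV, hUV⟩ := normal_separation
    (hZc.inter hv.isClosed_compl) (hZc.inter hu.isClosed_compl)
    (disjoint_left.2 fun y hy hy' => (huv hy.1).elim hy'.2 hy.2)
  have hZV : ∀ y ∈ ZR n q, y ∉ V → y ∈ (closure V)ᶜ := by
    intro y hy hyV hc
    have hyU : y ∈ U := hAU ⟨hy, fun h => hyV (hBV ⟨hy, fun h' => hsep y hy ⟨h', h⟩⟩)⟩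
    exact disjoint_left.1 (hUV.closure_right hU) hyU hc
  have haV : a ∉ V := fun h => disjoint_left.1 hUV (hAU ⟨haZ, fun h => hsep a haZ ⟨hau, h⟩⟩) h
  have hbV : b ∈ V := hBV ⟨hbZ, fun h => hsep b hbZ ⟨h, hbv⟩⟩
  choose s hsq hs using fin_gen q
  let B : ∀ m, s m → (Fin n → ℂ) → ℂ := fun m g => cx g.1
  let M : (Fin n → ℂ) → ℕ := fun z => ⌊‖z‖⌋₊ + 2
  let re : (Fin n → ℂ) → Fin n → ℝ := fun z i => (z i).re
  have hre : Continuous re := by fun_prop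
  have hrer : ∀ y, re (rc y) = y := fun y => by simp [re, rc]
  have hnorm : ∀ y : Fin n → ℝ, ‖rc y‖ = ‖y‖ := fun y => by
    have h : rc (0 : Fin n → ℝ) = 0 := by ext i; simp [rc]
    rw [← dist_zero_right, ← h, rc_dist, dist_zero_right]
  let F : (Fin n → ℂ) → ((Fin n → ℂ) → Unit → ℂ) → Prop := fun z c =>
    AnV c z ∧ (re z ∉ V → In (B (M z)) z (fun w => c w ()))
  have hFG : ∀ y, FG F (𝓝 (rc y)) := by
    intro y
    have htriv : (∀ᶠ z in 𝓝 (rc y), ∀ c, F z c ↔ AnV c z) → FG F (𝓝 (rc y)) := by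
      intro h
      refine ⟨Unit, inferInstance, fun _ _ _ => 1, ?_⟩
      filter_upwards [h] with z hz
      refine ⟨fun _ _ => analyticAt_const, fun c => (hz c).trans ⟨fun hc => ⟨fun _ w => c w (), fun _ => hc (),
        by simp⟩, fun ⟨d, hd, h⟩ k => (hd ()).congr ?_⟩⟩
      filter_upwards [h] with w hw
      simp [hw]
    by_cases hyV : y ∈ V
    · refine htriv ?_
      have : ∀ᶠ z in 𝓝 (rc y), re z ∈ V :=
        hre.continuousAt.eventually_mem (hV.mem_nhds (by rwa [hrer]))
      filter_upwards [this] with z hz c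
      simp [F, hz]
    -- nearby, only finitely many of the generating families occur, and they agree
    have hM : ∀ᶠ z in 𝓝 (rc y), ∀ f, In (B (M z)) z f ↔ In (B (M (rc y))) z f := by
      have h1 : ∀ m : ℕ, ‖y‖ ≤ m → ∀ g : ORn n, g ∈ q → In (B m) (rc y) (cx g) := fun m hm g hg => hs m g hg y hm
      have h0 : ‖y‖ ≤ (M (rc y) : ℕ) := by
        simp only [M, hnorm]; push_cast; linarith [Nat.lt_floor_add_one ‖y‖]
      have h2 : ∀ᶠ z in 𝓝 (rc y), ∀ m ∈ Finset.range (⌊‖y‖⌋₊ + 5), ‖y‖ ≤ (m : ℕ) →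
          ∀ f, In (B m) z f ↔ In (B (M (rc y))) z f := by
        refine (Filter.eventually_all_finset _).2 fun m _ => ?_
        by_cases hm : ‖y‖ ≤ m
        · exact (in_iff_ev (fun g => h1 _ h0 _ (hsq _ g.2)) (fun g => h1 _ hm _ (hsq _ g.2))).mono
            fun z hz _ => hz
        · exact Eventually.of_forall fun z h => absurd h hm
      have h3 : ∀ᶠ z in 𝓝 (rc y), |‖z‖ - ‖y‖| < 1 := by
        have : Tendsto (fun z : Fin n → ℂ => |‖z‖ - ‖y‖|) (𝓝 (rc y)) (𝓝 |‖rc y‖ - ‖y‖|) := by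
          apply Continuous.tendsto; fun_prop
        rw [hnorm, sub_self, abs_zero] at this
        exact this.eventually (gt_mem_nhds one_pos)
      filter_upwards [h2, h3] with z h2 h3
      rw [abs_lt] at h3
      have h4 := Nat.lt_floor_add_one ‖z‖
      refine h2 (M z) ?_ ?_
      · have h5 := Nat.lt_floor_add_one ‖y‖
        have h6 := Nat.floor_le (norm_nonneg z)
        have h7 : (⌊‖z‖⌋₊ : ℝ) < (⌊‖y‖⌋₊ + 2 : ℕ) := by push_cast; linarith
        have h8 : ⌊‖z‖⌋₊ < ⌊‖y‖⌋₊ + 2 := by exact_mod_cast h7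
        simp only [M, Finset.mem_range]; omega
      · simp only [M]; push_cast; linarith
    have hBy : ∀ᶠ z in 𝓝 (rc y), ∀ g, AnalyticAt ℂ (B (M (rc y)) g) z :=
      eventually_all.2 fun g => (cx_an g.1 y).eventually_analyticAt
    by_cases hyZ : y ∈ ZR n q
    · have : ∀ᶠ z in 𝓝 (rc y), re z ∈ (closure V)ᶜ :=
        hre.continuousAt.eventually_mem (isClosed_closure.isOpen_compl.mem_nhds (by
          rw [hrer]; exact hZV y hyZ hyV))
      refine ⟨_, inferInstance, fun g w _ => B (M (rc y)) g w, ?_⟩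
      filter_upwards [this, hM, hBy] with z h1 h2 h3
      refine ⟨fun g _ => h3 g, fun c => ⟨fun ⟨h4, h5⟩ => ?_, fun ⟨d, hd, h⟩ => ?_⟩⟩
      · obtain ⟨d, hd, h⟩ := (h2 _).1 (h5 fun h => h1 (subset_closure h))
        exact ⟨d, hd, h.mono fun w hw _ => hw⟩
      · have h6 : In (B (M (rc y))) z (fun w => c w ()) := ⟨d, hd, h.mono fun w hw => hw ()⟩
        exact ⟨fun _ => h6.an h3, fun _ => (h2 _).2 h6⟩
    · refine htriv ?_
      simp only [ZR, mem_ofPred_eq, not_forall] at hyZ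
      obtain ⟨f, hf, hfy⟩ := hyZ
      have h0 : In (B (M (rc y))) (rc y) (cx f) := hs _ f hf y (by
        simp only [M, hnorm]; push_cast; linarith [Nat.lt_floor_add_one ‖y‖])
      filter_upwards [hM, hBy, h0.ev, (cx_an f y).continuousAt.eventually_ne
        (by rw [cx_eq]; exact Complex.ofReal_ne_zero.2 hfy)] with z h1 h2 h3 h4 c
      exact ⟨fun h => h.1, fun h => ⟨h, fun _ => (h1 _).2 (in_of_ne h2 h3 h4 (h ()))⟩⟩
  obtain ⟨H, hH, hHb⟩ := globA (κ := Unit) (Ω := {z | FG F (𝓝 z)}) (F := F)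
    (isOpen_iff_mem_nhds.2 fun z ⟨l, i, t, h⟩ => h.eventually_nhds.mono fun z' h => ⟨l, i, t, h⟩) hFG
    (fun z hz => hz) (x₀ := b) (c₀ := fun _ _ => 1)
    ⟨fun _ => analyticAt_const, fun h => absurd hbV (by rwa [hrer] at h)⟩ one_half_pos
  let e : ORn n := ⟨fun y => (H y ()).re, fun x => by
    obtain ⟨c, hc, h⟩ := hH x
    exact (re_analytic (hc.1 ())).congr (h.mono fun y hy => by simp [hy])⟩
  have heq : e ∈ q := by
    obtain ⟨c, hc, h⟩ := hH a
    obtain ⟨d, hd, h'⟩ := hc.2 (by rwa [hrer])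
    refine mem_of_local hq haZ (fun g => g.1) (fun g => hsq _ g.2) (fun g y => (d g (rc y)).re)
      (fun g => re_analytic (hd g)) ?_
    filter_upwards [h, rc_continuous.continuousAt.eventually h'] with y h1 h2
    simp only [e, h1, h2, B, cx_eq]
    exact re_sum_mul _ _
  have h1 : (H b ()).re = 0 := hbZ e heq
  have h2 := (Complex.abs_re_le_norm _).trans (hHb ())
  simp only [Complex.sub_re, h1, Complex.one_re] at h2
  norm_num at h2

end CA

theorem stmt_9 (n : ℕ) (q : Ideal (ORn n)) (hq : q.IsPrimary) :
    (saturation n (q : Set (ORn n)) = (q : Set (ORn n)) ↔ (ZR n q).Nonempty) ∧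
    IsPreconnected (ZR n q) := by
  refine ⟨⟨fun h => ?_, fun ⟨x, hx⟩ => Subset.antisymm (fun g hg => ?_) fun g hg x => ?_⟩, CA.preconn hq⟩
  · by_contra hZ
    apply (Ideal.isPrimary_iff.1 hq).1
    rw [Ideal.eq_top_iff_one, ← SetLike.mem_coe, ← h]
    intro x
    -- some element of `q` is nonzero at `x`; divide `1` by it nearby
    have hx : ¬ x ∈ ZR n q := fun hx => hZ ⟨x, hx⟩
    simp only [ZR, mem_ofPred_eq, not_forall] at hx
    obtain ⟨f, hf, hfx⟩ := hx
    have hc : Continuous (f : (Fin n → ℝ) → ℝ) := continuous_iff_continuousAt.2 fun y => (f.2 y).continuousAt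
    refine ⟨_, isOpen_ne_fun hc continuous_const, hfx, 1, fun _ => f, fun _ y => (f.1 y)⁻¹, fun _ => hf,
      fun _ y hy => (f.2 y).fun_inv hy, fun y hy => ?_⟩
    simp only [Fin.sum_univ_one]
    exact (inv_mul_cancel₀ hy).symm
  · obtain ⟨U, hU, hxU, r, A, c, hA, hc, h⟩ := hg x
    exact CA.mem_of_local hq hx A hA c (fun i => hc i x hxU) (Filter.mem_of_superset (hU.mem_nhds hxU) h)
  · exact ⟨univ, isOpen_univ, mem_univ _, 1, fun _ => g, fun _ _ => 1, fun _ => hg,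
      fun _ _ _ => analyticAt_const, fun y _ => by simp⟩
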